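/- Let a_1,…,a_k ∈ H have polynomial growth with lim_{t→+∞} |a_i(t)|/log t = +∞ for every 1 ≤ i ≤ k and lim_{t→+∞} |a_i(t) − a_j(t)|/log t = +∞ for all i ≠ j. Then the integer sequences ⌊a_1(n)⌋,…,⌊a_k(n)⌋ are jointly ergodic if and only if for every (t_1,…,t_k) ∈ [0,1)^k with not all t_i equal to zero, lim_{N→∞} (1/N)∑_{n=1}^N e(t_1⌊a_1(n)⌋ + ⋯ + t_k⌊a_k(n)⌋) = 0, where e(x) = e^{2πix}. -/

import Mathlib

/-!
Write `b_i(n) = ⌊a_i(n)⌋`.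

**Joint ergodicity implies equidistribution.** Given frequencies `t_i`, not all integers, test joint
ergodicity on the rotation by `(e(t_1), …, e(t_k))` on the closed subgroup which this element generates
in the torus; this rotation is ergodic (`exists_rotation`). For the coordinate functions the multiple
average equals the exponential average times a function of modulus one, and the product of the
integrals vanishes because some coordinate function has a nontrivial eigenvalue (`equidistributed_of`).

**Equidistribution implies joint ergodicity.** The argument has two independent parts.

*Seminorm control* (`propS`). Uniformity is measured by the finitary box averages `BB`; a function `u`
is `Null` if these become small along suitable arbitrarily large side lengths, for every number of
sides. For such `u` the averages with `u ∘ T^{b_m(n)}` among the factors are negligible, uniformly in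
bounded weights and in the other functions. To see this, translate by `-b_m(n)`, which puts `u` at
position `0` and leaves the phases `-a_m` and `a_i - a_m`. On dyadic blocks `[M, 2M)` apply the van der
Corput inequality repeatedly, first with bounded shifts (`good_phase1`), then with shifts which are
multiples of `τ_M = ⌊M^{1/3}⌋` (`good_phase2`), eliminating the fastest growing phases by a scheme of
PET type (`level`), until all phases have bounded derivative. On short pieces of a block these phases
are linear up to bounded error (`piece`), and `lemmaZ` applies (`good_term`). The hypotheses on
`|a_i| / log` and `|a_i - a_j| / log` say that `t` times the derivative of each phase tends to infinity
(`nt_of_log`); this nondegeneracy `Nt` survives every van der Corput step (`nt_phase1`, `nt_phase2`).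

*From seminorm control to joint ergodicity* (`jointlyErgodic_of`). By induction on a set `S` of indices
(`PS_all`), the averages in which the indices in `S` carry functions and the remaining ones carry
phases `e(t_j b_j(n))` converge to the expected limit in `L¹`; for `S = ∅` this is the equidistribution
hypothesis. To add an index `m` (`PS_step`), decompose `f_m` into its projection to the Kronecker
factor and a part orthogonal to all eigenfunctions. The first part is approximated by combinations of
eigenfunctions, and each of these turns index `m` into a phase, so the inductive hypothesis applies
(`QQ_InK`). The second part contributes nothing (`orth_average`): otherwise it would correlate with a
weak limit `F` of dual functions. By the inductive hypothesis `F` has the linear phase property `Lin`: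
eigenfunctions that correlate with its cube products have many coincidences among the alternating sums
of their eigenvalues (`Lin_dual`). This permits degree lowering (`lower`), so that positivity of any
uniformity seminorm of `F` minus its Kronecker projection would descend to correlation with an
eigenfunction. Hence this difference is `Null`, so by seminorm control it is orthogonal to `F` and
therefore zero; but then `F` belongs to the Kronecker factor and cannot correlate with a function
orthogonal to all eigenfunctions. Finally `L¹` convergence of uniformly bounded functions upgrades to
`L²`.
-/

open Filter MeasureTheory Topology

noncomputable section

/-- A (simplified) Hardy field: a set of real functions, identified up to eventual equality
at `+∞`, that forms a field of germs closed under differentiation, contains all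
logarithmico-exponential functions (generated by constants, the identity, field operations,
`exp` and `log`), and is closed under composition and compositional inversion of functions
tending to `+∞`. -/
structure HardyField : Type where
  carrier : Set (ℝ → ℝ)
  mem_congr : ∀ {f g : ℝ → ℝ}, f ∈ carrier → f =ᶠ[atTop] g → g ∈ carrier
  smooth : ∀ f ∈ carrier, ∃ a : ℝ, ContDiffOn ℝ (⊤ : ℕ∞) f (Set.Ioi a)
  zero_mem : (0 : ℝ → ℝ) ∈ carrier
  one_mem : (1 : ℝ → ℝ) ∈ carrier
  add_mem : ∀ {f g : ℝ → ℝ}, f ∈ carrier → g ∈ carrier → f + g ∈ carrier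
  neg_mem : ∀ {f : ℝ → ℝ}, f ∈ carrier → -f ∈ carrier
  mul_mem : ∀ {f g : ℝ → ℝ}, f ∈ carrier → g ∈ carrier → f * g ∈ carrier
  inv_mem : ∀ {f : ℝ → ℝ}, f ∈ carrier → ¬f =ᶠ[atTop] (0 : ℝ → ℝ) →
    ∃ g ∈ carrier, f * g =ᶠ[atTop] (1 : ℝ → ℝ)
  deriv_mem : ∀ {f : ℝ → ℝ}, f ∈ carrier → deriv f ∈ carrier
  id_mem : (fun x : ℝ => x) ∈ carrier
  const_mem : ∀ c : ℝ, (fun _ : ℝ => c) ∈ carrier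
  exp_comp_mem : ∀ {f : ℝ → ℝ}, f ∈ carrier → (fun x => Real.exp (f x)) ∈ carrier
  log_comp_mem : ∀ {f : ℝ → ℝ}, f ∈ carrier → Tendsto f atTop atTop →
    (fun x => Real.log (f x)) ∈ carrier
  comp_mem : ∀ {f g : ℝ → ℝ}, f ∈ carrier → g ∈ carrier → Tendsto g atTop atTop →
    (f ∘ g) ∈ carrier
  compInv_mem : ∀ {g : ℝ → ℝ}, g ∈ carrier → Tendsto g atTop atTop →
    ∃ h ∈ carrier, Tendsto h atTop atTop ∧ (fun x => g (h x)) =ᶠ[atTop] fun x : ℝ => x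

/-- `f` has polynomial growth: `f(t)/t^d → 0` as `t → +∞` for some positive integer `d`. -/
def PolynomialGrowth (f : ℝ → ℝ) : Prop :=
  ∃ d : ℕ, 0 < d ∧ Tendsto (fun t => f t / t ^ d) atTop (𝓝 0)

/-- Integer sequences `b_1, …, b_k` are jointly ergodic: for every ergodic invertible
measure-preserving system (encoded as a measure-preserving ℤ-action `T`) and all bounded
measurable `f_1, …, f_k`, the averages `(1/N)∑_{n=1}^N ∏_i f_i ∘ T^{b_i(n)}` converge in
`L²(μ)` to `∏_i ∫ f_i dμ`. -/
def JointlyErgodic {k : ℕ} (b : Fin k → ℕ → ℤ) : Prop :=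
  ∀ (X : Type) (_ : MeasurableSpace X) (μ : Measure X), IsProbabilityMeasure μ →
    ∀ T : ℤ → X → X, (∀ n : ℤ, MeasurePreserving (T n) μ μ) → T 0 = id →
      (∀ m n : ℤ, T (m + n) = T m ∘ T n) → Ergodic (T 1) μ →
      ∀ f : Fin k → X → ℝ, (∀ i, Measurable (f i)) → (∀ i, ∃ C : ℝ, ∀ x, |f i x| ≤ C) →
        Tendsto (fun N : ℕ =>
          eLpNorm (fun x =>
            (N : ℝ)⁻¹ * ∑ n ∈ Finset.Icc 1 N, ∏ i, f i (T (b i n) x)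
              - ∏ i, ∫ x, f i x ∂μ) 2 μ)
          atTop (𝓝 0)

set_option linter.unusedSectionVars false

/-! ### Characters, bounded functions, actions -/

section

/-- The additive character `e(x) = exp(2πix)`. -/
def ee (x : ℝ) : ℂ := Complex.exp (2 * Real.pi * Complex.I * (x : ℝ))

theorem ee_add (x y : ℝ) : ee (x + y) = ee x * ee y := by
  unfold ee; rw [← Complex.exp_add]; congr 1; push_cast; ring

theorem ee_zero : ee 0 = 1 := by simp [ee]

theorem norm_ee (x : ℝ) : ‖ee x‖ = 1 := by
  have : (2 * Real.pi * Complex.I * (x : ℝ) : ℂ) = ((2 * Real.pi * x : ℝ) : ℂ) * Complex.I := by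
    push_cast; ring
  rw [ee, this, Complex.norm_exp_ofReal_mul_I]

theorem conj_ee (x : ℝ) : (starRingEnd ℂ) (ee x) = ee (-x) := by
  unfold ee; rw [← Complex.exp_conj]; congr 1; simp [map_ofNat (starRingEnd ℂ) 2]

theorem ee_int (n : ℤ) : ee n = 1 := by
  unfold ee; rw [Complex.exp_eq_one_iff]; exact ⟨n, by push_cast; ring⟩

theorem ee_eq_one_iff (x : ℝ) : ee x = 1 ↔ ∃ n : ℤ, x = n := by
  constructor
  · intro h
    unfold ee at h; rw [Complex.exp_eq_one_iff] at h
    obtain ⟨n, hn⟩ := h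
    refine ⟨n, ?_⟩
    have h2 : (2 * Real.pi * Complex.I : ℂ) ≠ 0 := by simp [Real.pi_ne_zero]
    have : ((x : ℝ) : ℂ) = ((n : ℝ) : ℂ) := by
      apply mul_left_cancel₀ h2; rw [hn]; push_cast; ring
    exact_mod_cast this
  · rintro ⟨n, rfl⟩; exact ee_int n

theorem ee_neg (x : ℝ) : ee (-x) = (ee x)⁻¹ := by
  apply eq_inv_of_mul_eq_one_left; rw [← ee_add]; simp [ee_zero]

theorem ee_sum {ι : Type*} (s : Finset ι) (f : ι → ℝ) : ee (∑ i ∈ s, f i) = ∏ i ∈ s, ee (f i) := by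
  classical
  induction s using Finset.induction_on with
  | empty => simp [ee_zero]
  | insert a s ha ih => rw [Finset.sum_insert ha, Finset.prod_insert ha, ee_add, ih]

theorem continuous_ee : Continuous ee := by unfold ee; fun_prop

variable {X : Type} [MeasurableSpace X]

/-- Measurable complex functions bounded by `1`. -/
def Bdd (f : X → ℂ) : Prop := Measurable f ∧ ∀ x, ‖f x‖ ≤ 1

/-- A measure preserving `ℤ`-action. -/
structure Sys (μ : Measure X) (T : ℤ → X → X) : Prop where
  mp : ∀ n : ℤ, MeasurePreserving (T n) μ μ
  zero : T 0 = id
  add : ∀ m n : ℤ, T (m + n) = T m ∘ T n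

/-- Complex conjugate of a function, pointwise. -/
def cj {α : Type*} (f : α → ℂ) : α → ℂ := fun x => (starRingEnd ℂ) (f x)

@[simp] theorem cj_apply {α : Type*} (f : α → ℂ) (x : α) : cj f x = (starRingEnd ℂ) (f x) := rfl

namespace Bdd
variable {f g : X → ℂ}
theorem mul (hf : Bdd f) (hg : Bdd g) : Bdd (fun x => f x * g x) :=
  ⟨hf.1.mul hg.1, fun x => by
    rw [norm_mul]; exact mul_le_one₀ (hf.2 x) (norm_nonneg _) (hg.2 x)⟩
theorem cj (hf : Bdd f) : Bdd (cj f) :=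
  ⟨(Complex.continuous_conj.measurable).comp hf.1, fun x => by simpa using hf.2 x⟩
theorem const {c : ℂ} (hc : ‖c‖ ≤ 1) : Bdd (fun _ : X => c) := ⟨measurable_const, fun _ => hc⟩
theorem one : Bdd (1 : X → ℂ) := ⟨measurable_const, fun _ => by simp⟩
theorem prod {ι : Type*} {s : Finset ι} {F : ι → X → ℂ} (h : ∀ i ∈ s, Bdd (F i)) :
    Bdd (fun x => ∏ i ∈ s, F i x) := by
  classical
  induction s using Finset.induction_on with
  | empty => simpa using Bdd.const (c := 1) (by simp)
  | insert a s ha ih =>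
    simp_rw [Finset.prod_insert ha]
    exact (h a (Finset.mem_insert_self _ _)).mul (ih fun i hi => h i (Finset.mem_insert_of_mem hi))
theorem comp (hf : Bdd f) {g : X → X} (hg : Measurable g) : Bdd (fun x => f (g x)) :=
  ⟨hf.1.comp hg, fun _ => hf.2 _⟩
theorem integrable {μ : Measure X} [IsFiniteMeasure μ] (hf : Bdd f) : Integrable f μ :=
  Integrable.of_bound hf.1.aestronglyMeasurable 1 (ae_of_all _ hf.2)
theorem norm_integral_le {μ : Measure X} [IsProbabilityMeasure μ] (hf : Bdd f) : ‖∫ x, f x ∂μ‖ ≤ 1 := by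
  simpa using norm_integral_le_of_norm_le_const (μ := μ) (ae_of_all _ hf.2)
end Bdd

namespace Sys
variable {μ : Measure X} {T : ℤ → X → X}
theorem meas (h : Sys μ T) (n : ℤ) : Measurable (T n) := (h.mp n).measurable
theorem app (h : Sys μ T) (m n : ℤ) (x : X) : T m (T n x) = T (m + n) x := by rw [h.add]; rfl
theorem app0 (h : Sys μ T) (x : X) : T 0 x = x := by rw [h.zero]; rfl
theorem bdd (h : Sys μ T) {f : X → ℂ} (hf : Bdd f) (n : ℤ) : Bdd (fun x => f (T n x)) :=
  hf.comp (h.meas n)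
theorem integral_comp (h : Sys μ T) {f : X → ℂ} (hf : Measurable f) (n : ℤ) :
    ∫ x, f (T n x) ∂μ = ∫ x, f x ∂μ := by
  have := integral_map (μ := μ) (h.mp n).measurable.aemeasurable (f := f)
    hf.aestronglyMeasurable
  rw [(h.mp n).map_eq] at this
  exact this.symm
end Sys

end

/-! ### The van der Corput inequality -/

section

theorem sq_integral_le {X : Type} [MeasurableSpace X] {μ : Measure X} [IsProbabilityMeasure μ]
    {g : X → ℝ} (hg : Integrable g μ) (hg2 : Integrable (fun x => g x ^ 2) μ) :
    (∫ x, g x ∂μ) ^ 2 ≤ ∫ x, g x ^ 2 ∂μ := by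
  set c := ∫ x, g x ∂μ with hc
  have h : 0 ≤ ∫ x, (g x - c) ^ 2 ∂μ := integral_nonneg fun x => sq_nonneg _
  have h2 : ∫ x, (g x - c) ^ 2 ∂μ = ∫ x, g x ^ 2 ∂μ - c ^ 2 := by
    have : (fun x => (g x - c) ^ 2) = fun x => (g x ^ 2 - 2 * c * g x) + c ^ 2 := by
      funext x; ring
    have hi : Integrable (fun x => g x ^ 2 - 2 * c * g x) μ := hg2.sub (hg.const_mul _)
    rw [this, integral_add hi (integrable_const _),
      integral_sub hg2 (hg.const_mul _), integral_const_mul, ← hc]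
    simp; ring
  linarith

theorem sum_shift (g : ℤ → ℂ) (x a b c : ℤ) (L : ℕ) (ha : a + c ≤ x) (hb : x + L ≤ b + c)
    (hg : ∀ n, n ∉ Finset.Ico x (x + L) → g n = 0) :
    ∑ m ∈ Finset.Ico a b, g (m + c) = ∑ n ∈ Finset.Ico x (x + L), g n := by
  rw [Finset.sum_Ico_add' g a b c]
  symm
  apply Finset.sum_subset
  · apply Finset.Ico_subset_Ico ha hb
  · intro n _ hn; exact hg n hn

/-- The van der Corput inequality for a sequence supported on an interval, with `K` shifts by
multiples of `s`. -/
theorem vdc_scalar (v : ℤ → ℂ) (x : ℤ) (L K s : ℕ)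
    (hv : ∀ n, n ∉ Finset.Ico x (x + L) → v n = 0) :
    (K : ℝ) ^ 2 * ‖∑ n ∈ Finset.Ico x (x + L), v n‖ ^ 2 ≤ (L + K * s) *
      ∑ j ∈ Finset.range K, ∑ j' ∈ Finset.range K,
        (∑ n ∈ Finset.Ico x (x + L), v n * (starRingEnd ℂ) (v (n + ((j' : ℤ) - j) * s))).re := by
  set J := Finset.Ico (x - K * s) (x + L) with hJ
  set w : ℤ → ℂ := fun m => ∑ j ∈ Finset.range K, v (m + j * s) with hw
  have hks : ∀ j ∈ Finset.range K, (0 : ℤ) ≤ j * s ∧ (j : ℤ) * s ≤ K * s := by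
    intro j hj
    have : (j : ℤ) ≤ K := by have := Finset.mem_range.1 hj; omega
    exact ⟨by positivity, by gcongr⟩
  have h1 : ∑ m ∈ J, w m = K * ∑ n ∈ Finset.Ico x (x + L), v n := by
    rw [Finset.sum_comm]
    rw [Finset.sum_congr rfl (g := fun _ => ∑ n ∈ Finset.Ico x (x + L), v n)]
    · simp
    · intro j hj
      obtain ⟨h1, h2⟩ := hks j hj
      exact sum_shift v x _ _ _ L (by linarith) (by linarith) hv
  have h2 : ‖∑ m ∈ J, w m‖ ^ 2 ≤ (L + K * s) * ∑ m ∈ J, ‖w m‖ ^ 2 := by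
    calc ‖∑ m ∈ J, w m‖ ^ 2 ≤ (∑ m ∈ J, ‖w m‖) ^ 2 := by gcongr; exact norm_sum_le _ _
      _ ≤ J.card * ∑ m ∈ J, ‖w m‖ ^ 2 := sq_sum_le_card_mul_sum_sq
      _ = _ := by
        congr 1
        rw [hJ, Int.card_Ico]
        have : (x + L - (x - K * s)) = ((L + K * s : ℕ) : ℤ) := by push_cast; ring
        rw [this, Int.toNat_natCast]; push_cast; rfl
  have h3 : ∑ m ∈ J, ‖w m‖ ^ 2 = ∑ j ∈ Finset.range K, ∑ j' ∈ Finset.range K,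
        (∑ n ∈ Finset.Ico x (x + L), v n * (starRingEnd ℂ) (v (n + ((j' : ℤ) - j) * s))).re := by
    have : ∀ m, ‖w m‖ ^ 2 = ∑ j ∈ Finset.range K, ∑ j' ∈ Finset.range K,
        (v (m + j * s) * (starRingEnd ℂ) (v (m + j' * s))).re := by
      intro m
      have : ‖w m‖ ^ 2 = (w m * (starRingEnd ℂ) (w m)).re := by
        rw [Complex.mul_conj, Complex.ofReal_re, Complex.normSq_eq_norm_sq]
      rw [this, hw]; simp only [map_sum, Finset.sum_mul_sum, Complex.re_sum]
    simp_rw [this]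
    rw [Finset.sum_comm]
    refine Finset.sum_congr rfl fun j hj => ?_
    rw [Finset.sum_comm]
    refine Finset.sum_congr rfl fun j' hj' => ?_
    rw [← Complex.re_sum]
    congr 1
    obtain ⟨h1, h2⟩ := hks j hj
    rw [← sum_shift (fun n => v n * (starRingEnd ℂ) (v (n + ((j' : ℤ) - j) * s))) x
      (x - K * s) (x + L) (j * s) L (by linarith) (by linarith)]
    · refine Finset.sum_congr rfl fun m _ => ?_
      congr 3; ring
    · intro n hn; simp [hv n hn]
  rw [h1, norm_mul, mul_pow, h3] at h2
  simpa using h2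

/-- A double sum of an even function of the difference is bounded by a single sum. -/
theorem sum_toeplitz_le (D : ℤ → ℝ) (hD : ∀ p, 0 ≤ D p) (hs : ∀ p, D (-p) = D p) (K : ℕ) :
    ∑ j ∈ Finset.range K, ∑ j' ∈ Finset.range K, D ((j' : ℤ) - j) ≤
      K * (D 0 + 2 * ∑ p ∈ Finset.Ico 1 K, D p) := by
  induction K with
  | zero => simp
  | succ K ih =>
    have e1 : ∑ j ∈ Finset.range K, D ((K : ℤ) - j) = ∑ p ∈ Finset.Ico 1 (K + 1), D p := by
      rw [Finset.sum_Ico_eq_sum_range, ← Finset.sum_range_reflect]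
      apply Finset.sum_congr (by simp)
      intro j hj
      have := Finset.mem_range.1 hj
      congr 1; push_cast [Nat.cast_sub (show j ≤ K - 1 by omega), Nat.cast_sub (show 1 ≤ K by omega)]
      ring
    have e2 : ∑ j' ∈ Finset.range K, D ((j' : ℤ) - K) = ∑ p ∈ Finset.Ico 1 (K + 1), D p := by
      rw [← e1]; refine Finset.sum_congr rfl fun j _ => ?_
      rw [← hs]; congr 1; ring
    have e3 : ∑ p ∈ Finset.Ico 1 K, D p ≤ ∑ p ∈ Finset.Ico 1 (K + 1), D p :=
      Finset.sum_le_sum_of_subset_of_nonneg (Finset.Ico_subset_Ico le_rfl (by omega))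
        fun p _ _ => hD p
    rw [Finset.sum_range_succ]
    simp_rw [Finset.sum_range_succ]
    rw [Finset.sum_add_distrib, e1, e2]
    have hK : (0 : ℝ) ≤ K := by positivity
    have := mul_le_mul_of_nonneg_left e3 hK
    push_cast
    simp only [sub_self]
    nlinarith [hD 0]

variable {X : Type} [MeasurableSpace X] {μ : Measure X} [IsProbabilityMeasure μ]

/-- The van der Corput inequality for the integrals of `f * h n`; the fixed function `f` is removed
by the Cauchy–Schwarz inequality. -/
theorem vdc (x : ℤ) (L K s : ℕ) (h : ℤ → X → ℂ) (hb : ∀ n, Bdd (h n))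
    (h0 : ∀ n, n ∉ Finset.Ico x (x + L) → h n = 0) (f : X → ℂ) (hf : Bdd f) :
    ‖∑ n ∈ Finset.Ico x (x + L), ∫ y, f y * h n y ∂μ‖ ^ 2 * K ≤ (L + K * s) *
      (L + 2 * ∑ p ∈ Finset.Ico 1 K, ‖∑ n ∈ Finset.Ico x (x + L),
        ∫ y, h n y * (starRingEnd ℂ) (h (n + p * s) y) ∂μ‖) := by
  rcases Nat.eq_zero_or_pos K with rfl | hK
  · simp; positivity
  set I := Finset.Ico x (x + L) with hI
  have hbb : ∀ n m, Bdd (fun y => h n y * (starRingEnd ℂ) (h m y)) := fun n m => (hb n).mul (hb m).cj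
  set C : ℤ → ℂ := fun p => ∑ n ∈ I, ∫ y, h n y * (starRingEnd ℂ) (h (n + p * s) y) ∂μ with hC
  have hCneg : ∀ p, ‖C (-p)‖ = ‖C p‖ := by
    intro p
    have : C (-p) = (starRingEnd ℂ) (C p) := by
      have e1 : C (-p) = ∑ n ∈ Finset.Ico (x - |p * s|) (x + L + |p * s|),
          ∫ y, h n y * (starRingEnd ℂ) (h (n + (-p) * s) y) ∂μ := by
        have := sum_shift (fun n => ∫ y, h n y * (starRingEnd ℂ) (h (n + (-p) * s) y) ∂μ) x
          (x - |p * s|) (x + L + |p * s|) 0 L (by linarith [abs_nonneg (p * (s : ℤ))])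
          (by linarith [abs_nonneg (p * (s : ℤ))])
          (by intro n hn; simp [h0 n hn])
        rw [hC]; simp only; rw [hI, ← this]; simp
      have e2 : C p = ∑ n ∈ Finset.Ico (x - |p * s|) (x + L + |p * s|),
          ∫ y, h (n + (-p) * s) y * (starRingEnd ℂ) (h n y) ∂μ := by
        have := sum_shift (fun n => ∫ y, h n y * (starRingEnd ℂ) (h (n + p * s) y) ∂μ) x
          (x - |p * s|) (x + L + |p * s|) (-p * s) L
          (by linarith [neg_abs_le (p * (s : ℤ))])
          (by linarith [le_abs_self (p * (s : ℤ))])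
          (by intro n hn; simp [h0 n hn])
        rw [hC]; simp only; rw [hI, ← this]
        refine Finset.sum_congr rfl fun n _ => ?_
        congr 1; funext y; congr 3; ring
      rw [e1, e2, map_sum]
      refine Finset.sum_congr rfl fun n _ => ?_
      rw [← integral_conj]; congr 1; funext y; simp [mul_comm]
    rw [this, RCLike.norm_conj]
  have hint : ∀ n, Integrable (h n) μ := fun n => (hb n).integrable
  -- first step: pull the sum inside and use Cauchy-Schwarz
  have hsb : ∀ y, ‖∑ n ∈ I, h n y‖ ≤ L := by
    intro y
    refine (norm_sum_le _ _).trans ?_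
    calc ∑ n ∈ I, ‖h n y‖ ≤ ∑ n ∈ I, (1 : ℝ) := Finset.sum_le_sum fun n _ => (hb n).2 y
      _ = L := by simp [hI]
  have hsm : Measurable (fun y => ∑ n ∈ I, h n y) := Finset.measurable_sum _ fun n _ => (hb n).1
  have hi1 : Integrable (fun y => ‖∑ n ∈ I, h n y‖) μ :=
    Integrable.of_bound hsm.norm.aestronglyMeasurable L (ae_of_all _ fun y => by simpa using hsb y)
  have hi2 : Integrable (fun y => ‖∑ n ∈ I, h n y‖ ^ 2) μ :=
    Integrable.of_bound (hsm.norm.pow_const 2).aestronglyMeasurable (L ^ 2)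
      (ae_of_all _ fun y => by
        rw [norm_pow, norm_norm]; gcongr; exact hsb y)
  have s1 : ‖∑ n ∈ I, ∫ y, f y * h n y ∂μ‖ ^ 2 ≤ ∫ y, ‖∑ n ∈ I, h n y‖ ^ 2 ∂μ := by
    refine le_trans ?_ (sq_integral_le hi1 hi2)
    gcongr
    rw [← integral_finsetSum _ fun n _ => (hf.mul (hb n)).integrable]
    refine (norm_integral_le_integral_norm _).trans ?_
    apply integral_mono_of_nonneg (ae_of_all _ fun y => norm_nonneg _) hi1
    refine ae_of_all _ fun y => ?_
    simp only
    rw [← Finset.mul_sum, norm_mul]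
    exact mul_le_of_le_one_left (norm_nonneg _) (hf.2 y)
  have s2 : (K : ℝ) ^ 2 * ∫ y, ‖∑ n ∈ I, h n y‖ ^ 2 ∂μ ≤ (L + K * s) *
      ∑ j ∈ Finset.range K, ∑ j' ∈ Finset.range K, (C ((j' : ℤ) - j)).re := by
    have hre : ∀ p : ℤ, (C p).re = ∫ y, (∑ n ∈ I, h n y * (starRingEnd ℂ) (h (n + p * s) y)).re ∂μ := by
      intro p
      rw [hC]; simp only
      rw [← integral_finsetSum _ fun n _ => (hbb _ _).integrable]
      exact (integral_re (integrable_finsetSum _ fun n _ => (hbb _ _).integrable)).symm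
    have hir : ∀ p : ℤ, Integrable (fun y => (∑ n ∈ I, h n y * (starRingEnd ℂ) (h (n + p * s) y)).re) μ :=
      fun p => (integrable_finsetSum _ fun n _ => (hbb _ _).integrable).re
    simp_rw [hre]
    rw [← integral_const_mul]
    simp_rw [← integral_finsetSum _ fun j' _ => hir _]
    rw [← integral_finsetSum _ fun j _ => integrable_finsetSum _ fun j' _ => hir _,
      ← integral_const_mul]
    apply integral_mono (hi2.const_mul _)
      ((integrable_finsetSum _ fun j _ => integrable_finsetSum _ fun j' _ => hir _).const_mul _)
    intro y
    exact vdc_scalar (fun n => h n y) x L K s (fun n hn => by simp [h0 n hn])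
  have s3 : ∑ j ∈ Finset.range K, ∑ j' ∈ Finset.range K, (C ((j' : ℤ) - j)).re ≤
      K * (‖C 0‖ + 2 * ∑ p ∈ Finset.Ico 1 K, ‖C p‖) :=
    (Finset.sum_le_sum fun j _ => Finset.sum_le_sum fun j' _ => Complex.re_le_norm _).trans
      (sum_toeplitz_le (fun p => ‖C p‖) (fun p => norm_nonneg _) hCneg K)
  have s4 : ‖C 0‖ ≤ L := by
    refine (norm_sum_le _ _).trans ?_
    calc _ ≤ ∑ n ∈ I, (1 : ℝ) := Finset.sum_le_sum fun n _ => (hbb _ _).norm_integral_le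
      _ = L := by simp [hI]
  have hK' : (0 : ℝ) < K := by exact_mod_cast hK
  have hls : (0 : ℝ) ≤ L + K * s := by positivity
  set A := ‖∑ n ∈ I, ∫ y, f y * h n y ∂μ‖ ^ 2
  set E := ∑ p ∈ Finset.Ico 1 K, ‖C p‖
  have : (K : ℝ) ^ 2 * A ≤ (L + K * s) * (K * (L + 2 * E)) := by
    calc (K : ℝ) ^ 2 * A ≤ (K : ℝ) ^ 2 * ∫ y, ‖∑ n ∈ I, h n y‖ ^ 2 ∂μ := by gcongr
      _ ≤ _ := s2
      _ ≤ (L + K * s) * (K * (‖C 0‖ + 2 * E)) := by gcongr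
      _ ≤ _ := by gcongr
  have h5 : (K : ℝ) * (A * K) ≤ K * ((L + K * s) * (L + 2 * E)) := by linarith
  exact le_of_mul_le_mul_left h5 hK'

end

/-! ### Box averages -/

section

variable {X : Type} [MeasurableSpace X] {μ : Measure X} [IsProbabilityMeasure μ] {T : ℤ → X → X}

/-- Van der Corput followed by recentering: the function `f b` is discarded, `u` is replaced by
`u · conj (u ∘ T^{d_b(n) - d_b(n+ps)})`, and the remaining functions by their two shifted copies. -/
theorem vdc_step (hS : Sys μ T) {ι : Type} (b : ι) (Y : Finset ι) (u : X → ℂ) (hu : Bdd u)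
    (f : ι → X → ℂ) (hf : ∀ i, Bdd (f i)) (c : ℤ → ℂ) (hc : ∀ n, ‖c n‖ ≤ 1) (d : ι → ℤ → ℤ)
    (x : ℤ) (L K s : ℕ) :
    ‖∑ n ∈ Finset.Ico x (x + L), c n * ∫ y, u y * (f b (T (d b n) y) *
        ∏ i ∈ Y, f i (T (d i n) y)) ∂μ‖ ^ 2 * K ≤ (L + K * s) *
      (L + 2 * ∑ p ∈ Finset.Ico 1 K, ‖∑ n ∈ Finset.Ico x (x + L),
        (if n + p * s ∈ Finset.Ico x (x + L) then c n * (starRingEnd ℂ) (c (n + p * s)) else 0) *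
        ∫ y, (u y * (starRingEnd ℂ) (u (T (d b n - d b (n + p * s)) y))) *
          ∏ i ∈ Y, (f i (T (d i n) y) *
            (starRingEnd ℂ) (f i (T (d i (n + p * s) - d b (n + p * s) + d b n) y))) ∂μ‖) := by
  classical
  set I := Finset.Ico x (x + L) with hI
  set g : ℤ → X → ℂ := fun n y => c n * (u (T (- d b n) y) * ∏ i ∈ Y, f i (T (d i n - d b n) y))
  have hg : ∀ n, Bdd (g n) := fun n =>
    (Bdd.const (hc n)).mul ((hS.bdd hu _).mul (Bdd.prod fun i _ => hS.bdd (hf i) _))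
  set h : ℤ → X → ℂ := fun n => if n ∈ I then g n else 0 with hh
  have hb : ∀ n, Bdd (h n) := by
    intro n; by_cases hn : n ∈ I
    · simpa [hh, hn] using hg n
    · simp only [hh, hn, if_false]; exact Bdd.const (c := 0) (by simp)
  have key := vdc (μ := μ) x L K s h hb (fun n hn => by simp only [hh]; rw [if_neg hn]) (f b) (hf b)
  have e1 : ∀ n ∈ I, c n * ∫ y, u y * (f b (T (d b n) y) * ∏ i ∈ Y, f i (T (d i n) y)) ∂μ
      = ∫ y, f b y * h n y ∂μ := by
    intro n hn
    have hm : Measurable (fun y => u y * (f b (T (d b n) y) * ∏ i ∈ Y, f i (T (d i n) y))) :=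
      (hu.mul ((hS.bdd (hf b) _).mul (Bdd.prod fun i _ => hS.bdd (hf i) _))).1
    rw [← hS.integral_comp hm (- d b n), ← integral_const_mul]
    congr 1; funext y
    simp only [hh, hn, if_true, g, hS.app]
    simp only [add_neg_cancel, hS.app0, ← sub_eq_add_neg]
    ring
  rw [Finset.sum_congr rfl e1]
  refine key.trans (le_of_eq ?_)
  congr 3
  refine Finset.sum_congr rfl fun p _ => ?_
  congr 1
  refine Finset.sum_congr rfl fun n hn => ?_
  by_cases hp : n + p * s ∈ I
  swap
  · simp [hh, hp]
  simp only [hp, if_true]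
  have hm : Measurable (fun y => h n y * (starRingEnd ℂ) (h (n + p * s) y)) :=
    ((hb _).mul (hb _).cj).1
  rw [← hS.integral_comp hm (d b n), ← integral_const_mul]
  congr 1; funext y
  simp only [hh, hn, hp, if_true, g, hS.app, map_mul, map_prod, Finset.prod_mul_distrib]
  simp only [neg_add_cancel, hS.app0, sub_add_cancel, neg_add_eq_sub]
  ring

/-- The averages `B l u` over cubes with side lengths `l`; they play the role of the
uniformity (Host–Kra) seminorms of `u`. -/
def BB (μ : Measure X) (T : ℤ → X → X) : List ℕ → (X → ℂ) → ℝ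
  | [], u => ‖∫ x, u x ∂μ‖ ^ 2
  | Q :: l, u => ((Q : ℝ) ^ 2)⁻¹ * ∑ m ∈ Finset.range Q, ∑ m' ∈ Finset.range Q,
      BB μ T l (fun x => u (T m x) * (starRingEnd ℂ) (u (T m' x)))

/-- `u` has positive `s`-th uniformity: the box averages with `s` sides are bounded below for all
large side lengths. -/
def Pos (μ : Measure X) (T : ℤ → X → X) (s : ℕ) (u : X → ℂ) : Prop :=
  ∃ γ : ℝ, 0 < γ ∧ ∃ Q0 : ℕ, ∀ l : List ℕ, l.length = s → (∀ q ∈ l, Q0 ≤ q) → γ < BB μ T l u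

/-- All uniformity seminorms of `u` vanish. -/
def Null (μ : Measure X) (T : ℤ → X → X) (u : X → ℂ) : Prop := ∀ s, ¬ Pos μ T s u

theorem BB_nonneg (l : List ℕ) : ∀ u : X → ℂ, 0 ≤ BB μ T l u := by
  induction l with
  | nil => intro u; exact sq_nonneg _
  | cons Q l ih =>
    intro u
    exact mul_nonneg (by positivity) (Finset.sum_nonneg fun _ _ => Finset.sum_nonneg fun _ _ => ih _)

theorem BB_shift (hS : Sys μ T) (l : List ℕ) : ∀ u : X → ℂ, Bdd u → ∀ j : ℤ,
    BB μ T l (fun x => u (T j x)) = BB μ T l u := by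
  induction l with
  | nil => intro u hu j; simp only [BB]; rw [hS.integral_comp hu.1]
  | cons Q l ih =>
    intro u hu j
    simp only [BB]
    congr 1
    refine Finset.sum_congr rfl fun m _ => Finset.sum_congr rfl fun m' _ => ?_
    refine Eq.trans ?_ (ih _ ((hS.bdd hu m).mul (hS.bdd hu m').cj) j)
    congr 1; funext x; simp only [hS.app, cj_apply, add_comm]

theorem BB_le_one (hS : Sys μ T) (l : List ℕ) : ∀ u : X → ℂ, Bdd u → BB μ T l u ≤ 1 := by
  induction l with
  | nil => intro u hu; exact pow_le_one₀ (norm_nonneg _) hu.norm_integral_le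
  | cons Q l ih =>
    intro u hu
    simp only [BB]
    have : ∑ m ∈ Finset.range Q, ∑ m' ∈ Finset.range Q,
      BB μ T l (fun x => u (T m x) * (starRingEnd ℂ) (u (T m' x))) ≤
        ∑ m ∈ Finset.range Q, ∑ m' ∈ Finset.range Q, 1 :=
      Finset.sum_le_sum fun m _ => Finset.sum_le_sum fun m' _ =>
        ih _ ((hS.bdd hu _).mul (hS.bdd hu _).cj)
    refine (mul_le_mul_of_nonneg_left this (by positivity)).trans ?_
    simp only [Finset.sum_const, Finset.card_range, nsmul_eq_mul, mul_one]
    rw [← sq]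
    exact inv_mul_le_one

/-- Null functions have, for each number of sides, small box averages for some arbitrarily large
side lengths (which may depend on the function). -/
theorem Null_iff {u : X → ℂ} : Null μ T u ↔ ∀ (s : ℕ) (γ : ℝ), 0 < γ → ∀ Q0 : ℕ, ∃ l : List ℕ,
    l.length = s ∧ (∀ q ∈ l, Q0 ≤ q) ∧ BB μ T l u ≤ γ := by
  unfold Null Pos
  push Not
  rfl

/-- Splitting a sum according to finitely many options. -/
theorem norm_sum_le_options {κ : Type*} [DecidableEq κ] (I : Finset ℤ) (o : ℤ → κ) (O : Finset κ)
    (a : ℤ → ℂ) (ho : ∀ n ∈ I, a n ≠ 0 → o n ∈ O) (E : ℝ)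
    (h : ∀ w ∈ O, ‖∑ n ∈ I, if o n = w then a n else 0‖ ≤ E) :
    ‖∑ n ∈ I, a n‖ ≤ O.card * E := by
  have : ∑ n ∈ I, a n = ∑ w ∈ O, ∑ n ∈ I, if o n = w then a n else 0 := by
    rw [Finset.sum_comm]
    refine Finset.sum_congr rfl fun n hn => ?_
    by_cases h0 : a n = 0
    · simp [h0]
    · rw [Finset.sum_ite_eq, if_pos (ho n hn h0)]
  rw [this]
  refine (norm_sum_le _ _).trans ?_
  refine (Finset.sum_le_sum h).trans ?_
  simp

end

/-! ### Almost linear iterates -/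

section

variable {X : Type} [MeasurableSpace X] {μ : Measure X} [IsProbabilityMeasure μ] {T : ℤ → X → X}

/-- Every integer `m` with `|m| ≤ 3Q/4` is the difference of at least `Q/4` pairs from `[0, Q)`. -/
theorem card_pairs_ge (Q : ℕ) (m : ℤ) (hm : 4 * |m| ≤ 3 * Q) :
    (Q : ℝ) / 4 ≤ ∑ m1 ∈ Finset.range Q, ∑ m2 ∈ Finset.range Q,
      if (m2 : ℤ) - m1 = m then (1 : ℝ) else 0 := by
  classical
  have h1 : ∀ m1 ∈ Finset.Ico (-m).toNat (Q - m.toNat), (1 : ℝ) ≤ ∑ m2 ∈ Finset.range Q,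
      if (m2 : ℤ) - m1 = m then (1 : ℝ) else 0 := by
    intro m1 h
    rw [Finset.mem_Ico] at h
    have hx : (m1 + m).toNat ∈ Finset.range Q := by rw [Finset.mem_range]; omega
    refine le_trans ?_ (Finset.single_le_sum (f := fun m2 : ℕ =>
      if (m2 : ℤ) - m1 = m then (1 : ℝ) else 0) (fun i _ => by split_ifs <;> norm_num) hx)
    rw [if_pos (by omega)]
  have h2 : Finset.Ico (-m).toNat (Q - m.toNat) ⊆ Finset.range Q := by
    intro i hi; rw [Finset.mem_Ico] at hi; rw [Finset.mem_range]; omega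
  refine le_trans ?_ (Finset.sum_le_sum_of_subset_of_nonneg h2 fun i _ _ =>
    Finset.sum_nonneg fun j _ => by split_ifs <;> norm_num)
  refine le_trans ?_ (Finset.sum_le_sum h1)
  simp only [Finset.sum_const, Nat.card_Ico, nsmul_eq_mul, mul_one]
  have : (Q : ℤ) ≤ 4 * ((Q - m.toNat - (-m).toNat : ℕ) : ℤ) := by
    rcases abs_cases m with h | h <;> omega
  have : (Q : ℝ) ≤ 4 * ((Q - m.toNat - (-m).toNat : ℕ) : ℝ) := by exact_mod_cast this
  linarith

/-- If `BB (Q :: l) u` is small, then only few shifts `m` with `|m| ≤ 3Q/4` have large `BB l (u ·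
conj (u ∘ T^m))`. -/
theorem bad_count (hS : Sys μ T) (Q : ℕ) (hQ : 0 < Q) (l : List ℕ) (u : X → ℂ) (hu : Bdd u)
    (γ γ' : ℝ) (hγ' : 0 < γ') (hB : BB μ T (Q :: l) u ≤ γ) (Bad : Finset ℤ)
    (hbad : ∀ m ∈ Bad, 4 * |m| ≤ 3 * Q ∧
      γ' < BB μ T l (fun x => u x * (starRingEnd ℂ) (u (T m x)))) :
    (Bad.card : ℝ) ≤ 4 * γ * Q / γ' := by
  classical
  set g : ℕ → ℕ → ℝ := fun m m' => BB μ T l (fun x => u (T m x) * (starRingEnd ℂ) (u (T m' x)))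
  have hg0 : ∀ m m', 0 ≤ g m m' := fun _ _ => BB_nonneg _ _
  have hg : ∀ m m' : ℕ, g m m' = BB μ T l (fun x => u x * (starRingEnd ℂ) (u (T ((m' : ℤ) - m) x))) := by
    intro m m'
    have := BB_shift hS l (fun x => u x * (starRingEnd ℂ) (u (T ((m' : ℤ) - m) x)))
      (hu.mul (hS.bdd hu _).cj) m
    rw [← this]
    simp only [g]; congr 1; funext x; simp only [hS.app]; simp
  have e1 : ∑ m ∈ Finset.range Q, ∑ m' ∈ Finset.range Q, g m m' ≤ γ * (Q : ℝ) ^ 2 := by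
    have hB' : ((Q : ℝ) ^ 2)⁻¹ * ∑ m ∈ Finset.range Q, ∑ m' ∈ Finset.range Q, g m m' ≤ γ := hB
    rw [inv_mul_le_iff₀ (by positivity)] at hB'
    linarith
  have e2 : ∑ a ∈ Bad, ∑ m ∈ Finset.range Q, ∑ m' ∈ Finset.range Q,
      (if (m' : ℤ) - m = a then γ' else 0) ≤ ∑ m ∈ Finset.range Q, ∑ m' ∈ Finset.range Q, g m m' := by
    rw [Finset.sum_comm]
    refine Finset.sum_le_sum fun m _ => ?_
    rw [Finset.sum_comm]
    refine Finset.sum_le_sum fun m' _ => ?_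
    rw [Finset.sum_ite_eq]
    split_ifs with h
    · rw [hg]; exact (hbad _ h).2.le
    · exact hg0 _ _
  have e3 : (Bad.card : ℝ) * (Q / 4 * γ') ≤ ∑ a ∈ Bad, ∑ m ∈ Finset.range Q, ∑ m' ∈ Finset.range Q,
      (if (m' : ℤ) - m = a then γ' else 0) := by
    rw [← nsmul_eq_mul]
    apply Finset.card_nsmul_le_sum
    intro a ha
    have := mul_le_mul_of_nonneg_right (card_pairs_ge Q a (hbad a ha).1) hγ'.le
    refine this.trans (le_of_eq ?_)
    simp only [Finset.sum_mul, ite_mul, one_mul, zero_mul]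
  have e4 := e3.trans (e2.trans e1)
  have hQ' : (0 : ℝ) < Q := by exact_mod_cast hQ
  rw [le_div_iff₀ hγ']
  have : (Q : ℝ) * (Bad.card * γ') ≤ Q * (4 * γ * Q) := by nlinarith
  exact le_of_mul_le_mul_left this hQ'

theorem card_le_of_diam (A : Finset ℕ) (D : ℝ) (hD : 0 ≤ D)
    (h : ∀ a ∈ A, ∀ b ∈ A, (b : ℝ) - a ≤ D) : (A.card : ℝ) ≤ D + 1 := by
  rcases A.eq_empty_or_nonempty with rfl | hA
  · simp; linarith
  have h1 : A ⊆ Finset.Icc (A.min' hA) (A.max' hA) := fun a ha =>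
    Finset.mem_Icc.2 ⟨A.min'_le a ha, A.le_max' a ha⟩
  have h2 := Finset.card_le_card h1
  rw [Nat.card_Icc] at h2
  have h3 := h _ (A.min'_mem hA) _ (A.max'_mem hA)
  have h4 : A.min' hA ≤ A.max' hA := A.min'_le_max' hA
  have h5 : (A.card : ℝ) ≤ ((A.max' hA + 1 - A.min' hA : ℕ) : ℝ) := by exact_mod_cast h2
  rw [Nat.cast_sub (by omega)] at h5
  push_cast at h5
  linarith

theorem card_int_window (a C : ℝ) (hC : 0 ≤ C) (O : Finset ℤ) (h : ∀ m ∈ O, |(m : ℝ) - a| ≤ C) :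
    (O.card : ℝ) ≤ 2 * C + 1 := by
  rcases O.eq_empty_or_nonempty with rfl | hA
  · simp; linarith
  have h1 : O ⊆ Finset.Icc (O.min' hA) (O.max' hA) := fun a ha =>
    Finset.mem_Icc.2 ⟨O.min'_le a ha, O.le_max' a ha⟩
  have h2 := Finset.card_le_card h1
  rw [Int.card_Icc] at h2
  have h3 := abs_le.1 (h _ (O.min'_mem hA))
  have h3' := abs_le.1 (h _ (O.max'_mem hA))
  have h4 : O.min' hA ≤ O.max' hA := O.min'_le_max' hA
  have h5 : (O.card : ℤ) ≤ O.max' hA + 1 - O.min' hA := by omega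
  have h6 : (O.card : ℝ) ≤ O.max' hA + 1 - O.min' hA := by exact_mod_cast h5
  linarith

/-- Uniform smallness of averages along almost linear iterates for the target `u`: over every
interval of length `L`, the weighted sum along `r` iterates `d i`, which are linear of slope `β i`
up to an additive error `C0` and a relative error `η`, is at most `ε L`, provided that the slopes
are bounded by `Bd` and each iterate moves by at least `R` over the interval. -/
def ZConc (μ : Measure X) (T : ℤ → X → X) (u : X → ℂ) (r : ℕ) (C0 Bd ε η R : ℝ) : Prop :=
  ∀ ⦃ι : Type⦄ (S : Finset ι), S.card = r → ∀ (x : ℤ) (L : ℕ) (d : ι → ℤ → ℤ) (β : ι → ℝ),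
    (∀ i ∈ S, ∀ n ∈ Finset.Ico x (x + L), ∀ m ∈ Finset.Ico x (x + L),
      |((d i n : ℝ) - d i m) - β i * (n - m)| ≤ C0 + η * |β i| * |(n : ℝ) - m|) →
    (∀ i ∈ S, |β i| ≤ Bd) → (∀ i ∈ S, R ≤ L * |β i|) →
    ∀ c : ℤ → ℂ, (∀ n, ‖c n‖ ≤ 1) → ∀ f : ι → X → ℂ, (∀ i, Bdd (f i)) →
    ‖∑ n ∈ Finset.Ico x (x + L), c n * ∫ y, u y * ∏ i ∈ S, f i (T (d i n) y) ∂μ‖ ≤ ε * L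

theorem ZConc.mono {u : X → ℂ} {r : ℕ} {C0 Bd ε η R η' R' : ℝ} (h : ZConc μ T u r C0 Bd ε η' R')
    (hη : η ≤ η') (hR : R' ≤ R) : ZConc μ T u r C0 Bd ε η R := by
  intro ι S hS x L d β h1 h2 h3
  refine h S hS x L d β (fun i hi n hn m hm => (h1 i hi n hn m hm).trans ?_) h2
    (fun i hi => hR.trans (h3 i hi))
  gcongr

end

section

variable {X : Type} [MeasurableSpace X] {μ : Measure X} [IsProbabilityMeasure μ] {T : ℤ → X → X}

/-- The integers within distance `C` of `a`. -/
def win (a C : ℝ) : Finset ℤ := Finset.Icc ⌈a - C⌉ ⌊a + C⌋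

theorem mem_win {a C : ℝ} {m : ℤ} : m ∈ win a C ↔ |(m : ℝ) - a| ≤ C := by
  rw [win, Finset.mem_Icc, Int.ceil_le, Int.le_floor, abs_le]
  constructor
  · rintro ⟨h1, h2⟩; constructor <;> linarith
  · rintro ⟨h1, h2⟩; constructor <;> linarith

theorem card_win (a : ℝ) (C : ℕ) : (win a C).card ≤ 2 * C + 1 := by
  have := card_int_window a C (by positivity) (win a C) (fun m hm => mem_win.1 hm)
  exact_mod_cast this

/-- The sum arising from the van der Corput shift `k` is small if, for all integers `m` close to `-k
β_b`, the target `u · conj (u ∘ T^m)` satisfies the estimate with one iterate less. The differences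
of iterates are known up to bounded integer errors, and the sum is split according to the values of
these errors. -/
theorem z_good_k (hS : Sys μ T) (r C : ℕ) (C0 Bd ε' η R : ℝ) (hC : 2 * C0 + 2 ≤ C)
    (u : X → ℂ) (hu : Bdd u) {ι : Type} (b : ι) (Y : Finset ι) (hY : Y.card = r)
    (x : ℤ) (L : ℕ) (d : ι → ℤ → ℤ) (β : ι → ℝ) (k : ℕ)
    (hdb : ∀ n ∈ Finset.Ico x (x + L), ∀ m ∈ Finset.Ico x (x + L),
      |((d b n : ℝ) - d b m) - β b * (n - m)| ≤ C0 + η * |β b| * |(n : ℝ) - m|)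
    (hd : ∀ i ∈ Y, ∀ n ∈ Finset.Ico x (x + L), ∀ m ∈ Finset.Ico x (x + L),
      |((d i n : ℝ) - d i m) - β i * (n - m)| ≤ C0 + η * |β i| * |(n : ℝ) - m|)
    (hk : η * |β b| * k ≤ 1) (hkY : ∀ i ∈ Y, η * |β i| * k ≤ 1)
    (hβ : ∀ i ∈ Y, |β i| ≤ Bd) (hR : ∀ i ∈ Y, R ≤ L * |β i|)
    (hgood : ∀ m : ℤ, |(m : ℝ) + k * β b| ≤ C →
      ZConc μ T (fun y => u y * (starRingEnd ℂ) (u (T m y))) r C0 Bd ε' η R)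
    (c : ℤ → ℂ) (hc : ∀ n, ‖c n‖ ≤ 1) (f : ι → X → ℂ) (hf : ∀ i, Bdd (f i)) :
    ‖∑ n ∈ Finset.Ico x (x + L),
        (if n + k ∈ Finset.Ico x (x + L) then c n * (starRingEnd ℂ) (c (n + k)) else 0) *
        ∫ y, (u y * (starRingEnd ℂ) (u (T (d b n - d b (n + k)) y))) *
          ∏ i ∈ Y, (f i (T (d i n) y) *
            (starRingEnd ℂ) (f i (T (d i (n + k) - d b (n + k) + d b n) y))) ∂μ‖
      ≤ ((2 * C + 1) ^ (r + 1) : ℕ) * (ε' * L) ∨ ε' < 0 := by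
  classical
  by_cases hε : ε' < 0
  · exact Or.inr hε
  left
  push Not at hε
  set I := Finset.Ico x (x + L) with hI
  let O : Finset (ℤ × (∀ i ∈ Y, ℤ)) := win (-(k * β b)) C ×ˢ Y.pi (fun i => win (k * (β i - β b)) C)
  have hO : O.card ≤ (2 * C + 1) ^ (r + 1) := by
    rw [Finset.card_product, Finset.card_pi, pow_succ', ← hY, ← Finset.prod_const]
    exact Nat.mul_le_mul (card_win _ _) (Finset.prod_le_prod' fun i _ => card_win _ _)
  let o : ℤ → (ℤ × (∀ i ∈ Y, ℤ)) := fun n => (d b n - d b (n + k),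
    fun i _ => d i (n + k) - d b (n + k) + d b n - d i n)
  have hcast : ∀ n : ℤ, ((n + k : ℤ) : ℝ) - n = k := by intro n; push_cast; ring
  refine (norm_sum_le_options I o O _ ?_ (ε' * L) ?_).trans ?_
  · intro n hn hne
    have hnk : n + k ∈ I := by
      by_contra h; apply hne; rw [if_neg h]; simp
    have hb := hdb (n + k) hnk n hn
    rw [hcast, Nat.abs_cast] at hb
    have hb' := abs_le.1 (hb.trans (add_le_add_right hk C0))
    rw [Finset.mem_product, Finset.mem_pi]
    have hC0 : 0 ≤ C0 + 1 := by
      have := (abs_nonneg _).trans (hb.trans (add_le_add_right hk C0)); linarith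
    refine ⟨mem_win.2 ?_, fun i hi => mem_win.2 ?_⟩
    · simp only [o]; push_cast; rw [abs_le]; constructor <;> linarith [hb'.1, hb'.2]
    · have hi' := hd i hi (n + k) hnk n hn
      rw [hcast, Nat.abs_cast] at hi'
      have hi'' := abs_le.1 (hi'.trans (add_le_add_right (hkY i hi) C0))
      simp only [o]; push_cast; rw [abs_le]
      constructor <;> linarith [hb'.1, hb'.2, hi''.1, hi''.2]
  · rintro ⟨m, e⟩ hw
    rw [Finset.mem_product] at hw
    have hm : |(m : ℝ) + k * β b| ≤ C := by
      have := mem_win.1 hw.1; rwa [sub_neg_eq_add] at this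
    let e' : ι → ℤ := fun i => if hi : i ∈ Y then e i hi else 0
    have key := hgood m hm Y hY x L d β hd hβ hR
      (fun n => if o n = (m, e) then (if n + k ∈ I then c n * (starRingEnd ℂ) (c (n + k)) else 0)
        else 0)
      (by
        intro n; split_ifs
        · rw [norm_mul, RCLike.norm_conj]; exact mul_le_one₀ (hc _) (norm_nonneg _) (hc _)
        · simp
        · simp)
      (fun i y => f i y * (starRingEnd ℂ) (f i (T (e' i) y)))
      (fun i => (hf i).mul (hS.bdd (hf i) _).cj)
    refine le_trans (le_of_eq ?_) key
    congr 1
    refine Finset.sum_congr rfl fun n hn => ?_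
    by_cases ho : o n = (m, e)
    · rw [if_pos ho, if_pos ho]
      congr 2
      funext y
      have h1 : d b n - d b (n + k) = m := congrArg Prod.fst ho
      have h2 : ∀ i (hi : i ∈ Y), d i (n + k) - d b (n + k) + d b n - d i n = e i hi := by
        intro i hi
        exact congrFun (congrFun (congrArg Prod.snd ho) i) hi
      rw [h1]
      congr 1
      refine Finset.prod_congr rfl fun i hi => ?_
      have : T (e' i) (T (d i n) y) = T (d i (n + k) - d b (n + k) + d b n) y := by
        rw [hS.app]; congr 1
        simp only [e', hi, dif_pos]; rw [← h2 i hi]; ring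
      rw [this]
    · rw [if_neg ho, if_neg ho]; simp
  · gcongr

/-- The numerical inequality that concludes `zstep`. -/
theorem zarith (A K L Q bt Bd γ γ' ε ε' P kb bad C Sg : ℝ) (hA : 0 ≤ A) (hK : 0 < K) (hL : 0 ≤ L)
    (hQ : 0 < Q) (hbt : 0 < bt) (hbtB : bt ≤ Bd) (hγ : 0 ≤ γ) (hγ' : 0 < γ') (hε : 0 ≤ ε)
    (hε' : 0 ≤ ε') (hP : 0 ≤ P) (hkb : 0 ≤ kb) (hC : 0 ≤ C)
    (hBadc : bad ≤ 4 * γ * Q / γ') (hKbc : kb ≤ bad * (2 * C / bt + 1)) (hKge : Q / 4 ≤ K * bt)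
    (hKL : K ≤ L) (key : A ^ 2 * K ≤ (L + K) * (L + 2 * Sg))
    (hSg1 : Sg ≤ K * (P * (ε' * L)) + kb * L)
    (hfin : 2 * (4 * Bd / Q + 2 * P * ε' + 32 * γ * (2 * C + Bd) / γ') ≤ ε ^ 2) : A ≤ ε * L := by
  have hKb2 : kb ≤ K * (16 * γ * (2 * C + Bd) / γ') := by
    calc kb ≤ bad * (2 * C / bt + 1) := hKbc
      _ ≤ (4 * γ * Q / γ') * (2 * C / bt + 1) := by gcongr
      _ = (Q / 4) * (16 * γ / γ' * (2 * C / bt + 1)) := by ring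
      _ ≤ (K * bt) * (16 * γ / γ' * (2 * C / bt + 1)) := by gcongr
      _ = K * (16 * γ * (2 * C + bt) / γ') := by field_simp
      _ ≤ _ := by gcongr
  have h1K : (1 : ℝ) ≤ K * (4 * Bd / Q) := by
    have : (Q : ℝ) / 4 ≤ K * Bd := hKge.trans (by gcongr)
    rw [mul_div_assoc', le_div_iff₀ hQ]; linarith
  have hmain : A ^ 2 * K ≤ (L ^ 2 * ε ^ 2) * K := by
    calc A ^ 2 * K ≤ (L + K) * (L + 2 * Sg) := key
      _ ≤ (L + K) * (L + 2 * (K * (P * (ε' * L)) + kb * L)) := by gcongr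
      _ ≤ (L + L) * (L + 2 * (K * (P * (ε' * L)) + kb * L)) := by gcongr
      _ = 2 * L ^ 2 * (1 + K * (2 * P * ε') + 2 * kb) := by ring
      _ ≤ 2 * L ^ 2 * (K * (4 * Bd / Q) + K * (2 * P * ε') +
          2 * (K * (16 * γ * (2 * C + Bd) / γ'))) := by gcongr
      _ = L ^ 2 * (2 * (4 * Bd / Q + 2 * P * ε' + 32 * γ * (2 * C + Bd) / γ')) * K := by ring
      _ ≤ (L ^ 2 * ε ^ 2) * K := by gcongr
  have hm2 := le_of_mul_le_mul_right hmain hK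
  have : A ^ 2 ≤ (ε * L) ^ 2 := by rw [mul_pow]; linarith
  exact (pow_le_pow_iff_left₀ hA (by positivity) (by norm_num)).1 this

set_option maxHeartbeats 1000000 in
/-- One van der Corput step, from `r + 1` to `r` iterates. The iterate `b` with the largest slope is
discarded; the number of shifts is about `Q / (2|β_b|)`, so that `-k β_b` runs through a range of
size `Q/2`, to which `bad_count` applies. -/
theorem zstep (hS : Sys μ T) (r C Q : ℕ) (C0 Bd ε ε' η R γ γ' : ℝ) (hC : 2 * C0 + 2 ≤ C)
    (hε : 0 ≤ ε) (hε' : 0 ≤ ε') (hγ' : 0 < γ') (hη0 : 0 ≤ η) (hQ : 0 < Q) (hηQ : η * Q ≤ 1)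
    (hRQ : Q ≤ R)
    (hQB : 2 * Bd ≤ Q) (hQC : 4 * C ≤ Q) (hBd : 0 ≤ Bd) (hγ : 0 ≤ γ) (l : List ℕ)
    (u : X → ℂ) (hu : Bdd u) (hB : BB μ T (Q :: l) u ≤ γ)
    (hIH : ∀ m : ℤ, |m| ≤ Q → BB μ T l (fun y => u y * (starRingEnd ℂ) (u (T m y))) ≤ γ' →
      ZConc μ T (fun y => u y * (starRingEnd ℂ) (u (T m y))) r C0 Bd ε' η R)
    (hfin : 2 * (4 * Bd / Q + 2 * ((2 * C + 1) ^ (r + 1) : ℕ) * ε' + 32 * γ * (2 * C + Bd) / γ')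
      ≤ ε ^ 2) :
    ZConc μ T u (r + 1) C0 Bd ε η R := by
  classical
  intro ι S hcard x L d β hd hβ hR c hc f hf
  have hSne : S.Nonempty := by rw [← Finset.card_pos]; omega
  obtain ⟨b, hbS, hbmax⟩ := S.exists_max_image (fun i => |β i|) hSne
  set Y := S.erase b with hYdef
  have hY : Y.card = r := by rw [hYdef, Finset.card_erase_of_mem hbS]; omega
  have hYS : ∀ i ∈ Y, i ∈ S := fun i hi => Finset.mem_of_mem_erase hi
  have hprod : ∀ (n : ℤ) (y : X), ∏ i ∈ S, f i (T (d i n) y) =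
      f b (T (d b n) y) * ∏ i ∈ Y, f i (T (d i n) y) :=
    fun n y => (Finset.mul_prod_erase S (fun i => f i (T (d i n) y)) hbS).symm
  simp_rw [hprod]
  set bt := |β b| with hbt
  have hQ' : (0 : ℝ) < Q := by exact_mod_cast hQ
  have hRb : (Q : ℝ) ≤ L * bt := hRQ.trans (hR b hbS)
  have hbtpos : 0 < bt := by
    rcases (abs_nonneg (β b)).lt_or_eq with h | h
    · exact h
    · rw [hbt, ← h] at hRb; linarith
  have hbtB : bt ≤ Bd := hβ b hbS
  set K := ⌊(Q : ℝ) / (2 * bt)⌋₊ with hK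
  have hKle : (K : ℝ) ≤ Q / (2 * bt) := Nat.floor_le (by positivity)
  have hKbt : (K : ℝ) * bt ≤ Q / 2 := by
    have := mul_le_mul_of_nonneg_right hKle hbtpos.le
    refine this.trans (le_of_eq ?_); field_simp
  have h1le : 1 ≤ (Q : ℝ) / (2 * bt) := by rw [le_div_iff₀ (by positivity)]; linarith
  have hK1 : 1 ≤ K := Nat.le_floor (by simpa using h1le)
  have hKge : (Q : ℝ) / 4 ≤ K * bt := by
    have h2 : (Q : ℝ) / (2 * bt) ≤ 2 * K := by
      have := Nat.lt_floor_add_one ((Q : ℝ) / (2 * bt))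
      have h3 : (1 : ℝ) ≤ K := by exact_mod_cast hK1
      rw [← hK] at this; linarith
    rw [div_le_iff₀ (by positivity)] at h2
    linarith
  have hKL : (K : ℝ) ≤ L := by
    refine hKle.trans ?_
    rw [div_le_iff₀ (by positivity)]
    nlinarith
  have key := vdc_step hS b Y u hu f hf c hc d x L K 1
  set A := ‖∑ n ∈ Finset.Ico x (x + L), c n * ∫ y, u y * (f b (T (d b n) y) *
        ∏ i ∈ Y, f i (T (d i n) y)) ∂μ‖ with hA
  simp only [Nat.cast_one, mul_one] at key
  set P : ℕ := (2 * C + 1) ^ (r + 1) with hP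
  set isBad : ℤ → Prop := fun m => γ' < BB μ T l (fun y => u y * (starRingEnd ℂ) (u (T m y)))
  set Bad : Finset ℤ := (Finset.Icc (-(Q : ℤ)) Q).filter (fun m => 4 * |m| ≤ 3 * Q ∧ isBad m) with hBad
  have hBadc : (Bad.card : ℝ) ≤ 4 * γ * Q / γ' :=
    bad_count hS Q hQ l u hu γ γ' hγ' hB Bad (fun m hm => (Finset.mem_filter.1 hm).2)
  have hnear : ∀ k ∈ Finset.Ico 1 K, ∀ m : ℤ, |(m : ℝ) + k * β b| ≤ C → 4 * |m| ≤ 3 * Q := by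
    intro k hk m hm
    have hkK : (k : ℝ) ≤ K := by exact_mod_cast (Finset.mem_Ico.1 hk).2.le
    have h1 : |(k : ℝ) * β b| ≤ Q / 2 := by
      rw [abs_mul, Nat.abs_cast]
      exact (mul_le_mul_of_nonneg_right hkK hbtpos.le).trans hKbt
    have h2 : |(m : ℝ)| ≤ C + Q / 2 := by
      have : (m : ℝ) = (m + k * β b) - k * β b := by ring
      rw [this]; exact (abs_sub _ _).trans (add_le_add hm h1)
    have h3 : 4 * |(m : ℝ)| ≤ 3 * Q := by
      have : (4 : ℝ) * C ≤ Q := by exact_mod_cast hQC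
      linarith
    exact_mod_cast h3
  set Kb : Finset ℕ := Bad.biUnion (fun m => (Finset.Ico 1 K).filter
    (fun k : ℕ => |(m : ℝ) + k * β b| ≤ C)) with hKb
  have hKbc : (Kb.card : ℝ) ≤ Bad.card * (2 * C / bt + 1) := by
    have h1 : (Kb.card : ℝ) ≤ ∑ m ∈ Bad, (((Finset.Ico 1 K).filter
      (fun k : ℕ => |(m : ℝ) + k * β b| ≤ C)).card : ℝ) := by exact_mod_cast Finset.card_biUnion_le
    refine h1.trans ?_
    rw [← nsmul_eq_mul]
    apply Finset.sum_le_card_nsmul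
    intro m _
    apply card_le_of_diam _ _ (by positivity)
    intro k hk k' hk'
    have h1 := (Finset.mem_filter.1 hk).2
    have h2 := (Finset.mem_filter.1 hk').2
    rw [le_div_iff₀ hbtpos]
    calc ((k' : ℝ) - k) * bt ≤ |(k' : ℝ) - k| * bt := by gcongr; exact le_abs_self _
      _ = |((m : ℝ) + k' * β b) - (m + k * β b)| := by rw [hbt, ← abs_mul]; congr 1; ring
      _ ≤ 2 * C := by refine (abs_sub _ _).trans ?_; linarith
  have hterm : ∀ k ∈ Finset.Ico 1 K, ‖∑ n ∈ Finset.Ico x (x + L),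
        (if n + k ∈ Finset.Ico x (x + L) then c n * (starRingEnd ℂ) (c (n + k)) else 0) *
        ∫ y, (u y * (starRingEnd ℂ) (u (T (d b n - d b (n + k)) y))) *
          ∏ i ∈ Y, (f i (T (d i n) y) *
            (starRingEnd ℂ) (f i (T (d i (n + k) - d b (n + k) + d b n) y))) ∂μ‖
        ≤ P * (ε' * L) + if k ∈ Kb then (L : ℝ) else 0 := by
    intro k hk
    by_cases hkb : k ∈ Kb
    · rw [if_pos hkb]
      have : (0 : ℝ) ≤ P * (ε' * L) := by positivity
      refine le_trans ?_ (le_add_of_nonneg_left this)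
      refine (norm_sum_le _ _).trans ?_
      refine (Finset.sum_le_sum (g := fun _ => (1 : ℝ)) fun n _ => ?_).trans (by simp)
      rw [norm_mul]
      refine mul_le_one₀ ?_ (norm_nonneg _) (Bdd.norm_integral_le
        ((hu.mul (hS.bdd hu _).cj).mul
          (Bdd.prod fun i _ => (hS.bdd (hf i) _).mul (hS.bdd (hf i) _).cj)))
      split_ifs
      · rw [norm_mul, RCLike.norm_conj]; exact mul_le_one₀ (hc _) (norm_nonneg _) (hc _)
      · simp
    · rw [if_neg hkb, add_zero]
      have hkK : (k : ℝ) ≤ K := by exact_mod_cast (Finset.mem_Ico.1 hk).2.le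
      have hkbt : η * bt * k ≤ 1 := by
        have : (k : ℝ) * bt ≤ Q / 2 := (mul_le_mul_of_nonneg_right hkK hbtpos.le).trans hKbt
        calc η * bt * k = η * (k * bt) := by ring
          _ ≤ η * (Q / 2) := by gcongr
          _ ≤ 1 := by linarith
      have := z_good_k hS r C C0 Bd ε' η R hC u hu b Y hY x L d β k (hd b hbS)
        (fun i hi => hd i (hYS i hi)) hkbt
        (fun i hi => by
          refine le_trans ?_ hkbt
          have := hbmax i (hYS i hi)
          gcongr) (fun i hi => hβ i (hYS i hi)) (fun i hi => hR i (hYS i hi))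
        (fun m hm => by
          have hmQ := hnear k hk m hm
          apply hIH m (by linarith [abs_nonneg m])
          by_contra hbad
          push Not at hbad
          apply hkb
          rw [hKb, Finset.mem_biUnion]
          refine ⟨m, ?_, Finset.mem_filter.2 ⟨hk, hm⟩⟩
          rw [hBad, Finset.mem_filter, Finset.mem_Icc]
          refine ⟨?_, hmQ, hbad⟩
          have h4 : |m| ≤ Q := by linarith [abs_nonneg m]
          exact abs_le.1 h4)
        c hc f hf
      exact this.resolve_right (not_lt.2 hε')
  have hsum := Finset.sum_le_sum hterm
  rw [Finset.sum_add_distrib, Finset.sum_const, Nat.card_Ico, nsmul_eq_mul] at hsum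
  have hKbsum : ∑ k ∈ Finset.Ico 1 K, (if k ∈ Kb then (L : ℝ) else 0) ≤ Kb.card * L := by
    rw [← Finset.sum_filter, Finset.sum_const, nsmul_eq_mul]
    gcongr
    intro k hk; exact (Finset.mem_filter.1 hk).2
  have hL0 : (0 : ℝ) ≤ L := by positivity
  have hKcast : ((K - 1 : ℕ) : ℝ) ≤ K := by exact_mod_cast Nat.sub_le K 1
  set Sg := ∑ k ∈ Finset.Ico 1 K, ‖∑ n ∈ Finset.Ico x (x + L),
        (if n + k ∈ Finset.Ico x (x + L) then c n * (starRingEnd ℂ) (c (n + k)) else 0) *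
        ∫ y, (u y * (starRingEnd ℂ) (u (T (d b n - d b (n + k)) y))) *
          ∏ i ∈ Y, (f i (T (d i n) y) *
            (starRingEnd ℂ) (f i (T (d i (n + k) - d b (n + k) + d b n) y))) ∂μ‖ with hSg
  have hSg1 : Sg ≤ K * (P * (ε' * L)) + Kb.card * L := by
    refine hsum.trans (add_le_add ?_ hKbsum); gcongr
  have hKpos : (0 : ℝ) < K := by exact_mod_cast hK1
  exact zarith A K L Q bt Bd γ γ' ε ε' P Kb.card Bad.card C Sg (norm_nonneg _) hKpos hL0 hQ' hbtpos hbtB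
    hγ hγ' hε hε' (by positivity) (by positivity) (by positivity) hBadc hKbc hKge hKL key hSg1 hfin

/-- If some box average of `u` with `r` large sides is small enough, then the averages of `u` along
`r` almost linear iterates are small. The threshold `γ` depends on `C0`, `Bd`, `ε` only, while `η`
and `R` may depend on `u` and on the side lengths. -/
theorem lemmaZ (hS : Sys μ T) (r : ℕ) : ∀ C0 Bd ε : ℝ, 0 < ε → 0 ≤ C0 → 0 ≤ Bd →
    ∃ γ > 0, ∃ Q0 : ℕ, ∀ u : X → ℂ, Bdd u → ∀ l : List ℕ, l.length = r → (∀ q ∈ l, Q0 ≤ q) →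
      BB μ T l u ≤ γ → ∃ η > 0, ∃ R : ℝ, ZConc μ T u r C0 Bd ε η R := by
  induction r with
  | zero =>
    intro C0 Bd ε hε _ _
    refine ⟨ε ^ 2, by positivity, 0, fun u hu l hl _ hB => ⟨1, one_pos, 0, ?_⟩⟩
    intro ι S hcard x L d β _ _ _ c hc f hf
    rw [List.length_eq_zero_iff.1 hl] at hB
    have hB' : ‖∫ x, u x ∂μ‖ ≤ ε := by
      have : ‖∫ x, u x ∂μ‖ ^ 2 ≤ ε ^ 2 := hB
      exact (pow_le_pow_iff_left₀ (norm_nonneg _) hε.le (by norm_num)).1 this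
    rw [Finset.card_eq_zero.1 hcard]
    simp only [Finset.prod_empty, mul_one]
    refine (norm_sum_le _ _).trans ?_
    refine (Finset.sum_le_sum (g := fun _ => ε) fun n _ => ?_).trans (by simp [mul_comm])
    rw [norm_mul]
    exact (mul_le_of_le_one_left (norm_nonneg _) (hc n)).trans hB'
  | succ r ih =>
    intro C0 Bd ε hε hC0 hBd
    set C := ⌈2 * C0 + 2⌉₊ with hC
    have hC' : 2 * C0 + 2 ≤ C := Nat.le_ceil _
    set P : ℕ := (2 * C + 1) ^ (r + 1) with hP
    have hPpos : (0 : ℝ) < P := by rw [hP]; positivity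
    set ε' : ℝ := ε ^ 2 / (12 * P) with hε'
    have hε'0 : 0 < ε' := by positivity
    obtain ⟨γ', hγ', Q0', hQ0'⟩ := ih C0 Bd ε' hε'0 hC0 hBd
    set γ : ℝ := ε ^ 2 * γ' / (192 * (2 * C + Bd + 1)) with hγ
    have hγ0 : 0 < γ := by positivity
    obtain ⟨Q1, hQ1⟩ := exists_nat_ge (2 * Bd + 24 * Bd / ε ^ 2 + 1)
    refine ⟨γ, hγ0, max Q0' (max Q1 (4 * C)), fun u hu l hl hlQ hB => ?_⟩
    obtain ⟨Q, l', rfl⟩ : ∃ Q l', l = Q :: l' := by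
      cases l with
      | nil => simp at hl
      | cons a l => exact ⟨a, l, rfl⟩
    have hl' : l'.length = r := by simpa using hl
    have hQge := hlQ Q (by simp)
    have hQQ1 : (Q1 : ℝ) ≤ Q := by exact_mod_cast (le_trans (by simp) hQge)
    have hQC : 4 * C ≤ Q := le_trans (by simp) hQge
    have h24 : 0 ≤ 24 * Bd / ε ^ 2 := by positivity
    have hQ1' : (1 : ℝ) ≤ Q := by linarith
    have hQ0 : (0 : ℝ) < Q := by linarith
    have hch : ∀ m : ℤ, ∃ η > 0, ∃ R : ℝ,
        BB μ T l' (fun y => u y * (starRingEnd ℂ) (u (T m y))) ≤ γ' →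
        ZConc μ T (fun y => u y * (starRingEnd ℂ) (u (T m y))) r C0 Bd ε' η R := by
      intro m
      by_cases h : BB μ T l' (fun y => u y * (starRingEnd ℂ) (u (T m y))) ≤ γ'
      · obtain ⟨η, hη, R, hR⟩ := hQ0' _ (hu.mul (hS.bdd hu m).cj) l' hl'
          (fun q hq => le_trans (by simp) (hlQ q (by simp [hq]))) h
        exact ⟨η, hη, R, fun _ => hR⟩
      · exact ⟨1, one_pos, 0, fun h' => absurd h' h⟩
    choose ηf hηf Rf hZ using hch
    set I := Finset.Icc (-(Q : ℤ)) Q with hI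
    have hIne : I.Nonempty := ⟨0, by simp [hI]⟩
    set η := min (1 / (Q : ℝ)) (I.inf' hIne ηf) with hη
    set R := max (Q : ℝ) (I.sup' hIne Rf) with hR
    have hη0 : 0 < η := by
      rw [hη, lt_min_iff]; refine ⟨by positivity, ?_⟩
      rw [Finset.lt_inf'_iff]; exact fun m _ => hηf m
    refine ⟨η, hη0, R, zstep hS r C Q C0 Bd ε ε' η R γ γ' hC' hε.le hε'0.le hγ' hη0.le
      (by exact_mod_cast hQ0) ?_ (le_max_left _ _) (by linarith) hQC hBd hγ0.le l' u hu hB ?_ ?_⟩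
    · calc η * Q ≤ (1 / Q) * Q := by gcongr; exact min_le_left _ _
        _ = 1 := by field_simp
    · intro m hm hBm
      have hmI : m ∈ I := by rw [hI, Finset.mem_Icc]; exact abs_le.1 hm
      exact (hZ m hBm).mono ((min_le_right _ _).trans (Finset.inf'_le _ hmI))
        (le_trans (Finset.le_sup' _ hmI) (le_max_right _ _))
    · have h1 : 4 * Bd / Q ≤ ε ^ 2 / 6 := by
        rw [div_le_div_iff₀ hQ0 (by norm_num)]
        have : 24 * Bd / ε ^ 2 ≤ Q := by linarith
        rw [div_le_iff₀ (by positivity)] at this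
        linarith
      have h2 : 2 * (P : ℝ) * ε' = ε ^ 2 / 6 := by rw [hε']; field_simp; norm_num
      have h3 : 32 * γ * (2 * C + Bd) / γ' ≤ ε ^ 2 / 6 := by
        have : 32 * γ * (2 * C + Bd) / γ' = ε ^ 2 / 6 * ((2 * C + Bd) / (2 * C + Bd + 1)) := by
          rw [hγ]; field_simp; ring
        rw [this]
        apply mul_le_of_le_one_right (by positivity)
        rw [div_le_one (by positivity)]; linarith
      rw [← hP]
      rw [h2]; linarith

end

/-! ### Calculus in a Hardy field -/

section

open Asymptotics

namespace HardyField
variable {H : HardyField} {f g : ℝ → ℝ}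

theorem sub_mem (hf : f ∈ H.carrier) (hg : g ∈ H.carrier) : f - g ∈ H.carrier := by
  rw [sub_eq_add_neg]; exact H.add_mem hf (H.neg_mem hg)

theorem smul_mem (c : ℝ) (hf : f ∈ H.carrier) : (fun t => c * f t) ∈ H.carrier :=
  H.mul_mem (H.const_mem c) hf

theorem rpow_mem (H : HardyField) (c : ℝ) : (fun t : ℝ => t ^ c) ∈ H.carrier := by
  refine H.mem_congr (H.exp_comp_mem (H.smul_mem c (H.log_comp_mem H.id_mem tendsto_id))) ?_
  filter_upwards [eventually_gt_atTop 0] with t ht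
  rw [Real.rpow_def_of_pos ht, mul_comm]

theorem shift_mem (p : ℝ) (hf : f ∈ H.carrier) : (fun t => f (t + p)) ∈ H.carrier :=
  H.comp_mem hf (H.add_mem H.id_mem (H.const_mem p)) (tendsto_atTop_add_const_right _ p tendsto_id)

theorem ev_differentiable (hf : f ∈ H.carrier) : ∀ᶠ t in atTop, DifferentiableAt ℝ f t := by
  obtain ⟨a, ha⟩ := H.smooth f hf
  filter_upwards [eventually_gt_atTop a] with t ht
  exact (ha.differentiableOn (by simp)).differentiableAt (Ioi_mem_nhds ht)

theorem ev_hasDerivAt (hf : f ∈ H.carrier) : ∀ᶠ t in atTop, HasDerivAt f (deriv f t) t :=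
  (H.ev_differentiable hf).mono fun _ h => h.hasDerivAt

/-- Elements of a Hardy field have eventually constant sign. -/
theorem trichotomy (hf : f ∈ H.carrier) :
    (∀ᶠ t in atTop, f t = 0) ∨ (∀ᶠ t in atTop, 0 < f t) ∨ (∀ᶠ t in atTop, f t < 0) := by
  by_cases h0 : f =ᶠ[atTop] (0 : ℝ → ℝ)
  · exact Or.inl h0
  right
  obtain ⟨g, -, hfg⟩ := H.inv_mem hf h0
  obtain ⟨a, ha⟩ := eventually_atTop.1 (hfg.and (H.ev_differentiable hf))
  have hne : ∀ t, a ≤ t → f t ≠ 0 := by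
    intro t ht h
    have := (ha t ht).1
    simp [h] at this
  have hcont : ContinuousOn f (Set.Ici a) := fun t ht =>
    (ha t ht).2.continuousAt.continuousWithinAt
  rcases lt_or_gt_of_ne (hne a le_rfl) with hlt | hgt
  · right
    filter_upwards [eventually_ge_atTop a] with t ht
    by_contra hc
    have hc' : 0 ≤ f t := not_lt.1 hc
    obtain ⟨s, hs, hs0⟩ := intermediate_value_Icc ht (hcont.mono Set.Icc_subset_Ici_self)
      (show (0 : ℝ) ∈ Set.Icc (f a) (f t) from ⟨hlt.le, hc'⟩)
    exact hne s hs.1 hs0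
  · left
    filter_upwards [eventually_ge_atTop a] with t ht
    by_contra hc
    have hc' : f t ≤ 0 := not_lt.1 hc
    obtain ⟨s, hs, hs0⟩ := intermediate_value_Icc' ht (hcont.mono Set.Icc_subset_Ici_self)
      (show (0 : ℝ) ∈ Set.Icc (f t) (f a) from ⟨hc', hgt.le⟩)
    exact hne s hs.1 hs0

theorem le_or_ge (hf : f ∈ H.carrier) (hg : g ∈ H.carrier) :
    (∀ᶠ t in atTop, f t ≤ g t) ∨ (∀ᶠ t in atTop, g t ≤ f t) := by
  rcases H.trichotomy (H.sub_mem hf hg) with h | h | h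
  · left; filter_upwards [h] with t ht; simp only [Pi.sub_apply] at ht; linarith
  · right; filter_upwards [h] with t ht; simp only [Pi.sub_apply] at ht; linarith
  · left; filter_upwards [h] with t ht; simp only [Pi.sub_apply] at ht; linarith

theorem abs_le_abs_of_mul_self {a b : ℝ} (h : a * a ≤ b * b) : |a| ≤ |b| := by
  apply sq_le_sq.1; nlinarith

theorem abs_le_or_ge (hf : f ∈ H.carrier) (hg : g ∈ H.carrier) :
    (∀ᶠ t in atTop, |f t| ≤ |g t|) ∨ (∀ᶠ t in atTop, |g t| ≤ |f t|) := by
  rcases H.le_or_ge (H.mul_mem hf hf) (H.mul_mem hg hg) with h | h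
  · left; filter_upwards [h] with t ht; exact abs_le_abs_of_mul_self ht
  · right; filter_upwards [h] with t ht; exact abs_le_abs_of_mul_self ht

/-- An element of a Hardy field is either bounded or tends to infinity in absolute value. -/
theorem bounded_or_tendsto (hf : f ∈ H.carrier) :
    (∃ C > 0, ∀ᶠ t in atTop, |f t| ≤ C) ∨ Tendsto (fun t => |f t|) atTop atTop := by
  by_cases h : ∃ C > 0, ∀ᶠ t in atTop, |f t| ≤ C
  · exact Or.inl h
  right
  push Not at h
  rw [tendsto_atTop]
  intro C
  rcases H.abs_le_or_ge hf (H.const_mem (max C 1)) with h1 | h1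
  · refine absurd ?_ (h (max C 1) (lt_max_of_lt_right one_pos))
    simp only [not_frequently, not_lt]
    filter_upwards [h1] with t ht
    rwa [abs_of_pos (a := max C 1) (lt_max_of_lt_right one_pos)] at ht
  · filter_upwards [h1] with t ht
    exact (le_max_left _ _).trans ((le_abs_self _).trans ht)

/-- If the derivative of `f` is eventually at most that of `h`, then `f ≤ h + C` eventually. -/
theorem abs_le_of_deriv_le {f h h' : ℝ → ℝ} (hf : ∀ᶠ t in atTop, DifferentiableAt ℝ f t)
    (hh : ∀ᶠ t in atTop, HasDerivAt h (h' t) t) (hle : ∀ᶠ t in atTop, deriv f t ≤ h' t) :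
    ∃ C, ∀ᶠ t in atTop, f t ≤ h t + C := by
  obtain ⟨a, ha⟩ := eventually_atTop.1 (hf.and (hh.and hle))
  have hmono : MonotoneOn (fun t => h t - f t) (Set.Ici a) := by
    apply monotoneOn_of_deriv_nonneg (convex_Ici a)
    · exact fun t ht => ((ha t ht).2.1.continuousAt.sub (ha t ht).1.continuousAt).continuousWithinAt
    · intro t ht
      rw [interior_Ici] at ht
      exact ((ha t (le_of_lt ht)).2.1.differentiableAt.sub (ha t (le_of_lt ht)).1).differentiableWithinAt
    · intro t ht
      rw [interior_Ici] at ht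
      have := ha t (le_of_lt ht)
      rw [(this.2.1.fun_sub this.1.hasDerivAt).deriv]
      linarith [this.2.2]
  refine ⟨f a - h a, ?_⟩
  filter_upwards [eventually_ge_atTop a] with t ht
  have := hmono (Set.mem_Ici.2 le_rfl) ht ht
  simp only at this
  linarith

/-- `f = O(t^c)`. -/
def OO (f : ℝ → ℝ) (c : ℝ) : Prop := ∃ C > 0, ∀ᶠ t in atTop, |f t| ≤ C * t ^ c

theorem OO.mono {c d : ℝ} (h : OO f c) (hcd : c ≤ d) : OO f d := by
  obtain ⟨C, hC, h⟩ := h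
  refine ⟨C, hC, ?_⟩
  filter_upwards [h, eventually_ge_atTop 1] with t ht h1
  exact ht.trans (by gcongr)

theorem OO.add {c : ℝ} (hf : OO f c) (hg : OO g c) : OO (f + g) c := by
  obtain ⟨C, hC, hf⟩ := hf
  obtain ⟨D, hD, hg⟩ := hg
  refine ⟨C + D, by positivity, ?_⟩
  filter_upwards [hf, hg] with t h1 h2
  rw [add_mul]; exact (abs_add_le _ _).trans (add_le_add h1 h2)

theorem OO.neg {c : ℝ} (hf : OO f c) : OO (-f) c := by
  obtain ⟨C, hC, hf⟩ := hf
  exact ⟨C, hC, by simpa using hf⟩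

theorem OO.sub {c : ℝ} (hf : OO f c) (hg : OO g c) : OO (f - g) c := by
  rw [sub_eq_add_neg]; exact hf.add hg.neg

theorem OO.zero (c : ℝ) : OO 0 c := by
  refine ⟨1, one_pos, ?_⟩
  filter_upwards [eventually_gt_atTop 0] with t ht
  simp only [Pi.zero_apply, abs_zero]; positivity

theorem OO.const_mul {c : ℝ} (a : ℝ) (hf : OO f c) : OO (fun t => a * f t) c := by
  obtain ⟨C, hC, hf⟩ := hf
  refine ⟨(|a| + 1) * C, by positivity, ?_⟩
  filter_upwards [hf, eventually_gt_atTop 0] with t h1 h0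
  rw [abs_mul, mul_assoc]
  have : 0 ≤ C * t ^ c := by positivity
  nlinarith [abs_nonneg a, mul_le_mul_of_nonneg_left h1 (abs_nonneg a)]

theorem OO.of_not {c : ℝ} (hf : f ∈ H.carrier) (h : ¬ OO f c) :
    Tendsto (fun t => t ^ (-c) * |f t|) atTop atTop := by
  rcases H.bounded_or_tendsto (H.mul_mem (H.rpow_mem (-c)) hf) with ⟨C, hC, h1⟩ | h1
  · refine absurd ⟨C, hC, ?_⟩ h
    filter_upwards [h1, eventually_gt_atTop 0] with t ht h0
    simp only [Pi.mul_apply] at ht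
    rw [abs_mul, abs_of_pos (by positivity), Real.rpow_neg h0.le, inv_mul_le_iff₀ (by positivity)] at ht
    linarith
  · refine h1.congr' ?_
    filter_upwards [eventually_gt_atTop 0] with t h0
    simp only [Pi.mul_apply]
    rw [abs_mul, abs_of_pos (by positivity)]

/-- Bounded germs have derivative `O(1/t)`: otherwise the germ grows at least like `log`. -/
theorem deriv_OO_zero (hf : f ∈ H.carrier) (h : ∃ C > 0, ∀ᶠ t in atTop, |f t| ≤ C) :
    OO (deriv f) (-1) := by
  by_contra hn
  obtain ⟨C, hC, hb⟩ := h
  have key : ∀ g : ℝ → ℝ, (∀ᶠ t in atTop, DifferentiableAt ℝ g t) → (∀ᶠ t in atTop, |g t| ≤ C) →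
      (∀ᶠ t in atTop, deriv g t ≤ -t⁻¹) → False := by
    intro g hg hgb hgd
    obtain ⟨D, hD⟩ := abs_le_of_deriv_le hg (h := fun t => -Real.log t) (h' := fun t => -t⁻¹)
      (by
        filter_upwards [eventually_gt_atTop 0] with t ht
        exact (Real.hasDerivAt_log ht.ne').neg) hgd
    obtain ⟨t, h1, h2, h3⟩ := (hD.and (hgb.and (Real.tendsto_log_atTop.eventually_gt_atTop (D + C)))).exists
    have := (abs_le.1 h2).1
    linarith
  have h1 := (OO.of_not (H.deriv_mem hf) hn).eventually_ge_atTop 1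
  simp only [neg_neg, Real.rpow_one] at h1
  rcases H.trichotomy (H.deriv_mem hf) with h2 | h2 | h2
  · obtain ⟨t, h3, h4⟩ := (h1.and h2).exists
    rw [h4] at h3; norm_num at h3
  · refine key (fun t => -f t) ((H.ev_differentiable hf).mono fun t ht => ht.neg) (by simpa using hb) ?_
    filter_upwards [h1, h2, eventually_gt_atTop 0] with t a1 a2 a3
    rw [deriv.fun_neg, neg_le_neg_iff, inv_le_iff_one_le_mul₀ a3]
    rwa [abs_of_pos a2, mul_comm] at a1
  · refine key f (H.ev_differentiable hf) hb ?_
    filter_upwards [h1, h2, eventually_gt_atTop 0] with t a1 a2 a3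
    rw [le_neg, inv_le_iff_one_le_mul₀ a3]
    rw [abs_of_neg a2] at a1; linarith

theorem deriv_OO {c : ℝ} (hf : f ∈ H.carrier) (h : OO f c) : OO (deriv f) (c - 1) := by
  obtain ⟨C, hC, h⟩ := h
  set g : ℝ → ℝ := (fun t : ℝ => t ^ (-c)) * f with hg
  have hgm : g ∈ H.carrier := H.mul_mem (H.rpow_mem _) hf
  have hgb : ∀ᶠ t in atTop, |g t| ≤ C := by
    filter_upwards [h, eventually_gt_atTop 0] with t ht h0
    simp only [hg, Pi.mul_apply]
    rw [abs_mul, abs_of_pos (by positivity), Real.rpow_neg h0.le, inv_mul_le_iff₀ (by positivity)]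
    linarith
  obtain ⟨D, hD, hd⟩ := deriv_OO_zero hgm ⟨C, hC, hgb⟩
  refine ⟨D + |c| * C, by positivity, ?_⟩
  filter_upwards [hd, h, eventually_gt_atTop 0, H.ev_hasDerivAt hf] with t h1 h2 h0 h3
  have h4 : HasDerivAt g (-c * t ^ (-c - 1) * f t + t ^ (-c) * deriv f t) t := by
    have := (Real.hasDerivAt_rpow_const (p := -c) (Or.inl h0.ne')).mul h3
    simpa using this
  rw [h4.deriv, Real.rpow_neg_one] at h1
  have e1 : t ^ (-c - 1) = t ^ (-c) * t⁻¹ := by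
    rw [Real.rpow_sub h0, Real.rpow_one]; rfl
  have e2 : t ^ (c - 1) = t ^ c * t⁻¹ := by
    rw [Real.rpow_sub h0, Real.rpow_one]; rfl
  have e3 : t ^ (-c) * t ^ c = 1 := by rw [← Real.rpow_add h0]; simp
  have hp : 0 < t ^ c := by positivity
  have hti : 0 < t⁻¹ := by positivity
  have e4 : deriv f t = t ^ c * (-c * t ^ (-c - 1) * f t + t ^ (-c) * deriv f t) + c * t⁻¹ * f t := by
    rw [e1]; linear_combination (deriv f t - c * t⁻¹ * f t) * (- e3)
  rw [e4]
  refine (abs_add_le _ _).trans ?_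
  rw [abs_mul, abs_mul, abs_mul c, abs_of_pos hp, abs_of_pos hti, e2]
  have a1 := mul_le_mul_of_nonneg_left h1 hp.le
  have a2 := mul_le_mul_of_nonneg_left h2 (mul_nonneg (abs_nonneg c) hti.le)
  nlinarith

theorem OO_of_deriv {c : ℝ} (hc : 0 < c) (hf : f ∈ H.carrier) (h : OO (deriv f) (c - 1)) :
    OO f c := by
  obtain ⟨C, hC, h⟩ := h
  have hh : ∀ᶠ t : ℝ in atTop, HasDerivAt (fun t => C / c * t ^ c) (C * t ^ (c - 1)) t := by
    filter_upwards [eventually_gt_atTop 0] with t ht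
    have := (Real.hasDerivAt_rpow_const (p := c) (Or.inl ht.ne')).const_mul (C / c)
    rwa [← mul_assoc, div_mul_cancel₀ _ hc.ne'] at this
  obtain ⟨D1, h1⟩ := abs_le_of_deriv_le (H.ev_differentiable hf) hh
    (h.mono fun t ht => (le_abs_self _).trans ht)
  obtain ⟨D2, h2⟩ := abs_le_of_deriv_le (f := fun t => - f t)
    ((H.ev_differentiable hf).mono fun t ht => ht.neg) hh
    (h.mono fun t ht => by rw [deriv.fun_neg]; exact (neg_le_abs _).trans ht)
  refine ⟨C / c + |D1| + |D2|, by positivity, ?_⟩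
  filter_upwards [h1, h2, eventually_ge_atTop 1] with t a1 a2 a3
  have hp : 1 ≤ t ^ c := Real.one_le_rpow a3 hc.le
  have b1 : |D1| ≤ |D1| * t ^ c := le_mul_of_one_le_right (abs_nonneg _) hp
  have b2 : |D2| ≤ |D2| * t ^ c := le_mul_of_one_le_right (abs_nonneg _) hp
  rw [add_mul, add_mul, abs_le]
  constructor <;> linarith [le_abs_self D1, le_abs_self D2, abs_nonneg D1, abs_nonneg D2]

theorem bounded_of_deriv {c : ℝ} (hc : c < 0) (hf : f ∈ H.carrier) (h : OO (deriv f) (c - 1)) :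
    OO f 0 := by
  obtain ⟨C, hC, h⟩ := h
  have hh : ∀ᶠ t : ℝ in atTop, HasDerivAt (fun t => C / c * t ^ c) (C * t ^ (c - 1)) t := by
    filter_upwards [eventually_gt_atTop 0] with t ht
    have := (Real.hasDerivAt_rpow_const (p := c) (Or.inl ht.ne')).const_mul (C / c)
    rwa [← mul_assoc, div_mul_cancel₀ _ hc.ne] at this
  obtain ⟨D1, h1⟩ := abs_le_of_deriv_le (H.ev_differentiable hf) hh
    (h.mono fun t ht => (le_abs_self _).trans ht)
  obtain ⟨D2, h2⟩ := abs_le_of_deriv_le (f := fun t => - f t)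
    ((H.ev_differentiable hf).mono fun t ht => ht.neg) hh
    (h.mono fun t ht => by rw [deriv.fun_neg]; exact (neg_le_abs _).trans ht)
  refine ⟨|D1| + |D2| + 1, by positivity, ?_⟩
  filter_upwards [h1, h2, eventually_gt_atTop 0] with t a1 a2 a3
  have hp : C / c * t ^ c ≤ 0 :=
    mul_nonpos_of_nonpos_of_nonneg (div_nonpos_of_nonneg_of_nonpos hC.le hc.le) (by positivity)
  rw [Real.rpow_zero, mul_one, abs_le]
  constructor <;> linarith [le_abs_self D1, le_abs_self D2, abs_nonneg D1, abs_nonneg D2]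

theorem log_of_deriv (hf : f ∈ H.carrier) (h : OO (deriv f) (-1)) :
    ∃ C, ∀ᶠ t in atTop, |f t| ≤ C * Real.log t := by
  obtain ⟨C, hC, h⟩ := h
  have hh : ∀ᶠ t : ℝ in atTop, HasDerivAt (fun t => C * Real.log t) (C * t ^ (-1 : ℝ)) t := by
    filter_upwards [eventually_gt_atTop 0] with t ht
    rw [Real.rpow_neg_one]
    exact (Real.hasDerivAt_log ht.ne').const_mul C
  obtain ⟨D1, h1⟩ := abs_le_of_deriv_le (H.ev_differentiable hf) hh
    (h.mono fun t ht => (le_abs_self _).trans ht)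
  obtain ⟨D2, h2⟩ := abs_le_of_deriv_le (f := fun t => - f t)
    ((H.ev_differentiable hf).mono fun t ht => ht.neg) hh
    (h.mono fun t ht => by rw [deriv.fun_neg]; exact (neg_le_abs _).trans ht)
  refine ⟨C + |D1| + |D2|, ?_⟩
  filter_upwards [h1, h2, Real.tendsto_log_atTop.eventually_ge_atTop 1] with t a1 a2 hp
  have b1 : |D1| ≤ |D1| * Real.log t := le_mul_of_one_le_right (abs_nonneg _) hp
  have b2 : |D2| ≤ |D2| * Real.log t := le_mul_of_one_le_right (abs_nonneg _) hp
  rw [add_mul, add_mul, abs_le]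
  constructor <;> linarith [le_abs_self D1, le_abs_self D2, abs_nonneg D1, abs_nonneg D2]

/-- Logarithmic derivatives of germs of polynomial size are `O(1/t)`. -/
theorem regular {A : ℝ} (hf : f ∈ H.carrier) (hA : OO f A) (hn : ¬ OO f (-2)) :
    (∀ᶠ t in atTop, f t ≠ 0) ∧ ∃ C > 0, ∀ᶠ t in atTop, |deriv f t / f t| ≤ C * t⁻¹ := by
  have h0 : ¬ f =ᶠ[atTop] (0 : ℝ → ℝ) := by
    intro h
    apply hn
    obtain ⟨C, hC, hz⟩ := OO.zero (-2)
    refine ⟨C, hC, ?_⟩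
    filter_upwards [h, hz] with t h1 h2
    rwa [h1]
  obtain ⟨g, hg, hfg⟩ := H.inv_mem hf h0
  have hne : ∀ᶠ t in atTop, f t ≠ 0 := by
    filter_upwards [hfg] with t ht h
    simp [h] at ht
  refine ⟨hne, ?_⟩
  have hgi : ∀ᶠ t in atTop, g t = (f t)⁻¹ := by
    filter_upwards [hfg] with t ht
    simp only [Pi.mul_apply, Pi.one_apply] at ht
    exact eq_inv_of_mul_eq_one_right ht
  set q : ℝ → ℝ := (fun t => t) * (deriv f * g) with hq
  have hqm : q ∈ H.carrier := H.mul_mem H.id_mem (H.mul_mem (H.deriv_mem hf) hg)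
  have hqe : ∀ᶠ t in atTop, deriv f t / f t = q t * t⁻¹ := by
    filter_upwards [hgi, eventually_gt_atTop 0] with t h1 h2
    simp only [hq, Pi.mul_apply, h1]
    field_simp
  rcases H.bounded_or_tendsto hqm with ⟨C, hC, h⟩ | h
  · refine ⟨C, hC, ?_⟩
    filter_upwards [hqe, h, eventually_gt_atTop 0] with t h1 h2 h3
    rw [h1, abs_mul, abs_of_pos (inv_pos.2 h3)]
    gcongr
  exfalso
  set N := max (A + 1) 2
  have hN := h.eventually_ge_atTop N
  have hN0 : 0 < N := lt_max_of_lt_right two_pos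
  have hd : ∀ᶠ t in atTop, HasDerivAt (fun t => Real.log (f t)) (q t * t⁻¹) t := by
    filter_upwards [hqe, hne, H.ev_hasDerivAt hf] with t h1 h2 h3
    rw [← h1]; exact h3.log h2
  have hlog : ∀ N : ℝ, ∀ᶠ t : ℝ in atTop, HasDerivAt (fun t => N * Real.log t) (N * t⁻¹) t := by
    intro N
    filter_upwards [eventually_gt_atTop 0] with t ht
    exact (Real.hasDerivAt_log ht.ne').const_mul N
  rcases H.trichotomy hqm with h2 | h2 | h2
  · obtain ⟨t, h3, h4⟩ := (hN.and h2).exists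
    rw [h4, abs_zero] at h3; linarith
  · obtain ⟨D, hD⟩ := abs_le_of_deriv_le (f := fun t => - Real.log (f t))
      (hd.mono fun t ht => ht.differentiableAt.neg) (hlog (-N)) (by
        filter_upwards [hd, hN, h2, eventually_gt_atTop 0] with t a1 a2 a3 a4
        rw [deriv.fun_neg, a1.deriv, neg_mul, neg_le_neg_iff]
        rw [abs_of_pos a3] at a2
        gcongr)
    obtain ⟨C, hC, hA⟩ := hA
    obtain ⟨t, a1, a2, a3, a4, a5⟩ := (hD.and (hA.and (hne.and ((eventually_gt_atTop 1).and
      (Real.tendsto_log_atTop.eventually_gt_atTop (D + Real.log C)))))).exists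
    have b0 : 0 < t := by linarith
    have b1 := Real.log_le_log (abs_pos.2 a3) a2
    rw [Real.log_abs, Real.log_mul hC.ne' (by positivity), Real.log_rpow b0] at b1
    have b2 : A + 1 ≤ N := le_max_left _ _
    have b3 : 0 < Real.log t := Real.log_pos a4
    nlinarith
  · obtain ⟨D, hD⟩ := abs_le_of_deriv_le (f := fun t => Real.log (f t))
      (hd.mono fun t ht => ht.differentiableAt) (hlog (-N)) (by
        filter_upwards [hd, hN, h2, eventually_gt_atTop 0] with t a1 a2 a3 a4
        rw [a1.deriv]
        rw [abs_of_neg a3] at a2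
        have : q t ≤ -N := by linarith
        gcongr)
    apply hn
    refine ⟨Real.exp D, Real.exp_pos _, ?_⟩
    filter_upwards [hD, hne, eventually_gt_atTop 1] with t a1 a3 a4
    have b0 : 0 < t := by linarith
    have b3 : 0 < Real.log t := Real.log_pos a4
    have b2 : 2 ≤ N := le_max_right _ _
    rw [← Real.exp_log (abs_pos.2 a3), Real.log_abs, Real.rpow_def_of_pos b0, ← Real.exp_add]
    apply Real.exp_le_exp.2
    nlinarith

/-- On a dyadic neighbourhood of `x` the derivative is controlled by the value at `x`. -/
theorem flat {A : ℝ} (hf : f ∈ H.carrier) (hA : OO f A) :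
    ∃ C > 0, ∀ᶠ x : ℝ in atTop, ∀ s ∈ Set.Icc (x / 2) (2 * x),
      |deriv f s| ≤ C / x * |f x| + C / x ^ 3 := by
  have hhalf : Tendsto (fun x : ℝ => x / 2) atTop atTop := tendsto_id.atTop_div_const two_pos
  by_cases hn : OO f (-2)
  · obtain ⟨C, hC, h⟩ := deriv_OO hf hn
    refine ⟨8 * C, by positivity, ?_⟩
    obtain ⟨a, ha⟩ := eventually_atTop.1 h
    filter_upwards [hhalf.eventually_ge_atTop a, eventually_gt_atTop 0] with x h1 h2 s hs
    have h3 := ha s (h1.trans hs.1)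
    have hs0 : 0 < s := lt_of_lt_of_le (by positivity) hs.1
    have e : s ^ (-2 - 1 : ℝ) = (s ^ 3)⁻¹ := by
      rw [show (-2 - 1 : ℝ) = -((3 : ℕ) : ℝ) by norm_num, Real.rpow_neg hs0.le, Real.rpow_natCast]
    rw [e] at h3
    have h4 : (s ^ 3)⁻¹ ≤ ((x / 2) ^ 3)⁻¹ := by
      gcongr; exact hs.1
    have h5 : C * ((x / 2) ^ 3)⁻¹ = 8 * C / x ^ 3 := by field_simp; norm_num
    have h6 : 0 ≤ 8 * C / x * |f x| := by positivity
    have h7 := mul_le_mul_of_nonneg_left h4 hC.le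
    linarith
  · obtain ⟨hne, C, hC, h⟩ := regular hf hA hn
    refine ⟨2 * C * Real.exp (2 * C), by positivity, ?_⟩
    obtain ⟨a, ha⟩ := eventually_atTop.1 (hne.and (h.and (H.ev_hasDerivAt hf)))
    filter_upwards [hhalf.eventually_ge_atTop a, eventually_gt_atTop 0] with x h1 h2 s hs
    have hx : x ∈ Set.Icc (x / 2) (2 * x) := ⟨by linarith, by linarith⟩
    have hs0 : 0 < s := lt_of_lt_of_le (by positivity) hs.1
    have hb : ∀ r ∈ Set.Icc (x / 2) (2 * x), |deriv f r / f r| ≤ 2 * C / x := by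
      intro r hr
      refine (ha r (h1.trans hr.1)).2.1.trans ?_
      have hr0 : 0 < r := lt_of_lt_of_le (by positivity) hr.1
      rw [← div_eq_mul_inv, div_le_div_iff₀ hr0 h2]
      nlinarith [hr.1]
    have hm := Convex.norm_image_sub_le_of_norm_hasDerivWithin_le
      (f := fun t => Real.log (f t)) (f' := fun t => deriv f t / f t) (C := 2 * C / x)
      (fun r hr => (((ha r (h1.trans hr.1)).2.2).log (ha r (h1.trans hr.1)).1).hasDerivWithinAt)
      (fun r hr => by rw [Real.norm_eq_abs]; exact hb r hr) (convex_Icc (x / 2) (2 * x)) hx hs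
    have hsx : ‖s - x‖ ≤ x := by
      rw [Real.norm_eq_abs, abs_le]; constructor <;> linarith [hs.1, hs.2]
    have hm2 : Real.log (f s) - Real.log (f x) ≤ 2 * C := by
      refine (le_abs_self _).trans (hm.trans ?_)
      calc 2 * C / x * ‖s - x‖ ≤ 2 * C / x * x := by gcongr
        _ = 2 * C := by field_simp
    have hfs : |f s| ≤ Real.exp (2 * C) * |f x| := by
      have hnx := (ha x (h1.trans hx.1)).1
      have hns := (ha s (h1.trans hs.1)).1
      rw [← Real.exp_log (abs_pos.2 hnx), ← Real.exp_log (abs_pos.2 hns), ← Real.exp_add,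
        Real.log_abs, Real.log_abs]
      apply Real.exp_le_exp.2; linarith
    have hd := hb s hs
    have hns := (ha s (h1.trans hs.1)).1
    rw [abs_div, div_le_iff₀ (abs_pos.2 hns)] at hd
    have h6 : 0 ≤ 2 * C * Real.exp (2 * C) / x ^ 3 := by positivity
    calc |deriv f s| ≤ 2 * C / x * |f s| := hd
      _ ≤ 2 * C / x * (Real.exp (2 * C) * |f x|) := by gcongr
      _ = 2 * C * Real.exp (2 * C) / x * |f x| := by ring
      _ ≤ _ := by linarith

end HardyField

end

/-! ### The elimination scheme -/

section

section Game
variable {V : Type} [AddCommGroup V] [DecidableEq V] (U : ℕ → AddSubgroup V) (m : ℕ)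

/-- `y'` is a descendant of `y` at depth `i` relative to the centre `z`: the difference is one
level lower than the difference of `y` and `z`, as long as that level is at least `i`. -/
def Desc (z : V) (i : ℕ) (y y' : V) : Prop :=
  y' - y ∈ U m ∧ ∀ l, i ≤ l → l ≤ m → y - z ∈ U (l + 1) → y' - y ∈ U l

variable {U m}

theorem Desc.refl (z : V) (i : ℕ) (y : V) : Desc U m z i y y := by
  constructor
  · simp
  · intros; simp

theorem Desc.trans (hU : Monotone U) {z : V} {i : ℕ} {y y' y'' : V} (h : Desc U m z i y y')
    (h' : Desc U m z i y' y'') : Desc U m z i y y'' := by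
  constructor
  · have := (U m).add_mem h'.1 h.1
    simpa using this
  · intro l h1 h2 h3
    have h4 := h.2 l h1 h2 h3
    have h5 : y' - z ∈ U (l + 1) := by
      have := (U (l + 1)).add_mem (hU (Nat.le_succ l) h4) h3
      simpa using this
    have := (U l).add_mem (h'.2 l h1 h2 h5) h4
    simpa using this

theorem Desc.mem (hU : Monotone U) {z : V} {i : ℕ} {y y' : V} (h : Desc U m z i y y')
    (hy : y ∈ U (m + 1)) : y' ∈ U (m + 1) := by
  have := (U (m + 1)).add_mem (hU (Nat.le_succ m) h.1) hy
  simpa using this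

/-- Elimination of a set `X` of `Far` elements lying within `U i` of a centre `z`: it suffices to
treat the families of descendants of the remaining elements `Y`. The proof is by induction on `i`
and, for given `i`, on a finite set of representatives of the classes of `X` modulo the lower level.
-/
theorem elim (hU : Monotone U) (dd : ℕ → V → V) (hdd : ∀ p i x, x ∈ U (i + 1) → dd p x ∈ U i)
    (Far : V → Prop) (hFar : ∀ x y, Far x → y - x ∈ U m → Far y) (Gd : Finset V → Prop)
    (merge : ∀ b X Y, b ∈ X → (∀ x ∈ X, x - b ∈ U 0) → Gd (insert b Y) → Gd (X ∪ Y))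
    (op : ∀ b Y, b ∈ U (m + 1) → (∀ y ∈ Y, y ∈ U (m + 1)) → Far b →
      (∀ p, Gd (Y ∪ (insert 0 Y).image (fun y => y + dd p (y - b)))) → Gd (insert b Y))
    (i : ℕ) (hi : i ≤ m + 1) : ∀ z ∈ U (m + 1), ∀ X Y : Finset V,
      (∀ x ∈ X, x ∈ U (m + 1) ∧ x - z ∈ U i ∧ Far x) → (∀ y ∈ Y, y ∈ U (m + 1)) →
      (∀ Y' : Finset V, (∀ y' ∈ Y', y' ∈ U (m + 1) ∧ ∃ y ∈ insert 0 Y, Desc U m z i y y') → Gd Y') →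
      Gd (X ∪ Y) := by
  induction i with
  | zero =>
    intro z hz X Y hX hY hGd
    rcases X.eq_empty_or_nonempty with rfl | ⟨b, hb⟩
    · rw [Finset.empty_union]
      exact hGd Y fun y hy => ⟨hY y hy, y, by simp [hy], Desc.refl _ _ _⟩
    · refine merge b X Y hb (fun x hx => ?_) ?_
      · have := (U 0).sub_mem (hX x hx).2.1 (hX b hb).2.1
        simpa using this
      refine op b Y (hX b hb).1 hY (hX b hb).2.2 fun p => hGd _ fun y' hy' => ?_
      have h0 : ∀ y ∈ insert 0 Y, y ∈ U (m + 1) := by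
        intro y hy
        rcases Finset.mem_insert.1 hy with rfl | hy
        · exact (U (m + 1)).zero_mem
        · exact hY y hy
      rw [Finset.mem_union, Finset.mem_image] at hy'
      rcases hy' with hy' | ⟨y, hy, rfl⟩
      · exact ⟨hY y' hy', y', by simp [hy'], Desc.refl _ _ _⟩
      · have hD : Desc U m z 0 y (y + dd p (y - b)) := by
          constructor
          · rw [add_sub_cancel_left]
            exact hdd p m _ ((U (m + 1)).sub_mem (h0 y hy) (hX b hb).1)
          · intro l _ _ h
            rw [add_sub_cancel_left]
            apply hdd
            have := (U (l + 1)).sub_mem h (hU (Nat.zero_le _) (hX b hb).2.1)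
            simpa using this
        exact ⟨hD.mem hU (h0 y hy), y, hy, hD⟩
  | succ i ih =>
    intro z hz X Y hX hY hGd
    have inner : ∀ Z : Finset V, (∀ ζ ∈ Z, ζ ∈ U (m + 1) ∧ ζ - z ∈ U (i + 1)) → ∀ X Y : Finset V,
        (∀ x ∈ X, x ∈ U (m + 1) ∧ x - z ∈ U (i + 1) ∧ Far x ∧ ∃ ζ ∈ Z, x - ζ ∈ U i) →
        (∀ y ∈ Y, y ∈ U (m + 1)) →
        (∀ Y' : Finset V, (∀ y' ∈ Y', y' ∈ U (m + 1) ∧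
          ∃ y ∈ insert 0 Y, Desc U m z (i + 1) y y') → Gd Y') → Gd (X ∪ Y) := by
      intro Z
      induction Z using Finset.induction_on with
      | empty =>
        intro _ X Y hX hY hGd
        have : X = ∅ := by
          rw [Finset.eq_empty_iff_forall_notMem]
          intro x hx
          obtain ⟨-, -, -, ζ, hζ, -⟩ := hX x hx
          simp at hζ
        rw [this, Finset.empty_union]
        exact hGd Y fun y hy => ⟨hY y hy, y, by simp [hy], Desc.refl _ _ _⟩
      | insert ζ Z hζZ ihZ =>
        intro hZ X Y hX hY hGd
        classical
        have hζ := hZ ζ (by simp)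
        -- the class of `ζ` modulo `U i` is eliminated first
        set X1 := X.filter (fun x => x - ζ ∈ U i) with hX1
        set X2 := X.filter (fun x => ¬ x - ζ ∈ U i) with hX2
        have hXX : X ∪ Y = X1 ∪ (X2 ∪ Y) := by
          rw [← Finset.union_assoc, hX1, hX2, Finset.filter_union_filter_not_eq]
        rw [hXX]
        refine ih (by omega) ζ hζ.1 X1 (X2 ∪ Y) ?_ ?_ ?_
        · intro x hx
          rw [hX1, Finset.mem_filter] at hx
          exact ⟨(hX x hx.1).1, hx.2, (hX x hx.1).2.2.1⟩
        · intro y hy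
          rcases Finset.mem_union.1 hy with hy | hy
          · exact (hX y (Finset.mem_filter.1 hy).1).1
          · exact hY y hy
        intro Y1 hY1
        set X' := Y1.filter (fun y' => ∃ y ∈ X2, Desc U m ζ i y y') with hX'
        set Y'' := Y1.filter (fun y' => ¬ ∃ y ∈ X2, Desc U m ζ i y y') with hY''
        have hsplit : Y1 = X' ∪ Y'' := by rw [hX', hY'', Finset.filter_union_filter_not_eq]
        have hYd : ∀ y' ∈ Y'', ∃ y ∈ insert 0 Y, Desc U m z (i + 1) y y' := by
          intro y' hy'
          rw [hY'', Finset.mem_filter] at hy'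
          obtain ⟨-, y, hy, hD⟩ := hY1 y' hy'.1
          rw [Finset.mem_insert, Finset.mem_union] at hy
          have hD' : Desc U m z (i + 1) y y' := by
            refine ⟨hD.1, fun l h1 h2 h3 => hD.2 l (by omega) h2 ?_⟩
            have := (U (l + 1)).sub_mem h3 (hU (show i + 1 ≤ l + 1 by omega) hζ.2)
            simpa using this
          rcases hy with rfl | hy | hy
          · exact ⟨0, by simp, hD'⟩
          · exact absurd ⟨y, hy, hD⟩ hy'.2
          · exact ⟨y, by simp [hy], hD'⟩
        rw [hsplit]
        refine ihZ (fun ζ' h => hZ ζ' (by simp [h])) X' Y'' ?_ ?_ ?_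
        · intro x' hx'
          rw [hX', Finset.mem_filter] at hx'
          obtain ⟨hx'1, x, hx, hD⟩ := hx'
          rw [hX2, Finset.mem_filter] at hx
          obtain ⟨a1, a2, a3, ζ', hζ', a4⟩ := hX x hx.1
          have hζ'Z : ζ' ∈ Z := by
            rcases Finset.mem_insert.1 hζ' with rfl | h
            · exact absurd a4 hx.2
            · exact h
          have b1 : x - ζ ∈ U (i + 1) := by
            have := (U (i + 1)).sub_mem a2 hζ.2
            simpa using this
          have b2 : x' - x ∈ U i := hD.2 i le_rfl (by omega) b1
          refine ⟨(hY1 x' hx'1).1, ?_, hFar x x' a3 hD.1, ζ', hζ'Z, ?_⟩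
          · have := (U (i + 1)).add_mem (hU (Nat.le_succ i) b2) a2
            simpa using this
          · have := (U i).add_mem b2 a4
            simpa using this
        · intro y hy
          exact (hY1 y (Finset.mem_filter.1 hy).1).1
        · intro Y3 hY3
          refine hGd Y3 fun y' hy' => ⟨(hY3 y' hy').1, ?_⟩
          obtain ⟨-, y2, hy2, hD2⟩ := hY3 y' hy'
          rcases Finset.mem_insert.1 hy2 with rfl | hy2
          · exact ⟨0, by simp, hD2⟩
          · obtain ⟨y, hy, hD⟩ := hYd y2 hy2
            exact ⟨y, hy, hD.trans hU hD2⟩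
    exact inner X (fun x hx => ⟨(hX x hx).1, (hX x hx).2.1⟩) X Y
      (fun x hx => ⟨(hX x hx).1, (hX x hx).2.1, (hX x hx).2.2, x, hx, by simp⟩) hY hGd

/-- If `Gd` holds for the families without `Far` elements, then it holds for all families in `U (m +
1)`. -/
theorem level (hU : Monotone U) (dd : ℕ → V → V) (hdd : ∀ p i x, x ∈ U (i + 1) → dd p x ∈ U i)
    (Far : V → Prop) (hFar0 : ¬ Far 0) (hFar : ∀ x y, Far x → y - x ∈ U m → Far y)
    (Gd : Finset V → Prop)
    (merge : ∀ b X Y, b ∈ X → (∀ x ∈ X, x - b ∈ U 0) → Gd (insert b Y) → Gd (X ∪ Y))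
    (op : ∀ b Y, b ∈ U (m + 1) → (∀ y ∈ Y, y ∈ U (m + 1)) → Far b →
      (∀ p, Gd (Y ∪ (insert 0 Y).image (fun y => y + dd p (y - b)))) → Gd (insert b Y))
    (term : ∀ Y : Finset V, (∀ y ∈ Y, y ∈ U (m + 1) ∧ ¬ Far y) → Gd Y)
    (A : Finset V) (hA : ∀ y ∈ A, y ∈ U (m + 1)) : Gd A := by
  classical
  rw [← Finset.filter_union_filter_not_eq Far A]
  refine elim hU dd hdd Far hFar Gd merge op (m + 1) le_rfl 0 (U (m + 1)).zero_mem _ _ ?_ ?_ ?_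
  · intro x hx
    rw [Finset.mem_filter] at hx
    exact ⟨hA x hx.1, by simpa using hA x hx.1, hx.2⟩
  · intro y hy
    exact hA y (Finset.mem_filter.1 hy).1
  · intro Y' hY'
    refine term Y' fun y' hy' => ⟨(hY' y' hy').1, fun hF => ?_⟩
    obtain ⟨-, y, hy, hD⟩ := hY' y' hy'
    have : Far y := hFar y' y hF (by
      have := (U m).neg_mem hD.1
      simpa using this)
    rcases Finset.mem_insert.1 hy with rfl | hy
    · exact hFar0 this
    · exact (Finset.mem_filter.1 hy).2 this

end Game

end

/-! ### Controlled families on dyadic blocks -/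

section

variable {X : Type} [MeasurableSpace X] {μ : Measure X} [IsProbabilityMeasure μ] {T : ℤ → X → X}

/-- Pairs `(F, G)`, encoding the block-dependent function `F + τ_M G` on the block `[M, 2M)`. -/
abbrev VV : Type := (ℝ → ℝ) × (ℝ → ℝ)

instance : DecidableEq VV := Classical.decEq _

/-- The integer part of the cube root of `M`. The exponent `1/3` makes `τ_M² F''` tend to `0` when
`F = O(t^{5/4})`, while `τ_M` is still large enough for nondegeneracy to survive shifts by multiples
of `τ_M`. -/
def tau (M : ℕ) : ℕ := ⌊(M : ℝ) ^ (1 / 3 : ℝ)⌋₊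

/-- The function `F + τ_M G` encoded by the pair `(F, G)`. -/
def ev (a : VV) (M : ℕ) (t : ℝ) : ℝ := a.1 t + tau M * a.2 t

theorem ev_add (a b : VV) (M : ℕ) (t : ℝ) : ev (a + b) M t = ev a M t + ev b M t := by
  simp only [ev, Prod.fst_add, Prod.snd_add, Pi.add_apply]; ring
theorem ev_sub (a b : VV) (M : ℕ) (t : ℝ) : ev (a - b) M t = ev a M t - ev b M t := by
  simp only [ev, Prod.fst_sub, Prod.snd_sub, Pi.sub_apply]; ring
theorem ev_zero (M : ℕ) (t : ℝ) : ev 0 M t = 0 := by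
  simp [ev]

/-- The family `A` is controlled by the target `u`: averages over dyadic blocks with weights and
with `u` at position `0` are asymptotically negligible, uniformly in the weights and functions. -/
def Good (μ : Measure X) (T : ℤ → X → X) (u : X → ℂ) (A : Finset VV) : Prop :=
  ∀ ε : ℝ, 0 < ε → ∃ M0 : ℕ, ∀ M ≥ M0, ∀ c : ℤ → ℂ, (∀ n, ‖c n‖ ≤ 1) → ∀ f : VV → X → ℂ,
    (∀ a, Bdd (f a)) →
    ‖∑ n ∈ Finset.Ico (M : ℤ) (M + M), c n * ∫ y, u y * ∏ a ∈ A, f a (T ⌊ev a M n⌋ y) ∂μ‖ ≤ ε * M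

/-- A controlled family may be replaced by any bounded perturbation of a multiset drawn from it. -/
theorem Good.flex (hS : Sys μ T) {u : X → ℂ} {A : Finset VV} (h : Good μ T u A) (C0 r : ℕ) (ε : ℝ)
    (hε : 0 < ε) : ∃ M0 : ℕ, ∀ M ≥ M0, ∀ {ι : Type} (S : Finset ι), S.card ≤ r → ∀ D : ι → VV,
      (∀ i ∈ S, D i ∈ A) → ∀ d : ι → ℤ → ℤ, ∀ c : ℤ → ℂ, (∀ n, ‖c n‖ ≤ 1) →
      (∀ n ∈ Finset.Ico (M : ℤ) (M + M), c n ≠ 0 → ∀ i ∈ S, |d i n - ⌊ev (D i) M n⌋| ≤ C0) →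
      ∀ f : ι → X → ℂ, (∀ i, Bdd (f i)) →
      ‖∑ n ∈ Finset.Ico (M : ℤ) (M + M), c n * ∫ y, u y * ∏ i ∈ S, f i (T (d i n) y) ∂μ‖ ≤ ε * M := by
  classical
  have hP : (0 : ℝ) < (2 * C0 + 1) ^ r := by positivity
  obtain ⟨M0, hM0⟩ := h (ε / (2 * C0 + 1) ^ r) (by positivity)
  refine ⟨M0, fun M hM ι S hcard D hD d c hc hd f hf => ?_⟩
  set I := Finset.Ico (M : ℤ) (M + M) with hI
  let O : Finset (∀ i ∈ S, ℤ) := S.pi (fun _ => Finset.Icc (-(C0 : ℤ)) C0)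
  have hO : (O.card : ℝ) ≤ (2 * C0 + 1) ^ r := by
    rw [Finset.card_pi, Finset.prod_const, Int.card_Icc]
    have e : ((C0 : ℤ) + 1 - -(C0 : ℤ)).toNat = 2 * C0 + 1 := by omega
    rw [e]
    push_cast
    exact pow_le_pow_right₀ (by linarith [Nat.cast_nonneg (α := ℝ) C0]) hcard
  let o : ℤ → (∀ i ∈ S, ℤ) := fun n i _ => d i n - ⌊ev (D i) M n⌋
  have hM' : (0 : ℝ) ≤ M := by positivity
  refine (norm_sum_le_options I o O _ ?_ (ε / (2 * C0 + 1) ^ r * M) ?_).trans ?_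
  · intro n hn hne
    have hcn : c n ≠ 0 := left_ne_zero_of_mul hne
    rw [Finset.mem_pi]
    intro i hi
    rw [Finset.mem_Icc]
    exact abs_le.1 (hd n hn hcn i hi)
  · intro e he
    let e' : ι → ℤ := fun i => if hi : i ∈ S then e i hi else 0
    have key := hM0 M hM (fun n => if o n = e then c n else 0)
      (by intro n; split_ifs; exacts [hc n, by simp])
      (fun a y => ∏ i ∈ S with D i = a, f i (T (e' i) y))
      (fun a => Bdd.prod fun i _ => hS.bdd (hf i) _)
    refine le_trans (le_of_eq ?_) key
    congr 1
    refine Finset.sum_congr rfl fun n hn => ?_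
    by_cases ho : o n = e
    · rw [if_pos ho, if_pos ho]
      congr 2
      funext y
      congr 1
      rw [← Finset.prod_fiberwise_of_maps_to (g := D) (t := A) hD]
      refine Finset.prod_congr rfl fun a _ => Finset.prod_congr rfl fun i hi => ?_
      rw [Finset.mem_filter] at hi
      have h2 : d i n - ⌊ev (D i) M n⌋ = e i hi.1 := congrFun (congrFun ho i) hi.1
      rw [hS.app, ← hi.2]
      congr 2
      simp only [e', hi.1, dif_pos]; rw [← h2]; ring
    · rw [if_neg ho, if_neg ho]; simp
  · calc (O.card : ℝ) * (ε / (2 * C0 + 1) ^ r * M) ≤ (2 * C0 + 1) ^ r * (ε / (2 * C0 + 1) ^ r * M) := by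
          gcongr
      _ = ε * M := by field_simp

theorem Good.mono (hS : Sys μ T) {u : X → ℂ} {A B : Finset VV} (h : Good μ T u A) (hBA : B ⊆ A) :
    Good μ T u B := by
  intro ε hε
  obtain ⟨M0, hM0⟩ := h.flex hS 0 B.card ε hε
  refine ⟨M0, fun M hM c hc f hf => ?_⟩
  exact hM0 M hM B le_rfl id (fun i hi => hBA hi) (fun a n => ⌊ev a M n⌋) c hc
    (fun n _ _ i _ => by simp) f hf

/-- Members of the family at bounded distance of each other may be merged. -/
theorem Good.merge (hS : Sys μ T) {u : X → ℂ} (b : VV) (A Y : Finset VV)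
    (hA : ∀ x ∈ A, ∀ᶠ M : ℕ in atTop, ∀ n ∈ Finset.Ico (M : ℤ) (M + M), |ev (x - b) M n| ≤ 1)
    (h : Good μ T u (insert b Y)) : Good μ T u (A ∪ Y) := by
  classical
  intro ε hε
  obtain ⟨M0, hM0⟩ := h.flex hS 2 (A ∪ Y).card ε hε
  have hA' : ∀ᶠ M : ℕ in atTop, ∀ x ∈ A, ∀ n ∈ Finset.Ico (M : ℤ) (M + M), |ev (x - b) M n| ≤ 1 :=
    (Finset.eventually_all A).2 hA
  obtain ⟨M1, hM1⟩ := eventually_atTop.1 hA'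
  refine ⟨max M0 M1, fun M hM c hc f hf => ?_⟩
  refine hM0 M (le_trans (le_max_left _ _) hM) (A ∪ Y) le_rfl (fun a => if a ∈ Y then a else b) ?_
    (fun a n => ⌊ev a M n⌋) c hc ?_ f hf
  · intro i _
    split_ifs with hi
    · exact Finset.mem_insert_of_mem hi
    · exact Finset.mem_insert_self _ _
  · intro n hn _ i hi
    split_ifs with hY
    · simp
    · have hiA : i ∈ A := (Finset.mem_union.1 hi).resolve_right hY
      have := abs_le.1 (hM1 M (le_trans (le_max_right _ _) hM) i hiA n hn)
      rw [ev_sub] at this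
      have h1 := Int.floor_le (ev i M n)
      have h2 := Int.lt_floor_add_one (ev i M n)
      have h3 := Int.floor_le (ev b M n)
      have h4 := Int.lt_floor_add_one (ev b M n)
      have : |((⌊ev i M n⌋ - ⌊ev b M n⌋ : ℤ) : ℝ)| ≤ ((2 : ℕ) : ℤ) := by
        push_cast; rw [abs_le]; constructor <;> linarith
      exact_mod_cast this

/-- The van der Corput operation, with shifts `p * s M`. -/
theorem Good.op (hS : Sys μ T) {u : X → ℂ} (hu : Bdd u) (b : VV) (Y : Finset VV) (dd : ℕ → VV → VV)
    (s : ℕ → ℕ) (hs : ∀ K : ℕ, ∀ᶠ M in atTop, K * s M ≤ M)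
    (herr : ∀ p : ℕ, ∀ y ∈ insert 0 Y, ∀ᶠ M : ℕ in atTop, ∀ n ∈ Finset.Ico (M : ℤ) (M + M),
      n + p * s M ∈ Finset.Ico (M : ℤ) (M + M) →
      |ev (y - b) M ((n : ℝ) + p * s M) - ev (y - b) M n - ev (dd p (y - b)) M n| ≤ 1)
    (hgood : ∀ᶠ p in atTop, Good μ T u (Y ∪ (insert 0 Y).image (fun y => y + dd p (y - b)))) :
    Good μ T u (insert b Y) := by
  classical
  by_cases hbY : b ∈ Y
  · rw [Finset.insert_eq_of_mem hbY]
    obtain ⟨p, hp⟩ := hgood.exists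
    exact hp.mono hS Finset.subset_union_left
  intro ε hε
  obtain ⟨p0, hp0⟩ := eventually_atTop.1 hgood
  set ε' := ε ^ 2 / 16 with hε'
  have hε'0 : 0 < ε' := by positivity
  obtain ⟨K, hK⟩ := exists_nat_ge (((1 + 2 * p0) * 8) / ε ^ 2 + 1)
  have hK1 : (1 : ℝ) ≤ K := by
    have : 0 ≤ ((1 + 2 * (p0 : ℝ)) * 8) / ε ^ 2 := by positivity
    linarith
  have hKp : (0 : ℝ) < K := by linarith
  set r := (Finset.insertNone (Y ×ˢ (Finset.univ : Finset Bool))).card with hr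
  have hflex : ∀ p, p0 ≤ p → ∃ M0 : ℕ, ∀ M ≥ M0, ∀ {ι : Type} (S : Finset ι), S.card ≤ r → ∀ D : ι → VV,
      (∀ i ∈ S, D i ∈ Y ∪ (insert 0 Y).image (fun y => y + dd p (y - b))) →
      ∀ d : ι → ℤ → ℤ, ∀ c : ℤ → ℂ, (∀ n, ‖c n‖ ≤ 1) →
      (∀ n ∈ Finset.Ico (M : ℤ) (M + M), c n ≠ 0 → ∀ i ∈ S, |d i n - ⌊ev (D i) M n⌋| ≤ (5 : ℕ)) →
      ∀ f : ι → X → ℂ, (∀ i, Bdd (f i)) →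
      ‖∑ n ∈ Finset.Ico (M : ℤ) (M + M), c n * ∫ y, u y * ∏ i ∈ S, f i (T (d i n) y) ∂μ‖ ≤ ε' * M :=
    fun p hp => (hp0 p hp).flex hS 5 r ε' hε'0
  have hev1 : ∀ᶠ M : ℕ in atTop, ∀ p ∈ Finset.range K, p0 ≤ p → ∀ {ι : Type} (S : Finset ι),
      S.card ≤ r → ∀ D : ι → VV,
      (∀ i ∈ S, D i ∈ Y ∪ (insert 0 Y).image (fun y => y + dd p (y - b))) →
      ∀ d : ι → ℤ → ℤ, ∀ c : ℤ → ℂ, (∀ n, ‖c n‖ ≤ 1) →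
      (∀ n ∈ Finset.Ico (M : ℤ) (M + M), c n ≠ 0 → ∀ i ∈ S, |d i n - ⌊ev (D i) M n⌋| ≤ (5 : ℕ)) →
      ∀ f : ι → X → ℂ, (∀ i, Bdd (f i)) →
      ‖∑ n ∈ Finset.Ico (M : ℤ) (M + M), c n * ∫ y, u y * ∏ i ∈ S, f i (T (d i n) y) ∂μ‖ ≤ ε' * M := by
    rw [Finset.eventually_all]
    intro p _
    by_cases hp : p0 ≤ p
    · obtain ⟨M0, hM0⟩ := hflex p hp
      filter_upwards [eventually_ge_atTop M0] with M hM _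
      exact hM0 M hM
    · exact Eventually.of_forall fun M h => absurd h hp
  have hev2 : ∀ᶠ M : ℕ in atTop, ∀ p ∈ Finset.range K, ∀ y ∈ insert 0 Y,
      ∀ n ∈ Finset.Ico (M : ℤ) (M + M), n + p * s M ∈ Finset.Ico (M : ℤ) (M + M) →
      |ev (y - b) M ((n : ℝ) + p * s M) - ev (y - b) M n - ev (dd p (y - b)) M n| ≤ 1 := by
    rw [Finset.eventually_all]; intro p _
    rw [Finset.eventually_all]; intro y hy
    exact herr p y hy
  obtain ⟨M0, hM0⟩ := eventually_atTop.1 (hev1.and (hev2.and (hs K)))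
  refine ⟨M0, fun M hM c hc f hf => ?_⟩
  obtain ⟨h1, h2, h3⟩ := hM0 M hM
  simp_rw [Finset.prod_insert hbY]
  have key := vdc_step hS b Y u hu f hf c hc (fun a n => ⌊ev a M n⌋) M M K (s M)
  set I := Finset.Ico (M : ℤ) (M + M) with hI
  set A := ‖∑ n ∈ I, c n * ∫ y, u y * (f b (T ⌊ev b M n⌋ y) * ∏ i ∈ Y, f i (T ⌊ev i M n⌋ y)) ∂μ‖
    with hA
  have hM' : (0 : ℝ) ≤ M := by positivity
  have hterm : ∀ p ∈ Finset.Ico 1 K, ‖∑ n ∈ I,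
        (if n + p * s M ∈ I then c n * (starRingEnd ℂ) (c (n + p * s M)) else 0) *
        ∫ y, (u y * (starRingEnd ℂ) (u (T (⌊ev b M n⌋ - ⌊ev b M ((n + p * s M : ℤ) : ℝ)⌋) y))) *
          ∏ i ∈ Y, (f i (T ⌊ev i M n⌋ y) *
            (starRingEnd ℂ) (f i (T (⌊ev i M ((n + p * s M : ℤ) : ℝ)⌋ -
              ⌊ev b M ((n + p * s M : ℤ) : ℝ)⌋ + ⌊ev b M n⌋) y))) ∂μ‖
        ≤ ε' * M + if p ∈ Finset.range p0 then (M : ℝ) else 0 := by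
    intro p hp
    have hcc : ∀ n : ℤ, ‖(if n + p * s M ∈ I then c n * (starRingEnd ℂ) (c (n + p * s M)) else 0)‖ ≤ 1 := by
      intro n
      split_ifs
      · rw [norm_mul, RCLike.norm_conj]; exact mul_le_one₀ (hc _) (norm_nonneg _) (hc _)
      · simp
    by_cases hpb : p ∈ Finset.range p0
    · rw [if_pos hpb]
      have : (0 : ℝ) ≤ ε' * M := by positivity
      refine le_trans ?_ (le_add_of_nonneg_left this)
      refine (norm_sum_le _ _).trans ?_
      refine (Finset.sum_le_sum (g := fun _ => (1 : ℝ)) fun n _ => ?_).trans (by simp [hI])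
      rw [norm_mul]
      exact mul_le_one₀ (hcc n) (norm_nonneg _) (Bdd.norm_integral_le
        ((hu.mul (hS.bdd hu _).cj).mul
          (Bdd.prod fun i _ => (hS.bdd (hf i) _).mul (hS.bdd (hf i) _).cj)))
    · rw [if_neg hpb, add_zero]
      have hpK : p ∈ Finset.range K := by
        rw [Finset.mem_range]; exact (Finset.mem_Ico.1 hp).2
      have hpp : p0 ≤ p := by simpa using hpb
      let D : Option (VV × Bool) → VV := fun o => o.elim (0 + dd p (0 - b))
        (fun q => if q.2 then q.1 + dd p (q.1 - b) else q.1)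
      let d : Option (VV × Bool) → ℤ → ℤ := fun o n => o.elim
        (⌊ev b M n⌋ - ⌊ev b M ((n + p * s M : ℤ) : ℝ)⌋)
        (fun q => if q.2 then ⌊ev q.1 M ((n + p * s M : ℤ) : ℝ)⌋ -
              ⌊ev b M ((n + p * s M : ℤ) : ℝ)⌋ + ⌊ev b M n⌋ else ⌊ev q.1 M n⌋)
      let g : Option (VV × Bool) → X → ℂ := fun o => o.elim (cj u)
        (fun q => if q.2 then cj (f q.1) else f q.1)
      have := h1 p hpK hpp (Finset.insertNone (Y ×ˢ (Finset.univ : Finset Bool))) le_rfl D ?_ d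
        (fun n => if n + p * s M ∈ I then c n * (starRingEnd ℂ) (c (n + p * s M)) else 0) hcc ?_ g ?_
      · refine le_trans (le_of_eq ?_) this
        congr 1
        refine Finset.sum_congr rfl fun n _ => ?_
        congr 2
        funext y
        rw [Finset.prod_insertNone, Finset.prod_product, mul_assoc]
        congr 2
        refine Finset.prod_congr rfl fun i _ => ?_
        simp [g, d, mul_comm]
      · intro i hi
        rcases i with _ | ⟨q, t⟩
        · exact Finset.mem_union_right _ (Finset.mem_image.2 ⟨0, by simp, rfl⟩)
        · rw [Finset.some_mem_insertNone, Finset.mem_product] at hi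
          cases t
          · exact Finset.mem_union_left _ hi.1
          · exact Finset.mem_union_right _ (Finset.mem_image.2 ⟨q, by simpa using Or.inr hi.1, rfl⟩)
      · intro n hn hne i hi
        have hnI : n + p * s M ∈ I := by
          by_contra h; exact hne (if_neg h)
        have fl : ∀ t : ℝ, (⌊t⌋ : ℝ) ≤ t ∧ t < ⌊t⌋ + 1 := fun t =>
          ⟨Int.floor_le t, Int.lt_floor_add_one t⟩
        have hcast : ((n + p * s M : ℤ) : ℝ) = (n : ℝ) + p * s M := by push_cast; ring
        suffices hh : |((d i n - ⌊ev (D i) M n⌋ : ℤ) : ℝ)| ≤ ((5 : ℕ) : ℤ) by exact_mod_cast hh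
        rcases i with _ | ⟨q, t⟩
        · have e := abs_le.1 (h2 p hpK 0 (by simp) n hn hnI)
          simp only [d, D, Option.elim_none]
          rw [hcast, zero_add]
          rw [ev_sub, ev_sub, ev_zero, ev_zero] at e
          have a1 := fl (ev b M n)
          have a2 := fl (ev b M ((n : ℝ) + p * s M))
          have a3 := fl (ev (dd p (0 - b)) M n)
          push_cast; rw [abs_le]; constructor <;> linarith [a1.1, a1.2, a2.1, a2.2, a3.1, a3.2, e.1, e.2]
        · rw [Finset.some_mem_insertNone, Finset.mem_product] at hi
          cases t
          · simp [d, D]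
          · have e := abs_le.1 (h2 p hpK q (by simpa using Or.inr hi.1) n hn hnI)
            simp only [d, D, Option.elim_some, if_true]
            rw [hcast, ev_add]
            rw [ev_sub, ev_sub] at e
            have a1 := fl (ev b M n)
            have a2 := fl (ev b M ((n : ℝ) + p * s M))
            have a3 := fl (ev q M n + ev (dd p (q - b)) M n)
            have a4 := fl (ev q M ((n : ℝ) + p * s M))
            push_cast; rw [abs_le]
            constructor <;>
              linarith [a1.1, a1.2, a2.1, a2.2, a3.1, a3.2, a4.1, a4.2, e.1, e.2]
      · intro i
        rcases i with _ | ⟨q, t⟩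
        · exact hu.cj
        · cases t
          · exact hf q
          · exact (hf q).cj
  have hsum := Finset.sum_le_sum hterm
  rw [Finset.sum_add_distrib, Finset.sum_const, Nat.card_Ico, nsmul_eq_mul] at hsum
  have hbsum : ∑ p ∈ Finset.Ico 1 K, (if p ∈ Finset.range p0 then (M : ℝ) else 0) ≤ p0 * M := by
    rw [← Finset.sum_filter, Finset.sum_const, nsmul_eq_mul]
    gcongr
    calc _ ≤ (Finset.range p0).card := Finset.card_le_card fun k hk => (Finset.mem_filter.1 hk).2
      _ = p0 := by simp
  have hKcast : ((K - 1 : ℕ) : ℝ) ≤ K := by exact_mod_cast Nat.sub_le K 1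
  have hKs : (K : ℝ) * s M ≤ M := by exact_mod_cast h3
  have hfinal : ∀ Sg : ℝ, Sg ≤ ((K - 1 : ℕ) : ℝ) * (ε' * M) + p0 * M →
      A ^ 2 * K ≤ (M + K * s M) * (M + 2 * Sg) → A ≤ ε * M := by
    intro Sg e1 e2
    have e3 : Sg ≤ K * (ε' * M) + p0 * M := e1.trans (by gcongr)
    have e4 : A ^ 2 * K ≤ (ε ^ 2 * M ^ 2) * K := by
      calc A ^ 2 * K ≤ (M + K * s M) * (M + 2 * Sg) := e2
        _ ≤ (M + K * s M) * (M + 2 * (K * (ε' * M) + p0 * M)) := by gcongr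
        _ ≤ (M + M) * (M + 2 * (K * (ε' * M) + p0 * M)) := by gcongr
        _ = 2 * M ^ 2 * (1 + 2 * p0) + 4 * M ^ 2 * K * ε' := by ring
        _ ≤ 2 * M ^ 2 * (K * ε ^ 2 / 8) + 4 * M ^ 2 * K * ε' := by
            gcongr
            rw [le_div_iff₀ (by norm_num)]
            have : ((1 + 2 * (p0 : ℝ)) * 8) / ε ^ 2 ≤ K := by linarith
            rwa [div_le_iff₀ (by positivity)] at this
        _ = (ε ^ 2 * M ^ 2) * K * (1 / 2) := by rw [hε']; ring
        _ ≤ (ε ^ 2 * M ^ 2) * K := by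
            have : 0 ≤ (ε ^ 2 * M ^ 2) * K := by positivity
            linarith
    have e5 := le_of_mul_le_mul_right e4 hKp
    have : A ^ 2 ≤ (ε * M) ^ 2 := by rw [mul_pow]; exact e5
    exact (pow_le_pow_iff_left₀ (norm_nonneg _) (by positivity) (by norm_num)).1 this
  exact hfinal _ (hsum.trans (add_le_add_right hbsum _)) key

end

/-! ### Nondegenerate derivatives -/

section

theorem blk {P : ℝ → Prop} (h : ∀ᶠ t in atTop, P t) : ∀ᶠ M : ℕ in atTop, ∀ t : ℝ, (M : ℝ) ≤ t → P t :=
  tendsto_natCast_atTop_atTop.eventually (eventually_forall_ge_atTop.2 h)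

theorem tau_le (M : ℕ) {t : ℝ} (ht : (M : ℝ) ≤ t) : (tau M : ℝ) ≤ t ^ (1 / 3 : ℝ) :=
  (Nat.floor_le (by positivity)).trans (by gcongr)

theorem le_tau : ∀ᶠ M : ℕ in atTop, 1 ≤ (tau M : ℝ) ∧ ∀ t : ℝ, (M : ℝ) ≤ t → t ≤ 2 * M →
    t ^ (1 / 3 : ℝ) ≤ 4 * tau M := by
  filter_upwards [eventually_ge_atTop 1] with M hM
  have hM1 : (1 : ℝ) ≤ M := by exact_mod_cast hM
  have h1 : (1 : ℝ) ≤ (M : ℝ) ^ (1 / 3 : ℝ) := Real.one_le_rpow hM1 (by norm_num)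
  have h2 : (1 : ℝ) ≤ tau M := by
    have : 1 ≤ tau M := Nat.le_floor (by exact_mod_cast h1)
    exact_mod_cast this
  refine ⟨h2, fun t ht1 ht2 => ?_⟩
  have h3 : (M : ℝ) ^ (1 / 3 : ℝ) < tau M + 1 := Nat.lt_floor_add_one _
  calc t ^ (1 / 3 : ℝ) ≤ (2 * M) ^ (1 / 3 : ℝ) := by gcongr; linarith
    _ = 2 ^ (1 / 3 : ℝ) * (M : ℝ) ^ (1 / 3 : ℝ) := Real.mul_rpow (by norm_num) (by positivity)
    _ ≤ 2 ^ (1 : ℝ) * (M : ℝ) ^ (1 / 3 : ℝ) := by gcongr <;> norm_num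
    _ ≤ 4 * tau M := by rw [Real.rpow_one]; linarith

/-- First order Taylor estimate with a bound on the second derivative. -/
theorem taylor2 {f f1 f2 : ℝ → ℝ} {x y B : ℝ} (h1 : ∀ s ∈ Set.Icc x y, HasDerivAt f (f1 s) s)
    (h2 : ∀ s ∈ Set.Icc x y, HasDerivAt f1 (f2 s) s) (hB : ∀ s ∈ Set.Icc x y, |f2 s| ≤ B)
    {n m : ℝ} (hn : n ∈ Set.Icc x y) (hm : m ∈ Set.Icc x y) :
    |f n - f m - f1 x * (n - m)| ≤ B * (y - x) * |n - m| := by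
  have hxy : x ≤ y := hn.1.trans hn.2
  have hB0 : 0 ≤ B := (abs_nonneg _).trans (hB x ⟨le_rfl, hxy⟩)
  have e1 : ∀ s ∈ Set.Icc x y, |f1 s - f1 x| ≤ B * (y - x) := by
    intro s hs
    have := (convex_Icc x y).norm_image_sub_le_of_norm_hasDerivWithin_le (f := f1) (f' := f2) (C := B)
      (fun s hs => (h2 s hs).hasDerivWithinAt) (fun s hs => hB s hs) ⟨le_rfl, hxy⟩ hs
    rw [Real.norm_eq_abs, Real.norm_eq_abs] at this
    refine this.trans ?_
    rw [abs_of_nonneg (by linarith [hs.1])]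
    gcongr; exact hs.2
  have := (convex_Icc x y).norm_image_sub_le_of_norm_hasDerivWithin_le
    (f := fun s => f s - f1 x * s) (f' := fun s => f1 s - f1 x) (C := B * (y - x))
      (fun s hs => ((h1 s hs).sub (by simpa using (hasDerivAt_id s).const_mul (f1 x))).hasDerivWithinAt)
      e1 hm hn
  rw [Real.norm_eq_abs, Real.norm_eq_abs] at this
  convert this using 2; ring

theorem taylor1 {f f1 : ℝ → ℝ} {x y B : ℝ} (h1 : ∀ s ∈ Set.Icc x y, HasDerivAt f (f1 s) s)
    (hB : ∀ s ∈ Set.Icc x y, |f1 s| ≤ B) (hxy : x ≤ y) : |f y - f x| ≤ B * (y - x) := by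
  have := (convex_Icc x y).norm_image_sub_le_of_norm_hasDerivWithin_le (f := f) (f' := f1) (C := B)
      (fun s hs => (h1 s hs).hasDerivWithinAt) hB ⟨le_rfl, hxy⟩ ⟨hxy, le_rfl⟩
  rw [Real.norm_eq_abs, Real.norm_eq_abs, abs_of_nonneg (a := y - x) (by linarith)] at this
  exact this

/-- Nondegeneracy of the derivative of `F + τ_M G`: there is no cancellation between the two parts
and the derivative is large compared with `1/t`. -/
def Nt (a : VV) : Prop :=
  (∃ c > 0, ∀ᶠ M : ℕ in atTop, ∀ t : ℝ, (M : ℝ) ≤ t → t ≤ 2 * M →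
    c * (|deriv a.1 t| + tau M * |deriv a.2 t|) ≤ |deriv a.1 t + tau M * deriv a.2 t|) ∧
  Tendsto (fun t => t * (|deriv a.1 t| + t ^ (1 / 3 : ℝ) * |deriv a.2 t|)) atTop atTop

theorem Nt_iff {F : ℝ → ℝ} : Nt (F, 0) ↔ Tendsto (fun t => t * |deriv F t|) atTop atTop := by
  unfold Nt
  simp only [Pi.zero_def, deriv_const, abs_zero, mul_zero, add_zero]
  refine ⟨fun h => h.2, fun h => ⟨⟨1, one_pos, Eventually.of_forall fun M t _ _ => by simp⟩, h⟩⟩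

namespace HardyField
variable {H : HardyField} {f g : ℝ → ℝ}

/-- Comparability dichotomy for two elements of a Hardy field. -/
theorem dich (hf : f ∈ H.carrier) (hg : g ∈ H.carrier) :
    (∀ κ > 0, ∀ᶠ t in atTop, |f t| ≤ κ * |g t|) ∨ ∃ C > 0, ∀ᶠ t in atTop, |g t| ≤ C * |f t| := by
  by_cases h : ∃ C > 0, ∀ᶠ t in atTop, |g t| ≤ C * |f t|
  · exact Or.inr h
  left
  intro κ hκ
  rcases H.abs_le_or_ge hf (H.smul_mem κ hg) with h1 | h1
  · filter_upwards [h1] with t ht; rwa [abs_mul, abs_of_pos hκ] at ht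
  · refine absurd ⟨κ⁻¹, by positivity, ?_⟩ h
    filter_upwards [h1] with t ht
    rw [abs_mul, abs_of_pos hκ] at ht
    rw [inv_mul_eq_div, le_div_iff₀ hκ]; linarith

theorem OO_growth {f : ℝ → ℝ} (hf : PolynomialGrowth f) : ∃ d : ℕ, OO f d := by
  obtain ⟨d, -, h⟩ := hf
  refine ⟨d, 1, one_pos, ?_⟩
  filter_upwards [h.norm.eventually_le_const (u := 1) (by simp), eventually_gt_atTop 0] with t ht h0
  rw [norm_div, Real.norm_eq_abs, Real.norm_of_nonneg (by positivity), div_le_iff₀ (by positivity)] at ht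
  rwa [Real.rpow_natCast]

/-- The difference operator `f(t + p) - f(t)`. -/
def Df (p : ℕ) (f : ℝ → ℝ) : ℝ → ℝ := fun t => f (t + p) - f t

theorem Df_mem (p : ℕ) (hf : f ∈ H.carrier) : Df p f ∈ H.carrier := H.sub_mem (H.shift_mem p hf) hf

/-- `Δ_p f` is approximately `p f'`. -/
theorem Df_approx {A : ℝ} (p : ℕ) (hf : f ∈ H.carrier) (hA : OO f A) : ∃ C > 0, ∀ᶠ t in atTop,
    |Df p f t - p * deriv f t| ≤ C / t * |deriv f t| + C / t ^ 3 := by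
  have hA' := deriv_OO hf hA
  obtain ⟨C, hC, h⟩ := flat (H.deriv_mem hf) hA'
  refine ⟨p ^ 2 * C + 1, by positivity, ?_⟩
  filter_upwards [h, eventually_gt_atTop 0, eventually_ge_atTop (p : ℝ),
    eventually_forall_ge_atTop.2 (H.ev_hasDerivAt hf),
    eventually_forall_ge_atTop.2 (H.ev_hasDerivAt (H.deriv_mem hf))] with t h1 h0 hp hd1 hd2
  have := taylor2 (f := f) (f1 := deriv f) (f2 := deriv (deriv f)) (x := t) (y := t + p)
    (B := C / t * |deriv f t| + C / t ^ 3)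
    (fun s hs => hd1 s hs.1) (fun s hs => hd2 s hs.1)
    (fun s hs => h1 s ⟨by linarith [hs.1], by linarith [hs.2]⟩) (n := t + p) (m := t)
    ⟨by linarith [Nat.cast_nonneg (α := ℝ) p], le_rfl⟩ ⟨le_rfl, by linarith [Nat.cast_nonneg (α := ℝ) p]⟩
  simp only [add_sub_cancel_left, Nat.abs_cast] at this
  rw [Df, mul_comm (p : ℝ)]
  refine this.trans ?_
  have e : (C / t * |deriv f t| + C / t ^ 3) * p * p = p ^ 2 * C / t * |deriv f t| + p ^ 2 * C / t ^ 3 := by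
    ring
  rw [e]
  gcongr <;> linarith

theorem Df_OO {c : ℝ} (p : ℕ) (hf : f ∈ H.carrier) (h : OO f c) : OO (Df p f) (c - 1) := by
  obtain ⟨C, hC, h1⟩ := deriv_OO hf h
  obtain ⟨a, ha⟩ := eventually_atTop.1 (h1.and (H.ev_hasDerivAt hf))
  refine ⟨C * (p + 1) * (2 ^ |c - 1|), by positivity, ?_⟩
  filter_upwards [eventually_ge_atTop a, eventually_ge_atTop (p : ℝ), eventually_gt_atTop 0] with t h1 h2 h3
  have hp := Nat.cast_nonneg (α := ℝ) p
  have key : ∀ s ∈ Set.Icc t (t + p), |deriv f s| ≤ C * (2 ^ |c - 1| * t ^ (c - 1)) := by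
    intro s hs
    have hs0 : 0 < s := by linarith [hs.1]
    refine (ha s (by linarith [hs.1])).1.trans ?_
    gcongr
    have hst : s = (s / t) * t := by field_simp
    conv_lhs => rw [hst, Real.mul_rpow (by positivity) h3.le]
    gcongr
    have e1 : 1 ≤ s / t := by rw [le_div_iff₀ h3]; linarith [hs.1]
    have e2 : s / t ≤ 2 := by rw [div_le_iff₀ h3]; linarith [hs.2]
    calc (s / t) ^ (c - 1) ≤ (s / t) ^ |c - 1| := by gcongr; exact le_abs_self _
      _ ≤ 2 ^ |c - 1| := by gcongr
  have := taylor1 (f := f) (f1 := deriv f) (x := t) (y := t + p)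
    (fun s hs => (ha s (by linarith [hs.1])).2) key (by linarith)
  rw [Df]
  refine this.trans ?_
  simp only [add_sub_cancel_left]
  have e3 : 0 ≤ C * (2 ^ |c - 1| * t ^ (c - 1)) := by positivity
  nlinarith [e3]

theorem deriv_Df (p : ℕ) (hf : f ∈ H.carrier) : ∀ᶠ t in atTop, deriv (Df p f) t = Df p (deriv f) t := by
  have h1 := H.ev_hasDerivAt hf
  filter_upwards [eventually_forall_ge_atTop.2 h1] with t ht
  have h2 := ht (t + p) (by linarith [Nat.cast_nonneg (α := ℝ) p])
  exact ((h2.comp_add_const t p).sub (ht t le_rfl)).deriv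

/-- Nondegeneracy survives the van der Corput step in the first phase. -/
theorem nt_phase1 {y E : ℝ → ℝ} {A : ℝ} (hy : y ∈ H.carrier) (hE : E ∈ H.carrier) (hA : OO E A)
    (h : Tendsto (fun t => t * |deriv y t|) atTop atTop ∨
      Tendsto (fun t => t * |deriv (deriv E) t|) atTop atTop) :
    ∀ᶠ p : ℕ in atTop, Tendsto (fun t => t * |deriv (y + Df p E) t|) atTop atTop := by
  set w := deriv y
  set v := deriv (deriv E)
  have hdE := H.deriv_mem hE
  have hAd := deriv_OO hE hA
  have hder : ∀ p : ℕ, ∀ᶠ t in atTop, deriv (y + Df p E) t = w t + Df p (deriv E) t := by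
    intro p
    filter_upwards [deriv_Df p hE, H.ev_hasDerivAt hy, H.ev_hasDerivAt (H.Df_mem p hE)] with t h1 h2 h3
    rw [(h2.add h3).deriv, h1]
  -- it suffices to find a lower bound by a multiple of a large function
  have fin : ∀ (p : ℕ) (z : ℝ → ℝ) (a : ℝ), 0 < a → Tendsto (fun t => t * |z t|) atTop atTop →
      (∀ᶠ t in atTop, a * |z t| - a / t ≤ |w t + Df p (deriv E) t|) →
      Tendsto (fun t => t * |deriv (y + Df p E) t|) atTop atTop := by
    intro p z a ha hz hb
    have h1 : Tendsto (fun t => a * (t * |z t|) + -a) atTop atTop :=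
      tendsto_atTop_add_const_right _ _ (hz.const_mul_atTop ha)
    refine tendsto_atTop_mono' _ ?_ h1
    filter_upwards [hb, hder p, eventually_gt_atTop 0] with t h2 h3 h4
    rw [h3]
    calc a * (t * |z t|) + -a = t * (a * |z t| - a / t) := by field_simp; ring
      _ ≤ _ := by gcongr
  rcases dich (H.deriv_mem hdE) (H.deriv_mem hy) with hd | ⟨K, hK, hd⟩
  · have hw : Tendsto (fun t => t * |w t|) atTop atTop := by
      rcases h with h | h
      · exact h
      · refine tendsto_atTop_mono' _ ?_ h
        filter_upwards [hd 1 one_pos, eventually_gt_atTop 0] with t h1 h2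
        rw [one_mul] at h1; gcongr
    filter_upwards [eventually_gt_atTop 0] with p hp
    have hp' : (0 : ℝ) < p := by exact_mod_cast hp
    obtain ⟨C, hC, hap⟩ := Df_approx (f := deriv E) p hdE hAd
    refine fin p w (1 / 2) (by norm_num) hw ?_
    filter_upwards [hap, hd (1 / (4 * p)) (by positivity), eventually_ge_atTop (4 * C + 1), eventually_ge_atTop C]
      with t h1 h2 h3 h4
    have ht : 0 < t := by linarith
    have e1 : C / t ≤ p := by
      rw [div_le_iff₀ ht]
      have : (1 : ℝ) ≤ p := by exact_mod_cast hp
      nlinarith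
    have e2 : C / t ^ 3 ≤ 1 / 2 / t := by
      rw [div_le_div_iff₀ (by positivity) ht]
      have : 4 * C ≤ t := by linarith
      nlinarith [sq_nonneg t, mul_pos ht ht, mul_pos (mul_pos ht ht) ht]
    have e3 : p * |v t| ≤ 1 / 4 * |w t| := by
      calc p * |v t| ≤ p * (1 / (4 * p) * |w t|) := by gcongr
        _ = _ := by field_simp
    have e4 : C / t * |v t| ≤ p * |v t| := by gcongr
    have e5 := abs_sub_abs_le_abs_sub (Df p (deriv E) t) (p * v t)
    rw [abs_mul, Nat.abs_cast] at e5
    have e6 := abs_sub_abs_le_abs_sub (w t) (-(Df p (deriv E) t))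
    rw [sub_neg_eq_add, abs_neg] at e6
    linarith
  · have hv : Tendsto (fun t => t * |v t|) atTop atTop := by
      rcases h with h | h
      · have h1 := h.const_mul_atTop (inv_pos.2 hK)
        refine tendsto_atTop_mono' _ ?_ h1
        filter_upwards [hd, eventually_gt_atTop 0] with t h1 h2
        calc K⁻¹ * (t * |w t|) ≤ K⁻¹ * (t * (K * |v t|)) := by gcongr
          _ = _ := by field_simp
      · exact h
    filter_upwards [eventually_ge_atTop ⌈K + 2⌉₊] with p hp
    have hp' : K + 2 ≤ (p : ℝ) := Nat.ceil_le.1 hp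
    obtain ⟨C, hC, hap⟩ := Df_approx (f := deriv E) p hdE hAd
    refine fin p v 1 one_pos hv ?_
    filter_upwards [hap, hd, eventually_ge_atTop (C + 1)] with t h1 h2 h3
    have ht : 0 < t := by linarith
    have e1 : C / t ≤ 1 := by rw [div_le_iff₀ ht]; linarith
    have e2 : C / t ^ 3 ≤ 1 / t := by
      rw [div_le_div_iff₀ (by positivity) ht]
      nlinarith [sq_nonneg t, mul_pos ht ht, mul_pos (mul_pos ht ht) ht]
    have e4 : C / t * |v t| ≤ 1 * |v t| := by gcongr
    have e5 := abs_sub_abs_le_abs_sub (p * v t) (Df p (deriv E) t)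
    rw [abs_mul, Nat.abs_cast, abs_sub_comm] at e5
    have e6 := abs_sub_abs_le_abs_sub (Df p (deriv E) t) (-(w t))
    rw [sub_neg_eq_add, abs_neg, add_comm] at e6
    have e7 : (K + 2) * |v t| ≤ p * |v t| := by gcongr
    have h1' : |Df p (deriv E) t - p * v t| ≤ C / t * |v t| + C / t ^ 3 := h1
    linarith
end HardyField

end

section

namespace HardyField
variable {H : HardyField} {f g : ℝ → ℝ}

/-- Nondegeneracy survives the van der Corput step in the second phase. -/
theorem nt_phase2 {F G E : ℝ → ℝ} (hF : F ∈ H.carrier) (hG : G ∈ H.carrier) (hE : E ∈ H.carrier)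
    (h : Nt (F, G) ∨ ((F, G) = (0 : VV) ∧
      Tendsto (fun t => t * (t ^ (1 / 3 : ℝ) * |deriv (deriv E) t|)) atTop atTop)) :
    ∀ᶠ p : ℕ in atTop, Nt (F, G + fun t => p * deriv E t) := by
  set v := deriv (deriv E) with hv
  have hdE := H.deriv_mem hE
  have hdv := H.deriv_mem hdE
  have hdF := H.deriv_mem hF
  have hdG := H.deriv_mem hG
  have hder : ∀ p : ℕ, ∀ᶠ t in atTop, deriv (G + fun t => p * deriv E t) t = deriv G t + p * v t := by
    intro p
    filter_upwards [H.ev_hasDerivAt hG, H.ev_hasDerivAt hdE] with t h2 h3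
    exact (h2.add (h3.const_mul _)).deriv
  have hρ := H.rpow_mem (1 / 3)
  set V : ℝ → ℝ := fun t => t ^ (1 / 3 : ℝ) * |v t| with hV
  set W : ℝ → ℝ := fun t => |deriv F t| + t ^ (1 / 3 : ℝ) * |deriv G t| with hW
  have hdich : (∀ κ > 0, ∀ᶠ t in atTop, V t ≤ κ * W t) ∨ ∃ C > 0, ∀ᶠ t in atTop, W t ≤ C * V t := by
    set S : ℝ → ℝ := (deriv F) * (deriv F) +
      ((fun t => t ^ (1 / 3 : ℝ)) * deriv G) * ((fun t => t ^ (1 / 3 : ℝ)) * deriv G) with hS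
    have hSm : S ∈ H.carrier := H.add_mem (H.mul_mem hdF hdF)
      (H.mul_mem (H.mul_mem hρ hdG) (H.mul_mem hρ hdG))
    have hSv : ∀ᶠ t in atTop, |S t| ≤ W t ^ 2 ∧ W t ^ 2 ≤ 2 * |S t| := by
      filter_upwards [eventually_gt_atTop 0] with t ht
      have e0 : S t = |deriv F t| ^ 2 + (t ^ (1 / 3 : ℝ) * |deriv G t|) ^ 2 := by
        simp only [hS, Pi.add_apply, Pi.mul_apply, mul_pow, sq_abs]; ring
      have e1 : 0 ≤ S t := by rw [e0]; positivity
      rw [abs_of_nonneg e1, e0]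
      have a1 := abs_nonneg (deriv F t)
      have a2 : 0 ≤ t ^ (1 / 3 : ℝ) * |deriv G t| := by positivity
      simp only [hW]
      constructor <;> nlinarith [sq_nonneg (|deriv F t| - t ^ (1 / 3 : ℝ) * |deriv G t|), mul_nonneg a1 a2]
    have hVm : ((fun t => t ^ (1 / 3 : ℝ)) * v) * ((fun t => t ^ (1 / 3 : ℝ)) * v) ∈ H.carrier :=
      H.mul_mem (H.mul_mem hρ hdv) (H.mul_mem hρ hdv)
    have hVv : ∀ t, |(((fun t : ℝ => t ^ (1 / 3 : ℝ)) * v) * ((fun t : ℝ => t ^ (1 / 3 : ℝ)) * v) : ℝ → ℝ) t| = V t ^ 2 := by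
      intro t
      rw [Pi.mul_apply, abs_mul_self, hV, Pi.mul_apply, mul_pow, sq_abs]; ring
    rcases dich hVm hSm with h1 | ⟨C, hC, h1⟩
    · left
      intro κ hκ
      filter_upwards [h1 (κ ^ 2) (by positivity), hSv, eventually_gt_atTop 0] with t h2 h3 ht
      rw [hVv] at h2
      have : V t ^ 2 ≤ (κ * W t) ^ 2 := by
        rw [mul_pow κ]; refine h2.trans ?_; gcongr; exact h3.1
      refine abs_le_of_sq_le_sq' this ?_ |>.2
      simp only [hW]; positivity
    · right
      refine ⟨2 * C + 1, by positivity, ?_⟩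
      filter_upwards [h1, hSv, eventually_gt_atTop 0] with t h2 h3 ht
      rw [hVv] at h2
      have : W t ^ 2 ≤ ((2 * C + 1) * V t) ^ 2 := by
        rw [mul_pow (2 * C + 1)]
        have e1 : 2 * C ≤ (2 * C + 1) ^ 2 := by nlinarith
        calc W t ^ 2 ≤ 2 * |S t| := h3.2
          _ ≤ 2 * (C * V t ^ 2) := by gcongr
          _ = (2 * C) * V t ^ 2 := by ring
          _ ≤ _ := by gcongr
      refine abs_le_of_sq_le_sq' this ?_ |>.2
      simp only [hV]; positivity
  -- a lower bound for the full derivative gives both halves of nondegeneracy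
  have fin : ∀ (p : ℕ) (Z : ℝ → ℝ) (a : ℝ), 0 < a → Tendsto (fun t => t * Z t) atTop atTop →
      (∀ᶠ t in atTop, W t + p * V t ≤ a * Z t) →
      (∃ c > 0, ∀ᶠ M : ℕ in atTop, ∀ t : ℝ, (M : ℝ) ≤ t → t ≤ 2 * M →
        c * Z t ≤ |deriv F t + tau M * (deriv G t + p * v t)|) →
      Nt (F, G + fun t => p * deriv E t) := by
    intro p Z a ha hZ hup ⟨c, hc, hlow⟩
    refine ⟨⟨c / a, by positivity, ?_⟩, ?_⟩
    · filter_upwards [hlow, blk hup, blk (hder p), eventually_gt_atTop 0] with M h1 h2 h3 hM t ht1 ht2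
      have ht0 : (0 : ℝ) < t := lt_of_lt_of_le (by exact_mod_cast hM) ht1
      rw [h3 t ht1]
      refine le_trans ?_ (h1 t ht1 ht2)
      have hτ := tau_le M ht1
      calc c / a * (|deriv F t| + tau M * |deriv G t + p * v t|)
          ≤ c / a * (|deriv F t| + t ^ (1 / 3 : ℝ) * (|deriv G t| + p * |v t|)) := by
            gcongr
            refine (abs_add_le _ _).trans ?_
            rw [abs_mul, Nat.abs_cast]
        _ = c / a * (W t + p * V t) := by simp only [hW, hV]; ring
        _ ≤ c / a * (a * Z t) := by gcongr; exact h2 t ht1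
        _ = c * Z t := by field_simp
    · have h1 := hZ.const_mul_atTop hc
      refine tendsto_atTop_mono' _ ?_ h1
      obtain ⟨M0, hM0⟩ := eventually_atTop.1 hlow
      filter_upwards [eventually_ge_atTop ((M0 : ℝ) + 1), eventually_ge_atTop 1, hder p] with t h2 h3 h4
      have e0 : M0 ≤ ⌊t⌋₊ := Nat.le_floor (by linarith)
      have e1 : (⌊t⌋₊ : ℝ) ≤ t := Nat.floor_le (by linarith)
      have e2 : 1 ≤ (⌊t⌋₊ : ℝ) := by exact_mod_cast Nat.le_floor (by exact_mod_cast h3)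
      have e3 := hM0 _ e0 t e1 (by linarith [Nat.lt_floor_add_one t])
      rw [h4]
      calc c * (t * Z t) = t * (c * Z t) := by ring
        _ ≤ t * |deriv F t + tau ⌊t⌋₊ * (deriv G t + p * v t)| := by gcongr
        _ ≤ _ := by
          gcongr
          refine (abs_add_le _ _).trans ?_
          rw [abs_mul, Nat.abs_cast]
          gcongr
          exact tau_le _ e1
  rcases hdich with hd | ⟨K, hK, hd⟩
  · have hw : (∃ c > 0, ∀ᶠ M : ℕ in atTop, ∀ t : ℝ, (M : ℝ) ≤ t → t ≤ 2 * M →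
        c * (|deriv F t| + tau M * |deriv G t|) ≤ |deriv F t + tau M * deriv G t|) ∧
        Tendsto (fun t => t * W t) atTop atTop := by
      rcases h with h | ⟨h0, h⟩
      · exact h
      · exfalso
        have h1 : F = 0 := congrArg Prod.fst h0
        have h2 : G = 0 := congrArg Prod.snd h0
        have h3 : ∀ᶠ t in atTop, t * V t ≤ 0 := by
          filter_upwards [hd 1 one_pos, eventually_gt_atTop 0] with t h4 h5
          have : W t = 0 := by simp [hW, h1, h2]
          rw [this, mul_zero] at h4
          nlinarith
        obtain ⟨t, h5, h6⟩ := (h3.and (h.eventually_gt_atTop 0)).exists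
        exact absurd h6 (not_lt.2 h5)
    obtain ⟨⟨c, hc, hlow⟩, hw⟩ := hw
    filter_upwards [eventually_gt_atTop 0] with p hp
    have hp' : (0 : ℝ) < p := by exact_mod_cast hp
    refine fin p W 2 (by norm_num) hw ?_ ⟨c / 8, by positivity, ?_⟩
    · filter_upwards [hd (1 / p) (by positivity)] with t ht
      have : p * V t ≤ p * (1 / p * W t) := by gcongr
      have e : p * (1 / p * W t) = W t := by field_simp
      linarith
    · filter_upwards [hlow, le_tau, blk (hd (c / (8 * p)) (by positivity)), eventually_gt_atTop 0]
        with M h1 h2 h3 hM t ht1 ht2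
      have ht0 : (0 : ℝ) < t := lt_of_lt_of_le (by exact_mod_cast hM) ht1
      have e1 := h1 t ht1 ht2
      have e2 := h2.2 t ht1 ht2
      have e3 : W t ≤ 4 * (|deriv F t| + tau M * |deriv G t|) := by
        simp only [hW]
        have : t ^ (1 / 3 : ℝ) * |deriv G t| ≤ 4 * tau M * |deriv G t| := by gcongr
        linarith [abs_nonneg (deriv F t)]
      have e4 : p * V t ≤ c / 8 * W t := by
        calc p * V t ≤ p * (c / (8 * p) * W t) := by gcongr; exact h3 t ht1
          _ = _ := by field_simp
      have e5 : |tau M * (p * v t)| ≤ p * V t := by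
        rw [abs_mul, abs_mul, Nat.abs_cast, Nat.abs_cast]
        have := tau_le M ht1
        calc (tau M : ℝ) * (p * |v t|) ≤ t ^ (1 / 3 : ℝ) * (p * |v t|) := by gcongr
          _ = _ := by simp only [hV]; ring
      have e6 := abs_sub_abs_le_abs_sub (deriv F t + tau M * deriv G t) (-(tau M * (p * v t)))
      rw [abs_neg, sub_neg_eq_add] at e6
      have e7 : deriv F t + tau M * (deriv G t + p * v t) =
        deriv F t + tau M * deriv G t + tau M * (p * v t) := by ring
      rw [e7]
      have e8 : c * W t ≤ 4 * (c * (|deriv F t| + tau M * |deriv G t|)) := by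
        calc c * W t ≤ c * (4 * (|deriv F t| + tau M * |deriv G t|)) := by gcongr
          _ = _ := by ring
      linarith
  · have hvt : Tendsto (fun t => t * V t) atTop atTop := by
      rcases h with h | ⟨-, h⟩
      · have h1 := h.2.const_mul_atTop (inv_pos.2 hK)
        refine tendsto_atTop_mono' _ ?_ h1
        filter_upwards [hd, eventually_gt_atTop 0] with t h1 h2
        calc K⁻¹ * (t * W t) ≤ K⁻¹ * (t * (K * V t)) := by gcongr
          _ = _ := by field_simp
      · exact h
    filter_upwards [eventually_ge_atTop ⌈4 * K + 4⌉₊] with p hp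
    have hp' : 4 * K + 4 ≤ (p : ℝ) := Nat.ceil_le.1 hp
    have hp0 : (0 : ℝ) < p := by linarith
    refine fin p V (K + p) (by positivity) hvt ?_ ⟨1, one_pos, ?_⟩
    · filter_upwards [hd] with t ht; linarith
    · filter_upwards [le_tau, blk hd, eventually_gt_atTop 0] with M h2 h3 hM t ht1 ht2
      have ht0 : (0 : ℝ) < t := lt_of_lt_of_le (by exact_mod_cast hM) ht1
      have e2 := h2.2 t ht1 ht2
      have hV0 : 0 ≤ V t := by simp only [hV]; positivity
      have e5 : p * V t ≤ 4 * |tau M * (p * v t)| := by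
        rw [abs_mul, abs_mul, Nat.abs_cast, Nat.abs_cast]
        calc p * V t = t ^ (1 / 3 : ℝ) * (p * |v t|) := by simp only [hV]; ring
          _ ≤ 4 * tau M * (p * |v t|) := by gcongr
          _ = _ := by ring
      have e4 : |deriv F t + tau M * deriv G t| ≤ W t := by
        refine (abs_add_le _ _).trans ?_
        rw [abs_mul, Nat.abs_cast]
        simp only [hW]
        gcongr
        exact tau_le _ ht1
      have e6 := abs_sub_abs_le_abs_sub (tau M * (p * v t)) (-(deriv F t + tau M * deriv G t))
      rw [abs_neg, sub_neg_eq_add] at e6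
      have e7 : deriv F t + tau M * (deriv G t + p * v t) =
        tau M * (p * v t) + (deriv F t + tau M * deriv G t) := by ring
      rw [e7]
      have e8 := h3 t ht1
      have e9 : (4 * K + 4) * V t ≤ p * V t := by gcongr
      linarith
end HardyField

end

/-! ### Families with bounded derivative -/

section

variable {X : Type} [MeasurableSpace X] {μ : Measure X} [IsProbabilityMeasure μ] {T : ℤ → X → X}

theorem sum_Ico_split (a : ℤ → ℂ) {x y z : ℤ} (h1 : x ≤ y) (h2 : y ≤ z) :
    ∑ n ∈ Finset.Ico x z, a n = ∑ n ∈ Finset.Ico x y, a n + ∑ n ∈ Finset.Ico y z, a n := by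
  rw [← Finset.sum_union (Finset.Ico_disjoint_Ico_consecutive x y z),
    Finset.Ico_union_Ico_eq_Ico h1 h2]

/-- A sum over a block is controlled by the sums over `K` equal pieces. -/
theorem sum_pieces (M K : ℕ) (hK : 0 < K) (a : ℤ → ℂ) (ha : ∀ n, ‖a n‖ ≤ 1) (ε : ℝ)
    (h : ∀ i < K, ‖∑ n ∈ Finset.Ico ((M : ℤ) + (i * (M / K) : ℕ)) ((M : ℤ) + (i * (M / K) : ℕ) + (M / K : ℕ)), a n‖
      ≤ ε * (M / K : ℕ)) (hε : 0 ≤ ε) :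
    ‖∑ n ∈ Finset.Ico (M : ℤ) (M + M), a n‖ ≤ ε * M + K := by
  set L := M / K with hL
  have hKL : K * L ≤ M := Nat.mul_div_le M K
  clear_value L
  have h1 : ∀ j ≤ K, ‖∑ n ∈ Finset.Ico (M : ℤ) (M + (j * L : ℕ)), a n‖ ≤ j * (ε * L) := by
    intro j
    induction j with
    | zero => simp
    | succ j ih =>
      intro hj
      have e : ∑ n ∈ Finset.Ico (M : ℤ) (M + ((j + 1) * L : ℕ)), a n =
          ∑ n ∈ Finset.Ico (M : ℤ) (M + (j * L : ℕ)), a n +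
          ∑ n ∈ Finset.Ico ((M : ℤ) + (j * L : ℕ)) ((M : ℤ) + (j * L : ℕ) + (L : ℕ)), a n := by
        rw [← sum_Ico_split a (by omega) (by omega)]
        congr 2; push_cast; ring
      rw [e]
      refine (norm_add_le _ _).trans ?_
      have := ih (by omega)
      have := h j (by omega)
      rw [Nat.cast_succ]; linarith
  have hKL' : M < K * L + K := by
    have := Nat.lt_div_mul_add (a := M) hK
    rw [hL, mul_comm]; exact this
  rw [sum_Ico_split a (x := (M : ℤ)) (y := M + (K * L : ℕ)) (z := M + M) (by omega) (by omega)]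
  refine (norm_add_le _ _).trans (add_le_add ?_ ?_)
  · refine (h1 K le_rfl).trans ?_
    have : (K : ℝ) * L ≤ M := by exact_mod_cast hKL
    calc (K : ℝ) * (ε * L) = ε * (K * L) := by ring
      _ ≤ _ := by gcongr
  · refine (norm_sum_le _ _).trans ((Finset.sum_le_sum fun n _ => ha n).trans ?_)
    rw [Finset.sum_const, nsmul_eq_mul, mul_one, Int.card_Ico]
    have : ((M : ℤ) + M - (M + (K * L : ℕ))).toNat ≤ K := by omega
    exact_mod_cast this

theorem floor_diff (p q z B : ℝ) (h : |p - q - z| ≤ B) : |((⌊p⌋ : ℝ) - ⌊q⌋) - z| ≤ 1 + B := by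
  have := abs_le.1 h
  have h1 := Int.floor_le p
  have h2 := Int.lt_floor_add_one p
  have h3 := Int.floor_le q
  have h4 := Int.lt_floor_add_one q
  rw [abs_le]; constructor <;> linarith

/-- Pure arithmetic in the terminal step: the derivative of `F + τ G` on a short piece stays close to
its value `β` at the left end. -/
theorem term_arith {A C c η x L K W β B τ M q : ℝ} (hA : A ≤ C / x * W + 2 * τ * C / x ^ 3) 
    (hc : 0 < c) (hη : 0 < η) (hM : 0 < M) (hx : M ≤ x) (hL0 : 0 ≤ L) (hL : L * K ≤ M) (hK : C / (c * η) ≤ K)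
    (hW : c * W ≤ β) (hW0 : 0 ≤ W) (hτ : τ * (2 * C) ≤ M) (hq : 0 ≤ q) (hqL : q ≤ L) (hK1 : 1 ≤ K)
    (hB : B ≤ A * L * q) : B ≤ 1 + η * β * q := by
  have hx0 : 0 < x := by linarith
  have hLM : L ≤ M := by nlinarith
  have hKL : C * L ≤ (c * η) * x := by
    rw [div_le_iff₀ (by positivity)] at hK
    calc C * L ≤ K * (c * η) * L := by gcongr
      _ = (c * η) * (L * K) := by ring
      _ ≤ (c * η) * x := by gcongr; linarith
  have h1 : C / x * W * L * q ≤ η * β * q := by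
    have : C / x * W * L = (C * L) / x * W := by ring
    rw [this]
    have h2 : (C * L) / x ≤ c * η := by rw [div_le_iff₀ hx0]; exact hKL
    calc (C * L) / x * W * q ≤ (c * η) * W * q := by gcongr
      _ = η * (c * W) * q := by ring
      _ ≤ η * β * q := by gcongr
  have h2 : 2 * τ * C / x ^ 3 * L * q ≤ 1 := by
    have : 2 * τ * C / x ^ 3 * L * q = (τ * (2 * C)) * L * q / x ^ 3 := by ring
    rw [this, div_le_one (by positivity)]
    calc (τ * (2 * C)) * L * q ≤ M * M * M := by gcongr; linarith
      _ ≤ x * x * x := by gcongr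
      _ = x ^ 3 := by ring
  calc B ≤ A * L * q := hB
    _ ≤ (C / x * W + 2 * τ * C / x ^ 3) * L * q := by gcongr
    _ = C / x * W * L * q + 2 * τ * C / x ^ 3 * L * q := by ring
    _ ≤ _ := by linarith

theorem tau_small (C : ℝ) : ∀ᶠ M : ℕ in atTop, (tau M : ℝ) * C ≤ M := by
  have h : Tendsto (fun M : ℕ => (M : ℝ) ^ (2 / 3 : ℝ)) atTop atTop :=
    (tendsto_rpow_atTop (by norm_num)).comp tendsto_natCast_atTop_atTop
  filter_upwards [h.eventually_ge_atTop C, eventually_gt_atTop 0] with M h1 h2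
  have hM : (0 : ℝ) < M := by exact_mod_cast h2
  calc (tau M : ℝ) * C ≤ tau M * (M : ℝ) ^ (2 / 3 : ℝ) := by gcongr
    _ ≤ (M : ℝ) ^ (1 / 3 : ℝ) * (M : ℝ) ^ (2 / 3 : ℝ) := by gcongr; exact tau_le M le_rfl
    _ = M := by rw [← Real.rpow_add hM]; norm_num

theorem tau_sq_small {C a : ℝ} (ha : a < -(2 / 3)) : ∀ᶠ M : ℕ in atTop, (tau M : ℝ) ^ 2 * (C * (M : ℝ) ^ a) ≤ 1 := by
  have h : Tendsto (fun M : ℕ => |C| * (M : ℝ) ^ (2 / 3 + a)) atTop (𝓝 (|C| * 0)) := by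
    refine Tendsto.const_mul _ ?_
    have := tendsto_rpow_neg_atTop (y := -(2 / 3 + a)) (by linarith)
    rw [neg_neg] at this
    exact this.comp tendsto_natCast_atTop_atTop
  rw [mul_zero] at h
  filter_upwards [h.eventually_le_const one_pos, eventually_gt_atTop 0] with M h1 h2
  have hM : (0 : ℝ) < M := by exact_mod_cast h2
  refine le_trans ?_ h1
  have e : (tau M : ℝ) ^ 2 ≤ (M : ℝ) ^ (2 / 3 : ℝ) := by
    calc (tau M : ℝ) ^ 2 ≤ ((M : ℝ) ^ (1 / 3 : ℝ)) ^ 2 := by gcongr; exact tau_le M le_rfl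
      _ = _ := by rw [← Real.rpow_natCast, ← Real.rpow_mul hM.le]; norm_num
  calc (tau M : ℝ) ^ 2 * (C * (M : ℝ) ^ a) ≤ (tau M : ℝ) ^ 2 * (|C| * (M : ℝ) ^ a) := by
        gcongr; exact le_abs_self _
    _ ≤ (M : ℝ) ^ (2 / 3 : ℝ) * (|C| * (M : ℝ) ^ a) := by gcongr
    _ = _ := by rw [Real.rpow_add hM]; ring

theorem tau_gap {C : ℝ} : ∀ᶠ M : ℕ in atTop, (tau M : ℝ) * (C * (M : ℝ) ^ (-(3 / 4) : ℝ)) ≤ 1 := by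
  filter_upwards [tau_sq_small (C := |C|) (a := -(3 / 4)) (by norm_num), le_tau] with M h1 h2
  refine le_trans ?_ h1
  calc (tau M : ℝ) * (C * (M : ℝ) ^ (-(3 / 4) : ℝ)) ≤ tau M * (|C| * (M : ℝ) ^ (-(3 / 4) : ℝ)) := by
        gcongr; exact le_abs_self _
    _ ≤ _ := by
      gcongr
      nlinarith [h2.1]

end

section

variable {X : Type} [MeasurableSpace X] {μ : Measure X} [IsProbabilityMeasure μ] {T : ℤ → X → X}
variable {H : HardyField}
open HardyField

/-- What is needed of one phase `a = (F, G)` on a piece of relative length `1/K` of a block: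
almost linearity with a bounded slope `β` of size much larger than the reciprocal of the length. -/
theorem piece (a : VV) (h1 : a.1 ∈ H.carrier) (h2 : a.2 ∈ H.carrier) (hb : OO (deriv a.1) 0)
    (hg : OO (deriv a.2) (-(3 / 4))) (hN : Nt a) :
    ∃ Bd ≥ 0, ∀ η > 0, ∃ K0 : ℕ, ∀ K ≥ K0, ∀ R : ℝ, ∀ᶠ M : ℕ in atTop, ∀ i < K, ∃ β : ℝ, |β| ≤ Bd ∧
      R ≤ (M / K : ℕ) * |β| ∧
      ∀ n ∈ Finset.Ico ((M : ℤ) + (i * (M / K) : ℕ)) ((M : ℤ) + (i * (M / K) : ℕ) + (M / K : ℕ)),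
      ∀ m ∈ Finset.Ico ((M : ℤ) + (i * (M / K) : ℕ)) ((M : ℤ) + (i * (M / K) : ℕ) + (M / K : ℕ)),
      |((⌊ev a M n⌋ : ℝ) - ⌊ev a M m⌋) - β * (n - m)| ≤ 2 + η * |β| * |(n : ℝ) - m| := by
  obtain ⟨F, G⟩ := a
  simp only at h1 h2 hb hg
  obtain ⟨⟨c, hc, hlow⟩, hlarge⟩ := hN
  simp only at hlow hlarge
  have hdF := H.deriv_mem h1
  have hdG := H.deriv_mem h2
  obtain ⟨C1, hC1, hf1⟩ := flat hdF hb
  obtain ⟨C2, hC2, hf2⟩ := flat hdG hg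
  obtain ⟨D1, hD1, hb1⟩ := hb
  obtain ⟨D2, hD2, hb2⟩ := hg
  set C := C1 + C2 with hC
  have hCp : 0 < C := by positivity
  refine ⟨D1 + 1, by positivity, fun η hη => ⟨⌈C / (c * η)⌉₊ + 1, fun K hK R => ?_⟩⟩
  have hK1 : 1 ≤ K := by omega
  have hK1' : (1 : ℝ) ≤ K := by exact_mod_cast hK1
  have hKC : C / (c * η) ≤ K := (Nat.le_ceil _).trans (by exact_mod_cast (by omega : ⌈C / (c * η)⌉₊ ≤ K))
  filter_upwards [hlow, blk (hlarge.eventually_ge_atTop (16 * K * |R| / c)), blk hf1, blk hf2, blk hb1, blk hb2,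
    blk (H.ev_hasDerivAt h1), blk (H.ev_hasDerivAt h2), blk (H.ev_hasDerivAt hdF),
    blk (H.ev_hasDerivAt hdG), le_tau, tau_small (2 * C), tau_gap (C := D2), eventually_ge_atTop (2 * K)]
    with M a1 a2 a3 a4 a5 a6 a7 a8 a9 a10 a11 a12 a13 a14 i hi
  have hM1 : 1 ≤ M := by omega
  have hMp : (0 : ℝ) < M := by exact_mod_cast hM1
  have hLK : (M / K) * K ≤ M := Nat.div_mul_le_self M K
  have hLK2 : M < (M / K) * K + K := Nat.lt_div_mul_add (by omega)
  generalize hL : M / K = L at *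
  have hLKr : (L : ℝ) * K ≤ M := by exact_mod_cast hLK
  have hLKr2 : (M : ℝ) ≤ 2 * K * L := by
    have h : (M : ℝ) ≤ L * K + K := by exact_mod_cast hLK2.le
    have h' : 2 * (K : ℝ) ≤ M := by exact_mod_cast a14
    nlinarith
  have hiL : ((i * L : ℕ) : ℝ) + L ≤ M := by
    have : i * L + L ≤ M := by
      calc i * L + L = (i + 1) * L := by ring
        _ ≤ K * L := Nat.mul_le_mul_right _ hi
        _ ≤ M := by rw [mul_comm]; exact hLK
    exact_mod_cast this
  set x : ℝ := (M : ℝ) + (i * L : ℕ) with hx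
  have hL0 : (0 : ℝ) ≤ L := Nat.cast_nonneg _
  have hxM : (M : ℝ) ≤ x := by rw [hx]; linarith [Nat.cast_nonneg (α := ℝ) (i * L)]
  have hx2 : x + L ≤ 2 * M := by rw [hx]; linarith
  have hxp : 0 < x := by linarith
  have hτ1 := a11.1
  set τ : ℝ := ((tau M : ℕ) : ℝ) with hτ
  set W := |deriv F x| + τ * |deriv G x| with hW
  have hW0 : 0 ≤ W := by positivity
  have hlow' : c * W ≤ |deriv F x + τ * deriv G x| := a1 x hxM (by linarith)
  refine ⟨deriv F x + τ * deriv G x, ?_, ?_, ?_⟩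
  · refine (abs_add_le _ _).trans (add_le_add ?_ ?_)
    · have := a5 x hxM; rwa [Real.rpow_zero, mul_one] at this
    · rw [abs_mul, hτ, Nat.abs_cast]
      refine le_trans ?_ a13
      gcongr
      refine (a6 x hxM).trans ?_
      gcongr D2 * ?_
      exact Real.rpow_le_rpow_of_nonpos hMp hxM (by norm_num)
  · have e1 := a2 x hxM
    have e2 := a11.2 x hxM (by linarith)
    have e3 : |deriv F x| + x ^ (1 / 3 : ℝ) * |deriv G x| ≤ 4 * W := by
      have : x ^ (1 / 3 : ℝ) * |deriv G x| ≤ 4 * τ * |deriv G x| := by gcongr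
      rw [hW]; linarith [abs_nonneg (deriv F x)]
    rw [div_le_iff₀ hc] at e1
    have e4 : 16 * K * |R| ≤ 4 * K * (4 * (L * (c * W))) := by
      calc 16 * K * |R| ≤ x * (|deriv F x| + x ^ (1 / 3 : ℝ) * |deriv G x|) * c := e1
        _ ≤ (2 * (2 * K * L)) * (4 * W) * c := by gcongr; linarith
        _ = _ := by ring
    have e5 : |R| ≤ L * (c * W) := by
      have : 0 < 16 * (K : ℝ) := by positivity
      nlinarith
    calc R ≤ |R| := le_abs_self _
      _ ≤ L * (c * W) := e5
      _ ≤ _ := by gcongr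
  · intro n hn m hm
    rw [Finset.mem_Ico] at hn hm
    have cast : ∀ k : ℤ, (M : ℤ) + (i * L : ℕ) ≤ k ∧ k < (M : ℤ) + (i * L : ℕ) + L →
        (k : ℝ) ∈ Set.Icc x (x + L) := by
      intro k hk
      constructor
      · rw [hx]; exact_mod_cast hk.1
      · rw [hx]; exact_mod_cast hk.2.le
    have hn' := cast n hn
    have hm' := cast m hm
    have key := taylor2 (f := ev (F, G) M) (f1 := fun s => deriv F s + τ * deriv G s)
      (f2 := fun s => deriv (deriv F) s + τ * deriv (deriv G) s) (x := x) (y := x + L)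
      (B := C / x * W + 2 * τ * C / x ^ 3)
      (fun s hs => (a7 s (by linarith [hs.1])).add ((a8 s (by linarith [hs.1])).const_mul _))
      (fun s hs => (a9 s (by linarith [hs.1])).add ((a10 s (by linarith [hs.1])).const_mul _))
      (fun s hs => ?_) hn' hm'
    · have hq : |(n : ℝ) - m| ≤ L := by
        rw [abs_le]; constructor <;> linarith [hn'.1, hn'.2, hm'.1, hm'.2]
      have := term_arith le_rfl hc hη hMp hxM hL0 hLKr hKC hlow' hW0 a12 (abs_nonneg ((n : ℝ) - m)) hq
        hK1' (B := |ev (F, G) M n - ev (F, G) M m - (deriv F x + τ * deriv G x) * ((n : ℝ) - m)|) (by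
          refine key.trans (le_of_eq ?_)
          ring)
      have h3 := floor_diff _ _ _ _ this
      linarith
    · have hs' : s ∈ Set.Icc (x / 2) (2 * x) :=
        ⟨by linarith [hs.1], by linarith [hs.2]⟩
      refine (abs_add_le _ _).trans ?_
      rw [abs_mul, abs_of_nonneg (by linarith : 0 ≤ τ)]
      have b1 := a3 x hxM s hs'
      have b2 := a4 x hxM s hs'
      calc |deriv (deriv F) s| + τ * |deriv (deriv G) s|
          ≤ (C1 / x * |deriv F x| + C1 / x ^ 3) + τ * (C2 / x * |deriv G x| + C2 / x ^ 3) := by gcongr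
        _ ≤ (C / x * |deriv F x| + τ * C / x ^ 3) + τ * (C / x * |deriv G x| + C / x ^ 3) := by
            have u1 : C1 ≤ C := by rw [hC]; linarith
            have u2 : C2 ≤ C := by rw [hC]; linarith
            have u3 : C1 ≤ τ * C := by nlinarith
            gcongr
        _ = _ := by rw [hW]; ring

/-- Families with bounded derivatives are controlled by null functions. -/
theorem good_term (hS : Sys μ T) {u : X → ℂ} (hu : Bdd u) (hn : Null μ T u) (Y : Finset VV)
    (hY : ∀ a ∈ Y, a.1 ∈ H.carrier ∧ a.2 ∈ H.carrier ∧ OO (deriv a.1) 0 ∧ OO (deriv a.2) (-(3 / 4)) ∧ Nt a) :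
    Good μ T u Y := by
  classical
  have hp : ∀ a : VV, ∃ Bd : ℝ, 0 ≤ Bd ∧ (a ∈ Y → ∀ η > 0, ∃ K0 : ℕ, ∀ K ≥ K0, ∀ R : ℝ, ∀ᶠ M : ℕ in atTop,
      ∀ i < K, ∃ β : ℝ, |β| ≤ Bd ∧ R ≤ (M / K : ℕ) * |β| ∧
      ∀ n ∈ Finset.Ico ((M : ℤ) + (i * (M / K) : ℕ)) ((M : ℤ) + (i * (M / K) : ℕ) + (M / K : ℕ)),
      ∀ m ∈ Finset.Ico ((M : ℤ) + (i * (M / K) : ℕ)) ((M : ℤ) + (i * (M / K) : ℕ) + (M / K : ℕ)),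
      |((⌊ev a M n⌋ : ℝ) - ⌊ev a M m⌋) - β * (n - m)| ≤ 2 + η * |β| * |(n : ℝ) - m|) := by
    intro a
    by_cases ha : a ∈ Y
    · obtain ⟨b1, b2, b3, b4, b5⟩ := hY a ha
      obtain ⟨Bd, h0, h⟩ := piece a b1 b2 b3 b4 b5
      exact ⟨Bd, h0, fun _ => h⟩
    · exact ⟨0, le_rfl, fun h => absurd h ha⟩
  choose Bd hBd0 hBd using hp
  intro ε hε
  set BD := ∑ a ∈ Y, Bd a with hBD
  have hBD0 : 0 ≤ BD := Finset.sum_nonneg fun a _ => hBd0 a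
  obtain ⟨γ, hγ, Q0, hZ⟩ := lemmaZ hS Y.card 2 BD (ε / 2) (by positivity) (by norm_num) hBD0
  obtain ⟨l, hl1, hl2, hl3⟩ := Null_iff.1 hn Y.card γ hγ Q0
  obtain ⟨η, hη, R, hconc⟩ := hZ u hu l hl1 hl2 hl3
  have hK : ∀ a : VV, ∃ K0 : ℕ, a ∈ Y → ∀ K ≥ K0, ∀ R : ℝ, ∀ᶠ M : ℕ in atTop, ∀ i < K, ∃ β : ℝ, |β| ≤ Bd a ∧
      R ≤ (M / K : ℕ) * |β| ∧
      ∀ n ∈ Finset.Ico ((M : ℤ) + (i * (M / K) : ℕ)) ((M : ℤ) + (i * (M / K) : ℕ) + (M / K : ℕ)),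
      ∀ m ∈ Finset.Ico ((M : ℤ) + (i * (M / K) : ℕ)) ((M : ℤ) + (i * (M / K) : ℕ) + (M / K : ℕ)),
      |((⌊ev a M n⌋ : ℝ) - ⌊ev a M m⌋) - β * (n - m)| ≤ 2 + η * |β| * |(n : ℝ) - m| := by
    intro a
    by_cases ha : a ∈ Y
    · obtain ⟨K0, h⟩ := hBd a ha η hη
      exact ⟨K0, fun _ => h⟩
    · exact ⟨0, fun h => absurd h ha⟩
  choose K0 hK0 using hK
  set K := (∑ a ∈ Y, K0 a) + 1 with hKdef
  have hall : ∀ᶠ M : ℕ in atTop, ∀ a ∈ Y, ∀ i < K, ∃ β : ℝ, |β| ≤ Bd a ∧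
      R ≤ (M / K : ℕ) * |β| ∧
      ∀ n ∈ Finset.Ico ((M : ℤ) + (i * (M / K) : ℕ)) ((M : ℤ) + (i * (M / K) : ℕ) + (M / K : ℕ)),
      ∀ m ∈ Finset.Ico ((M : ℤ) + (i * (M / K) : ℕ)) ((M : ℤ) + (i * (M / K) : ℕ) + (M / K : ℕ)),
      |((⌊ev a M n⌋ : ℝ) - ⌊ev a M m⌋) - β * (n - m)| ≤ 2 + η * |β| * |(n : ℝ) - m| := by
    rw [Finset.eventually_all]
    intro a ha
    exact hK0 a ha K ((Finset.single_le_sum (fun a _ => Nat.zero_le _) ha).trans (Nat.le_succ _)) R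
  obtain ⟨M0, hM0⟩ := eventually_atTop.1 hall
  obtain ⟨M1, hM1⟩ := exists_nat_ge (2 * K / ε)
  refine ⟨max M0 M1, fun M hM c hc f hf => ?_⟩
  have h1 := hM0 M (le_trans (le_max_left _ _) hM)
  have h2 : (K : ℝ) ≤ ε / 2 * M := by
    have : (M1 : ℝ) ≤ M := by exact_mod_cast le_trans (le_max_right _ _) hM
    have h3 := hM1.trans this
    rw [div_le_iff₀ hε] at h3
    linarith
  have h3 := sum_pieces M K (by omega)
    (fun n => c n * ∫ y, u y * ∏ a ∈ Y, f a (T ⌊ev a M n⌋ y) ∂μ) ?_ (ε / 2) ?_ (by positivity)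
  · linarith
  · intro n
    rw [norm_mul]
    exact mul_le_one₀ (hc n) (norm_nonneg _)
      (Bdd.norm_integral_le (hu.mul (Bdd.prod fun a _ => hS.bdd (hf a) _)))
  · intro i hi
    have h4 : ∀ a : VV, ∃ β : ℝ, a ∈ Y → |β| ≤ Bd a ∧ R ≤ (M / K : ℕ) * |β| ∧
      ∀ n ∈ Finset.Ico ((M : ℤ) + (i * (M / K) : ℕ)) ((M : ℤ) + (i * (M / K) : ℕ) + (M / K : ℕ)),
      ∀ m ∈ Finset.Ico ((M : ℤ) + (i * (M / K) : ℕ)) ((M : ℤ) + (i * (M / K) : ℕ) + (M / K : ℕ)),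
      |((⌊ev a M n⌋ : ℝ) - ⌊ev a M m⌋) - β * (n - m)| ≤ 2 + η * |β| * |(n : ℝ) - m| := by
      intro a
      by_cases ha : a ∈ Y
      · obtain ⟨β, h⟩ := h1 a ha i hi; exact ⟨β, fun _ => h⟩
      · exact ⟨0, fun h => absurd h ha⟩
    choose β hβ using h4
    exact hconc Y rfl _ (M / K) (fun a n => ⌊ev a M n⌋) β (fun a ha => (hβ a ha).2.2)
      (fun a ha => (hβ a ha).1.trans (Finset.single_le_sum (fun a _ => hBd0 a) ha))
      (fun a ha => (hβ a ha).2.1) c hc f hf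

end

/-! ### Seminorm control -/

section

variable {X : Type} [MeasurableSpace X] {μ : Measure X} [IsProbabilityMeasure μ] {T : ℤ → X → X}
variable {H : HardyField}
open HardyField

/-- The levels of the first phase: pairs `(F, 0)` with `F = O(t^{l - 3/4})`. -/
def U1 (H : HardyField) (l : ℕ) : AddSubgroup VV where
  carrier := {x | x.1 ∈ H.carrier ∧ OO x.1 ((l : ℝ) - 3 / 4) ∧ x.2 = 0}
  zero_mem' := ⟨H.zero_mem, OO.zero _, rfl⟩
  add_mem' := fun h1 h2 => ⟨H.add_mem h1.1 h2.1, h1.2.1.add h2.2.1, by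
    rw [Prod.snd_add, h1.2.2, h2.2.2, add_zero]⟩
  neg_mem' := fun h1 => ⟨H.neg_mem h1.1, h1.2.1.neg, by rw [Prod.snd_neg, h1.2.2, neg_zero]⟩

/-- The levels of the second phase: `(F, G)` with `F = O(t^{5/4})` and `G = O(t^{1/4})` at the top,
then `F = 0`, then `0`. -/
def U2 (H : HardyField) : ℕ → AddSubgroup VV
  | 0 => ⊥
  | 1 => { carrier := {x | x.1 = 0 ∧ x.2 ∈ H.carrier ∧ OO x.2 (1 / 4)}
           zero_mem' := ⟨rfl, H.zero_mem, OO.zero _⟩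
           add_mem' := fun h1 h2 => ⟨by rw [Prod.fst_add, h1.1, h2.1, add_zero],
              H.add_mem h1.2.1 h2.2.1, h1.2.2.add h2.2.2⟩
           neg_mem' := fun h1 => ⟨by rw [Prod.fst_neg, h1.1, neg_zero], H.neg_mem h1.2.1, h1.2.2.neg⟩ }
  | _ + 2 => { carrier := {x | (x.1 ∈ H.carrier ∧ OO x.1 (5 / 4)) ∧ x.2 ∈ H.carrier ∧ OO x.2 (1 / 4)}
               zero_mem' := ⟨⟨H.zero_mem, OO.zero _⟩, H.zero_mem, OO.zero _⟩
               add_mem' := fun h1 h2 => ⟨⟨H.add_mem h1.1.1 h2.1.1, h1.1.2.add h2.1.2⟩,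
                  H.add_mem h1.2.1 h2.2.1, h1.2.2.add h2.2.2⟩
               neg_mem' := fun h1 => ⟨⟨H.neg_mem h1.1.1, h1.1.2.neg⟩, H.neg_mem h1.2.1, h1.2.2.neg⟩ }

theorem mem_U1 {l : ℕ} {x : VV} : x ∈ U1 H l ↔ x.1 ∈ H.carrier ∧ OO x.1 ((l : ℝ) - 3 / 4) ∧ x.2 = 0 := Iff.rfl
theorem mem_U2_0 {x : VV} : x ∈ U2 H 0 ↔ x = 0 := Iff.rfl
theorem mem_U2_1 {x : VV} : x ∈ U2 H 1 ↔ x.1 = 0 ∧ x.2 ∈ H.carrier ∧ OO x.2 (1 / 4) := Iff.rfl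
theorem mem_U2_2 {l : ℕ} {x : VV} : x ∈ U2 H (l + 2) ↔
    (x.1 ∈ H.carrier ∧ OO x.1 (5 / 4)) ∧ x.2 ∈ H.carrier ∧ OO x.2 (1 / 4) := Iff.rfl

theorem U1_mono : Monotone (U1 H) := by
  intro a b hab x hx
  rw [mem_U1] at hx ⊢
  refine ⟨hx.1, hx.2.1.mono ?_, hx.2.2⟩
  have : (a : ℝ) ≤ b := by exact_mod_cast hab
  linarith

theorem U2_mono : Monotone (U2 H) := by
  refine monotone_nat_of_le_succ fun n => ?_
  match n with
  | 0 => intro x hx; rw [mem_U2_0.1 hx]; exact zero_mem _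
  | 1 => intro x hx; rw [mem_U2_1] at hx; rw [mem_U2_2, hx.1]; exact ⟨⟨H.zero_mem, OO.zero _⟩, hx.2⟩
  | _ + 2 => exact fun x hx => hx

/-- Pairs `(F, G)` with `F = O(t^{5/4})` and `G = O(t^{1/4})`. The shift `p τ_M` replaces a
difference `(F, G)` by `(0, p F')` up to a bounded error, and this is used to eliminate the pairs
with unbounded `F'`; the remaining families are those of `good_term`. -/
theorem good_phase2 (hS : Sys μ T) {u : X → ℂ} (hu : Bdd u) (hn : Null μ T u) (A : Finset VV)
    (hA : ∀ a ∈ A, a ∈ U2 H 2) : (∀ a ∈ A, Nt a) → Good μ T u A := by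
  refine level (U := U2 H) (m := 1) U2_mono (fun p x => (0, fun t => (p : ℝ) * deriv x.1 t)) ?_
    (fun x => ¬ OO (deriv x.1) 0) ?_ ?_ (fun A => (∀ a ∈ A, Nt a) → Good μ T u A) ?_ ?_ ?_ A hA
  · intro p i x hx
    match i with
    | 0 =>
      rw [mem_U2_1] at hx
      rw [mem_U2_0, hx.1]
      simp only [Pi.zero_def, deriv_const, mul_zero]
      rfl
    | 1 =>
      rw [mem_U2_2] at hx
      rw [mem_U2_1]
      refine ⟨rfl, H.smul_mem p (H.deriv_mem hx.1.1), ?_⟩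
      have := deriv_OO hx.1.1 hx.1.2
      norm_num at this ⊢
      exact this.const_mul p
    | j + 2 =>
      have hx : x ∈ U2 H 2 := hx
      rw [mem_U2_2] at hx ⊢
      refine ⟨⟨H.zero_mem, OO.zero _⟩, H.smul_mem p (H.deriv_mem hx.1.1), ?_⟩
      have := deriv_OO hx.1.1 hx.1.2
      norm_num at this ⊢
      exact this.const_mul p
  · intro h
    apply h
    have : deriv (0 : VV).1 = 0 := by
      rw [Prod.fst_zero]; funext t; simp [Pi.zero_def]
    rw [this]
    exact OO.zero _
  · intro x y hx hxy
    rw [mem_U2_1] at hxy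
    have : y.1 = x.1 := by
      have := hxy.1
      rw [Prod.fst_sub, sub_eq_zero] at this
      exact this
    simp only [this]; exact hx
  · intro b A Y hb hA h hN
    refine Good.merge hS b A Y ?_ (h ?_)
    · intro x hx
      have := mem_U2_0.1 (hA x hx)
      rw [this]
      exact Eventually.of_forall fun M n _ => by rw [ev_zero]; simp
    · intro a ha
      rcases Finset.mem_insert.1 ha with rfl | ha
      · exact hN _ (Finset.mem_union_left _ hb)
      · exact hN _ (Finset.mem_union_right _ ha)
  · intro b Y hb hY hFar h hN
    have hb' := mem_U2_2.1 hb
    have hE : ∀ y ∈ insert 0 Y, y - b ∈ U2 H 2 := by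
      intro y hy
      rcases Finset.mem_insert.1 hy with rfl | hy
      · exact sub_mem (zero_mem _) hb
      · exact sub_mem (hY y hy) hb
    refine Good.op hS hu b Y (fun p x => (0, fun t => (p : ℝ) * deriv x.1 t)) tau ?_ ?_ ?_
    · intro K
      filter_upwards [tau_small K] with M hM
      rw [mul_comm]
      exact_mod_cast hM
    · intro p y hy
      obtain ⟨⟨e1, e2⟩, e3, e4⟩ := mem_U2_2.1 (hE y hy)
      set E := y - b with hEdef
      have e5 := deriv_OO e1 e2
      have e6 := deriv_OO (H.deriv_mem e1) e5
      have e7 := deriv_OO e3 e4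
      norm_num at e6 e7
      obtain ⟨C1, hC1, e6⟩ := e6
      obtain ⟨C2, hC2, e7⟩ := e7
      filter_upwards [blk e6, blk e7, blk (H.ev_hasDerivAt e1), blk (H.ev_hasDerivAt (H.deriv_mem e1)),
        blk (H.ev_hasDerivAt e3), tau_sq_small (C := 2 * p ^ 2 * C1) (a := -(3 / 4)) (by norm_num),
        tau_sq_small (C := 2 * p * C2) (a := -(3 / 4)) (by norm_num), eventually_gt_atTop 0]
        with M f1 f2 f3 f4 f5 f6 f7 hM n hnI _
      have hM' : (0 : ℝ) < M := by exact_mod_cast hM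
      have hn1 : (M : ℝ) ≤ n := by exact_mod_cast (Finset.mem_Ico.1 hnI).1
      have hpτ : (0 : ℝ) ≤ p * tau M := by positivity
      have pw : ∀ s : ℝ, (n : ℝ) ≤ s → s ^ (-(3 / 4) : ℝ) ≤ (M : ℝ) ^ (-(3 / 4) : ℝ) := fun s hs =>
        Real.rpow_le_rpow_of_nonpos hM' (hn1.trans hs) (by norm_num)
      -- second order Taylor error: `τ_M² M^{-3/4}` tends to `0` since `τ_M ≤ M^{1/3}`
      have t1 := taylor2 (f := E.1) (f1 := deriv E.1) (f2 := deriv (deriv E.1)) (x := n) (y := n + p * tau M)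
        (B := C1 * (M : ℝ) ^ (-(3 / 4) : ℝ)) (fun s hs => f3 s (hn1.trans hs.1)) (fun s hs => f4 s (hn1.trans hs.1))
        (fun s hs => (f1 s (hn1.trans hs.1)).trans (by gcongr C1 * ?_; exact pw s hs.1))
        (n := n + p * tau M) (m := n) ⟨by linarith, le_rfl⟩ ⟨le_rfl, by linarith⟩
      have t2 := taylor1 (f := E.2) (f1 := deriv E.2) (x := n) (y := n + p * tau M)
        (B := C2 * (M : ℝ) ^ (-(3 / 4) : ℝ)) (fun s hs => f5 s (hn1.trans hs.1))
        (fun s hs => (f2 s (hn1.trans hs.1)).trans (by gcongr C2 * ?_; exact pw s hs.1)) (by linarith)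
      simp only [add_sub_cancel_left, abs_of_nonneg hpτ] at t1 t2
      have t3 : |(tau M : ℝ) * (E.2 (n + p * tau M) - E.2 n)| ≤
          tau M * (C2 * (M : ℝ) ^ (-(3 / 4) : ℝ) * (p * tau M)) := by
        rw [abs_mul, Nat.abs_cast]; gcongr
      simp only [ev, Pi.zero_apply, zero_add]
      have e : E.1 (↑n + ↑p * ↑(tau M)) + ↑(tau M) * E.2 (↑n + ↑p * ↑(tau M)) - (E.1 ↑n + ↑(tau M) * E.2 ↑n) -
          ↑(tau M) * (↑p * deriv E.1 ↑n) = (E.1 (n + p * tau M) - E.1 n - deriv E.1 n * (p * tau M)) +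
          (tau M : ℝ) * (E.2 (n + p * tau M) - E.2 n) := by ring
      rw [e]
      refine (abs_add_le _ _).trans ?_
      have g1 : C1 * (M : ℝ) ^ (-(3 / 4) : ℝ) * (p * tau M) * (p * tau M) ≤ 1 / 2 := by
        have : C1 * (M : ℝ) ^ (-(3 / 4) : ℝ) * (p * tau M) * (p * tau M) =
          (tau M : ℝ) ^ 2 * (2 * p ^ 2 * C1 * (M : ℝ) ^ (-(3 / 4) : ℝ)) / 2 := by ring
        rw [this]; linarith
      have g2 : tau M * (C2 * (M : ℝ) ^ (-(3 / 4) : ℝ) * (p * tau M)) ≤ 1 / 2 := by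
        have : tau M * (C2 * (M : ℝ) ^ (-(3 / 4) : ℝ) * (p * tau M)) =
          (tau M : ℝ) ^ 2 * (2 * p * C2 * (M : ℝ) ^ (-(3 / 4) : ℝ)) / 2 := by ring
        rw [this]; linarith
      linarith
    · have hnt : ∀ᶠ p : ℕ in atTop, ∀ y ∈ insert 0 Y,
          Nt (y + ((0, fun t => (p : ℝ) * deriv (y - b).1 t) : VV)) := by
        rw [Finset.eventually_all]
        intro y hy
        have hEy := mem_U2_2.1 (hE y hy)
        have hy2 : y.1 ∈ H.carrier ∧ y.2 ∈ H.carrier := by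
          rcases Finset.mem_insert.1 hy with rfl | hy
          · exact ⟨H.zero_mem, H.zero_mem⟩
          · have := mem_U2_2.1 (hY y hy); exact ⟨this.1.1, this.2.1⟩
        have := nt_phase2 hy2.1 hy2.2 hEy.1.1 ?_
        · filter_upwards [this] with p hp
          convert hp using 1
          ext <;> simp
        · rcases Finset.mem_insert.1 hy with rfl | hy
          · right
            refine ⟨rfl, ?_⟩
            have hno : ¬ OO (deriv (0 - b).1) 0 := by
              intro h
              apply hFar
              have : deriv b.1 = - deriv (0 - b).1 := by
                funext t; simp
              rw [this]; exact h.neg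
            have hno2 : ¬ OO (deriv (deriv (0 - b).1)) (-(1 / 3) - 1) := fun h => hno
              (bounded_of_deriv (by norm_num) (H.deriv_mem hEy.1.1) h)
            have := OO.of_not (H.deriv_mem (H.deriv_mem hEy.1.1)) hno2
            refine this.congr' ?_
            filter_upwards [eventually_gt_atTop 0] with t ht
            rw [← mul_assoc]
            congr 1
            nth_rewrite 2 [← Real.rpow_one t]
            rw [← Real.rpow_add ht]; norm_num
          · left; exact hN y (Finset.mem_insert_of_mem hy)
      filter_upwards [hnt] with p hp
      refine h p fun a ha => ?_
      rcases Finset.mem_union.1 ha with ha | ha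
      · exact hN a (Finset.mem_insert_of_mem ha)
      · obtain ⟨y, hy, rfl⟩ := Finset.mem_image.1 ha
        exact hp y hy
  · intro Y hY hN
    refine good_term (H := H) hS hu hn Y fun a ha => ?_
    obtain ⟨h1, h2⟩ := hY a ha
    obtain ⟨⟨e1, e2⟩, e3, e4⟩ := mem_U2_2.1 h1
    have := deriv_OO e3 e4
    norm_num at this
    refine ⟨e1, e3, not_not.1 h2, ?_, hN a ha⟩
    exact this

theorem OO_of_deriv2 {f : ℝ → ℝ} (hf : f ∈ H.carrier) (h : OO (deriv (deriv f)) (-(3 / 4))) : OO f (5 / 4) := by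
  have h1 : OO (deriv f) (1 / 4) := OO_of_deriv (by norm_num) (H.deriv_mem hf) (by norm_num; exact h)
  exact OO_of_deriv (by norm_num) hf (by norm_num; exact h1)

/-- Pairs `(F, 0)` with `F` of arbitrary polynomial growth. Shifting by `p` lowers the degree of a
difference by one, and this is used to eliminate all pairs of the highest level; the induction on
the level ends in the second phase. -/
theorem good_phase1 (hS : Sys μ T) {u : X → ℂ} (hu : Bdd u) (hn : Null μ T u) (j : ℕ) (A : Finset VV)
    (hA : ∀ a ∈ A, a ∈ U1 H (j + 2)) : (∀ a ∈ A, Nt a) → Good μ T u A := by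
  induction j generalizing A with
  | zero =>
    refine good_phase2 (H := H) hS hu hn A fun a ha => ?_
    have := mem_U1.1 (hA a ha)
    rw [mem_U2_2, this.2.2]
    refine ⟨⟨this.1, ?_⟩, H.zero_mem, OO.zero _⟩
    have h := this.2.1
    norm_num at h
    exact h
  | succ j ih =>
  refine level (U := U1 H) (m := j + 2) U1_mono (fun p x => (Df p x.1, 0)) ?_
    (fun x => x ∉ U1 H (j + 2)) (fun h => h (zero_mem _)) ?_ (fun A => (∀ a ∈ A, Nt a) → Good μ T u A)
    ?_ ?_ ?_ A hA
  · intro p i x hx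
    rw [mem_U1] at hx ⊢
    refine ⟨H.Df_mem p hx.1, (Df_OO p hx.1 hx.2.1).mono ?_, rfl⟩
    push_cast; linarith
  · intro x y hx hxy hy
    exact hx (by simpa using sub_mem hy hxy)
  · intro b A Y hb hA h hN
    refine Good.merge hS b A Y ?_ (h ?_)
    · intro x hx
      obtain ⟨h1, ⟨C, hC, h2⟩, h3⟩ := mem_U1.1 (hA x hx)
      have h4 : Tendsto (fun t : ℝ => C * t ^ (((0 : ℕ) : ℝ) - 3 / 4)) atTop (𝓝 (C * 0)) := by
        refine Tendsto.const_mul _ ?_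
        have := tendsto_rpow_neg_atTop (y := 3 / 4) (by norm_num)
        simpa using this
      rw [mul_zero] at h4
      filter_upwards [blk (h2.and (h4.eventually_le_const one_pos))] with M hM n hnI
      have hn1 : (M : ℝ) ≤ n := by exact_mod_cast (Finset.mem_Ico.1 hnI).1
      have := hM n hn1
      rw [ev, h3, Pi.zero_apply, mul_zero, add_zero]
      exact this.1.trans this.2
    · intro a ha
      rcases Finset.mem_insert.1 ha with rfl | ha
      · exact hN _ (Finset.mem_union_left _ hb)
      · exact hN _ (Finset.mem_union_right _ ha)
  · intro b Y hb hY hFar h hN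
    have hb' := mem_U1.1 hb
    have hE : ∀ y ∈ insert 0 Y, y - b ∈ U1 H (j + 2 + 1) := by
      intro y hy
      rcases Finset.mem_insert.1 hy with rfl | hy
      · exact sub_mem (zero_mem _) hb
      · exact sub_mem (hY y hy) hb
    refine Good.op hS hu b Y (fun p x => (Df p x.1, 0)) (fun _ => 1) ?_ ?_ ?_
    · intro K
      filter_upwards [eventually_ge_atTop K] with M hM
      simpa using hM
    · intro p y hy
      have e3 := (mem_U1.1 (hE y hy)).2.2
      refine Eventually.of_forall fun M n _ _ => ?_
      simp only [ev, e3, Pi.zero_apply, Df, Nat.cast_one, mul_one, mul_zero, add_zero, sub_self, abs_zero]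
      exact zero_le_one
    · have hnt : ∀ᶠ p : ℕ in atTop, ∀ y ∈ insert 0 Y, Nt (y + ((Df p (y - b).1, 0) : VV)) := by
        rw [Finset.eventually_all]
        intro y hy
        have hEy := mem_U1.1 (hE y hy)
        have hy2 : y.1 ∈ H.carrier ∧ y.2 = 0 := by
          rcases Finset.mem_insert.1 hy with rfl | hy
          · exact ⟨H.zero_mem, rfl⟩
          · have := mem_U1.1 (hY y hy); exact ⟨this.1, this.2.2⟩
        have := nt_phase1 hy2.1 hEy.1 hEy.2.1 ?_
        · filter_upwards [this] with p hp
          have e : y + ((Df p (y - b).1, 0) : VV) = (y.1 + Df p (y - b).1, 0) := by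
            ext <;> simp [hy2.2]
          rw [e, Nt_iff]
          exact hp
        · rcases Finset.mem_insert.1 hy with rfl | hy
          · right
            have hno : ¬ OO (0 - b).1 (5 / 4) := by
              intro h
              apply hFar
              rw [mem_U1]
              refine ⟨hb'.1, ?_, hb'.2.2⟩
              have h2 := h.neg
              have e : -(0 - b).1 = b.1 := by simp
              rw [e] at h2
              refine h2.mono ?_
              push_cast
              have : (0 : ℝ) ≤ j := Nat.cast_nonneg _
              linarith
            have hno2 : ¬ OO (deriv (deriv (0 - b).1)) (-(3 / 4)) := fun h => hno (OO_of_deriv2 hEy.1 h)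
            have := OO.of_not (H.deriv_mem (H.deriv_mem hEy.1)) hno2
            refine tendsto_atTop_mono' _ ?_ this
            filter_upwards [eventually_ge_atTop 1] with t ht
            gcongr
            calc t ^ (-(-(3 / 4)) : ℝ) ≤ t ^ (1 : ℝ) := by gcongr; norm_num
              _ = t := Real.rpow_one t
          · left
            have := hN y (Finset.mem_insert_of_mem hy)
            have e : y = (y.1, 0) := by ext <;> simp [hy2.2]
            rw [e, Nt_iff] at this
            exact this
      filter_upwards [hnt] with p hp
      refine h p fun a ha => ?_
      rcases Finset.mem_union.1 ha with ha | ha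
      · exact hN a (Finset.mem_insert_of_mem ha)
      · obtain ⟨y, hy, rfl⟩ := Finset.mem_image.1 ha
        exact hp y hy
  · intro Y hY hN
    exact ih Y (fun a ha => not_not.1 (hY a ha).2) hN

/-- Elements growing faster than the logarithm have a nondegenerate derivative. -/
theorem nt_of_log {F : ℝ → ℝ} (hF : F ∈ H.carrier)
    (h : Tendsto (fun t => |F t| / Real.log t) atTop atTop) : Nt (F, 0) := by
  rw [Nt_iff]
  have hno : ¬ OO (deriv F) (-1) := by
    intro h1
    obtain ⟨C, hC⟩ := log_of_deriv hF h1
    obtain ⟨t, h2, h3, h4⟩ := (hC.and ((h.eventually_gt_atTop C).and (eventually_gt_atTop 1))).exists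
    have := Real.log_pos h4
    rw [lt_div_iff₀ this] at h3
    linarith
  have := OO.of_not (H.deriv_mem hF) hno
  simpa using this

/-- From dyadic blocks to initial segments. -/
theorem dyadic_sum {ε : ℝ} (hε : 0 < ε) (M0 : ℕ) : ∃ C : ℝ, 0 ≤ C ∧ ∀ a : ℤ → ℂ, (∀ n, ‖a n‖ ≤ 1) →
    (∀ M ≥ M0, ‖∑ n ∈ Finset.Ico (M : ℤ) (M + M), a n‖ ≤ ε * M) →
    ∀ Q : ℕ, 1 ≤ Q → ‖∑ n ∈ Finset.Ico (1 : ℤ) Q, a n‖ ≤ C + 4 * ε * Q := by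
  obtain ⟨M1, hM1⟩ := exists_nat_ge (1 / ε)
  refine ⟨2 * (M0 + M1) + 2, by positivity, fun a ha h Q => ?_⟩
  induction Q using Nat.strong_induction_on with
  | _ Q ih =>
  intro hQ
  have triv : ∀ x y : ℤ, ‖∑ n ∈ Finset.Ico x y, a n‖ ≤ (y - x).toNat := by
    intro x y
    refine (norm_sum_le _ _).trans ((Finset.sum_le_sum fun n _ => ha n).trans ?_)
    rw [Finset.sum_const, nsmul_eq_mul, mul_one, Int.card_Ico]
  by_cases hs : Q < 2 * (M0 + M1) + 2
  · refine (triv _ _).trans ?_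
    have h1 : (((Q : ℤ) - 1).toNat : ℝ) ≤ 2 * (M0 + M1) + 2 := by
      have : ((Q : ℤ) - 1).toNat ≤ 2 * (M0 + M1) + 2 := by omega
      exact_mod_cast this
    have : 0 ≤ 4 * ε * Q := by positivity
    linarith
  · set M := Q / 2 with hM
    have hM2 : 2 * M ≤ Q ∧ Q ≤ 2 * M + 1 := by omega
    have hM0 : M0 ≤ M ∧ M1 ≤ M ∧ 1 ≤ M := by omega
    have hMQ : M < Q := by omega
    clear_value M
    have h1 := ih M hMQ hM0.2.2
    have h2 := h M hM0.1
    have h3 := triv (M + M) Q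
    rw [sum_Ico_split a (x := 1) (y := (M : ℤ)) (z := Q) (by omega) (by omega),
      sum_Ico_split a (x := (M : ℤ)) (y := (M : ℤ) + M) (z := Q) (by omega) (by omega)]
    refine (norm_add_le _ _).trans ?_
    refine (add_le_add le_rfl (norm_add_le _ _)).trans ?_
    have h4 : (((Q : ℤ) - (M + M)).toNat : ℝ) ≤ 1 := by
      have : ((Q : ℤ) - (M + M)).toNat ≤ 1 := by omega
      exact_mod_cast this
    have h5 : 1 ≤ ε * M := by
      have : (M1 : ℝ) ≤ M := by exact_mod_cast hM0.2.1
      have := hM1.trans this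
      rw [div_le_iff₀ hε] at this
      linarith
    have h6 : (2 : ℝ) * M ≤ Q := by exact_mod_cast hM2.1
    nlinarith

theorem sum_Icc_eq (a : ℤ → ℂ) (N : ℕ) : ∑ n ∈ Finset.Icc 1 N, a n = ∑ n ∈ Finset.Ico (1 : ℤ) (N + 1 : ℕ), a n := by
  induction N with
  | zero => simp
  | succ N ih =>
    rw [Finset.sum_Icc_succ_top (by omega), ih,
      sum_Ico_split a (x := 1) (y := ((N + 1 : ℕ) : ℤ)) (z := ((N + 1 + 1 : ℕ) : ℤ)) (by omega) (by omega)]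
    congr 1
    have : Finset.Ico ((N + 1 : ℕ) : ℤ) ((N + 1 + 1 : ℕ) : ℤ) = {((N + 1 : ℕ) : ℤ)} := by
      ext x; simp; omega
    rw [this, Finset.sum_singleton]

/-- Null functions are negligible for the multiple averages along the given sequences, uniformly in the
weights and in the other functions. -/
theorem propS (hS : Sys μ T) {u : X → ℂ} (hu : Bdd u) (hn : Null μ T u) {k : ℕ} (a : Fin k → ℝ → ℝ)
    (haH : ∀ i, a i ∈ H.carrier) (hgrowth : ∀ i, PolynomialGrowth (a i))
    (hlog : ∀ i, Tendsto (fun t => |a i t| / Real.log t) atTop atTop)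
    (hdiff : ∀ i j, i ≠ j → Tendsto (fun t => |a i t - a j t| / Real.log t) atTop atTop)
    (m : Fin k) (S : Finset (Fin k)) (hm : m ∉ S) (ε : ℝ) (hε : 0 < ε) :
    ∃ N0 : ℕ, ∀ N ≥ N0, ∀ c : ℕ → ℂ, (∀ n, ‖c n‖ ≤ 1) → ∀ g : X → ℂ, Bdd g → ∀ f : Fin k → X → ℂ,
      (∀ i, Bdd (f i)) → ‖∑ n ∈ Finset.Icc 1 N, c n * ∫ y, g y * (u (T ⌊a m n⌋ y) *
        ∏ i ∈ S, f i (T ⌊a i n⌋ y)) ∂μ‖ ≤ ε * N := by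
  classical
  -- translating by `-⌊a_m⌋` puts `u` at position `0` and leaves the phases `-a_m` and `a_i - a_m`
  set D : Option (Fin k) → VV := fun o => o.elim (-(a m), 0) (fun i => (a i - a m, 0)) with hD
  set A : Finset VV := (Finset.insertNone S).image D with hA
  have hgr : ∀ i, ∃ d : ℕ, OO (a i) d := fun i => OO_growth (hgrowth i)
  choose d hd using hgr
  set j := ∑ i, d i with hj
  have hOO : ∀ i, OO (a i) (((j + 2 : ℕ) : ℝ) - 3 / 4) := by
    intro i
    refine (hd i).mono ?_
    have h1 : d i ≤ j := Finset.single_le_sum (fun i _ => Nat.zero_le _) (Finset.mem_univ i)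
    have h2 : (d i : ℝ) ≤ j := by exact_mod_cast h1
    push_cast; linarith
  have hmem : ∀ x ∈ A, x ∈ U1 H (j + 2) := by
    intro x hx
    obtain ⟨o, -, rfl⟩ := Finset.mem_image.1 hx
    cases o with
    | none => exact ⟨H.neg_mem (haH m), (hOO m).neg, rfl⟩
    | some i => exact ⟨H.sub_mem (haH i) (haH m), (hOO i).sub (hOO m), rfl⟩
  have hnt : ∀ x ∈ A, Nt x := by
    intro x hx
    obtain ⟨o, ho, rfl⟩ := Finset.mem_image.1 hx
    cases o with
    | none => exact nt_of_log (H.neg_mem (haH m)) (by simpa using hlog m)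
    | some i =>
      have hi : i ∈ S := by simpa using ho
      exact nt_of_log (H.sub_mem (haH i) (haH m)) (by
        simpa using hdiff i m (fun h => hm (h ▸ hi)))
  have hgood := good_phase1 (H := H) hS hu hn j A hmem hnt
  obtain ⟨M0, hM0⟩ := hgood.flex hS 2 (Finset.insertNone S).card (ε / 16) (by positivity)
  obtain ⟨C, hC, hdy⟩ := dyadic_sum (ε := ε / 16) (by positivity) M0
  obtain ⟨N0, hN0⟩ := exists_nat_ge (2 * C / ε)
  refine ⟨N0 + 1, fun N hN c hc g hg f hf => ?_⟩
  set b : Fin k → ℤ → ℤ := fun i n => ⌊a i (n : ℝ)⌋ with hb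
  set G : ℤ → ℂ := fun n => c n.toNat * ∫ y, u y * ∏ o ∈ Finset.insertNone S,
    (o.elim g f : X → ℂ) (T (o.elim (-(b m n)) (fun i => b i n - b m n)) y) ∂μ with hG
  have hbd : ∀ o : Option (Fin k), Bdd (o.elim g f : X → ℂ) := by
    intro o; cases o; exacts [hg, hf _]
  have h1 := hdy G ?_ ?_ (N + 1) (by omega)
  · rw [← sum_Icc_eq] at h1
    have e : ∀ n ∈ Finset.Icc 1 N, c n * ∫ y, g y * (u (T ⌊a m n⌋ y) *
        ∏ i ∈ S, f i (T ⌊a i n⌋ y)) ∂μ = G n := by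
      intro n _
      simp only [hG, Int.toNat_natCast]
      congr 1
      have hme : Measurable (fun y => g y * (u (T ⌊a m n⌋ y) * ∏ i ∈ S, f i (T ⌊a i n⌋ y))) :=
        (hg.mul ((hS.bdd hu _).mul (Bdd.prod fun i _ => hS.bdd (hf i) _))).1
      rw [← hS.integral_comp hme (-(b m n))]
      congr 1
      funext y
      rw [Finset.prod_insertNone]
      simp only [Option.elim_none, Option.elim_some, hS.app, hb, Int.cast_natCast]
      rw [add_neg_cancel, hS.app0]
      simp only [← sub_eq_add_neg]
      ring
    rw [Finset.sum_congr rfl e]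
    refine h1.trans ?_
    have hN1 : (1 : ℝ) ≤ N := by exact_mod_cast (by omega : 1 ≤ N)
    have h2 : (N0 : ℝ) ≤ N := by exact_mod_cast (by omega : N0 ≤ N)
    have h3 := hN0.trans h2
    rw [div_le_iff₀ hε] at h3
    push_cast
    nlinarith
  · intro n
    rw [hG]
    simp only [norm_mul]
    exact mul_le_one₀ (hc _) (norm_nonneg _)
      (Bdd.norm_integral_le (hu.mul (Bdd.prod fun o _ => hS.bdd (hbd o) _)))
  · intro M hM
    refine hM0 M hM (Finset.insertNone S) le_rfl D (fun o ho => Finset.mem_image_of_mem D ho)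
      (fun o n => o.elim (-(b m n)) (fun i => b i n - b m n)) (fun n => c n.toNat) (fun n => hc _) ?_ _ hbd
    intro n _ _ o _
    have fl : ∀ t : ℝ, (⌊t⌋ : ℝ) ≤ t ∧ t < ⌊t⌋ + 1 := fun t =>
      ⟨Int.floor_le t, Int.lt_floor_add_one t⟩
    suffices hh : ∀ z : ℤ, z = (o.elim (-(b m n)) (fun i => b i n - b m n)) - ⌊ev (D o) M n⌋ →
        |(z : ℝ)| ≤ ((2 : ℕ) : ℤ) by exact_mod_cast hh _ rfl
    rintro z rfl
    cases o with
    | none =>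
      simp only [hD, Option.elim_none, ev, hb, Pi.zero_apply, mul_zero, add_zero, Pi.neg_apply]
      have a1 := fl (a m n)
      have a2 := fl (-(a m n))
      push_cast; rw [abs_le]; constructor <;> linarith [a1.1, a1.2, a2.1, a2.2]
    | some i =>
      simp only [hD, Option.elim_some, ev, hb, Pi.zero_apply, mul_zero, add_zero, Pi.sub_apply]
      have a1 := fl (a m n)
      have a2 := fl (a i n)
      have a3 := fl (a i n - a m n)
      push_cast; rw [abs_le]; constructor <;> linarith [a1.1, a1.2, a2.1, a2.2, a3.1, a3.2]

end

/-! ### Cube products and the box lemma -/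

section

open scoped BigOperators

variable {X : Type} [MeasurableSpace X] {μ : Measure X} [IsProbabilityMeasure μ] {T : ℤ → X → X}

theorem Bdd.expect {ι : Type*} {s : Finset ι} {F : ι → X → ℂ} (h : ∀ i ∈ s, Bdd (F i)) :
    Bdd (fun x => 𝔼 i ∈ s, F i x) := by
  constructor
  · simp only [Finset.expect_eq_sum_div_card]
    exact (Finset.measurable_fun_sum _ fun i hi => (h i hi).1).div_const _
  · intro x
    rcases s.eq_empty_or_nonempty with rfl | hs
    · simp
    · exact (RCLike.norm_expect_le (K := ℂ)).trans (Finset.expect_le hs fun i hi => (h i hi).2 x)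

theorem integral_expect {ι : Type*} {s : Finset ι} {F : ι → X → ℂ} (h : ∀ i ∈ s, Bdd (F i)) :
    ∫ x, 𝔼 i ∈ s, F i x ∂μ = 𝔼 i ∈ s, ∫ x, F i x ∂μ := by
  simp only [Finset.expect_eq_sum_div_card]
  rw [integral_div, integral_finsetSum _ fun i hi => (h i hi).integrable]

/-- Power mean inequality for uniform averages. -/
theorem pow_expect_le {ι : Type*} {s : Finset ι} (f : ι → ℝ) (hf : ∀ i ∈ s, 0 ≤ f i) {n : ℕ}
    (hn : n ≠ 0) : (𝔼 i ∈ s, f i) ^ n ≤ 𝔼 i ∈ s, f i ^ n := by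
  rcases s.eq_empty_or_nonempty with rfl | hs
  · simp [hn]
  have hc : (0 : ℝ) < s.card := by exact_mod_cast hs.card_pos
  have := Real.pow_arith_mean_le_arith_mean_pow s (fun _ => (s.card : ℝ)⁻¹) f
    (fun _ _ => by positivity) (by simp [hc.ne']) hf n
  simp only [← Finset.mul_sum] at this
  simp only [Finset.expect_eq_sum_div_card, div_eq_inv_mul]
  exact this

theorem re_expect {ι : Type*} (s : Finset ι) (f : ι → ℂ) : (𝔼 i ∈ s, f i).re = 𝔼 i ∈ s, (f i).re := by
  simp only [Finset.expect_eq_sum_div_card]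
  rw [← Complex.ofReal_natCast, Complex.div_ofReal_re, Complex.re_sum]

theorem cj_expect {ι : Type*} (s : Finset ι) (f : ι → ℂ) :
    (starRingEnd ℂ) (𝔼 i ∈ s, f i) = 𝔼 i ∈ s, (starRingEnd ℂ) (f i) := by
  simp only [Finset.expect_eq_sum_div_card, map_div₀, map_sum, map_natCast]

theorem norm_integral_sq_le {f : X → ℂ} (hf : Bdd f) :
    ‖∫ x, f x ∂μ‖ ^ 2 ≤ ∫ x, ‖f x‖ ^ 2 ∂μ := by
  have h1 : Integrable (fun x => ‖f x‖) μ := hf.integrable.norm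
  have h2 : Integrable (fun x => ‖f x‖ ^ 2) μ :=
    Integrable.of_bound ((hf.1.norm.pow_const 2).aestronglyMeasurable) 1 (ae_of_all _ fun x => by
      rw [Real.norm_of_nonneg (by positivity)]
      exact pow_le_one₀ (norm_nonneg _) (hf.2 x))
  refine le_trans ?_ (sq_integral_le h1 h2)
  exact pow_le_pow_left₀ (norm_nonneg _) (norm_integral_le_integral_norm _) 2

theorem norm_sq_conj (z : ℂ) : ((‖z‖ ^ 2 : ℝ) : ℂ) = (starRingEnd ℂ) z * z := by
  rw [mul_comm, Complex.mul_conj, Complex.normSq_eq_norm_sq]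

theorem ofReal_integral_norm_sq (f : X → ℂ) :
    ((∫ x, ‖f x‖ ^ 2 ∂μ : ℝ) : ℂ) = ∫ x, (starRingEnd ℂ) (f x) * f x ∂μ := by
  rw [← integral_complex_ofReal]
  simp only [norm_sq_conj]

/-- Expanding the square of the `L²` norm of an average. -/
theorem integral_norm_sq_expect {ι : Type*} {s : Finset ι} {F : ι → X → ℂ}
    (h : ∀ i ∈ s, Bdd (F i)) :
    ((∫ x, ‖𝔼 i ∈ s, F i x‖ ^ 2 ∂μ : ℝ) : ℂ) =
      𝔼 i ∈ s, 𝔼 j ∈ s, ∫ x, (starRingEnd ℂ) (F i x) * F j x ∂μ := by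
  rw [ofReal_integral_norm_sq]
  simp only [cj_expect, Finset.expect_mul_expect]
  rw [integral_expect (F := fun i x => 𝔼 j ∈ s, (starRingEnd ℂ) (F i x) * F j x)
    fun i hi => Bdd.expect fun j hj => (h i hi).cj.mul (h j hj)]
  exact Finset.expect_congr rfl fun i hi => integral_expect fun j hj => (h i hi).cj.mul (h j hj)

/-- The Cauchy–Schwarz step of the box lemma. -/
theorem cs_step {ι κ : Type*} (I : Finset ι) (K : Finset κ) (A : κ → X → ℂ) (Ψ : ι → κ → X → ℂ)
    (hA : ∀ k, Bdd (A k)) (hΨ : ∀ m k, Bdd (Ψ m k)) :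
    ‖𝔼 m ∈ I, 𝔼 k ∈ K, ∫ x, A k x * Ψ m k x ∂μ‖ ^ 2 ≤
      (𝔼 m₀ ∈ I, 𝔼 m ∈ I, 𝔼 k ∈ K, ∫ x, (starRingEnd ℂ) (Ψ m₀ k x) * Ψ m k x ∂μ).re := by
  have hM : ∀ k, Bdd (fun x => 𝔼 m ∈ I, Ψ m k x) := fun k => Bdd.expect fun m _ => hΨ m k
  have e1 : 𝔼 m ∈ I, 𝔼 k ∈ K, ∫ x, A k x * Ψ m k x ∂μ =
      𝔼 k ∈ K, ∫ x, A k x * (𝔼 m ∈ I, Ψ m k x) ∂μ := by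
    rw [Finset.expect_comm]
    refine Finset.expect_congr rfl fun k _ => ?_
    simp only [Finset.mul_expect]
    rw [integral_expect fun m _ => (hA k).mul (hΨ m k)]
  have e2 : 𝔼 m₀ ∈ I, 𝔼 m ∈ I, 𝔼 k ∈ K, ∫ x, (starRingEnd ℂ) (Ψ m₀ k x) * Ψ m k x ∂μ =
      𝔼 k ∈ K, ((∫ x, ‖𝔼 m ∈ I, Ψ m k x‖ ^ 2 ∂μ : ℝ) : ℂ) := by
    have : ∀ m₀, 𝔼 m ∈ I, 𝔼 k ∈ K, ∫ x, (starRingEnd ℂ) (Ψ m₀ k x) * Ψ m k x ∂μ =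
      𝔼 k ∈ K, 𝔼 m ∈ I, ∫ x, (starRingEnd ℂ) (Ψ m₀ k x) * Ψ m k x ∂μ :=
      fun m₀ => Finset.expect_comm _ _ _
    simp only [this]
    rw [Finset.expect_comm]
    exact Finset.expect_congr rfl fun k _ => (integral_norm_sq_expect fun m _ => hΨ m k).symm
  rw [e1, e2, re_expect]
  simp only [Complex.ofReal_re]
  have h1 : ‖𝔼 k ∈ K, ∫ x, A k x * (𝔼 m ∈ I, Ψ m k x) ∂μ‖ ^ 2 ≤
      (𝔼 k ∈ K, ‖∫ x, A k x * (𝔼 m ∈ I, Ψ m k x) ∂μ‖) ^ 2 :=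
    pow_le_pow_left₀ (norm_nonneg _) (RCLike.norm_expect_le (K := ℂ)) 2
  refine h1.trans ((pow_expect_le _ (fun _ _ => norm_nonneg _) two_ne_zero).trans ?_)
  refine Finset.expect_le_expect fun k _ => ?_
  refine (norm_integral_sq_le ((hA k).mul (hM k))).trans ?_
  refine integral_mono_of_nonneg (ae_of_all _ fun x => by positivity) ?_ (ae_of_all _ fun x => ?_)
  · exact Integrable.of_bound (((hM k).1.norm.pow_const 2).aestronglyMeasurable) 1
      (ae_of_all _ fun x => by
        rw [Real.norm_of_nonneg (by positivity)]
        exact pow_le_one₀ (norm_nonneg _) ((hM k).2 x))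
  · simp only [norm_mul, mul_pow]
    exact mul_le_of_le_one_left (by positivity) (pow_le_one₀ (norm_nonneg _) ((hA k).2 x))

/-- The box `[0, Q₁) × ⋯ × [0, Qₛ)`, as a finset of lists. -/
def box : List ℕ → Finset (List ℕ)
  | [] => {[]}
  | Q :: H => (Finset.range Q ×ˢ box H).image (fun p => p.1 :: p.2)

theorem expect_box_nil {M : Type*} [AddCommMonoid M] [Module ℚ≥0 M] (f : List ℕ → M) :
    𝔼 k ∈ box [], f k = f [] := by simp [box]

theorem expect_box_cons {M : Type*} [AddCommMonoid M] [Module ℚ≥0 M] (Q : ℕ) (H : List ℕ)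
    (f : List ℕ → M) :
    𝔼 k ∈ box (Q :: H), f k = 𝔼 m ∈ Finset.range Q, 𝔼 k ∈ box H, f (m :: k) := by
  rw [box, Finset.expect_image, Finset.expect_product]
  rintro ⟨a, b⟩ _ ⟨c, d⟩ _ h
  simp only [List.cons.injEq] at h
  exact Prod.ext h.1 h.2

theorem box_nonempty : ∀ H : List ℕ, (∀ q ∈ H, 0 < q) → (box H).Nonempty
  | [], _ => by simp [box]
  | Q :: H, h => by
    rw [box, Finset.image_nonempty, Finset.nonempty_product]
    exact ⟨by simpa using (h Q (by simp)).ne', box_nonempty H fun q hq => h q (by simp [hq])⟩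

theorem length_of_mem_box : ∀ (H : List ℕ) {k : List ℕ}, k ∈ box H → k.length = H.length
  | [], k, h => by simp [box] at h; simp [h]
  | Q :: H, k, h => by
    simp only [box, Finset.mem_image, Finset.mem_product, Prod.exists] at h
    obtain ⟨a, b, hab, rfl⟩ := h
    simp [length_of_mem_box H hab.2]

/-- The cube product: `cp h k Φ` multiplies, over all vertices of the cube with opposite
corners `h` and `k`, the functions `Φ`, conjugated according to the number of `h`-coordinates. -/
def cp : List ℕ → List ℕ → (List ℕ → X → ℂ) → X → ℂ
  | m₀ :: h, m :: k, Φ => cp h k (fun j x => (starRingEnd ℂ) (Φ (m₀ :: j) x) * Φ (m :: j) x)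
  | _, _, Φ => Φ []

/-- The cube product without the factor at the vertex `k`. -/
def lo : List ℕ → List ℕ → (List ℕ → X → ℂ) → X → ℂ
  | m₀ :: h, m :: k, Φ => fun x => (starRingEnd ℂ) (Φ (m₀ :: k) x) *
      lo h k (fun j x => (starRingEnd ℂ) (Φ (m₀ :: j) x) * Φ (m :: j) x) x
  | _, _, _ => 1

/-- Products of bounded functions of `k = (k₁, …, kₛ)` each of which omits some coordinate. -/
def Lw : ℕ → (List ℕ → X → ℂ) → Prop
  | 0, P => P [] = 1
  | s + 1, P => ∃ (a : List ℕ → X → ℂ) (P' : ℕ → List ℕ → X → ℂ), (∀ k, Bdd (a k)) ∧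
      (∀ m, Lw s (P' m)) ∧ ∀ m k, k.length = s → P (m :: k) = a k * P' m k

theorem Lw.bdd : ∀ {s : ℕ} {P : List ℕ → X → ℂ}, Lw s P → ∀ k, k.length = s → Bdd (P k)
  | 0, P, h, k, hk => by
    rw [List.length_eq_zero_iff.1 hk, show P [] = 1 from h]; exact Bdd.one
  | s + 1, P, ⟨a, P', ha, hP', h⟩, m :: k, hk => by
    have hk' : k.length = s := by simpa using hk
    rw [h m k hk']; exact (ha k).mul (Lw.bdd (hP' m) k hk')

theorem Lw.mul : ∀ {s : ℕ} {P R : List ℕ → X → ℂ}, Lw s P → Lw s R → Lw s (fun k => P k * R k)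
  | 0, P, R, h, h' => by
    show P [] * R [] = 1
    rw [show P [] = 1 from h, show R [] = 1 from h', mul_one]
  | s + 1, P, R, ⟨a, P', ha, hP', h⟩, ⟨b, R', hb, hR', h'⟩ =>
    ⟨fun k => a k * b k, fun m k => P' m k * R' m k, fun k => (ha k).mul (hb k),
      fun m => Lw.mul (hP' m) (hR' m), fun m k hk => by
        show P _ * R _ = _
        rw [h m k hk, h' m k hk]; ring⟩

theorem Lw.cj : ∀ {s : ℕ} {P : List ℕ → X → ℂ}, Lw s P → Lw s (fun k => cj (P k))
  | 0, P, h => by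
    show _root_.cj (P []) = 1
    rw [show P [] = 1 from h]; funext x; simp
  | s + 1, P, ⟨a, P', ha, hP', h⟩ =>
    ⟨fun k => _root_.cj (a k), fun m k => _root_.cj (P' m k), fun k => (ha k).cj,
      fun m => Lw.cj (hP' m), fun m k hk => by
        show _root_.cj (P _) = _
        rw [h m k hk]; funext x; simp⟩

theorem Lw.comp {f : X → X} (hf : Measurable f) : ∀ {s : ℕ} {P : List ℕ → X → ℂ}, Lw s P →
    Lw s (fun k x => P k (f x))
  | 0, P, h => by
    show (fun x => P [] (f x)) = 1
    rw [show P [] = 1 from h]; rfl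
  | s + 1, P, ⟨a, P', ha, hP', h⟩ =>
    ⟨fun k x => a k (f x), fun m k x => P' m k (f x), fun k => (ha k).comp hf,
      fun m => Lw.comp hf (hP' m), fun m k hk => by
        show (fun x => P (m :: k) (f x)) = _
        rw [h m k hk]; rfl⟩

theorem cp_bdd : ∀ (h k : List ℕ) {Φ : List ℕ → X → ℂ}, (∀ j, Bdd (Φ j)) → Bdd (cp h k Φ)
  | m₀ :: h, m :: k, Φ, hΦ => cp_bdd h k fun j => (hΦ _).cj.mul (hΦ _)
  | [], k, Φ, hΦ => by rw [cp]; exact hΦ _; simp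
  | m :: h, [], Φ, hΦ => by rw [cp]; exact hΦ _; simp

theorem cp_mul : ∀ (h k : List ℕ) (Φ Ψ : List ℕ → X → ℂ),
    cp h k (fun j x => Φ j x * Ψ j x) = fun x => cp h k Φ x * cp h k Ψ x
  | m₀ :: h, m :: k, Φ, Ψ => by
    simp only [cp]
    rw [← cp_mul h k]
    congr 1; funext j x; simp only [map_mul]; ring
  | [], k, Φ, Ψ => by simp [cp]
  | m :: h, [], Φ, Ψ => by simp [cp]

theorem cp_comp (f : X → X) : ∀ (h k : List ℕ) (Φ : List ℕ → X → ℂ),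
    cp h k (fun j x => Φ j (f x)) = fun x => cp h k Φ (f x)
  | m₀ :: h, m :: k, Φ => by
    simp only [cp]
    rw [← cp_comp f h k]
  | [], k, Φ => by simp [cp]
  | m :: h, [], Φ => by simp [cp]

theorem cp_cj : ∀ (h k : List ℕ) (Φ : List ℕ → X → ℂ),
    cp h k (fun j => cj (Φ j)) = cj (cp h k Φ)
  | m₀ :: h, m :: k, Φ => by
    simp only [cp]
    rw [← cp_cj h k]
    congr 1; funext j x; simp
  | [], k, Φ => by simp [cp]
  | m :: h, [], Φ => by simp [cp]

/-- The cube product is the value at the vertex `k` times the remaining factors. -/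
theorem cp_eq_mul_lo : ∀ (h k : List ℕ), h.length = k.length → ∀ (Φ : List ℕ → X → ℂ),
    cp h k Φ = fun x => Φ k x * lo h k Φ x
  | m₀ :: h, m :: k, hl, Φ => by
    simp only [cp, lo]
    rw [cp_eq_mul_lo h k (by simpa using hl)]
    funext x; ring
  | [], [], _, Φ => by simp [cp, lo]

/-- For fixed `h`, the cube product without the vertex `k` is a lower order factor as a function of
`k`. -/
theorem lo_Lw : ∀ (h : List ℕ) {Φ : List ℕ → X → ℂ}, (∀ j, Bdd (Φ j)) →
    Lw h.length (fun k => lo h k Φ)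
  | [], Φ, _ => by show lo [] [] Φ = 1; simp [lo]
  | m₀ :: h, Φ, hΦ =>
    ⟨fun k => cj (Φ (m₀ :: k)), fun m k => lo h k
      (fun j x => (starRingEnd ℂ) (Φ (m₀ :: j) x) * Φ (m :: j) x), fun k => (hΦ _).cj,
      fun m => lo_Lw h fun j => (hΦ _).cj.mul (hΦ _), fun m k _ => by
        funext x; simp only [lo, Pi.mul_apply, cj_apply]⟩

/-- The box lemma: lower order factors are removed by repeated Cauchy–Schwarz. -/
theorem box_lemma : ∀ (H : List ℕ) (Q : ℕ) (Φ P : List ℕ → X → ℂ), (∀ j, Bdd (Φ j)) →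
    Lw (H.length + 1) P →
    ‖𝔼 k ∈ box (Q :: H), ∫ x, P k x * Φ k x ∂μ‖ ^ (2 ^ (H.length + 1)) ≤
      (𝔼 h ∈ box (Q :: H), 𝔼 k ∈ box (Q :: H), ∫ x, cp h k Φ x ∂μ).re
  | [], Q, Φ, P, hΦ, ⟨a, P', ha, hP', h⟩ => by
    simp only [expect_box_cons, expect_box_nil, List.length_nil, cp]
    have := cs_step (μ := μ) (Finset.range Q) {([] : List ℕ)} a (fun m k => Φ (m :: k)) ha
      (fun m k => hΦ _)
    simp only [Finset.expect_singleton] at this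
    refine le_trans (le_of_eq ?_) this
    have h1 : ∀ m, P [m] = a [] := fun m => by
      rw [h m [] rfl, show P' m [] = 1 from hP' m, mul_one]
    simp only [h1]; rfl
  | Q' :: H, Q, Φ, P, hΦ, ⟨a, P', ha, hP', h⟩ => by
    rw [expect_box_cons]
    set K := box (Q' :: H) with hK
    have hlen : ∀ k ∈ K, k.length = H.length + 1 := fun k hk => by
      simpa using length_of_mem_box _ hk
    -- values of `P'` off the box are irrelevant and are replaced by `0`
    let Ψ : ℕ → List ℕ → X → ℂ := fun m k =>
      if k.length = H.length + 1 then fun x => P' m k x * Φ (m :: k) x else 0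
    have hΨ : ∀ m k, Bdd (Ψ m k) := by
      intro m k
      by_cases hk : k.length = H.length + 1
      · simp only [Ψ, if_pos hk]; exact ((hP' m).bdd k hk).mul (hΦ _)
      · simp only [Ψ, if_neg hk]; exact Bdd.const (c := 0) (by simp)
    have e1 : 𝔼 m ∈ Finset.range Q, 𝔼 k ∈ K, ∫ x, P (m :: k) x * Φ (m :: k) x ∂μ =
        𝔼 m ∈ Finset.range Q, 𝔼 k ∈ K, ∫ x, a k x * Ψ m k x ∂μ := by
      refine Finset.expect_congr rfl fun m _ => Finset.expect_congr rfl fun k hk => ?_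
      simp only [Ψ, if_pos (hlen k hk), h m k (hlen k hk), Pi.mul_apply, mul_assoc]
    have hc := cs_step (μ := μ) (Finset.range Q) K a Ψ ha hΨ
    have ih : ∀ m₀ m, ‖𝔼 k ∈ K, ∫ x, (starRingEnd ℂ) (Ψ m₀ k x) * Ψ m k x ∂μ‖ ^
        (2 ^ (H.length + 1)) ≤ (𝔼 h ∈ K, 𝔼 k ∈ K, ∫ x, cp (m₀ :: h) (m :: k) Φ x ∂μ).re := by
      intro m₀ m
      refine le_trans (le_of_eq ?_) (box_lemma H Q'
        (fun j x => (starRingEnd ℂ) (Φ (m₀ :: j) x) * Φ (m :: j) x)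
        (fun k => cj (P' m₀ k) * P' m k) (fun j => (hΦ _).cj.mul (hΦ _))
        ((hP' m₀).cj.mul (hP' m)))
      congr 2
      refine Finset.expect_congr rfl fun k hk => ?_
      simp only [Ψ, if_pos (hlen k hk), Pi.mul_apply, cj_apply, map_mul]
      congr 1; funext x; ring
    rw [e1, List.length_cons, pow_succ' 2 (H.length + 1), pow_mul]
    refine (pow_le_pow_left₀ (by positivity) hc _).trans ?_
    have hc' : (𝔼 m₀ ∈ Finset.range Q, 𝔼 m ∈ Finset.range Q, 𝔼 k ∈ K,
        ∫ x, (starRingEnd ℂ) (Ψ m₀ k x) * Ψ m k x ∂μ).re ≤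
        𝔼 m₀ ∈ Finset.range Q, 𝔼 m ∈ Finset.range Q, ‖𝔼 k ∈ K,
        ∫ x, (starRingEnd ℂ) (Ψ m₀ k x) * Ψ m k x ∂μ‖ := by
      simp only [re_expect]
      refine Finset.expect_le_expect fun m₀ _ => Finset.expect_le_expect fun m _ => ?_
      rw [← re_expect]
      exact Complex.re_le_norm _
    refine (pow_le_pow_left₀ ((sq_nonneg _).trans hc) hc' _).trans ?_
    refine (pow_expect_le _ (fun _ _ => Finset.expect_nonneg fun _ _ => norm_nonneg _)
      (by positivity)).trans ?_
    have e2 : 𝔼 h ∈ box (Q :: Q' :: H), 𝔼 k ∈ box (Q :: Q' :: H), ∫ x, cp h k Φ x ∂μ =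
        𝔼 m₀ ∈ Finset.range Q, 𝔼 m ∈ Finset.range Q, 𝔼 h ∈ K, 𝔼 k ∈ K,
          ∫ x, cp (m₀ :: h) (m :: k) Φ x ∂μ := by
      rw [expect_box_cons]
      refine Finset.expect_congr rfl fun m₀ _ => ?_
      simp only [expect_box_cons Q (Q' :: H)]
      rw [Finset.expect_comm]
    rw [e2, re_expect]
    refine Finset.expect_le_expect fun m₀ _ => ?_
    refine (pow_expect_le _ (fun _ _ => norm_nonneg _) (by positivity)).trans ?_
    rw [re_expect]
    exact Finset.expect_le_expect fun m _ => ih m₀ m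

/-- The translates of `u` along the box. -/
def trl (T : ℤ → X → X) (u : X → ℂ) : List ℕ → X → ℂ := fun k x => u (T (k.sum : ℕ) x)

theorem trl_bdd (hS : Sys μ T) {u : X → ℂ} (hu : Bdd u) (k : List ℕ) : Bdd (trl T u k) :=
  hS.bdd hu _

theorem trl_cons (hS : Sys μ T) (u : X → ℂ) (m₀ m : ℕ) :
    (fun j x => (starRingEnd ℂ) (trl T u (m₀ :: j) x) * trl T u (m :: j) x) =
      trl T (fun x => (starRingEnd ℂ) (u (T m₀ x)) * u (T m x)) := by
  funext j x; simp only [trl, hS.app, List.sum_cons, Nat.cast_add]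

/-- A box average over a concatenated list is the average over the first box of the box averages of
cube products. -/
theorem BB_append (hS : Sys μ T) (H' : List ℕ) : ∀ (H : List ℕ) (u : X → ℂ),
    BB μ T (H ++ H') u = 𝔼 h ∈ box H, 𝔼 k ∈ box H, BB μ T H' (cp h k (trl T u))
  | [], u => by
    simp only [expect_box_nil, cp, List.nil_append]
    congr 1; funext x; simp [trl, hS.app0]
  | Q :: H, u => by
    simp only [expect_box_cons, cp, trl_cons hS, List.cons_append, BB]
    have : ∀ m₀ ∈ Finset.range Q, 𝔼 h ∈ box H, 𝔼 m ∈ Finset.range Q, 𝔼 k ∈ box H,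
        BB μ T H' (cp h k (trl T fun x => (starRingEnd ℂ) (u (T m₀ x)) * u (T m x))) =
        𝔼 m ∈ Finset.range Q, BB μ T (H ++ H')
          (fun x => (starRingEnd ℂ) (u (T m₀ x)) * u (T m x)) := by
      intro m₀ _
      rw [Finset.expect_comm]
      exact Finset.expect_congr rfl fun m _ => (BB_append hS H' H _).symm
    rw [Finset.expect_congr rfl this, Finset.sum_comm]
    simp only [Finset.expect_eq_sum_div_card, Finset.card_range, ← Finset.sum_div]
    simp only [mul_comm (u _)]
    rw [div_div, ← sq, div_eq_inv_mul]

end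

/-! ### Eigenfunctions and the mean ergodic theorem -/

section

open scoped BigOperators

variable {X : Type} [MeasurableSpace X] {μ : Measure X} [IsProbabilityMeasure μ] {T : ℤ → X → X}

/-- `χ` is an eigenfunction of modulus one with eigenvalue `e(θ)`. -/
structure Eig (μ : Measure X) (T : ℤ → X → X) (χ : X → ℂ) (θ : ℝ) : Prop where
  meas : Measurable χ
  norm_one : ∀ x, ‖χ x‖ = 1
  eig : ∀ᵐ x ∂μ, χ (T 1 x) = ee θ * χ x

namespace Eig
variable {χ ψ : X → ℂ} {θ η : ℝ}

theorem bdd (h : Eig μ T χ θ) : Bdd χ := ⟨h.meas, fun x => (h.norm_one x).le⟩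

theorem cj (h : Eig μ T χ θ) : Eig μ T (cj χ) (-θ) :=
  ⟨h.bdd.cj.1, fun x => by simpa using h.norm_one x, h.eig.mono fun x hx => by
    simp only [cj_apply, hx, map_mul, conj_ee]⟩

theorem mul (h : Eig μ T χ θ) (h' : Eig μ T ψ η) : Eig μ T (fun x => χ x * ψ x) (θ + η) :=
  ⟨h.meas.mul h'.meas, fun x => by rw [norm_mul, h.norm_one, h'.norm_one, mul_one], by
    filter_upwards [h.eig, h'.eig] with x h1 h2
    rw [h1, h2, ee_add]; ring⟩

theorem const {c : ℂ} (hc : ‖c‖ = 1) : Eig μ T (fun _ => c) 0 :=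
  ⟨measurable_const, fun _ => hc, ae_of_all _ fun x => by rw [ee_zero, one_mul]⟩

theorem const_mul {c : ℂ} (hc : ‖c‖ = 1) (h : Eig μ T χ θ) : Eig μ T (fun x => c * χ x) θ := by
  simpa using (Eig.const (μ := μ) (T := T) hc).mul h

theorem comp (hS : Sys μ T) (h : Eig μ T χ θ) (n : ℤ) : Eig μ T (fun x => χ (T n x)) θ :=
  ⟨h.meas.comp (hS.meas n), fun x => h.norm_one _, by
    filter_upwards [(hS.mp n).quasiMeasurePreserving.ae h.eig] with x hx
    rw [← hx, hS.app, hS.app, add_comm]⟩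

theorem pow (hS : Sys μ T) (h : Eig μ T χ θ) (n : ℤ) :
    ∀ᵐ x ∂μ, χ (T n x) = ee (n * θ) * χ x := by
  induction n using Int.induction_on with
  | zero => exact ae_of_all _ fun x => by simp [hS.app0, ee_zero]
  | succ n ih =>
    filter_upwards [ih, (h.comp hS n).eig] with x h1 h2
    rw [hS.app] at h2
    rw [h2, h1]; push_cast; rw [add_mul, one_mul, ee_add]; ring
  | pred n ih =>
    filter_upwards [ih, (h.comp hS (-n - 1)).eig] with x h1 h2
    rw [hS.app, sub_add_cancel, h1] at h2
    have h3 : ee ((-(n : ℤ) : ℤ) * θ) = ee θ * ee ((-(n : ℤ) - 1 : ℤ) * θ) := by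
      rw [← ee_add]; congr 1; push_cast; ring
    have hne : ee θ ≠ 0 := by
      intro h0; have := norm_ee θ; rw [h0] at this; simp at this
    rw [h3, mul_assoc] at h2
    exact (mul_left_cancel₀ hne h2).symm

theorem integral_eq_zero (hS : Sys μ T) (h : Eig μ T χ θ) (hθ : ¬ ∃ n : ℤ, θ = n) :
    ∫ x, χ x ∂μ = 0 := by
  have h1 := hS.integral_comp h.meas 1
  rw [integral_congr_ae h.eig, integral_const_mul] at h1
  by_contra h0
  exact hθ ((ee_eq_one_iff θ).1 (mul_right_cancel₀ h0 (by rw [h1, one_mul])))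

theorem ae_const (hE : Ergodic (T 1) μ) (h : Eig μ T χ θ) (hθ : ∃ n : ℤ, θ = n) :
    ∀ᵐ x ∂μ, χ x = ∫ y, χ y ∂μ := by
  obtain ⟨c, hc⟩ := hE.ae_eq_const_of_ae_eq_comp_ae (g := χ) h.meas.aestronglyMeasurable
    (h.eig.mono fun x hx => by
      rw [Function.comp, hx, (ee_eq_one_iff θ).2 hθ, one_mul])
  have : ∫ y, χ y ∂μ = c := by rw [integral_congr_ae hc]; simp
  rw [this]; exact hc

end Eig

/-- The alternating sum of `t` over the vertices of the cube with opposite corners `h`, `k`. -/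
def alt : List ℕ → List ℕ → (List ℕ → ℝ) → ℝ
  | m₀ :: h, m :: k, t => alt h k (fun j => -t (m₀ :: j) + t (m :: j))
  | _, _, t => t []

theorem cp_eig : ∀ (h k : List ℕ) {χ : List ℕ → X → ℂ} {t : List ℕ → ℝ},
    (∀ j, Eig μ T (χ j) (t j)) → Eig μ T (cp h k χ) (alt h k t)
  | m₀ :: h, m :: k, χ, t, hχ => cp_eig h k fun j => (hχ _).cj.mul (hχ _)
  | [], k, χ, t, hχ => by simpa [cp, alt] using hχ []
  | m :: h, [], χ, t, hχ => by simpa [cp, alt] using hχ []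

theorem cp_ee : ∀ (h k : List ℕ) (t : List ℕ → ℝ),
    cp h k (fun j (_ : X) => ee (t j)) = fun _ => ee (alt h k t)
  | m₀ :: h, m :: k, t => by
    simp only [cp, alt]
    rw [← cp_ee h k]
    simp only [conj_ee, ee_add]
  | [], k, t => by simp [cp, alt]
  | m :: h, [], t => by simp [cp, alt]

theorem alt_smul (c : ℝ) : ∀ (h k : List ℕ) (t : List ℕ → ℝ),
    alt h k (fun j => c * t j) = c * alt h k t
  | m₀ :: h, m :: k, t => by
    simp only [alt]
    rw [← alt_smul c h k]
    congr 1; funext j; ring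
  | [], k, t => by simp [alt]
  | m :: h, [], t => by simp [alt]

theorem alt_add : ∀ (h k : List ℕ) (t t' : List ℕ → ℝ),
    alt h k (fun j => t j + t' j) = alt h k t + alt h k t'
  | m₀ :: h, m :: k, t, t' => by
    simp only [alt]
    rw [← alt_add h k]
    congr 1; funext j; ring
  | [], k, t, t' => by simp [alt]
  | m :: h, [], t, t' => by simp [alt]

/-- In positive dimension constants have alternating sum `0`. -/
theorem alt_const (c : ℝ) (m₀ m : ℕ) (h k : List ℕ) : alt (m₀ :: h) (m :: k) (fun _ => c) = 0 := by
  have := alt_smul 0 h k (fun _ => 0)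
  simpa [alt] using this

theorem inner_L2 (f g : X → ℂ) (hf : MemLp f 2 μ) (hg : MemLp g 2 μ) :
    inner ℂ (hf.toLp f) (hg.toLp g) = ∫ x, (starRingEnd ℂ) (f x) * g x ∂μ := by
  rw [L2.inner_def]
  refine integral_congr_ae ?_
  filter_upwards [hf.coeFn_toLp, hg.coeFn_toLp] with x h1 h2
  rw [h1, h2, RCLike.inner_apply, mul_comm]

theorem norm_sq_L2 (f : X → ℂ) (hf : MemLp f 2 μ) : ‖hf.toLp f‖ ^ 2 = ∫ x, ‖f x‖ ^ 2 ∂μ := by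
  have h1 := inner_self_eq_norm_sq_to_K (𝕜 := ℂ) (hf.toLp f)
  rw [inner_L2, ← ofReal_integral_norm_sq] at h1
  have h2 : ((∫ x, ‖f x‖ ^ 2 ∂μ : ℝ) : ℂ) = ((‖hf.toLp f‖ ^ 2 : ℝ) : ℂ) := by
    rw [h1]; push_cast; rfl
  exact_mod_cast h2.symm

theorem toLp_sum {ι : Type*} (s : Finset ι) (f : ι → X → ℂ) (hf : ∀ i, MemLp (f i) 2 μ) :
    ∑ i ∈ s, (hf i).toLp (f i) = (memLp_finsetSum' s fun i _ => hf i).toLp (∑ i ∈ s, f i) := by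
  classical
  induction s using Finset.induction_on with
  | empty => simp only [Finset.sum_empty]; exact (MemLp.toLp_zero _).symm
  | insert a s ha ih =>
    simp only [Finset.sum_insert ha]
    rw [ih, ← MemLp.toLp_add]

theorem Bdd.memLp {f : X → ℂ} (hf : Bdd f) : MemLp f 2 μ :=
  MemLp.of_bound hf.1.aestronglyMeasurable 1 (ae_of_all _ hf.2)

/-- The twisted mean ergodic theorem. The limit `g` is the projection of `F` to the eigenspace of
`e(θ)`; only the convergence of the norms is recorded. -/
theorem mean_ergodic (hS : Sys μ T) {F : X → ℂ} (hF : Bdd F) (θ : ℝ) :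
    ∃ g : X → ℂ, Measurable g ∧ MemLp g 2 μ ∧ (∀ᵐ x ∂μ, g (T 1 x) = ee θ * g x) ∧
      (∀ h : X → ℂ, MemLp h 2 μ → (∀ᵐ x ∂μ, h (T 1 x) = ee θ * h x) →
        ∫ x, (starRingEnd ℂ) (h x) * F x ∂μ = ∫ x, (starRingEnd ℂ) (h x) * g x ∂μ) ∧
      Tendsto (fun N : ℕ => ∫ x, ‖𝔼 n ∈ Finset.range N, ee (-(n * θ)) * F (T n x)‖ ^ 2 ∂μ) atTop
        (𝓝 (∫ x, ‖g x‖ ^ 2 ∂μ)) := by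
  let U : Lp ℂ 2 μ →ₗᵢ[ℂ] Lp ℂ 2 μ := Lp.compMeasurePreservingₗᵢ ℂ (T 1) (hS.mp 1)
  let V : Lp ℂ 2 μ →L[ℂ] Lp ℂ 2 μ := ee (-θ) • U.toContinuousLinearMap
  have hVapp : ∀ f, V f = ee (-θ) • U f := fun f => rfl
  have hUapp : ∀ (f : X → ℂ) (hf : MemLp f 2 μ), U (hf.toLp f) =
      (hf.comp_measurePreserving (hS.mp 1)).toLp _ := fun f hf =>
    Lp.toLp_compMeasurePreserving hf (hS.mp 1)
  have hVn : ‖V‖ ≤ 1 := by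
    refine ContinuousLinearMap.opNorm_le_bound _ zero_le_one fun f => ?_
    rw [hVapp, norm_smul, norm_ee, U.norm_map]
  have hfix : ∀ (f : X → ℂ) (hf : MemLp f 2 μ), V (hf.toLp f) = hf.toLp f ↔
      ∀ᵐ x ∂μ, f (T 1 x) = ee θ * f x := by
    intro f hf
    rw [hVapp, hUapp, ← MemLp.toLp_const_smul, MemLp.toLp_eq_toLp_iff]
    have h1 : ee (-θ) * ee θ = 1 := by rw [← ee_add]; simp [ee_zero]
    constructor
    · intro h
      filter_upwards [h] with x hx
      simp only [Pi.smul_apply, Function.comp, smul_eq_mul] at hx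
      rw [← hx, ← mul_assoc, mul_comm (ee θ), h1, one_mul]
    · intro h
      filter_upwards [h] with x hx
      simp only [Pi.smul_apply, Function.comp, smul_eq_mul]
      rw [hx, ← mul_assoc, h1, one_mul]
  set G : Lp ℂ 2 μ := ((V.eqLocus (1 : Lp ℂ 2 μ →L[ℂ] Lp ℂ 2 μ)).orthogonalProjectionOnto
    (hF.memLp.toLp F)).1 with hG
  have hGm : MemLp G 2 μ := Lp.memLp G
  have hGV : V G = G := ((V.eqLocus (1 : Lp ℂ 2 μ →L[ℂ] Lp ℂ 2 μ)).orthogonalProjectionOnto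
    (hF.memLp.toLp F)).2
  have hGe : hGm.toLp G = G := Lp.toLp_coeFn G hGm
  refine ⟨G, (Lp.stronglyMeasurable G).measurable, hGm, ?_, ?_, ?_⟩
  · rw [← hfix G hGm, hGe, hGV]
  · intro h hh hhe
    rw [← inner_L2 h F hh hF.memLp, ← inner_L2 h G hh hGm, hGe]
    have hmem : hh.toLp h ∈ V.eqLocus (1 : Lp ℂ 2 μ →L[ℂ] Lp ℂ 2 μ) := (hfix h hh).2 hhe
    have := Submodule.inner_starProjection_left_eq_right
      (V.eqLocus (1 : Lp ℂ 2 μ →L[ℂ] Lp ℂ 2 μ)) (hh.toLp h) (hF.memLp.toLp F)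
    rw [Submodule.starProjection_eq_self_iff.2 hmem] at this
    exact this
  · have hlim := (ContinuousLinearMap.tendsto_birkhoffAverage_orthogonalProjection V hVn
      (hF.memLp.toLp F)).norm.pow 2
    rw [← hG] at hlim
    have e1 : ‖G‖ ^ 2 = ∫ x, ‖G x‖ ^ 2 ∂μ := by rw [← norm_sq_L2 G hGm, hGe]
    rw [e1] at hlim
    refine hlim.congr fun N => ?_
    have hb : ∀ n : ℕ, Bdd (fun x => ee (-(n * θ)) * F (T n x)) := fun n =>
      (Bdd.const (norm_ee _).le).mul (hS.bdd hF n)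
    have hit : ∀ n : ℕ, V^[n] (hF.memLp.toLp F) = (hb n).memLp.toLp _ := by
      intro n
      induction n with
      | zero =>
        simp only [Function.iterate_zero, id]
        rw [MemLp.toLp_eq_toLp_iff]
        exact ae_of_all _ fun x => by simp [ee_zero, hS.app0]
      | succ n ih =>
        rw [Function.iterate_succ', Function.comp, ih, hVapp, hUapp, ← MemLp.toLp_const_smul,
          MemLp.toLp_eq_toLp_iff]
        refine ae_of_all _ fun x => ?_
        simp only [Pi.smul_apply, Function.comp, smul_eq_mul, hS.app]
        rw [← mul_assoc, ← ee_add]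
        push_cast
        congr 2; ring
    have hb' : Bdd (fun x => 𝔼 n ∈ Finset.range N, ee (-(n * θ)) * F (T n x)) :=
      Bdd.expect fun n _ => hb n
    rw [← norm_sq_L2 _ hb'.memLp]
    congr 2
    rw [birkhoffAverage, birkhoffSum]
    simp only [id, hit]
    rw [toLp_sum (Finset.range N) _ (fun n => (hb n).memLp), ← MemLp.toLp_const_smul, MemLp.toLp_eq_toLp_iff]
    refine ae_of_all _ fun x => ?_
    simp only [Pi.smul_apply, Finset.sum_apply, smul_eq_mul, Finset.expect_eq_sum_div_card,
      Finset.card_range]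
    rw [div_eq_inv_mul]

/-- The mean ergodic theorem for an ergodic system. -/
theorem mean_ergodic_const (hS : Sys μ T) (hE : Ergodic (T 1) μ) {F : X → ℂ} (hF : Bdd F) :
    Tendsto (fun N : ℕ => ∫ x, ‖𝔼 n ∈ Finset.range N, F (T (n : ℕ) x)‖ ^ 2 ∂μ) atTop
        (𝓝 (‖∫ x, F x ∂μ‖ ^ 2)) := by
  obtain ⟨g, hgm, hg2, hge, hgp, hlim⟩ := mean_ergodic hS hF 0
  obtain ⟨c, hc⟩ := hE.ae_eq_const_of_ae_eq_comp_ae (g := g) hgm.aestronglyMeasurable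
    (hge.mono fun x hx => by rw [Function.comp, hx, ee_zero, one_mul])
  have h1 := hgp (fun _ => 1) (memLp_const _) (ae_of_all _ fun x => by simp [ee_zero])
  simp only [map_one, one_mul] at h1
  rw [integral_congr_ae hc] at h1
  simp only [Function.const_apply, integral_const, probReal_univ, one_smul] at h1
  have h2 : ∫ x, ‖g x‖ ^ 2 ∂μ = ‖∫ x, F x ∂μ‖ ^ 2 := by
    rw [integral_congr_ae (g := fun _ => ‖c‖ ^ 2) (hc.mono fun x hx => by
      simp only [hx, Function.const_apply]), h1]
    simp
  rw [h2] at hlim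
  refine hlim.congr fun N => ?_
  simp [ee_zero]

end

/-! ### Fourier analysis on a grid -/

section

open scoped BigOperators

theorem ee_nat_mul (n : ℕ) (x : ℝ) : ee (n * x) = ee x ^ n := by
  induction n with
  | zero => simp [ee_zero]
  | succ n ih => rw [pow_succ, ← ih, ← ee_add]; congr 1; push_cast; ring

/-- Orthogonality of the characters on the grid of `M`-th roots of unity. -/
theorem grid_orth {M : ℕ} (hM : 0 < M) {k : ℤ} (hk : |k| < M) :
    ∑ j ∈ Finset.range M, ee (k * ((j : ℝ) / M)) = if k = 0 then (M : ℂ) else 0 := by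
  have hM' : (M : ℝ) ≠ 0 := by positivity
  split_ifs with h
  · simp [h, ee_zero]
  · have h1 : ∀ j : ℕ, ee (k * ((j : ℝ) / M)) = ee (k / M) ^ j := fun j => by
      rw [← ee_nat_mul]; congr 1; ring
    simp only [h1]
    have hz : ee (k / M) ≠ 1 := by
      rw [Ne, ee_eq_one_iff]
      rintro ⟨n, hn⟩
      rw [div_eq_iff hM'] at hn
      have hn' : k = n * M := by exact_mod_cast hn
      rw [hn', abs_mul, Nat.abs_cast] at hk
      have hn0 : n ≠ 0 := by rintro rfl; exact h (by simpa using hn')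
      have := Int.one_le_abs hn0
      nlinarith
    have hone : ee (k / M) ^ M = 1 := by
      rw [← ee_nat_mul, mul_div_cancel₀ _ hM', ee_int]
    have := geom_sum_mul (ee (k / M)) M
    rw [hone, sub_self] at this
    exact (mul_eq_zero.1 this).resolve_right (sub_ne_zero.2 hz)

/-- Parseval's identity on the grid. -/
theorem grid_parseval {Q : ℕ} (hQ : 0 < Q) (R : ℤ → ℂ) :
    ∑ j ∈ Finset.range (2 * Q), ‖∑ k ∈ Finset.Ioo (-(Q : ℤ)) Q,
      R k * ee (-(k * ((j : ℝ) / (2 * Q : ℕ))))‖ ^ 2 =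
      (2 * Q : ℕ) * ∑ k ∈ Finset.Ioo (-(Q : ℤ)) Q, ‖R k‖ ^ 2 := by
  have h : ((∑ j ∈ Finset.range (2 * Q), ‖∑ k ∈ Finset.Ioo (-(Q : ℤ)) Q,
      R k * ee (-(k * ((j : ℝ) / (2 * Q : ℕ))))‖ ^ 2 : ℝ) : ℂ) =
      (((2 * Q : ℕ) * ∑ k ∈ Finset.Ioo (-(Q : ℤ)) Q, ‖R k‖ ^ 2 : ℝ) : ℂ) := by
    rw [Complex.ofReal_sum]
    simp only [norm_sq_conj, map_sum, Finset.sum_mul_sum, map_mul, conj_ee]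
    rw [Finset.sum_comm]
    simp only [Complex.ofReal_mul, Complex.ofReal_sum, norm_sq_conj, Finset.mul_sum]
    refine Finset.sum_congr rfl fun k hk => ?_
    rw [Finset.sum_comm]
    have h1 : ∀ l ∈ Finset.Ioo (-(Q : ℤ)) Q, ∑ j ∈ Finset.range (2 * Q),
        (starRingEnd ℂ) (R k) * ee (-(-(k * ((j : ℝ) / (2 * Q : ℕ))))) *
          (R l * ee (-(l * ((j : ℝ) / (2 * Q : ℕ))))) =
        if k = l then ((2 * Q : ℕ) : ℂ) * ((starRingEnd ℂ) (R k) * R l) else 0 := by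
      intro l hl
      rw [Finset.mem_Ioo] at hk hl
      have h2 := grid_orth (M := 2 * Q) (by omega) (k := k - l) (by
        rw [abs_lt]; push_cast; omega)
      have h3 : ∀ j : ℕ, (starRingEnd ℂ) (R k) * ee (-(-(k * ((j : ℝ) / (2 * Q : ℕ))))) *
          (R l * ee (-(l * ((j : ℝ) / (2 * Q : ℕ))))) =
          (starRingEnd ℂ) (R k) * R l * ee ((k - l : ℤ) * ((j : ℝ) / (2 * Q : ℕ))) := by
        intro j
        have : ee ((k - l : ℤ) * ((j : ℝ) / (2 * Q : ℕ))) =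
            ee (-(-(k * ((j : ℝ) / (2 * Q : ℕ))))) * ee (-(l * ((j : ℝ) / (2 * Q : ℕ)))) := by
          rw [← ee_add]; congr 1; push_cast; ring
        rw [this]; ring
      simp only [h3, ← Finset.mul_sum, h2, sub_eq_zero]
      split_ifs <;> ring
    rw [Finset.sum_congr rfl h1, Finset.sum_ite_eq, if_pos hk]
    simp
  exact_mod_cast h

/-- A positive definite Toeplitz form with large entries has a large value on the grid. -/
theorem grid_large {Q : ℕ} (hQ : 0 < Q) (c : ℤ → ℂ) (hc : ∀ k, ‖c k‖ ≤ 1) (d : ℝ → ℝ)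
    (hd0 : ∀ θ, 0 ≤ d θ) (hd : ∀ θ, ((d θ : ℝ) : ℂ) = ∑ m ∈ Finset.range Q, ∑ m' ∈ Finset.range Q,
      c ((m : ℤ) - m') * ee (-(((m : ℤ) - m' : ℤ) * θ)))
    {γ : ℝ} (hγ : 0 < γ) (h : γ * Q ^ 2 < ∑ m ∈ Finset.range Q, ∑ m' ∈ Finset.range Q,
      ‖c ((m : ℤ) - m')‖ ^ 2) :
    ∃ θ ∈ Set.Icc (0 : ℝ) 1, γ ^ 2 * Q ^ 2 / 2 ≤ d θ := by
  classical
  by_contra hcon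
  push Not at hcon
  set M := 2 * Q with hM
  have hQ' : (0 : ℝ) < Q := by exact_mod_cast hQ
  have hMQ : (M : ℝ) = 2 * Q := by rw [hM]; push_cast; ring
  set K := Finset.Ioo (-(Q : ℤ)) Q with hK
  let r : ℤ → ℕ := fun k => ((Finset.range Q ×ˢ Finset.range Q).filter
    (fun p : ℕ × ℕ => (p.1 : ℤ) - p.2 = k)).card
  have hfib : ∀ {E : Type} [AddCommMonoid E] (G : ℤ → E),
      ∑ m ∈ Finset.range Q, ∑ m' ∈ Finset.range Q, G ((m : ℤ) - m') = ∑ k ∈ K, r k • G k := by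
    intro E _ G
    rw [← Finset.sum_product',
      ← Finset.sum_fiberwise_of_maps_to (t := K) (g := fun p : ℕ × ℕ => (p.1 : ℤ) - p.2)]
    · refine Finset.sum_congr rfl fun k _ => ?_
      rw [Finset.sum_congr rfl (g := fun _ => G k), Finset.sum_const]
      intro p hp
      rw [(Finset.mem_filter.1 hp).2]
    · intro p hp
      simp only [Finset.mem_product, Finset.mem_range] at hp
      rw [hK, Finset.mem_Ioo]; omega
  have hgrid : ∀ j ∈ Finset.range M, (j : ℝ) / M ∈ Set.Icc (0 : ℝ) 1 := by
    intro j hj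
    rw [Finset.mem_range] at hj
    exact ⟨by positivity, div_le_one_of_le₀ (by exact_mod_cast hj.le) (by positivity)⟩
  -- first moment
  have h1 : ∑ j ∈ Finset.range M, d ((j : ℝ) / M) ≤ M * Q := by
    have e : ((∑ j ∈ Finset.range M, d ((j : ℝ) / M) : ℝ) : ℂ) =
        ∑ m ∈ Finset.range Q, c 0 * M := by
      rw [Complex.ofReal_sum]
      simp only [hd]
      rw [Finset.sum_comm]
      refine Finset.sum_congr rfl fun m hm => ?_
      rw [Finset.sum_comm]
      have h2 : ∀ m' ∈ Finset.range Q, ∑ j ∈ Finset.range M,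
          c ((m : ℤ) - m') * ee (-(((m : ℤ) - m' : ℤ) * ((j : ℝ) / M))) =
          if m = m' then c 0 * M else 0 := by
        intro m' hm'
        rw [Finset.mem_range] at hm hm'
        have h3 := grid_orth (M := M) (by omega) (k := -((m : ℤ) - m')) (by
          rw [abs_lt]; omega)
        rw [← Finset.mul_sum]
        push_cast at h3 ⊢
        simp only [neg_mul] at h3
        rw [h3]
        by_cases hmm : m = m'
        · simp [hmm]
        · rw [if_neg (by omega), if_neg hmm, mul_zero]
      rw [Finset.sum_congr rfl h2, Finset.sum_ite_eq, if_pos hm]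
    have h4 : ‖((∑ j ∈ Finset.range M, d ((j : ℝ) / M) : ℝ) : ℂ)‖ ≤ M * Q := by
      rw [e, Finset.sum_const, Finset.card_range, nsmul_eq_mul, norm_mul, norm_mul]
      simp only [Complex.norm_natCast]
      nlinarith [hc 0, mul_pos hQ' (show (0 : ℝ) < M by rw [hMQ]; positivity)]
    rw [Complex.norm_real] at h4
    exact (le_abs_self _).trans h4
  -- second moment
  have h2 : ∑ j ∈ Finset.range M, d ((j : ℝ) / M) ^ 2 = M * ∑ k ∈ K, ‖(r k : ℂ) * c k‖ ^ 2 := by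
    rw [← grid_parseval hQ]
    refine Finset.sum_congr rfl fun j _ => ?_
    have e : ((d ((j : ℝ) / M) : ℝ) : ℂ) = ∑ k ∈ K, (r k : ℂ) * c k *
        ee (-(k * ((j : ℝ) / M))) := by
      rw [hd, hfib (fun k => c k * ee (-(k * ((j : ℝ) / M))))]
      refine Finset.sum_congr rfl fun k _ => ?_
      rw [nsmul_eq_mul, mul_assoc]
    rw [← e, Complex.norm_real, Real.norm_eq_abs, sq_abs]
  have h3 : ∑ j ∈ Finset.range M, d ((j : ℝ) / M) ^ 2 ≤ γ ^ 2 * Q ^ 2 / 2 * (M * Q) := by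
    refine le_trans ?_ (mul_le_mul_of_nonneg_left h1 (by positivity))
    rw [Finset.mul_sum]
    refine Finset.sum_le_sum fun j hj => ?_
    rw [sq]
    exact mul_le_mul_of_nonneg_right (hcon _ (hgrid j hj)).le (hd0 _)
  have h4 : ∑ m ∈ Finset.range Q, ∑ m' ∈ Finset.range Q, ‖c ((m : ℤ) - m')‖ ^ 2 =
      ∑ k ∈ K, ((r k : ℝ) * ‖c k‖) * ‖c k‖ := by
    rw [hfib (fun k => ‖c k‖ ^ 2)]
    refine Finset.sum_congr rfl fun k _ => ?_
    rw [nsmul_eq_mul]; ring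
  have h5 := Finset.sum_mul_sq_le_sq_mul_sq K (fun k => (r k : ℝ) * ‖c k‖) (fun k => ‖c k‖)
  rw [← h4] at h5
  have h6 : ∑ k ∈ K, ‖c k‖ ^ 2 ≤ 2 * Q := by
    refine (Finset.sum_le_sum (g := fun _ => (1 : ℝ)) fun k _ =>
      pow_le_one₀ (norm_nonneg _) (hc k)).trans ?_
    rw [Finset.sum_const, hK, Int.card_Ioo, nsmul_eq_mul, mul_one]
    have : ((Q : ℤ) - -(Q : ℤ) - 1).toNat ≤ 2 * Q := by omega
    exact_mod_cast this
  have h7 : ∑ k ∈ K, ((r k : ℝ) * ‖c k‖) ^ 2 ≤ γ ^ 2 * Q ^ 2 / 2 * Q := by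
    have : ∀ k, ((r k : ℝ) * ‖c k‖) ^ 2 = ‖(r k : ℂ) * c k‖ ^ 2 := fun k => by
      rw [norm_mul, Complex.norm_natCast]
    simp only [this]
    have hMpos : (0 : ℝ) < M := by rw [hMQ]; positivity
    rw [h2] at h3
    refine le_of_mul_le_mul_left (h3.trans (le_of_eq ?_)) hMpos
    ring
  have h8 : (γ * Q ^ 2) ^ 2 < (∑ m ∈ Finset.range Q, ∑ m' ∈ Finset.range Q,
      ‖c ((m : ℤ) - m')‖ ^ 2) ^ 2 := by gcongr
  have h9 : (∑ k ∈ K, ((r k : ℝ) * ‖c k‖) ^ 2) * ∑ k ∈ K, ‖c k‖ ^ 2 ≤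
      γ ^ 2 * Q ^ 2 / 2 * Q * (2 * Q) :=
    mul_le_mul h7 h6 (Finset.sum_nonneg fun _ _ => by positivity) (by positivity)
  have : (γ * Q ^ 2) ^ 2 < γ ^ 2 * Q ^ 2 / 2 * Q * (2 * Q) := h8.trans_le (h5.trans h9)
  have e : (γ * (Q : ℝ) ^ 2) ^ 2 = γ ^ 2 * Q ^ 2 / 2 * Q * (2 * Q) := by ring
  exact absurd this (by rw [e]; exact lt_irrefl _)

end

/-! ### Correlation with eigenfunctions -/

section

open scoped BigOperators

variable {X : Type} [MeasurableSpace X] {μ : Measure X} [IsProbabilityMeasure μ] {T : ℤ → X → X}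

/-- The squared `L²` norm of a twisted ergodic average. -/
def tw (μ : Measure X) (T : ℤ → X → X) (F : X → ℂ) (N : ℕ) (θ : ℝ) : ℝ :=
  ∫ x, ‖𝔼 n ∈ Finset.range N, ee (-(n * θ)) * F (T n x)‖ ^ 2 ∂μ

theorem tw_bdd (hS : Sys μ T) {F : X → ℂ} (hF : Bdd F) (n : ℕ) (θ : ℝ) :
    Bdd (fun x => ee (-(n * θ)) * F (T n x)) := (Bdd.const (norm_ee _).le).mul (hS.bdd hF n)

theorem tw_eq (hS : Sys μ T) {F : X → ℂ} (hF : Bdd F) (N : ℕ) (θ : ℝ) :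
    ((tw μ T F N θ : ℝ) : ℂ) = 𝔼 m' ∈ Finset.range N, 𝔼 m ∈ Finset.range N,
      (∫ x, F (T ((m : ℤ) - m') x) * (starRingEnd ℂ) (F x) ∂μ) *
        ee (-(((m : ℤ) - m' : ℤ) * θ)) := by
  rw [tw, integral_norm_sq_expect fun n _ => tw_bdd hS hF n θ]
  refine Finset.expect_congr rfl fun m' _ => Finset.expect_congr rfl fun m _ => ?_
  have hm : Measurable (fun x => F (T ((m : ℤ) - m') x) * (starRingEnd ℂ) (F x)) :=
    ((hS.bdd hF _).mul hF.cj).1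
  rw [← hS.integral_comp hm m', ← integral_mul_const]
  congr 1; funext x
  have : ee (-(((m : ℤ) - m' : ℤ) * θ)) = ee (m' * θ) * ee (-(m * θ)) := by
    rw [← ee_add]; congr 1; push_cast; ring
  rw [hS.app, sub_add_cancel, this, map_mul, conj_ee, neg_neg]
  ring

theorem tw_continuous (hS : Sys μ T) {F : X → ℂ} (hF : Bdd F) (N : ℕ) :
    Continuous (tw μ T F N) := by
  have h : Continuous (fun θ => ((tw μ T F N θ : ℝ) : ℂ)) := by
    simp only [tw_eq hS hF, Finset.expect_eq_sum_div_card]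
    have := continuous_ee
    fun_prop
  exact Complex.continuous_re.comp h

/-- A large one-dimensional box average forces a large twisted average, by Fourier analysis on the
grid. -/
theorem exists_tw_large (hS : Sys μ T) {F : X → ℂ} (hF : Bdd F) {Q : ℕ} (hQ : 0 < Q) {γ : ℝ}
    (hγ : 0 < γ) (h : γ < BB μ T [Q] F) : ∃ θ ∈ Set.Icc (0 : ℝ) 1, γ ^ 2 / 2 ≤ tw μ T F Q θ := by
  have hQ' : (0 : ℝ) < Q := by exact_mod_cast hQ
  obtain ⟨θ, hθ, hd⟩ := grid_large hQ
    (fun k => ∫ x, F (T k x) * (starRingEnd ℂ) (F x) ∂μ)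
    (fun k => ((hS.bdd hF _).mul hF.cj).norm_integral_le) (fun θ => Q ^ 2 * tw μ T F Q θ)
    (fun θ => mul_nonneg (by positivity) (integral_nonneg fun _ => by positivity))
    (fun θ => by
      rw [Complex.ofReal_mul, tw_eq hS hF, Finset.sum_comm]
      simp only [Finset.expect_eq_sum_div_card, Finset.card_range, ← Finset.sum_div]
      have : (Q : ℂ) ≠ 0 := by exact_mod_cast hQ.ne'
      push_cast
      field_simp
      try simp only [mul_comm θ]) hγ (by
      simp only [BB] at h
      rw [lt_inv_mul_iff₀ (by positivity), mul_comm] at h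
      refine h.trans_le (le_of_eq ?_)
      refine Finset.sum_congr rfl fun m _ => Finset.sum_congr rfl fun m' _ => ?_
      have hm : Measurable (fun x => F (T ((m : ℤ) - m') x) * (starRingEnd ℂ) (F x)) :=
        ((hS.bdd hF _).mul hF.cj).1
      rw [← hS.integral_comp hm m']
      simp only [hS.app, sub_add_cancel])
  refine ⟨θ, hθ, ?_⟩
  have : (Q : ℝ) ^ 2 * (γ ^ 2 / 2) ≤ Q ^ 2 * tw μ T F Q θ := by
    refine le_trans (le_of_eq ?_) hd; ring
  exact le_of_mul_le_mul_left this (by positivity)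

/-- Shifting the window of an average. -/
theorem norm_expect_shift_sub (a : ℕ → ℂ) (ha : ∀ n, ‖a n‖ ≤ 1) (Q i : ℕ) (hQ : 0 < Q) :
    ‖𝔼 n ∈ Finset.range Q, a (n + i) - 𝔼 n ∈ Finset.range Q, a n‖ ≤ 2 * i / Q := by
  have hQ' : (0 : ℝ) < Q := by exact_mod_cast hQ
  rw [Finset.expect_eq_sum_div_card, Finset.expect_eq_sum_div_card, ← sub_div, norm_div,
    Finset.card_range, Complex.norm_natCast]
  refine div_le_div_of_nonneg_right ?_ hQ'.le
  have h1 := Finset.sum_range_add a Q i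
  have h2 := Finset.sum_range_add a i Q
  rw [add_comm i Q, h1] at h2
  have h3 : ∑ n ∈ Finset.range Q, a (n + i) - ∑ n ∈ Finset.range Q, a n =
      ∑ n ∈ Finset.range i, a (Q + n) - ∑ n ∈ Finset.range i, a n := by
    simp only [add_comm _ i]
    linear_combination -h2
  rw [h3]
  refine (norm_sub_le _ _).trans ?_
  have h4 : ∀ b : ℕ → ℂ, (∀ n, ‖b n‖ ≤ 1) → ‖∑ n ∈ Finset.range i, b n‖ ≤ i := fun b hb => by
    refine (norm_sum_le_of_le _ fun n _ => hb n).trans ?_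
    simp
  have := h4 _ ha
  have := h4 (fun n => a (Q + n)) fun n => ha _
  linarith

/-- Up to a small error, a long average is an average of translates of short ones. -/
theorem tw_compare (hS : Sys μ T) {F : X → ℂ} (hF : Bdd F) {Q N : ℕ} (hQ : 0 < Q) (hN : 0 < N)
    (θ : ℝ) : tw μ T F Q θ ≤ tw μ T F N θ + 4 * N / Q := by
  have hQ' : (0 : ℝ) < Q := by exact_mod_cast hQ
  have hNe : (Finset.range N).Nonempty := by simpa using hN.ne'
  have hQe : (Finset.range Q).Nonempty := by simpa using hQ.ne'
  set a : ℕ → X → ℂ := fun n x => ee (-(n * θ)) * F (T n x) with ha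
  have hab : ∀ n, Bdd (a n) := fun n => tw_bdd hS hF n θ
  have hb : ∀ n, Bdd (fun x => 𝔼 i ∈ Finset.range N, a (n + i) x) := fun n =>
    Bdd.expect fun i _ => hab _
  have hI : ∀ {f : X → ℂ}, Bdd f → Integrable (fun x => ‖f x‖ ^ 2) μ := fun {f} hf =>
    Integrable.of_bound ((hf.1.norm.pow_const 2).aestronglyMeasurable) 1 (ae_of_all _ fun x => by
      rw [Real.norm_of_nonneg (by positivity)]
      exact pow_le_one₀ (norm_nonneg _) (hf.2 x))
  have hbn : ∀ n, ∫ x, ‖𝔼 i ∈ Finset.range N, a (n + i) x‖ ^ 2 ∂μ = tw μ T F N θ := by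
    intro n
    rw [tw]
    have h1 : ∀ x, ‖𝔼 i ∈ Finset.range N, a (n + i) x‖ ^ 2 =
        (fun y => ‖𝔼 i ∈ Finset.range N, ee (-(i * θ)) * F (T i y)‖ ^ 2) (T n x) := by
      intro x
      have h2 : ∀ i : ℕ, a (n + i) x = ee (-(n * θ)) * (ee (-(i * θ)) * F (T i (T n x))) := by
        intro i
        simp only [ha]
        rw [hS.app, ← mul_assoc, ← ee_add]
        congr 2
        · push_cast; ring
        · push_cast; rw [add_comm]
      simp only [h2, ← Finset.mul_expect, norm_mul, norm_ee, one_mul]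
    simp only [h1]
    have hmp := hS.mp (n : ℤ)
    have hmeas : Measurable (fun y => ‖𝔼 i ∈ Finset.range N, ee (-(i * θ)) * F (T i y)‖ ^ 2) :=
      (Bdd.expect fun i _ => tw_bdd hS hF i θ).1.norm.pow_const 2
    conv_rhs => rw [← hmp.map_eq]
    rw [integral_map hmp.measurable.aemeasurable hmeas.aestronglyMeasurable]
  have hpt : ∀ x, ‖𝔼 n ∈ Finset.range Q, a n x‖ ^ 2 ≤
      𝔼 n ∈ Finset.range Q, ‖𝔼 i ∈ Finset.range N, a (n + i) x‖ ^ 2 + 4 * N / Q := by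
    intro x
    set p := ‖𝔼 n ∈ Finset.range Q, a n x‖
    set q := ‖𝔼 n ∈ Finset.range Q, 𝔼 i ∈ Finset.range N, a (n + i) x‖
    have hp1 : p ≤ 1 := (Bdd.expect (s := Finset.range Q) fun n _ => hab n).2 x
    have hq1 : q ≤ 1 := (Bdd.expect (s := Finset.range Q) fun n _ => hb n).2 x
    have hp0 : 0 ≤ p := norm_nonneg _
    have hq0 : 0 ≤ q := norm_nonneg _
    have hpq : p ≤ q + 2 * N / Q := by
      have e : 𝔼 n ∈ Finset.range Q, 𝔼 i ∈ Finset.range N, a (n + i) x -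
          𝔼 n ∈ Finset.range Q, a n x = 𝔼 i ∈ Finset.range N,
            (𝔼 n ∈ Finset.range Q, a (n + i) x - 𝔼 n ∈ Finset.range Q, a n x) := by
        rw [Finset.expect_sub_distrib, Finset.expect_const hNe, Finset.expect_comm]
      have h2 : ‖𝔼 n ∈ Finset.range Q, 𝔼 i ∈ Finset.range N, a (n + i) x -
          𝔼 n ∈ Finset.range Q, a n x‖ ≤ 2 * N / Q := by
        rw [e]
        refine (RCLike.norm_expect_le (K := ℂ)).trans (Finset.expect_le hNe fun i hi => ?_)
        refine (norm_expect_shift_sub (fun n => a n x) (fun n => (hab n).2 x) Q i hQ).trans ?_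
        have : (i : ℝ) ≤ N := by exact_mod_cast (Finset.mem_range.1 hi).le
        gcongr
      have h3 := norm_sub_norm_le (𝔼 n ∈ Finset.range Q, a n x)
        (𝔼 n ∈ Finset.range Q, 𝔼 i ∈ Finset.range N, a (n + i) x)
      rw [norm_sub_rev] at h3
      linarith
    have h4 : p ^ 2 ≤ q ^ 2 + 4 * N / Q := by
      have e4 : 4 * (N : ℝ) / Q = 2 * (2 * N / Q) := by ring
      have : 0 ≤ 2 * (N : ℝ) / Q := by positivity
      rw [e4]
      generalize 2 * (N : ℝ) / Q = e at *
      by_cases hle : p ≤ q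
      · nlinarith
      · nlinarith
    have h5 : q ^ 2 ≤ 𝔼 n ∈ Finset.range Q, ‖𝔼 i ∈ Finset.range N, a (n + i) x‖ ^ 2 :=
      (pow_le_pow_left₀ hq0 (RCLike.norm_expect_le (K := ℂ)) 2).trans
        (pow_expect_le _ (fun _ _ => norm_nonneg _) two_ne_zero)
    linarith
  have hint : Integrable (fun x => 𝔼 n ∈ Finset.range Q,
      ‖𝔼 i ∈ Finset.range N, a (n + i) x‖ ^ 2) μ := by
    simp only [Finset.expect_eq_sum_div_card (K := ℝ)]
    exact (integrable_finsetSum _ fun n _ => hI (hb n)).div_const _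
  calc tw μ T F Q θ ≤ ∫ x, (𝔼 n ∈ Finset.range Q, ‖𝔼 i ∈ Finset.range N, a (n + i) x‖ ^ 2 +
        4 * N / Q) ∂μ :=
        integral_mono (hI (Bdd.expect fun n _ => hab n)) (hint.add (integrable_const _)) hpt
    _ = tw μ T F N θ + 4 * N / Q := by
        rw [integral_add hint (integrable_const _)]
        simp only [Finset.expect_eq_sum_div_card (K := ℝ)]
        rw [integral_div, integral_finsetSum _ fun n _ => hI (hb n)]
        simp only [hbn]
        simp only [Finset.sum_const, Finset.card_range, nsmul_eq_mul, integral_const,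
          probReal_univ, one_smul]
        field_simp

/-- A function whose autocorrelations do not vanish on average correlates with an eigenfunction. -/
theorem exists_eig (hS : Sys μ T) (hE : Ergodic (T 1) μ) {F : X → ℂ} (hF : Bdd F) {γ : ℝ}
    (hγ : 0 < γ) (h : ∃ᶠ Q : ℕ in atTop, γ < BB μ T [Q] F) :
    ∃ (χ : X → ℂ) (θ : ℝ), Eig μ T χ θ ∧ γ / 2 ≤ ‖∫ x, F x * χ x ∂μ‖ := by
  have h' : ∃ᶠ Q : ℕ in atTop, ∃ θ ∈ Set.Icc (0 : ℝ) 1, γ ^ 2 / 2 ≤ tw μ T F Q θ :=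
    (h.and_eventually (eventually_gt_atTop 0)).mono fun Q hQ =>
      exists_tw_large hS hF hQ.2 hγ hQ.1
  have : ∃ t : ℕ → ℝ, (∀ Q, t Q ∈ Set.Icc (0 : ℝ) 1) ∧
      ∃ᶠ Q : ℕ in atTop, γ ^ 2 / 2 ≤ tw μ T F Q (t Q) := by
    have : ∀ Q : ℕ, ∃ θ ∈ Set.Icc (0 : ℝ) 1, (∃ θ ∈ Set.Icc (0 : ℝ) 1,
        γ ^ 2 / 2 ≤ tw μ T F Q θ) → γ ^ 2 / 2 ≤ tw μ T F Q θ := by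
      intro Q
      by_cases hq : ∃ θ ∈ Set.Icc (0 : ℝ) 1, γ ^ 2 / 2 ≤ tw μ T F Q θ
      · obtain ⟨θ, h1, h2⟩ := hq; exact ⟨θ, h1, fun _ => h2⟩
      · exact ⟨0, by simp, fun hh => absurd hh hq⟩
    choose t ht1 ht2 using this
    exact ⟨t, ht1, h'.mono fun Q hQ => ht2 Q hQ⟩
  obtain ⟨t, ht, hfr⟩ := this
  have hne := Filter.frequently_mem_iff_neBot.1 hfr
  obtain ⟨u, hu, hut⟩ : ∃ u : Ultrafilter ℕ, (u : Filter ℕ) ≤ atTop ∧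
      ∀ᶠ Q in (u : Filter ℕ), γ ^ 2 / 2 ≤ tw μ T F Q (t Q) := by
    obtain ⟨u, hu⟩ := @Ultrafilter.exists_le _ _ hne
    exact ⟨u, hu.trans inf_le_left, hu (mem_inf_of_right (mem_principal_self _))⟩
  obtain ⟨θ, -, hθ⟩ := isCompact_Icc.ultrafilter_le_nhds (u.map t) (by
    rw [le_principal_iff]; exact Filter.mem_map.2 (Filter.univ_mem' ht))
  have hθ' : Tendsto t u (𝓝 θ) := hθ
  have hlow : ∀ N : ℕ, 0 < N → γ ^ 2 / 2 ≤ tw μ T F N θ := by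
    intro N hN
    have h1 : Tendsto (fun Q : ℕ => tw μ T F N (t Q) + 4 * N / Q) u
        (𝓝 (tw μ T F N θ + 0)) :=
      (((tw_continuous hS hF N).tendsto θ).comp hθ').add
        ((tendsto_const_div_atTop_nhds_zero_nat (4 * N : ℝ)).mono_left hu)
    rw [add_zero] at h1
    refine ge_of_tendsto h1 ?_
    filter_upwards [hut, hu (eventually_gt_atTop 0)] with Q hQ hQ0
    exact hQ.trans (tw_compare hS hF hQ0 hN _)
  obtain ⟨g, hgm, hg2, hge, hgp, hlim⟩ := mean_ergodic hS hF θ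
  have hg : γ ^ 2 / 2 ≤ ∫ x, ‖g x‖ ^ 2 ∂μ :=
    ge_of_tendsto hlim ((eventually_gt_atTop 0).mono fun N hN => hlow N hN)
  obtain ⟨ρ, hρ⟩ := hE.ae_eq_const_of_ae_eq_comp_ae (g := fun x => ‖g x‖)
    hgm.norm.aestronglyMeasurable
    (hge.mono fun x hx => by simp only [Function.comp, hx, norm_mul, norm_ee, one_mul])
  rw [integral_congr_ae (g := fun _ => ρ ^ 2) (hρ.mono fun x hx => by
    have hx' : ‖g x‖ = ρ := hx
    simp only [hx'])] at hg
  simp only [integral_const, probReal_univ, one_smul] at hg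
  have hρ0 : 0 ≤ ρ := by
    obtain ⟨x, hx⟩ := hρ.exists
    have hx' : ‖g x‖ = ρ := hx
    exact hx' ▸ norm_nonneg _
  have hρ1 : γ / 2 ≤ ρ := by
    by_contra hlt
    push Not at hlt
    nlinarith
  have hρpos : 0 < ρ := by linarith
  let χ : X → ℂ := fun x => if ‖g x‖ = ρ then g x / ρ else 1
  have hχae : ∀ᵐ x ∂μ, χ x = g x / ρ := hρ.mono fun x hx => if_pos hx
  have hχ : Eig μ T χ θ := by
    refine ⟨Measurable.ite (measurableSet_eq_fun hgm.norm measurable_const)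
      (hgm.div_const _) measurable_const, fun x => ?_, ?_⟩
    · by_cases hx : ‖g x‖ = ρ
      · simp only [χ, if_pos hx, norm_div, hx, Complex.norm_real, Real.norm_of_nonneg hρ0]
        exact div_self hρpos.ne'
      · simp only [χ, if_neg hx, norm_one]
    · filter_upwards [hχae, (hS.mp 1).quasiMeasurePreserving.ae hχae, hge] with x h1 h2 h3
      rw [h1, h2, h3, mul_div_assoc]
  refine ⟨cj χ, -θ, hχ.cj, ?_⟩
  have h1 := hgp χ hχ.bdd.memLp hχ.eig
  have h2 : ∫ x, (starRingEnd ℂ) (χ x) * g x ∂μ = ρ := by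
    rw [integral_congr_ae (g := fun _ => (ρ : ℂ))]
    · simp
    · filter_upwards [hχae, hρ] with x hx hx2
      have hx2' : ‖g x‖ = ρ := hx2
      rw [hx, map_div₀, Complex.conj_ofReal, div_mul_eq_mul_div, ← norm_sq_conj, hx2']
      push_cast
      rw [sq, mul_div_assoc, div_self (by exact_mod_cast hρpos.ne'), mul_one]
  simp only [cj_apply, mul_comm (F _)]
  rw [h1, h2, Complex.norm_real, Real.norm_of_nonneg hρ0]
  exact hρ1

end

/-! ### The Kronecker factor -/

section

open scoped BigOperators

variable {X : Type} [MeasurableSpace X] {μ : Measure X} [IsProbabilityMeasure μ] {T : ℤ → X → X}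

/-- Trigonometric polynomials: finite linear combinations of eigenfunctions. -/
def TP (μ : Measure X) (T : ℤ → X → X) : Submodule ℂ (X → ℂ) :=
  Submodule.span ℂ {χ | ∃ θ, Eig μ T χ θ}

theorem TP_mul {p q : X → ℂ} (hp : p ∈ TP μ T) (hq : q ∈ TP μ T) : p * q ∈ TP μ T := by
  refine Submodule.span_induction₂ (p := fun p q _ _ => p * q ∈ TP μ T) ?_ ?_ ?_ ?_ ?_ ?_ ?_ hp hq
  · rintro x y ⟨θ, hx⟩ ⟨η, hy⟩
    exact Submodule.subset_span ⟨θ + η, hx.mul hy⟩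
  · intro y _; rw [zero_mul]; exact Submodule.zero_mem _
  · intro y _; rw [mul_zero]; exact Submodule.zero_mem _
  · intro x y z _ _ _ h1 h2; rw [add_mul]; exact Submodule.add_mem _ h1 h2
  · intro x y z _ _ _ h1 h2; rw [mul_add]; exact Submodule.add_mem _ h1 h2
  · intro r x y _ _ h; rw [smul_mul_assoc]; exact Submodule.smul_mem _ _ h
  · intro r x y _ _ h; rw [mul_smul_comm]; exact Submodule.smul_mem _ _ h

theorem TP_star {p : X → ℂ} (hp : p ∈ TP μ T) : cj p ∈ TP μ T := by
  refine Submodule.span_induction (p := fun p _ => cj p ∈ TP μ T) ?_ ?_ ?_ ?_ hp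
  · rintro x ⟨θ, hx⟩
    exact Submodule.subset_span ⟨-θ, hx.cj⟩
  · have : cj (0 : X → ℂ) = 0 := by funext x; simp
    rw [this]; exact Submodule.zero_mem _
  · intro x y _ _ h1 h2
    have : cj (x + y) = cj x + cj y := by funext t; simp
    rw [this]; exact Submodule.add_mem _ h1 h2
  · intro r x _ h
    have : cj (r • x) = (starRingEnd ℂ) r • cj x := by funext t; simp
    rw [this]; exact Submodule.smul_mem _ _ h

theorem TP_const (c : ℂ) : (fun _ => c) ∈ TP μ T := by
  have : (fun _ : X => c) = c • (fun _ : X => (1 : ℂ)) := by funext x; simp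
  rw [this]
  exact Submodule.smul_mem _ _ (Submodule.subset_span ⟨0, Eig.const (by simp)⟩)

theorem TP_bound {p : X → ℂ} (hp : p ∈ TP μ T) : Measurable p ∧ ∃ C : ℝ, ∀ x, ‖p x‖ ≤ C := by
  refine Submodule.span_induction (p := fun p _ => Measurable p ∧ ∃ C : ℝ, ∀ x, ‖p x‖ ≤ C)
    ?_ ?_ ?_ ?_ hp
  · rintro x ⟨θ, hx⟩
    exact ⟨hx.meas, 1, fun t => (hx.norm_one t).le⟩
  · exact ⟨measurable_const, 0, fun x => by simp⟩
  · rintro x y _ _ ⟨h1, C, hC⟩ ⟨h2, D, hD⟩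
    exact ⟨h1.add h2, C + D, fun t => (norm_add_le _ _).trans (add_le_add (hC t) (hD t))⟩
  · rintro r x _ ⟨h, C, hC⟩
    refine ⟨h.const_smul r, ‖r‖ * C, fun t => ?_⟩
    rw [Pi.smul_apply, norm_smul]
    exact mul_le_mul_of_nonneg_left (hC t) (norm_nonneg _)

theorem TP_memLp {p : X → ℂ} (hp : p ∈ TP μ T) : MemLp p 2 μ := by
  obtain ⟨h, C, hC⟩ := TP_bound hp
  exact MemLp.of_bound h.aestronglyMeasurable C (ae_of_all _ hC)

/-- Trigonometric polynomials as a subspace of `L²`. -/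
def TPL (μ : Measure X) [IsProbabilityMeasure μ] (T : ℤ → X → X) : Submodule ℂ (Lp ℂ 2 μ) where
  carrier := {q | ∃ p ∈ TP μ T, q =ᵐ[μ] p}
  zero_mem' := ⟨0, Submodule.zero_mem _, Lp.coeFn_zero _ _ _⟩
  add_mem' := by
    rintro a b ⟨p, hp, h1⟩ ⟨q, hq, h2⟩
    exact ⟨p + q, Submodule.add_mem _ hp hq, (Lp.coeFn_add a b).trans (h1.add h2)⟩
  smul_mem' := by
    rintro c a ⟨p, hp, h1⟩
    exact ⟨c • p, Submodule.smul_mem _ _ hp, (Lp.coeFn_smul c a).trans (h1.const_smul c)⟩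

/-- Continuous functions of trigonometric polynomials are uniform limits of trigonometric
polynomials. -/
theorem TP_approx {p : X → ℂ} (hp : p ∈ TP μ T) {G : ℂ → ℂ} (hG : Continuous G) {ε : ℝ}
    (hε : 0 < ε) : ∃ q ∈ TP μ T, ∀ x, ‖G (p x) - q x‖ ≤ ε := by
  obtain ⟨-, C, hC⟩ := TP_bound hp
  let s : Set ℂ := Metric.closedBall 0 C
  have : CompactSpace s := isCompact_iff_compactSpace.1 (isCompact_closedBall 0 C)
  have hs : ∀ x, p x ∈ s := fun x => by simpa [s] using hC x
  let G' : C(s, ℂ) := ⟨fun z => G z, hG.comp continuous_subtype_val⟩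
  have hmem : G' ∈ StarAlgebra.elemental ℂ (ContinuousMap.restrict s (ContinuousMap.id ℂ)) := by
    rw [ContinuousMap.elemental_id_eq_top]; trivial
  have hmem' : G' ∈ closure ((StarAlgebra.adjoin ℂ
      {ContinuousMap.restrict s (ContinuousMap.id ℂ)} : StarSubalgebra ℂ C(s, ℂ)) : Set C(s, ℂ)) :=
    hmem
  obtain ⟨g, hg, hd⟩ := Metric.mem_closure_iff.1 hmem' ε hε
  refine ⟨fun x => g ⟨p x, hs x⟩, ?_, fun x => ?_⟩
  · refine StarAlgebra.adjoin_induction (p := fun g _ => (fun x => g ⟨p x, hs x⟩) ∈ TP μ T)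
      ?_ ?_ ?_ ?_ ?_ hg
    · rintro x rfl
      exact hp
    · intro r
      exact TP_const r
    · intro x y _ _ h1 h2
      exact Submodule.add_mem _ h1 h2
    · intro x y _ _ h1 h2
      exact TP_mul h1 h2
    · intro x _ h
      exact TP_star h
  · have := (ContinuousMap.dist_apply_le_dist (f := G') (g := g) ⟨p x, hs x⟩).trans hd.le
    rwa [dist_eq_norm] at this

/-- Truncation of a real number to `[-1, 1]`. -/
def cl1 (r : ℝ) : ℝ := max (min r 1) (-1)

theorem cl1_lip (a b : ℝ) : |cl1 a - cl1 b| ≤ |a - b| := by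
  refine (abs_max_sub_max_le_abs _ _ _).trans ?_
  refine (abs_min_sub_min_le_max _ _ _ _).trans ?_
  simp

theorem cl1_bd (a : ℝ) : |cl1 a| ≤ 1 := by
  rw [abs_le, cl1]; exact ⟨le_max_right _ _, max_le (min_le_right _ _) (by norm_num)⟩

theorem cl1_var {f w : ℝ} (hf : |f| ≤ 1) : (f - w) * (w - cl1 w) ≤ -(w - cl1 w) ^ 2 := by
  rw [abs_le] at hf
  unfold cl1
  rcases le_total w 1 with h1 | h1
  · rw [min_eq_left h1]
    rcases le_total w (-1) with h2 | h2
    · rw [max_eq_right h2]; nlinarith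
    · rw [max_eq_left h2]; simp
  · rw [min_eq_right h1, max_eq_left (by norm_num)]; nlinarith

/-- Coordinatewise truncation of a complex number to the square `[-1, 1]²`. -/
def cl (z : ℂ) : ℂ := ⟨cl1 z.re, cl1 z.im⟩

theorem cl_lip : LipschitzWith 2 cl := by
  refine LipschitzWith.of_dist_le_mul fun z w => ?_
  rw [dist_eq_norm, dist_eq_norm]
  refine (Complex.norm_le_abs_re_add_abs_im _).trans ?_
  have h1 := (cl1_lip z.re w.re).trans (by simpa using Complex.abs_re_le_norm (z - w))
  have h2 := (cl1_lip z.im w.im).trans (by simpa using Complex.abs_im_le_norm (z - w))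
  simp only [cl, Complex.sub_re, Complex.sub_im, NNReal.coe_ofNat]
  linarith

theorem cl_norm (z : ℂ) : ‖cl z‖ ≤ 2 := by
  refine (Complex.norm_le_abs_re_add_abs_im _).trans ?_
  have h1 := cl1_bd z.re
  have h2 := cl1_bd z.im
  simp only [cl]; linarith

theorem cl_zero : cl 0 = 0 := by
  have : cl1 0 = 0 := by norm_num [cl1]
  simp [cl, this]; rfl

/-- Truncation is the nearest point projection to the square, expressed by its variational
inequality at a point `f` of the unit disc. -/
theorem cl_var {f w : ℂ} (hf : ‖f‖ ≤ 1) :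
    ((starRingEnd ℂ) (f - w) * (w - cl w)).re ≤ -‖w - cl w‖ ^ 2 := by
  have h1 := cl1_var (w := w.re) ((Complex.abs_re_le_norm f).trans hf)
  have h2 := cl1_var (w := w.im) ((Complex.abs_im_le_norm f).trans hf)
  rw [← Complex.normSq_eq_norm_sq, Complex.normSq_apply]
  simp only [cl, map_sub, Complex.mul_re, Complex.sub_re, Complex.sub_im, Complex.conj_re,
    Complex.conj_im]
  nlinarith

/-- The Kronecker subspace of `L²`: the closed span of the eigenfunctions. -/
def KK (μ : Measure X) [IsProbabilityMeasure μ] (T : ℤ → X → X) : Submodule ℂ (Lp ℂ 2 μ) :=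
  (TPL μ T).topologicalClosure

/-- The Kronecker subspace is stable under truncation. -/
theorem KK_cl {q : Lp ℂ 2 μ} (hq : q ∈ KK μ T) : cl_lip.compLp cl_zero q ∈ KK μ T := by
  have h1 : ∀ q ∈ (TPL μ T : Set (Lp ℂ 2 μ)), cl_lip.compLp cl_zero q ∈
      closure (TPL μ T : Set (Lp ℂ 2 μ)) := by
    rintro q ⟨p, hp, hqp⟩
    rw [Metric.mem_closure_iff]
    intro ε hε
    obtain ⟨r, hr, hb⟩ := TP_approx hp cl_lip.continuous (half_pos hε)
    refine ⟨(TP_memLp hr).toLp r, ⟨r, hr, MemLp.coeFn_toLp _⟩, ?_⟩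
    rw [dist_eq_norm]
    refine (Lp.norm_le_of_ae_bound (half_pos hε).le ?_).trans_lt
      (b := measureUnivNNReal μ ^ (2 : ENNReal).toReal⁻¹ * (ε / 2)) ?_
    · filter_upwards [Lp.coeFn_sub (cl_lip.compLp cl_zero q) ((TP_memLp hr).toLp r),
        cl_lip.coeFn_compLp cl_zero q, (TP_memLp hr).coeFn_toLp, hqp] with x h1 h2 h3 h4
      rw [h1, Pi.sub_apply, h2, h3, Function.comp, h4]
      exact hb x
    · have : measureUnivNNReal μ = 1 := by simp [measureUnivNNReal]
      rw [this]; simp; linarith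
  have h2 : Continuous (cl_lip.compLp cl_zero : Lp ℂ 2 μ → Lp ℂ 2 μ) :=
    cl_lip.continuous_compLp cl_zero
  have h3 := map_mem_closure h2 (s := (TPL μ T : Set (Lp ℂ 2 μ)))
    (t := closure (TPL μ T : Set (Lp ℂ 2 μ))) hq h1
  rwa [closure_closure] at h3

/-- `w` is an `L²` limit of trigonometric polynomials. -/
def InK (μ : Measure X) (T : ℤ → X → X) (w : X → ℂ) : Prop :=
  ∀ ε : ℝ, 0 < ε → ∃ p ∈ TP μ T, ∫ x, ‖w x - p x‖ ^ 2 ∂μ ≤ ε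

/-- Measurable and bounded by `2`. -/
def Bdd2 (w : X → ℂ) : Prop := Measurable w ∧ ∀ x, ‖w x‖ ≤ 2

/-- The projection of `f` to the Kronecker factor has a representative bounded by `2`: the
truncation of the projection is again in the Kronecker subspace and is at least as close to `f`, so
it equals the projection. -/
theorem exists_proj {f : X → ℂ} (hf : Bdd f) :
    ∃ w : X → ℂ, Bdd2 w ∧ InK μ T w ∧ ∀ χ θ, Eig μ T χ θ → ∫ x, (f x - w x) * χ x ∂μ = 0 := by
  have : CompleteSpace (KK μ T) := (Submodule.isClosed_topologicalClosure _).completeSpace_coe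
  let F : Lp ℂ 2 μ := hf.memLp.toLp f
  let W : Lp ℂ 2 μ := (KK μ T).starProjection F
  have hW : W ∈ KK μ T := Submodule.starProjection_apply_mem _ _
  have hperp : ∀ q ∈ KK μ T, inner ℂ (F - W) q = 0 := fun q hq =>
    Submodule.starProjection_inner_eq_zero _ _ hq
  let W' := cl_lip.compLp cl_zero W
  have hW' : W' ∈ KK μ T := KK_cl hW
  have heq : W = W' := by
    have h0 := hperp (W - W') (Submodule.sub_mem _ hW hW')
    have h1 : ‖W - W'‖ ^ 2 ≤ 0 := by
      have h2 : ‖W - W'‖ ^ 2 = ∫ x, ‖(W - W' : Lp ℂ 2 μ) x‖ ^ 2 ∂μ := by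
        have := norm_sq_L2 (W - W' : Lp ℂ 2 μ) (Lp.memLp (W - W'))
        rwa [Lp.toLp_coeFn] at this
      have h3 : (∫ x, (inner ℂ ((F - W : Lp ℂ 2 μ) x) ((W - W' : Lp ℂ 2 μ) x)).re ∂μ) = 0 := by
        rw [L2.inner_def] at h0
        have := integral_re (𝕜 := ℂ) (L2.integrable_inner (𝕜 := ℂ) (F - W) (W - W'))
        simp only [RCLike.re_eq_complex_re] at this
        rw [this, h0]; rfl
      have h4 : ∫ x, (inner ℂ ((F - W : Lp ℂ 2 μ) x) ((W - W' : Lp ℂ 2 μ) x)).re ∂μ ≤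
          ∫ x, -‖(W - W' : Lp ℂ 2 μ) x‖ ^ 2 ∂μ := by
        refine integral_mono_ae ?_ ?_ ?_
        · exact (L2.integrable_inner (𝕜 := ℂ) (F - W) (W - W')).re
        · exact ((memLp_two_iff_integrable_sq_norm (Lp.memLp _).1).1 (Lp.memLp _)).neg
        · filter_upwards [Lp.coeFn_sub F W, Lp.coeFn_sub W W', cl_lip.coeFn_compLp cl_zero W,
            hf.memLp.coeFn_toLp] with x h1 h2 h3 h4
          rw [h1, h2, Pi.sub_apply, Pi.sub_apply, h3, RCLike.inner_apply]
          simp only [F, h4, Function.comp]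
          rw [mul_comm]
          exact cl_var (hf.2 x)
      rw [integral_neg, h3] at h4
      rw [h2]; linarith
    have h5 : ‖W - W'‖ = 0 := by
      have := norm_nonneg (W - W')
      nlinarith
    exact sub_eq_zero.1 (norm_eq_zero.1 h5)
  obtain ⟨w0, hw0m, hw0⟩ := (Lp.aestronglyMeasurable W)
  let w : X → ℂ := fun x => cl (w0 x)
  have hwW : W =ᵐ[μ] w := by
    have := cl_lip.coeFn_compLp cl_zero W
    filter_upwards [this, hw0] with x h1 h2
    have h3 : W x = W' x := congrArg (fun q : Lp ℂ 2 μ => q x) heq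
    rw [h3, h1, Function.comp, h2]
  have hw2 : Bdd2 w := ⟨cl_lip.continuous.measurable.comp hw0m.measurable, fun x => cl_norm _⟩
  have hwL : MemLp w 2 μ := MemLp.of_bound hw2.1.aestronglyMeasurable 2 (ae_of_all _ hw2.2)
  refine ⟨w, hw2, fun ε hε => ?_, fun χ θ hχ => ?_⟩
  · obtain ⟨q, ⟨p, hp, hqp⟩, hd⟩ := Metric.mem_closure_iff.1 hW (Real.sqrt ε) (Real.sqrt_pos.2 hε)
    refine ⟨p, hp, ?_⟩
    have h2 : ‖W - q‖ ^ 2 = ∫ x, ‖(W - q : Lp ℂ 2 μ) x‖ ^ 2 ∂μ := by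
      have := norm_sq_L2 (W - q : Lp ℂ 2 μ) (Lp.memLp (W - q))
      rwa [Lp.toLp_coeFn] at this
    rw [integral_congr_ae (g := fun x => ‖(W - q : Lp ℂ 2 μ) x‖ ^ 2) (by
      filter_upwards [hwW, Lp.coeFn_sub W q, hqp] with x h1 h2 h3
      rw [h2, Pi.sub_apply, h1, h3]), ← h2]
    rw [dist_eq_norm] at hd
    have := Real.sq_sqrt hε.le
    nlinarith [norm_nonneg (W - q)]
  · have hq : hχ.cj.bdd.memLp.toLp (cj χ) ∈ KK μ T :=
      Submodule.le_topologicalClosure _ ⟨cj χ, Submodule.subset_span ⟨-θ, hχ.cj⟩, MemLp.coeFn_toLp _⟩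
    have h0 := hperp _ hq
    rw [L2.inner_def] at h0
    have h1 : ∫ x, (starRingEnd ℂ) ((f x - w x) * χ x) ∂μ = 0 := by
      rw [← h0]
      refine integral_congr_ae ?_
      filter_upwards [Lp.coeFn_sub F W, hwW, hf.memLp.coeFn_toLp, hχ.cj.bdd.memLp.coeFn_toLp]
        with x h1 h2 h3 h4
      rw [h1, Pi.sub_apply, h2, h4, RCLike.inner_apply]
      simp only [F, h3, cj_apply, map_mul]
      ring
    rw [integral_conj] at h1
    simpa using h1

theorem Bdd2.half {w : X → ℂ} (hw : Bdd2 w) : Bdd (fun x => w x / 2) :=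
  ⟨hw.1.div_const _, fun x => by
    rw [norm_div]; have := hw.2 x; simp; linarith⟩

theorem integral_cs {f g : X → ℂ} (hf : MemLp f 2 μ) (hg : MemLp g 2 μ) :
    ‖∫ x, f x * g x ∂μ‖ ^ 2 ≤ (∫ x, ‖f x‖ ^ 2 ∂μ) * ∫ x, ‖g x‖ ^ 2 ∂μ := by
  have hf' : MemLp (cj f) 2 μ := hf.star
  have h := norm_inner_le_norm (𝕜 := ℂ) (hf'.toLp (cj f)) (hg.toLp g)
  rw [inner_L2] at h
  have h2 := pow_le_pow_left₀ (norm_nonneg _) h 2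
  rw [mul_pow, norm_sq_L2, norm_sq_L2] at h2
  simpa using h2

/-- A function orthogonal to all eigenfunctions is orthogonal to the Kronecker factor. -/
theorem orth_InK {u w : X → ℂ} (hu : Bdd u) (ho : ∀ χ θ, Eig μ T χ θ → ∫ x, u x * χ x ∂μ = 0)
    (hw : Bdd2 w) (hK : InK μ T w) : ∫ x, u x * (starRingEnd ℂ) (w x) ∂μ = 0 := by
  have hp0 : ∀ p ∈ TP μ T, ∫ x, u x * (starRingEnd ℂ) (p x) ∂μ = 0 := by
    have key : ∀ p ∈ TP μ T, ∫ x, u x * p x ∂μ = 0 := by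
      intro p hp
      obtain ⟨n, c, g, rfl⟩ := Submodule.mem_span_set'.1 hp
      simp only [Finset.sum_apply, Pi.smul_apply, smul_eq_mul, Finset.mul_sum]
      have hg : ∀ i, ∃ θ, Eig μ T (g i : X → ℂ) θ := fun i => (g i).2
      rw [integral_finsetSum]
      · refine Finset.sum_eq_zero fun i _ => ?_
        obtain ⟨θ, hθ⟩ := hg i
        have := ho _ θ hθ
        simp only [mul_left_comm _ (c i)]
        rw [integral_const_mul, this, mul_zero]
      · intro i _
        obtain ⟨θ, hθ⟩ := hg i
        simp only [mul_left_comm _ (c i)]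
        exact ((hu.mul hθ.bdd).integrable).const_mul _
    exact fun p hp => key _ (TP_star hp)
  have hwL : MemLp w 2 μ := MemLp.of_bound hw.1.aestronglyMeasurable 2 (ae_of_all _ hw.2)
  by_contra hne
  have hpos : 0 < ‖∫ x, u x * (starRingEnd ℂ) (w x) ∂μ‖ ^ 2 := by positivity
  obtain ⟨p, hp, hd⟩ := hK _ (half_pos hpos)
  have hpL := TP_memLp hp
  have h1 := integral_cs hu.memLp ((hwL.sub hpL).star)
  have h2 : ∫ x, u x * (star (w - p)) x ∂μ = ∫ x, u x * (starRingEnd ℂ) (w x) ∂μ := by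
    have : ∀ x, u x * (star (w - p)) x = u x * (starRingEnd ℂ) (w x) -
        u x * (starRingEnd ℂ) (p x) := fun x => by simp [mul_sub]
    simp only [this]
    rw [integral_sub, hp0 p hp, sub_zero]
    · exact hu.memLp.integrable_mul hwL.star
    · exact hu.memLp.integrable_mul hpL.star
  have h3 : ∫ x, ‖u x‖ ^ 2 ∂μ ≤ 1 := by
    refine (integral_mono (g := fun _ => (1 : ℝ)) ?_ (integrable_const _) fun x => ?_).trans (by simp)
    · exact (memLp_two_iff_integrable_sq_norm hu.memLp.1).1 hu.memLp
    · exact pow_le_one₀ (norm_nonneg _) (hu.2 x)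
  rw [h2] at h1
  have h4 : ∀ x, ‖star (w - p) x‖ = ‖w x - p x‖ := fun x => norm_star (w x - p x)
  simp only [h4] at h1
  have h5 : 0 ≤ ∫ x, ‖w x - p x‖ ^ 2 ∂μ := integral_nonneg fun _ => by positivity
  nlinarith

end

/-! ### The linear phase property -/

section

open scoped BigOperators

variable {X : Type} [MeasurableSpace X] {μ : Measure X} [IsProbabilityMeasure μ] {T : ℤ → X → X}

open Classical in
/-- Real indicator of a proposition. -/
def ind (p : Prop) : ℝ := if p then 1 else 0

theorem ind_nonneg (p : Prop) : 0 ≤ ind p := by unfold ind; split_ifs <;> norm_num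
theorem ind_le_one (p : Prop) : ind p ≤ 1 := by unfold ind; split_ifs <;> norm_num
theorem ind_true {p : Prop} (h : p) : ind p = 1 := if_pos h
theorem ind_false {p : Prop} (h : ¬ p) : ind p = 0 := if_neg h
theorem ind_norm (p : Prop) : ‖(ind p : ℂ)‖ ≤ 1 := by
  rw [Complex.norm_real, Real.norm_of_nonneg (ind_nonneg p)]; exact ind_le_one p

theorem lo_bdd (h k : List ℕ) (hl : h.length = k.length) {Φ : List ℕ → X → ℂ}
    (hΦ : ∀ j, Bdd (Φ j)) : Bdd (lo h k Φ) := (lo_Lw h hΦ).bdd k hl.symm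

theorem cp_ind (A : List ℕ → Prop) (h k : List ℕ) (hl : h.length = k.length) :
    ∃ a : ℂ, ‖a‖ ≤ ind (A k) ∧ cp h k (fun j (_ : X) => (ind (A j) : ℂ)) = fun _ => a := by
  rcases isEmpty_or_nonempty X with hX | ⟨⟨x0⟩⟩
  · exact ⟨0, by simpa using ind_nonneg _, funext fun x => hX.elim x⟩
  refine ⟨cp h k (fun j (_ : X) => (ind (A j) : ℂ)) x0, ?_, ?_⟩
  · rw [cp_eq_mul_lo h k hl, norm_mul, Complex.norm_real, Real.norm_of_nonneg (ind_nonneg _)]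
    exact mul_le_of_le_one_right (ind_nonneg _)
      ((lo_bdd h k hl fun j => Bdd.const (ind_norm _)).2 x0)
  · exact cp_comp (fun _ => x0) h k (fun j (_ : X) => (ind (A j) : ℂ))

/-- The proportion of pairs `(h, k)` with `k ∈ A` and integral alternating sum of `t`. -/
def dens (H : List ℕ) (A : List ℕ → Prop) (t : List ℕ → ℝ) : ℝ :=
  𝔼 h ∈ box H, 𝔼 k ∈ box H, ind (A k ∧ ∃ n : ℤ, alt h k t = n)

/-- The quantity that detects linear phases correlating with `f`. -/
def cor (μ : Measure X) (T : ℤ → X → X) (f : X → ℂ) (H : List ℕ) (A : List ℕ → Prop)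
    (χ P : List ℕ → X → ℂ) : ℂ :=
  𝔼 k ∈ box H, ∫ x, P k x * ((ind (A k) : ℂ) * (f (T (k.sum : ℕ) x) * χ k x)) ∂μ

/-- If many translates of `f` correlate with eigenfunctions up to lower order factors, then the
eigenvalues have many coincidences. -/
def Lin (μ : Measure X) (T : ℤ → X → X) (f : X → ℂ) : Prop :=
  ∀ (s : ℕ) (δ : ℝ), 0 < δ → ∃ c : ℝ, 0 < c ∧ ∀ (Q : ℕ) (H : List ℕ), H.length = s →
    ∀ (A : List ℕ → Prop) (χ : List ℕ → X → ℂ) (t : List ℕ → ℝ), (∀ k, Eig μ T (χ k) (t k)) →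
    ∀ P : List ℕ → X → ℂ, Lw (s + 1) P → δ ≤ ‖cor μ T f (Q :: H) A χ P‖ → c ≤ dens (Q :: H) A t

theorem expect_re_le {ι : Type*} (s : Finset ι) (f : ι → ℂ) (g : ι → ℝ)
    (h : ∀ i ∈ s, (f i).re ≤ g i) : (𝔼 i ∈ s, f i).re ≤ 𝔼 i ∈ s, g i := by
  rw [re_expect]; exact Finset.expect_le_expect h

/-- The box lemma reduces the correlation to integrals of products of eigenfunctions, which vanish
unless the alternating sum of the eigenvalues is an integer. -/
theorem Lin_eig (hS : Sys μ T) {ψ : X → ℂ} {θ : ℝ} (hψ : Eig μ T ψ θ) : Lin μ T ψ := by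
  intro s δ hδ
  refine ⟨δ ^ (2 ^ (s + 1)), by positivity, ?_⟩
  rintro Q H rfl A χ t hχ P hP hle
  have hE : ∀ k : List ℕ, Eig μ T (fun x => ψ (T (k.sum : ℕ) x) * χ k x) (θ + t k) := fun k =>
    (hψ.comp hS _).mul (hχ k)
  have hb := box_lemma (μ := μ) H Q
    (fun k x => (ind (A k) : ℂ) * (ψ (T (k.sum : ℕ) x) * χ k x)) P
    (fun k => (Bdd.const (ind_norm _)).mul (hE k).bdd) hP
  refine (pow_le_pow_left₀ hδ.le hle _).trans (hb.trans ?_)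
  refine expect_re_le _ _ _ fun h hh => expect_re_le _ _ _ fun k hk => ?_
  have hlh := length_of_mem_box _ hh
  have hlk := length_of_mem_box _ hk
  obtain ⟨a, ha, hcp⟩ := cp_ind (X := X) A h k (hlh.trans hlk.symm)
  have hE' := cp_eig h k hE
  rw [cp_mul h k (fun j _ => (ind (A j) : ℂ)) (fun k x => ψ (T (k.sum : ℕ) x) * χ k x), hcp]
  simp only
  rw [integral_const_mul]
  have halt : alt h k (fun k => θ + t k) = alt h k t := by
    rw [alt_add h k (fun _ => θ) t]
    obtain ⟨m₀, h', rfl⟩ := List.exists_cons_of_length_pos (l := h) (by rw [hlh]; simp)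
    obtain ⟨m, k', rfl⟩ := List.exists_cons_of_length_pos (l := k) (by rw [hlk]; simp)
    rw [alt_const, zero_add]
  rw [halt] at hE'
  refine (Complex.re_le_norm _).trans ?_
  rw [norm_mul]
  by_cases hi : ∃ n : ℤ, alt h k t = n
  · simp only [hi, and_true]
    exact (mul_le_of_le_one_right (norm_nonneg _) hE'.bdd.norm_integral_le).trans ha
  · rw [hE'.integral_eq_zero hS hi]
    simpa using ind_nonneg _

/-- Measurable and bounded. -/
def MB (f : X → ℂ) : Prop := Measurable f ∧ ∃ C : ℝ, ∀ x, ‖f x‖ ≤ C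

theorem MB.integrable {f : X → ℂ} (h : MB f) : Integrable f μ := by
  obtain ⟨hm, C, hC⟩ := h
  exact Integrable.of_bound hm.aestronglyMeasurable C (ae_of_all _ hC)

theorem Bdd.MB {f : X → ℂ} (h : Bdd f) : MB f := ⟨h.1, 1, h.2⟩

theorem MB.mul {f g : X → ℂ} (hf : MB f) (hg : MB g) : MB (fun x => f x * g x) := by
  obtain ⟨hm, C, hC⟩ := hf
  obtain ⟨hm', D, hD⟩ := hg
  refine ⟨hm.mul hm', C * D, fun x => ?_⟩
  rw [norm_mul]
  exact mul_le_mul (hC x) (hD x) (norm_nonneg _) ((norm_nonneg _).trans (hC x))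

theorem MB.add {f g : X → ℂ} (hf : MB f) (hg : MB g) : MB (fun x => f x + g x) := by
  obtain ⟨hm, C, hC⟩ := hf
  obtain ⟨hm', D, hD⟩ := hg
  exact ⟨hm.add hm', C + D, fun x => (norm_add_le _ _).trans (add_le_add (hC x) (hD x))⟩

theorem MB.const (c : ℂ) : MB (fun _ : X => c) := ⟨measurable_const, ‖c‖, fun _ => le_rfl⟩

theorem MB.sub {f g : X → ℂ} (hf : MB f) (hg : MB g) : MB (fun x => f x - g x) := by
  obtain ⟨hm, C, hC⟩ := hf
  obtain ⟨hm', D, hD⟩ := hg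
  exact ⟨hm.sub hm', C + D, fun x => (norm_sub_le _ _).trans (add_le_add (hC x) (hD x))⟩

theorem MB.comp {f : X → ℂ} (hf : MB f) {g : X → X} (hg : Measurable g) : MB (fun x => f (g x)) := by
  obtain ⟨hm, C, hC⟩ := hf
  exact ⟨hm.comp hg, C, fun x => hC _⟩

theorem MB.memLp {f : X → ℂ} (h : MB f) : MemLp f 2 μ := by
  obtain ⟨hm, C, hC⟩ := h
  exact MemLp.of_bound hm.aestronglyMeasurable C (ae_of_all _ hC)

theorem cor_integrand_MB (hS : Sys μ T) {f : X → ℂ} (hf : MB f) {H : List ℕ} {A : List ℕ → Prop}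
    {χ P : List ℕ → X → ℂ} {t : List ℕ → ℝ} (hχ : ∀ k, Eig μ T (χ k) (t k))
    (hP : Lw H.length P) {k : List ℕ} (hk : k ∈ box H) :
    MB (fun x => P k x * ((ind (A k) : ℂ) * (f (T (k.sum : ℕ) x) * χ k x))) :=
  (hP.bdd k (length_of_mem_box _ hk)).MB.mul ((MB.const _).mul ((hf.comp (hS.meas _)).mul (hχ k).bdd.MB))

theorem cor_add (hS : Sys μ T) {f g : X → ℂ} (hf : MB f) (hg : MB g) {H : List ℕ}
    {A : List ℕ → Prop} {χ P : List ℕ → X → ℂ} {t : List ℕ → ℝ} (hχ : ∀ k, Eig μ T (χ k) (t k))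
    (hP : Lw H.length P) :
    cor μ T (fun x => f x + g x) H A χ P = cor μ T f H A χ P + cor μ T g H A χ P := by
  unfold cor
  rw [← Finset.expect_add_distrib]
  refine Finset.expect_congr rfl fun k hk => ?_
  rw [← integral_add (cor_integrand_MB hS hf hχ hP hk).integrable
    (cor_integrand_MB hS hg hχ hP hk).integrable]
  congr 1; funext x; ring

theorem cor_smul (r : ℂ) {f : X → ℂ} {H : List ℕ}
    {A : List ℕ → Prop} {χ P : List ℕ → X → ℂ} :
    cor μ T (fun x => r * f x) H A χ P = r * cor μ T f H A χ P := by
  unfold cor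
  rw [Finset.mul_expect]
  refine Finset.expect_congr rfl fun k hk => ?_
  rw [← integral_const_mul]
  congr 1; funext x; ring

theorem norm_cor_le (hS : Sys μ T) {f : X → ℂ} (hf : MB f) {H : List ℕ}
    {A : List ℕ → Prop} {χ P : List ℕ → X → ℂ} {t : List ℕ → ℝ} (hχ : ∀ k, Eig μ T (χ k) (t k))
    (hP : Lw H.length P) : ‖cor μ T f H A χ P‖ ≤ ∫ x, ‖f x‖ ∂μ := by
  unfold cor
  rcases (box H).eq_empty_or_nonempty with he | hne
  · rw [he]; simp; exact integral_nonneg fun _ => norm_nonneg _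
  refine (RCLike.norm_expect_le (K := ℂ)).trans (Finset.expect_le hne fun k hk => ?_)
  have hcomp : ∫ x, ‖f (T (k.sum : ℕ) x)‖ ∂μ = ∫ x, ‖f x‖ ∂μ := by
    have := integral_map (μ := μ) (hS.mp (k.sum : ℕ)).measurable.aemeasurable (f := fun x => ‖f x‖)
      hf.1.norm.aestronglyMeasurable
    rw [(hS.mp _).map_eq] at this
    exact this.symm
  rw [← hcomp]
  refine (norm_integral_le_integral_norm _).trans ?_
  refine integral_mono (cor_integrand_MB hS hf hχ hP hk).integrable.norm
    (hf.comp (hS.meas _)).integrable.norm fun x => ?_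
  have h1 := (hP.bdd k (length_of_mem_box _ hk)).2 x
  have h2 := ind_norm (A k)
  simp only [norm_mul, (hχ k).norm_one, mul_one]
  calc ‖P k x‖ * (‖(ind (A k) : ℂ)‖ * ‖f (T (k.sum : ℕ) x)‖)
      ≤ 1 * (1 * ‖f (T (k.sum : ℕ) x)‖) := by gcongr
    _ = _ := by ring

theorem Lin_add (hS : Sys μ T) {f g : X → ℂ} (hf : MB f) (hg : MB g) (h1 : Lin μ T f)
    (h2 : Lin μ T g) : Lin μ T (fun x => f x + g x) := by
  intro s δ hδ
  obtain ⟨c1, hc1, H1⟩ := h1 s (δ / 2) (half_pos hδ)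
  obtain ⟨c2, hc2, H2⟩ := h2 s (δ / 2) (half_pos hδ)
  refine ⟨min c1 c2, lt_min hc1 hc2, ?_⟩
  rintro Q H rfl A χ t hχ P hP hle
  rw [cor_add hS hf hg (H := Q :: H) hχ hP] at hle
  have := hle.trans (norm_add_le _ _)
  rcases le_or_gt (δ / 2) ‖cor μ T f (Q :: H) A χ P‖ with h | h
  · exact (min_le_left _ _).trans (H1 Q H rfl A χ t hχ P hP h)
  · exact (min_le_right _ _).trans (H2 Q H rfl A χ t hχ P hP (by linarith))

theorem Lin_smul (r : ℂ) {f : X → ℂ} (h1 : Lin μ T f) : Lin μ T (fun x => r * f x) := by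
  intro s δ hδ
  have hr := norm_nonneg r
  obtain ⟨c1, hc1, H1⟩ := h1 s (δ / (‖r‖ + 1)) (by positivity)
  refine ⟨c1, hc1, ?_⟩
  rintro Q H rfl A χ t hχ P hP hle
  refine H1 Q H rfl A χ t hχ P hP ?_
  rw [cor_smul, norm_mul] at hle
  rw [div_le_iff₀ (by positivity)]
  nlinarith [norm_nonneg (cor μ T f (Q :: H) A χ P)]

theorem Lin_TP (hS : Sys μ T) {p : X → ℂ} (hp : p ∈ TP μ T) : Lin μ T p := by
  refine Submodule.span_induction (p := fun p _ => Lin μ T p) ?_ ?_ ?_ ?_ hp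
  · rintro x ⟨θ, hx⟩
    exact Lin_eig hS hx
  · have := Lin_smul 0 (Lin_eig hS (Eig.const (μ := μ) (T := T) (c := 1) (by simp)))
    simp only [zero_mul] at this
    exact this
  · intro x y hx hy h1 h2
    exact Lin_add hS (TP_bound hx) (TP_bound hy) h1 h2
  · intro r x _ h
    exact Lin_smul r h

theorem integral_norm_le {f : X → ℂ} (hf : MB f) {ε : ℝ} (hε : 0 ≤ ε)
    (h : ∫ x, ‖f x‖ ^ 2 ∂μ ≤ ε ^ 2) : ∫ x, ‖f x‖ ∂μ ≤ ε := by
  have h1 := sq_integral_le (μ := μ) hf.integrable.norm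
    ((memLp_two_iff_integrable_sq_norm hf.memLp.1).1 hf.memLp)
  exact abs_le_of_sq_le_sq' (h1.trans h) hε |>.2

theorem Lin_InK (hS : Sys μ T) {w : X → ℂ} (hw : Bdd2 w) (hK : InK μ T w) : Lin μ T w := by
  intro s δ hδ
  obtain ⟨p, hp, hd⟩ := hK ((δ / 2) ^ 2) (by positivity)
  have hwM : MB w := ⟨hw.1, 2, hw.2⟩
  have hpM : MB p := TP_bound hp
  obtain ⟨c, hc, H1⟩ := Lin_TP hS hp s (δ / 2) (half_pos hδ)
  refine ⟨c, hc, ?_⟩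
  rintro Q H rfl A χ t hχ P hP hle
  refine H1 Q H rfl A χ t hχ P hP ?_
  have h1 := norm_cor_le hS (hwM.sub hpM) (A := A) hχ (H := Q :: H) hP
  have h2 := integral_norm_le (hwM.sub hpM) (half_pos hδ).le hd
  have h3 := cor_add hS (hwM.sub hpM) hpM (A := A) hχ (H := Q :: H) hP
  simp only [sub_add_cancel] at h3
  rw [show (fun x => w x) = w from rfl] at h3
  rw [h3] at hle
  have := hle.trans (norm_add_le _ _)
  linarith

end

/-! ### Dual functions -/

section

open scoped BigOperators

variable {X : Type} [MeasurableSpace X] {μ : Measure X} [IsProbabilityMeasure μ] {T : ℤ → X → X}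

theorem cp_one : ∀ (h k : List ℕ), cp h k (fun _ (_ : X) => (1 : ℂ)) = fun _ => 1
  | m₀ :: h, m :: k => by simp only [cp, map_one, mul_one]; exact cp_one h k
  | [], k => by simp [cp]
  | m :: h, [] => by simp [cp]

theorem cp_prod {ι : Type*} (S : Finset ι) (h k : List ℕ) (Φ : ι → List ℕ → X → ℂ) :
    cp h k (fun j x => ∏ i ∈ S, Φ i j x) = fun x => ∏ i ∈ S, cp h k (Φ i) x := by
  classical
  induction S using Finset.induction_on with
  | empty => simpa using cp_one h k
  | insert a S ha ih => simp only [Finset.prod_insert ha]; rw [cp_mul, ih]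

/-- A single summand of the dual function. -/
def dualt {K : ℕ} (T : ℤ → X → X) (b : Fin K → ℕ → ℤ) (m : Fin K) (S : Finset (Fin K)) (r : ℕ → ℝ)
    (f : Fin K → X → ℂ) (g : X → ℂ) (n : ℕ) (x : X) : ℂ :=
  ee (r n) * (g (T (-b m n) x) * ∏ i ∈ S, f i (T (b i n - b m n) x))

/-- The dual function of a multiple ergodic average with respect to the coordinate `m`. -/
def dual {K : ℕ} (T : ℤ → X → X) (b : Fin K → ℕ → ℤ) (m : Fin K) (S : Finset (Fin K)) (r : ℕ → ℝ)
    (f : Fin K → X → ℂ) (g : X → ℂ) (N : ℕ) (x : X) : ℂ :=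
  𝔼 n ∈ Finset.Icc 1 N, dualt T b m S r f g n x

section
variable {K : ℕ} {b : Fin K → ℕ → ℤ} {m : Fin K} {S : Finset (Fin K)} {r : ℕ → ℝ}
    {f : Fin K → X → ℂ} {g : X → ℂ}

theorem dualt_bdd (hS : Sys μ T) (hf : ∀ i, Bdd (f i)) (hg : Bdd g) (n : ℕ) :
    Bdd (dualt T b m S r f g n) :=
  (Bdd.const (norm_ee _).le).mul ((hS.bdd hg _).mul (Bdd.prod fun i _ => hS.bdd (hf i) _))

theorem dual_bdd (hS : Sys μ T) (hf : ∀ i, Bdd (f i)) (hg : Bdd g) (N : ℕ) :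
    Bdd (dual T b m S r f g N) := Bdd.expect fun n _ => dualt_bdd hS hf hg n

/-- The integral of the cube product of the `n`-th summand of a dual function, after the change of
variables `T^{b_m(n)}`. The eigenfunctions `χ` turn this change of variables into the phase `e(alt ·
b_m(n))`. -/
theorem integral_cp_dualt (hS : Sys μ T) (hf : ∀ i, Bdd (f i)) (hg : Bdd g) (n : ℕ)
    {χ : List ℕ → X → ℂ} {t : List ℕ → ℝ} (hχ : ∀ k, Eig μ T (χ k) (t k)) (A : List ℕ → Prop)
    {h k : List ℕ} {a : ℂ} (ha : cp h k (fun j (_ : X) => (ind (A j) : ℂ)) = fun _ => a)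
    (hh : h ≠ []) (hk : k ≠ []) :
    ∫ x, cp h k (fun j x => (ind (A j) : ℂ) * (dualt T b m S r f g n (T (j.sum : ℕ) x) * χ j x)) x ∂μ
      = ∫ x, a * (cp h k (trl T g) x * cp h k χ x) * (ee (alt h k t * b m n) *
          ∏ i ∈ S, cp h k (trl T (f i)) (T (b i n) x)) ∂μ := by
  set Φ : List ℕ → X → ℂ := fun j x =>
    (ind (A j) : ℂ) * (dualt T b m S r f g n (T (j.sum : ℕ) x) * χ j x)
  have hΦ : ∀ j, Bdd (Φ j) := fun j => (Bdd.const (ind_norm _)).mul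
    ((hS.bdd (dualt_bdd hS hf hg n) _).mul (hχ j).bdd)
  rw [← hS.integral_comp (cp_bdd h k hΦ).1 (b m n), ← cp_comp]
  have e : (fun j x => Φ j (T (b m n) x)) = fun j x => (fun j (_ : X) => (ind (A j) : ℂ)) j x *
      ((fun j (_ : X) => ee ((fun _ : List ℕ => r n) j)) j x * (trl T g j x *
        ((∏ i ∈ S, (fun j x => trl T (f i) j (T (b i n) x)) j x) *
          (fun j x => χ j (T (b m n) x)) j x))) := by
    funext j x
    simp only [Φ, dualt, trl, hS.app]
    have e1 : -b m n + (j.sum : ℕ) + b m n = ((j.sum : ℕ) : ℤ) := by ring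
    have e2 : ∀ i, b i n - b m n + (j.sum : ℕ) + b m n = ((j.sum : ℕ) : ℤ) + b i n :=
      fun i => by ring
    simp only [e1, e2]
    ring
  rw [e, cp_mul, cp_mul h k (fun j (_ : X) => ee ((fun _ : List ℕ => r n) j)),
    cp_mul h k (trl T g), cp_mul h k (fun j x => ∏ i ∈ S, (fun j x => trl T (f i) j (T (b i n) x)) j x),
    cp_prod, ha, cp_ee]
  simp only [cp_comp]
  refine integral_congr_ae ?_
  filter_upwards [(cp_eig h k hχ).pow hS (b m n)] with x hx
  rw [hx]
  have : alt h k (fun _ => r n) = 0 := by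
    obtain ⟨m₀, h', rfl⟩ := List.exists_cons_of_ne_nil hh
    obtain ⟨m₁, k', rfl⟩ := List.exists_cons_of_ne_nil hk
    exact alt_const _ _ _ _ _
  rw [this, ee_zero, mul_comm (alt h k t)]
  ring

theorem cor_dual (hS : Sys μ T) (hf : ∀ i, Bdd (f i)) (hg : Bdd g) (N : ℕ) {H : List ℕ}
    {A : List ℕ → Prop} {χ P : List ℕ → X → ℂ} {t : List ℕ → ℝ} (hχ : ∀ k, Eig μ T (χ k) (t k))
    (hP : Lw H.length P) : cor μ T (dual T b m S r f g N) H A χ P =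
      𝔼 n ∈ Finset.Icc 1 N, cor μ T (dualt T b m S r f g n) H A χ P := by
  unfold cor
  rw [Finset.expect_comm]
  refine Finset.expect_congr rfl fun k hk => ?_
  rw [← integral_expect]
  · congr 1; funext x
    simp only [dual, Finset.mul_expect, Finset.expect_mul]
  · intro n _
    exact (hP.bdd k (length_of_mem_box _ hk)).mul ((Bdd.const (ind_norm _)).mul
      ((hS.bdd (dualt_bdd hS hf hg n) _).mul (hχ k).bdd))

/-- The box lemma bounds the correlations of a dual function by multiple averages in which the index
`m` carries only a phase `e(alt · b_m(n))` and the functions are at the indices in `S`; the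
inductive hypothesis applies to such averages. -/
theorem cor_dual_le (hS : Sys μ T) (hf : ∀ i, Bdd (f i)) (hg : Bdd g) (N : ℕ) {Q : ℕ} {H : List ℕ}
    {A : List ℕ → Prop} {χ P : List ℕ → X → ℂ} {t : List ℕ → ℝ} (hχ : ∀ k, Eig μ T (χ k) (t k))
    (hP : Lw (H.length + 1) P) :
    ‖cor μ T (dual T b m S r f g N) (Q :: H) A χ P‖ ^ (2 ^ (H.length + 1)) ≤
      𝔼 h ∈ box (Q :: H), 𝔼 k ∈ box (Q :: H), ind (A k) *
        ∫ x, ‖𝔼 n ∈ Finset.Icc 1 N, ee (alt h k t * b m n) *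
          ∏ i ∈ S, cp h k (trl T (f i)) (T (b i n) x)‖ ∂μ := by
  rw [cor_dual hS hf hg N (H := Q :: H) hχ hP]
  have hb : ∀ n, ∀ j : List ℕ, Bdd (fun x => (ind (A j) : ℂ) *
      (dualt T b m S r f g n (T (j.sum : ℕ) x) * χ j x)) := fun n j =>
    (Bdd.const (ind_norm _)).mul ((hS.bdd (dualt_bdd hS hf hg n) _).mul (hχ j).bdd)
  calc _ ≤ (𝔼 n ∈ Finset.Icc 1 N, ‖cor μ T (dualt T b m S r f g n) (Q :: H) A χ P‖) ^
        (2 ^ (H.length + 1)) :=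
        pow_le_pow_left₀ (norm_nonneg _) (RCLike.norm_expect_le (K := ℂ)) _
    _ ≤ 𝔼 n ∈ Finset.Icc 1 N, ‖cor μ T (dualt T b m S r f g n) (Q :: H) A χ P‖ ^
        (2 ^ (H.length + 1)) := pow_expect_le _ (fun _ _ => norm_nonneg _) (by positivity)
    _ ≤ 𝔼 n ∈ Finset.Icc 1 N, (𝔼 h ∈ box (Q :: H), 𝔼 k ∈ box (Q :: H),
          ∫ x, cp h k (fun j x => (ind (A j) : ℂ) *
            (dualt T b m S r f g n (T (j.sum : ℕ) x) * χ j x)) x ∂μ).re :=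
        Finset.expect_le_expect fun n _ => box_lemma (μ := μ) H Q _ P (hb n) hP
    _ = (𝔼 h ∈ box (Q :: H), 𝔼 k ∈ box (Q :: H), 𝔼 n ∈ Finset.Icc 1 N,
          ∫ x, cp h k (fun j x => (ind (A j) : ℂ) *
            (dualt T b m S r f g n (T (j.sum : ℕ) x) * χ j x)) x ∂μ).re := by
        rw [← re_expect, Finset.expect_comm]
        congr 1
        refine Finset.expect_congr rfl fun h _ => ?_
        rw [Finset.expect_comm]
    _ ≤ _ := by
        refine expect_re_le _ _ _ fun h hh => expect_re_le _ _ _ fun k hk => ?_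
        have hlh := length_of_mem_box _ hh
        have hlk := length_of_mem_box _ hk
        obtain ⟨a, ha, hcp⟩ := cp_ind (X := X) A h k (hlh.trans hlk.symm)
        have hh0 : h ≠ [] := by rintro rfl; simp at hlh
        have hk0 : k ≠ [] := by rintro rfl; simp at hlk
        have ha1 : ‖a‖ ≤ 1 := ha.trans (ind_le_one _)
        have hG : Bdd (fun x => cp h k (trl T g) x * cp h k χ x) :=
          (cp_bdd h k (trl_bdd hS hg)).mul (cp_bdd h k fun j => (hχ j).bdd)
        have hR : ∀ n, Bdd (fun x => ee (alt h k t * b m n) *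
            ∏ i ∈ S, cp h k (trl T (f i)) (T (b i n) x)) := fun n =>
          (Bdd.const (norm_ee _).le).mul
            (Bdd.prod fun i _ => hS.bdd (cp_bdd h k (trl_bdd hS (hf i))) _)
        have hRE := Bdd.expect (s := Finset.Icc 1 N) fun n _ => hR n
        rw [Finset.expect_congr rfl fun n _ => integral_cp_dualt hS hf hg n hχ A hcp hh0 hk0,
          ← integral_expect fun n _ => ((Bdd.const ha1).mul hG).mul (hR n)]
        refine (Complex.re_le_norm _).trans ((norm_integral_le_integral_norm _).trans ?_)
        rw [← integral_const_mul]
        refine integral_mono ?_ ?_ fun x => ?_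
        · exact (Bdd.expect fun n _ => ((Bdd.const ha1).mul hG).mul (hR n)).integrable.norm
        · exact hRE.integrable.norm.const_mul _
        · simp only
          rw [← Finset.mul_expect, norm_mul, norm_mul]
          exact mul_le_mul_of_nonneg_right
            ((mul_le_of_le_one_right (norm_nonneg _) (hG.2 x)).trans ha) (norm_nonneg _)

theorem tendsto_expect {ι α E : Type*} [NormedAddCommGroup E] [NormedSpace ℝ E] [Module ℚ≥0 E]
    {s : Finset ι} {l : Filter α} {F : ι → α → E} {a : ι → E}
    (h : ∀ i ∈ s, Tendsto (F i) l (𝓝 (a i))) :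
    Tendsto (fun x => 𝔼 i ∈ s, F i x) l (𝓝 (𝔼 i ∈ s, a i)) := by
  have : ∀ v : ι → E, 𝔼 i ∈ s, v i = ((s.card : ℝ)⁻¹) • ∑ i ∈ s, v i := fun v => by
    rw [Finset.expect]
    have := NNRat.cast_smul_eq_nnqsmul ℝ ((s.card : ℚ≥0)⁻¹) (∑ i ∈ s, v i)
    rw [← this]; push_cast; rfl
  simp only [this]
  exact (tendsto_finsetSum _ h).const_smul _

/-- Weak limits of dual functions have the linear phase property. -/
theorem Lin_dual (hS : Sys μ T) (hf : ∀ i, Bdd (f i)) {G : ℕ → X → ℂ} (hG : ∀ N, Bdd (G N))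
    {l : Filter ℕ} [l.NeBot] (hl : l ≤ atTop) {F : X → ℂ} (hF : Bdd F)
    (hw : ∀ ψ, Bdd ψ → Tendsto (fun N => ∫ x, dual T b m S r f (G N) N x * ψ x ∂μ) l
      (𝓝 (∫ x, F x * ψ x ∂μ)))
    (hP : ∀ α : ℝ, (¬ ∃ n : ℤ, α = n) → ∀ f : Fin K → X → ℂ, (∀ i, Bdd (f i)) →
      Tendsto (fun N : ℕ => ∫ x, ‖𝔼 n ∈ Finset.Icc 1 N, ee (α * b m n) *
        ∏ i ∈ S, f i (T (b i n) x)‖ ∂μ) atTop (𝓝 0)) : Lin μ T F := by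
  classical
  intro s δ hδ
  refine ⟨δ ^ (2 ^ (s + 1)), by positivity, ?_⟩
  rintro Q H rfl A χ t hχ P hPL hle
  refine (pow_le_pow_left₀ hδ.le hle _).trans ?_
  have hcor : Tendsto (fun N => cor μ T (dual T b m S r f (G N) N) (Q :: H) A χ P) l
      (𝓝 (cor μ T F (Q :: H) A χ P)) := by
    unfold cor
    refine tendsto_expect fun k hk => ?_
    have hψ : Bdd (fun x => P k x * ((ind (A k) : ℂ) * χ k x)) :=
      (hPL.bdd k (length_of_mem_box _ hk)).mul ((Bdd.const (ind_norm _)).mul (hχ k).bdd)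
    have key : ∀ {F : X → ℂ}, Bdd F →
        ∫ x, P k x * ((ind (A k) : ℂ) * (F (T (k.sum : ℕ) x) * χ k x)) ∂μ =
        ∫ x, F x * (fun x => P k x * ((ind (A k) : ℂ) * χ k x)) (T (-(k.sum : ℕ)) x) ∂μ := by
      intro F hF
      rw [← hS.integral_comp (hF.mul (hS.bdd hψ _)).1 (k.sum : ℕ)]
      congr 1; funext x
      simp only [hS.app, neg_add_cancel, hS.app0]
      ring
    simp only [key (dual_bdd hS hf (hG _) _), key hF]
    exact hw _ (hS.bdd hψ _)
  refine le_of_tendsto_of_tendsto (b := l) (hcor.norm.pow _)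
    (g := fun N => 𝔼 h ∈ box (Q :: H), 𝔼 k ∈ box (Q :: H),
      if ∃ n : ℤ, alt h k t = n then ind (A k) else ind (A k) * 
        ∫ x, ‖𝔼 n ∈ Finset.Icc 1 N, ee (alt h k t * b m n) *
          ∏ i ∈ S, cp h k (trl T (f i)) (T (b i n) x)‖ ∂μ) ?_ ?_
  · unfold dens
    refine tendsto_expect fun h _ => tendsto_expect fun k _ => ?_
    by_cases hi : ∃ n : ℤ, alt h k t = n
    · simp only [hi, if_true, and_true]; exact tendsto_const_nhds
    · simp only [hi, if_false, and_false]
      have := (hP _ hi _ fun i => cp_bdd h k (trl_bdd hS (hf i))).mono_left hl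
      rw [ind_false (p := False) (by simp)]
      simpa using this.const_mul (ind (A k))
  · refine Eventually.of_forall fun N => (cor_dual_le hS hf (hG N) N hχ hPL).trans ?_
    refine Finset.expect_le_expect fun h hh => Finset.expect_le_expect fun k hk => ?_
    split_ifs with hi
    · refine mul_le_of_le_one_right (ind_nonneg _) ?_
      have hRE : Bdd (fun x => 𝔼 n ∈ Finset.Icc 1 N, ee (alt h k t * b m n) *
          ∏ i ∈ S, cp h k (trl T (f i)) (T (b i n) x)) := Bdd.expect fun n _ =>
        (Bdd.const (norm_ee _).le).mul
            (Bdd.prod fun i _ => hS.bdd (cp_bdd h k (trl_bdd hS (hf i))) _)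
      exact (integral_mono hRE.integrable.norm (integrable_const (1 : ℝ)) hRE.2).trans (by simp)
    · exact le_rfl
end

end

/-! ### Degree lowering -/

section

open scoped BigOperators

variable {X : Type} [MeasurableSpace X] {μ : Measure X} [IsProbabilityMeasure μ] {T : ℤ → X → X}

/-- If the alternating sum of `t` is an integer, then the phase at the vertex `k` is a product of
phases at the other vertices, so it is a lower order factor. -/
theorem lo_ee {k0 k : List ℕ} (hl : k0.length = k.length) {t : List ℕ → ℝ}
    (hi : ∃ n : ℤ, alt k0 k t = n) (l : ℕ) (x : X) :
    (starRingEnd ℂ) (lo k0 k (fun j (_ : X) => ee (l * t j)) x) = ee (l * t k) := by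
  have h1 := congrFun (cp_ee (X := X) k0 k (fun j => l * t j)) x
  rw [cp_eq_mul_lo k0 k hl, alt_smul] at h1
  obtain ⟨n, hn⟩ := hi
  have h2 : ee ((l : ℝ) * alt k0 k t) = 1 := (ee_eq_one_iff _).2 ⟨l * n, by rw [hn]; push_cast; ring⟩
  rw [h2] at h1
  have h3 : lo k0 k (fun j (_ : X) => ee (l * t j)) x = ee (-(l * t k)) := by
    rw [ee_neg]; exact eq_inv_of_mul_eq_one_right h1
  rw [h3, conj_ee, neg_neg]

/-- Correlation with an eigenfunction bounds the twisted averages from below. -/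
theorem twisted_lower (hS : Sys μ T) {F χ : X → ℂ} {θ : ℝ} (hF : Bdd F) (hχ : Eig μ T χ θ) {L : ℕ}
    (hL : 0 < L) :
    ‖∫ x, F x * χ x ∂μ‖ ^ 2 ≤ ∫ x, ‖𝔼 l ∈ Finset.range L, ee (l * θ) * F (T (l : ℕ) x)‖ ^ 2 ∂μ := by
  have hb : ∀ l : ℕ, Bdd (fun x => ee (l * θ) * F (T (l : ℕ) x)) := fun l =>
    (Bdd.const (norm_ee _).le).mul (hS.bdd hF _)
  have hbe := Bdd.expect (s := Finset.range L) fun l _ => hb l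
  have h1 := norm_integral_sq_le (μ := μ) (hχ.bdd.mul hbe)
  have h2 : ∀ x, ‖χ x * 𝔼 l ∈ Finset.range L, ee (l * θ) * F (T (l : ℕ) x)‖ =
      ‖𝔼 l ∈ Finset.range L, ee (l * θ) * F (T (l : ℕ) x)‖ := fun x => by
    rw [norm_mul, hχ.norm_one, one_mul]
  simp only [h2] at h1
  refine le_trans (le_of_eq ?_) h1
  congr 2
  simp only [Finset.mul_expect]
  rw [integral_expect fun l _ => hχ.bdd.mul (hb l)]
  have h3 : ∀ l ∈ Finset.range L, ∫ x, χ x * (ee (l * θ) * F (T (l : ℕ) x)) ∂μ =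
      ∫ x, F x * χ x ∂μ := by
    intro l _
    rw [← hS.integral_comp (hF.mul hχ.bdd).1 (l : ℕ)]
    refine integral_congr_ae ?_
    filter_upwards [hχ.pow hS (l : ℕ)] with x hx
    rw [hx]; push_cast; ring
  rw [Finset.expect_congr rfl h3, Finset.expect_const (by simpa using hL.ne')]

theorem ofReal_expect {ι : Type*} (s : Finset ι) (f : ι → ℝ) :
    ((𝔼 i ∈ s, f i : ℝ) : ℂ) = 𝔼 i ∈ s, ((f i : ℝ) : ℂ) := by
  simp only [Finset.expect_eq_sum_div_card]; push_cast; rfl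

/-- The Cauchy–Schwarz part of the degree lowering argument. -/
theorem lower_core (hS : Sys μ T) (hE : Ergodic (T 1) μ) {v : X → ℂ} (hv : Bdd v) {Q : ℕ}
    {H h k0 : List ℕ} (hh : h.length = H.length + 1) (hk0 : k0.length = H.length + 1)
    {χ : List ℕ → X → ℂ} {t : List ℕ → ℝ} (hχ : ∀ k, Eig μ T (χ k) (t k)) {B : List ℕ → Prop}
    {c η : ℝ} (hc : 0 < c) (hη : 0 < η) (hB : c ≤ 𝔼 k ∈ box (Q :: H), ind (B k))
    (hB1 : ∀ k, B k → ∃ n : ℤ, alt k0 k t = n)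
    (hB2 : ∀ k, B k → η ≤ ‖∫ x, cp h k (trl T v) x * χ k x ∂μ‖) :
    (c * η ^ 2) ^ (2 ^ (H.length + 1)) ≤ BB μ T (Q :: H) v := by
  let R : ℕ → List ℕ → X → ℂ := fun l k => cj (lo k0 k (fun j (_ : X) => ee (l * t j)))
  have hR : ∀ l, Lw (H.length + 1) (R l) := fun l => by
    rw [← hk0]; exact (lo_Lw k0 fun j => Bdd.const (norm_ee _).le).cj
  have hlo : Lw (H.length + 1) (fun k => lo h k (trl T v)) := by
    rw [← hh]; exact lo_Lw h (trl_bdd hS hv)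
  have hvb : ∀ k, Bdd (trl T v k) := trl_bdd hS hv
  -- the estimate for averages of length `L`
  have main : ∀ L : ℕ, 0 < L → (c * η ^ 2) ^ (2 ^ (H.length + 1)) ≤
      𝔼 h ∈ box (Q :: H), 𝔼 k ∈ box (Q :: H),
        ∫ x, ‖𝔼 l ∈ Finset.range L, cp h k (trl T v) (T (l : ℕ) x)‖ ^ 2 ∂μ := by
    intro L hL
    let P : ℕ → ℕ → List ℕ → X → ℂ := fun l' l k x =>
      (starRingEnd ℂ) (R l' k x * lo h k (trl T v) (T (l' : ℕ) x)) *
        (R l k x * lo h k (trl T v) (T (l : ℕ) x))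
    let Φ : ℕ → ℕ → List ℕ → X → ℂ := fun l' l k x =>
      (starRingEnd ℂ) (trl T v k (T (l' : ℕ) x)) * trl T v k (T (l : ℕ) x)
    have hP : ∀ l' l, Lw (H.length + 1) (P l' l) := fun l' l =>
      (((hR l').mul (hlo.comp (hS.meas _))).cj).mul ((hR l).mul (hlo.comp (hS.meas _)))
    have hΦ : ∀ l' l k, Bdd (Φ l' l k) := fun l' l k =>
      (hS.bdd (hvb k) _).cj.mul (hS.bdd (hvb k) _)
    have hYb : ∀ l, ∀ k ∈ box (Q :: H), Bdd (fun x => R l k x * cp h k (trl T v) (T (l : ℕ) x)) :=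
      fun l k hk => ((hR l).bdd k (length_of_mem_box _ hk)).mul (hS.bdd (cp_bdd h k hvb) _)
    have h1 : c * η ^ 2 ≤ 𝔼 k ∈ box (Q :: H),
        ∫ x, ‖𝔼 l ∈ Finset.range L, R l k x * cp h k (trl T v) (T (l : ℕ) x)‖ ^ 2 ∂μ := by
      refine (mul_le_mul_of_nonneg_right hB (sq_nonneg η)).trans ?_
      rw [Finset.expect_mul]
      refine Finset.expect_le_expect fun k hk => ?_
      have hlk := length_of_mem_box _ hk
      by_cases hb : B k
      · rw [ind_true hb, one_mul]
        refine (pow_le_pow_left₀ hη.le (hB2 k hb) 2).trans ?_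
        refine (twisted_lower hS (cp_bdd h k hvb) (hχ k) hL).trans (le_of_eq ?_)
        congr 1; funext x
        congr 2
        refine Finset.expect_congr rfl fun l _ => ?_
        simp only [R, cj_apply]
        rw [lo_ee (hk0.trans hlk.symm) (hB1 k hb)]
      · rw [ind_false hb, zero_mul]
        exact integral_nonneg fun _ => by positivity
    have h2 : ((𝔼 k ∈ box (Q :: H),
        ∫ x, ‖𝔼 l ∈ Finset.range L, R l k x * cp h k (trl T v) (T (l : ℕ) x)‖ ^ 2 ∂μ : ℝ) : ℂ) =
        𝔼 l' ∈ Finset.range L, 𝔼 l ∈ Finset.range L, 𝔼 k ∈ box (Q :: H),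
          ∫ x, P l' l k x * Φ l' l k x ∂μ := by
      rw [ofReal_expect]
      rw [Finset.expect_congr rfl fun k hk => integral_norm_sq_expect fun l _ => hYb l k hk]
      rw [Finset.expect_comm]
      refine Finset.expect_congr rfl fun l' _ => ?_
      rw [Finset.expect_comm]
      refine Finset.expect_congr rfl fun l _ => Finset.expect_congr rfl fun k hk => ?_
      have hlk := length_of_mem_box _ hk
      congr 1; funext x
      rw [cp_eq_mul_lo h k (hh.trans hlk.symm)]
      simp only [P, Φ, map_mul]; ring
    have h3 : c * η ^ 2 ≤ 𝔼 l' ∈ Finset.range L, 𝔼 l ∈ Finset.range L,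
        ‖𝔼 k ∈ box (Q :: H), ∫ x, P l' l k x * Φ l' l k x ∂μ‖ := by
      refine h1.trans ?_
      have h0 : 0 ≤ 𝔼 k ∈ box (Q :: H),
        ∫ x, ‖𝔼 l ∈ Finset.range L, R l k x * cp h k (trl T v) (T (l : ℕ) x)‖ ^ 2 ∂μ :=
        Finset.expect_nonneg fun k _ => integral_nonneg fun _ => by positivity
      rw [← Real.norm_of_nonneg h0, ← Complex.norm_real, h2]
      exact (RCLike.norm_expect_le (K := ℂ)).trans
        (Finset.expect_le_expect fun l' _ => RCLike.norm_expect_le (K := ℂ))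
    calc (c * η ^ 2) ^ (2 ^ (H.length + 1))
        ≤ (𝔼 l' ∈ Finset.range L, 𝔼 l ∈ Finset.range L,
          ‖𝔼 k ∈ box (Q :: H), ∫ x, P l' l k x * Φ l' l k x ∂μ‖) ^ (2 ^ (H.length + 1)) :=
          pow_le_pow_left₀ (by positivity) h3 _
      _ ≤ 𝔼 l' ∈ Finset.range L, 𝔼 l ∈ Finset.range L,
          ‖𝔼 k ∈ box (Q :: H), ∫ x, P l' l k x * Φ l' l k x ∂μ‖ ^ (2 ^ (H.length + 1)) := by
          refine (pow_expect_le _ (fun _ _ => Finset.expect_nonneg fun _ _ => norm_nonneg _)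
            (by positivity)).trans (Finset.expect_le_expect fun l' _ => ?_)
          exact pow_expect_le _ (fun _ _ => norm_nonneg _) (by positivity)
      _ ≤ 𝔼 l' ∈ Finset.range L, 𝔼 l ∈ Finset.range L,
          (𝔼 h ∈ box (Q :: H), 𝔼 k ∈ box (Q :: H), ∫ x, cp h k (Φ l' l) x ∂μ).re :=
          Finset.expect_le_expect fun l' _ => Finset.expect_le_expect fun l _ =>
            box_lemma H Q (Φ l' l) (P l' l) (hΦ l' l) (hP l' l)
      _ = (𝔼 h ∈ box (Q :: H), 𝔼 k ∈ box (Q :: H), 𝔼 l' ∈ Finset.range L, 𝔼 l ∈ Finset.range L,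
            ∫ x, cp h k (Φ l' l) x ∂μ).re := by
          simp only [← re_expect]
          congr 1
          simp only [Finset.expect_comm (s := Finset.range L) (t := box (Q :: H))]
      _ = _ := by
          rw [re_expect]
          refine Finset.expect_congr rfl fun h _ => ?_
          rw [re_expect]
          refine Finset.expect_congr rfl fun k _ => ?_
          have e : ∀ l' l, cp h k (Φ l' l) = fun x =>
              (starRingEnd ℂ) (cp h k (trl T v) (T (l' : ℕ) x)) * cp h k (trl T v) (T (l : ℕ) x) := by
            intro l' l
            rw [cp_mul h k (fun k x => (starRingEnd ℂ) (trl T v k (T (l' : ℕ) x)))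
              (fun k x => trl T v k (T (l : ℕ) x)), cp_comp]
            have := cp_cj h k (fun k x => trl T v k (T (l' : ℕ) x))
            have h2 := cp_comp (T (l' : ℤ)) h k (trl T v)
            rw [h2] at this
            funext x
            exact congrArg (· * _) (congrFun this x)
          simp only [e]
          rw [← integral_norm_sq_expect (F := fun l x => cp h k (trl T v) (T (l : ℕ) x))
            fun l _ => hS.bdd (cp_bdd h k hvb) _, Complex.ofReal_re]
  have hBB := BB_append hS [] (Q :: H) v
  rw [List.append_nil] at hBB
  rw [hBB]
  refine ge_of_tendsto (tendsto_expect fun h _ => tendsto_expect fun k _ =>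
    mean_ergodic_const hS hE (cp_bdd h k hvb)) ?_
  filter_upwards [eventually_gt_atTop 0] with L hL
  exact main L hL

theorem exists_le_of_expect {ι : Type*} {s : Finset ι} {f : ι → ℝ} {c : ℝ} (hc : 0 < c)
    (h : c ≤ 𝔼 i ∈ s, f i) : ∃ i ∈ s, c ≤ f i := by
  by_contra hcon
  push Not at hcon
  rcases s.eq_empty_or_nonempty with rfl | hs
  · simp at h; linarith
  · have := Finset.expect_lt_expect (f := f) (g := fun _ => c) (fun i hi => (hcon i hi).le)
      ⟨hs.choose, hs.choose_spec, hcon _ hs.choose_spec⟩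
    rw [Finset.expect_const hs] at this
    linarith

/-- Normalising the phase of a correlating eigenfunction. -/
theorem exists_eig_re (hS : Sys μ T) (hE : Ergodic (T 1) μ) {F : X → ℂ} (hF : Bdd F) {γ : ℝ}
    (hγ : 0 < γ) : ∃ (χ : X → ℂ) (θ : ℝ), Eig μ T χ θ ∧
      ((∃ᶠ Q : ℕ in atTop, γ < BB μ T [Q] F) → γ / 2 ≤ (∫ x, F x * χ x ∂μ).re) := by
  by_cases h : ∃ᶠ Q : ℕ in atTop, γ < BB μ T [Q] F
  · obtain ⟨χ, θ, hχ, hle⟩ := exists_eig hS hE hF hγ h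
    set I := ∫ x, F x * χ x ∂μ with hI
    have hI0 : (‖I‖ : ℂ) ≠ 0 := by
      have : 0 < ‖I‖ := by linarith
      exact_mod_cast this.ne'
    have hc : ‖(starRingEnd ℂ) I / ‖I‖‖ = 1 := by
      rw [norm_div, RCLike.norm_conj, Complex.norm_real, norm_norm, div_self (by exact_mod_cast hI0)]
    refine ⟨_, θ, hχ.const_mul hc, fun _ => ?_⟩
    have : ∀ x, F x * ((starRingEnd ℂ) I / ‖I‖ * χ x) = (starRingEnd ℂ) I / ‖I‖ * (F x * χ x) :=
      fun x => by ring
    simp only [this]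
    rw [integral_const_mul, ← hI, div_mul_eq_mul_div, ← norm_sq_conj]
    have e : (((‖I‖ ^ 2 : ℝ) : ℂ) / (‖I‖ : ℂ)) = ((‖I‖ : ℝ) : ℂ) := by
      push_cast; field_simp
    rw [e, Complex.ofReal_re]
    exact hle
  · exact ⟨_, 0, Eig.const (c := 1) (by simp), fun hh => absurd hh h⟩

/-- Degree lowering: for functions with the linear phase property, positive `(s+2)`-nd uniformity
implies positive `(s+1)`-st uniformity. Cube products of `v` correlate with eigenfunctions, and the
linear phase property yields many coincidences among the eigenvalues; fixing a popular vertex makes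
the eigenvalues lower order factors, which `lower_core` removes. -/
theorem lower (hS : Sys μ T) (hE : Ergodic (T 1) μ) {v : X → ℂ} (hv : Bdd v) (hL : Lin μ T v)
    {s : ℕ} (hp : Pos μ T (s + 2) v) : Pos μ T (s + 1) v := by
  obtain ⟨γ, hγ, Q0, hQ⟩ := hp
  obtain ⟨c, hc, hLin⟩ := hL s (γ / 2 * (γ / 4)) (by positivity)
  refine ⟨(c * (γ / 4) ^ 2) ^ (2 ^ (s + 1)) / 2, by positivity, max Q0 1, ?_⟩
  intro l hl hle
  refine (half_lt_self (by positivity)).trans_le ?_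
  obtain ⟨Q, H, rfl⟩ := List.exists_cons_of_length_pos (l := l) (by omega)
  have hlen : H.length = s := by simpa using hl
  subst hlen
  have hne : (box (Q :: H)).Nonempty := box_nonempty _ fun q hq =>
    lt_of_lt_of_le one_pos ((le_max_right _ _).trans (hle q hq))
  have hvb : ∀ k, Bdd (trl T v k) := trl_bdd hS hv
  let Good : List ℕ → List ℕ → Prop := fun h k =>
    ∃ᶠ q : ℕ in atTop, γ / 2 < BB μ T [q] (cp h k (trl T v))
  have hGood : γ / 2 ≤ 𝔼 h ∈ box (Q :: H), 𝔼 k ∈ box (Q :: H), ind (Good h k) := by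
    have hev : ∀ᶠ q : ℕ in atTop, ∀ h ∈ box (Q :: H), ∀ k ∈ box (Q :: H),
        BB μ T [q] (cp h k (trl T v)) ≤ ind (Good h k) + γ / 2 := by
      rw [Filter.eventually_all_finset]
      intro h _
      rw [Filter.eventually_all_finset]
      intro k _
      by_cases hg : Good h k
      · refine Eventually.of_forall fun q => ?_
        rw [ind_true hg]
        have := BB_le_one hS [q] _ (cp_bdd h k hvb)
        linarith
      · rw [ind_false hg]
        refine (not_frequently.1 hg).mono fun q hq => ?_
        push Not at hq; linarith
    obtain ⟨q, hq, hq0⟩ := (hev.and (eventually_ge_atTop Q0)).exists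
    have h1 := hQ ((Q :: H) ++ [q]) (by simp) (by
      intro q' hq'
      rw [List.mem_append] at hq'
      rcases hq' with hq' | hq'
      · exact (le_max_left _ _).trans (hle q' hq')
      · simp at hq'; rw [hq']; exact hq0)
    rw [BB_append hS] at h1
    have h2 : 𝔼 h ∈ box (Q :: H), 𝔼 k ∈ box (Q :: H), BB μ T [q] (cp h k (trl T v)) ≤
        𝔼 h ∈ box (Q :: H), 𝔼 k ∈ box (Q :: H), (ind (Good h k) + γ / 2) :=
      Finset.expect_le_expect fun h hh => Finset.expect_le_expect fun k hk => hq h hh k hk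
    simp only [Finset.expect_add_distrib, Finset.expect_const hne] at h2
    linarith
  have hex := fun h k => exists_eig_re hS hE (cp_bdd h k hvb) (half_pos hγ)
  choose χ t hχ hcor using hex
  have h1 : γ / 2 * (γ / 4) ≤ 𝔼 h ∈ box (Q :: H),
      ‖cor μ T v (Q :: H) (Good h) (χ h) (fun k => lo h k (trl T v))‖ := by
    refine (mul_le_mul_of_nonneg_right hGood (by positivity)).trans ?_
    rw [Finset.expect_mul]
    refine Finset.expect_le_expect fun h hh => ?_
    refine le_trans ?_ (Complex.re_le_norm _)
    rw [cor, re_expect, Finset.expect_mul]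
    refine Finset.expect_le_expect fun k hk => ?_
    have hlk := (length_of_mem_box _ hh).trans (length_of_mem_box _ hk).symm
    have e : ∫ x, lo h k (trl T v) x * ((ind (Good h k) : ℂ) * (v (T (k.sum : ℕ) x) * χ h k x)) ∂μ =
        (ind (Good h k) : ℂ) * ∫ x, cp h k (trl T v) x * χ h k x ∂μ := by
      rw [← integral_const_mul]
      congr 1; funext x
      rw [cp_eq_mul_lo h k hlk]
      simp only [trl]; ring
    rw [e, Complex.re_ofReal_mul]
    by_cases hg : Good h k
    · rw [ind_true hg, one_mul, one_mul]
      have := hcor h k hg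
      linarith
    · rw [ind_false hg]; simp
  obtain ⟨h, hh, hcorh⟩ := exists_le_of_expect (by positivity) h1
  have hlh := length_of_mem_box _ hh
  have hLw : Lw (H.length + 1) (fun k => lo h k (trl T v)) := by
    have := lo_Lw h hvb
    rwa [hlh] at this
  have hd := hLin Q H rfl (Good h) (χ h) (t h) (hχ h) _ hLw hcorh
  obtain ⟨k0, hk0, hd0⟩ := exists_le_of_expect hc hd
  refine lower_core hS hE hv hlh (length_of_mem_box _ hk0) (hχ h) hc (by positivity) hd0
    (fun k hk => hk.2) fun k hk => ?_
  have := hcor h k hk.1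
  have h5 := Complex.re_le_norm (∫ x, cp h k (trl T v) x * χ h k x ∂μ)
  linarith

/-- A function with the linear phase property that is orthogonal to all eigenfunctions has
vanishing uniformity seminorms. -/
theorem Null_of_Lin (hS : Sys μ T) (hE : Ergodic (T 1) μ) {v : X → ℂ} (hv : Bdd v)
    (hL : Lin μ T v) (ho : ∀ χ θ, Eig μ T χ θ → ∫ x, v x * χ x ∂μ = 0) : Null μ T v := by
  have h1 : ∀ s, ¬ Pos μ T (s + 1) v := by
    intro s
    induction s with
    | zero =>
      rintro ⟨γ, hγ, Q0, hQ⟩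
      obtain ⟨χ, θ, hχ, hle⟩ := exists_eig hS hE hv hγ
        (((eventually_ge_atTop Q0).mono fun q hq => hQ [q] rfl (by simpa using hq)).frequently)
      rw [ho χ θ hχ, norm_zero] at hle
      linarith
    | succ s ih => exact fun h => ih (lower hS hE hv hL h)
  intro s
  cases s with
  | zero =>
    rintro ⟨γ, hγ, Q0, hQ⟩
    have h0 := ho (fun _ => 1) 0 (Eig.const (by simp))
    have := hQ [] rfl (by simp)
    simp only [mul_one] at h0
    rw [BB, h0] at this
    norm_num at this
    linarith
  | succ s => exact h1 s

end

/-! ### Weak limits -/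

section

open scoped BigOperators
variable {X : Type} [MeasurableSpace X] {μ : Measure X} [IsProbabilityMeasure μ] {T : ℤ → X → X}

/-- The conjugate phase of a complex number, equal to `0` at `0`. -/
def cphase (z : ℂ) : ℂ := (starRingEnd ℂ) z / ‖z‖

theorem norm_cphase_le (z : ℂ) : ‖cphase z‖ ≤ 1 := by
  rw [cphase, norm_div, RCLike.norm_conj, Complex.norm_real, norm_norm]
  exact div_self_le_one _

theorem cphase_mul (z : ℂ) : cphase z * z = (‖z‖ : ℝ) := by
  by_cases h : z = 0
  · simp [h]
  · have h0 : (‖z‖ : ℂ) ≠ 0 := by simpa using h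
    rw [cphase, div_mul_eq_mul_div, ← norm_sq_conj]
    push_cast; field_simp

theorem measurable_cphase : Measurable cphase := by
  unfold cphase
  have : Measurable (fun z : ℂ => (starRingEnd ℂ) z) := Complex.continuous_conj.measurable
  fun_prop

/-- Weak-star compactness of the unit ball of `L^∞`, along an ultrafilter. -/
theorem weak_limit {D : ℕ → X → ℂ} (hD : ∀ N, Bdd (D N)) (l : Ultrafilter ℕ) :
    ∃ F : X → ℂ, Bdd F ∧ ∀ ψ : X → ℂ, Bdd ψ →
      Tendsto (fun N => ∫ x, D N x * ψ x ∂μ) l (𝓝 (∫ x, F x * ψ x ∂μ)) := by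
  have hcD : ∀ N, MemLp (cj (D N)) 2 μ := fun N => (hD N).cj.memLp
  set d : ℕ → WeakDual ℂ (Lp ℂ 2 μ) := fun N =>
    StrongDual.toWeakDual (InnerProductSpace.toDual ℂ (Lp ℂ 2 μ) ((hcD N).toLp)) with hd
  have hb : ∀ N, d N ∈ WeakDual.toStrongDual ⁻¹'
      Metric.closedBall (0 : StrongDual ℂ (Lp ℂ 2 μ)) 1 := by
    intro N
    show InnerProductSpace.toDual ℂ (Lp ℂ 2 μ) ((hcD N).toLp) ∈ Metric.closedBall 0 1
    rw [mem_closedBall_zero_iff, LinearIsometryEquiv.norm_map]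
    have h1 := norm_sq_L2 (μ := μ) (cj (D N)) (hcD N)
    have h2 : ∫ x, ‖cj (D N) x‖ ^ 2 ∂μ ≤ ∫ _, (1 : ℝ) ∂μ := by
      refine integral_mono_of_nonneg (ae_of_all _ fun _ => by positivity) (integrable_const _)
        (ae_of_all _ fun x => ?_)
      exact pow_le_one₀ (norm_nonneg _) ((hD N).cj.2 x)
    rw [← h1] at h2
    simp only [integral_const, probReal_univ, smul_eq_mul, mul_one] at h2
    exact (sq_le_one_iff₀ (norm_nonneg _)).1 h2
  obtain ⟨p, _, hp⟩ := (WeakDual.isCompact_closedBall (𝕜 := ℂ) (E := Lp ℂ 2 μ) 0 1).ultrafilter_le_nhds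
    (l.map d) (by
      rw [Filter.le_principal_iff]
      exact Filter.mem_map.2 (Filter.Eventually.of_forall hb))
  have hp' : Tendsto d l (𝓝 p) := hp
  set φ : Lp ℂ 2 μ := (InnerProductSpace.toDual ℂ (Lp ℂ 2 μ)).symm (WeakDual.toStrongDual p) with hφ
  have hφm : MemLp φ 2 μ := Lp.memLp φ
  set F0 : X → ℂ := cj (fun x => φ x) with hF0
  have hF0m : Measurable F0 := by
    have := (Lp.stronglyMeasurable φ).measurable
    exact Complex.continuous_conj.measurable.comp this
  have key : ∀ ψ : X → ℂ, Bdd ψ →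
      Tendsto (fun N => ∫ x, D N x * ψ x ∂μ) l (𝓝 (∫ x, F0 x * ψ x ∂μ)) := by
    intro ψ hψ
    have h1 : Tendsto (fun N => d N (hψ.memLp (μ := μ)).toLp) l (𝓝 (p (hψ.memLp (μ := μ)).toLp)) :=
      ((WeakDual.eval_continuous _).tendsto p).comp hp'
    have e1 : ∀ N, d N (hψ.memLp (μ := μ)).toLp = ∫ x, D N x * ψ x ∂μ := by
      intro N
      show InnerProductSpace.toDual ℂ (Lp ℂ 2 μ) ((hcD N).toLp) (hψ.memLp (μ := μ)).toLp = _
      rw [InnerProductSpace.toDual_apply_apply, inner_L2]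
      simp [cj_apply]
    have e2 : p (hψ.memLp (μ := μ)).toLp = ∫ x, F0 x * ψ x ∂μ := by
      have : p (hψ.memLp (μ := μ)).toLp =
        InnerProductSpace.toDual ℂ (Lp ℂ 2 μ) φ (hψ.memLp (μ := μ)).toLp := by
        rw [hφ, LinearIsometryEquiv.apply_symm_apply]; rfl
      rw [this, InnerProductSpace.toDual_apply_apply]
      have h3 := inner_L2 (μ := μ) φ ψ hφm hψ.memLp
      rw [Lp.toLp_coeFn] at h3
      rw [h3]; rfl
    simpa only [e1, e2] using h1
  have hF0i : Integrable F0 μ := by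
    have h : Integrable (fun x => φ x) μ := hφm.integrable (by norm_num)
    exact (Complex.conjCLE.toContinuousLinearMap.integrable_comp h)
  -- testing against the conjugate phase on the set where the limit is too large
  have hae : ∀ᵐ x ∂μ, ‖F0 x‖ ≤ 1 := by
    set A : Set X := {x | 1 < ‖F0 x‖} with hA
    have hAm : MeasurableSet A := measurableSet_lt measurable_const hF0m.norm
    set ψ : X → ℂ := A.indicator (fun x => cphase (F0 x)) with hψd
    have hψ : Bdd ψ := by
      refine ⟨(measurable_cphase.comp hF0m).indicator hAm, fun x => ?_⟩
      exact (norm_indicator_le_norm_self _ _).trans (norm_cphase_le _)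
    have hψA : ∀ x, ‖ψ x‖ ≤ A.indicator (fun _ => (1 : ℝ)) x := by
      intro x
      by_cases hx : x ∈ A
      · simp only [hψd, Set.indicator_of_mem hx]; exact norm_cphase_le _
      · simp only [hψd, Set.indicator_of_notMem hx, norm_zero]; exact le_rfl
    have h1 : ‖∫ x, F0 x * ψ x ∂μ‖ ≤ μ.real A := by
      refine le_of_tendsto (key ψ hψ).norm (Eventually.of_forall fun N => ?_)
      calc ‖∫ x, D N x * ψ x ∂μ‖ ≤ ∫ x, A.indicator (fun _ => (1 : ℝ)) x ∂μ := by
            refine norm_integral_le_of_norm_le ((integrable_const (1 : ℝ)).indicator hAm)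
              (ae_of_all _ fun x => ?_)
            rw [norm_mul]
            calc ‖D N x‖ * ‖ψ x‖ ≤ 1 * ‖ψ x‖ :=
                  mul_le_mul_of_nonneg_right ((hD N).2 x) (norm_nonneg _)
              _ ≤ _ := by rw [one_mul]; exact hψA x
        _ = μ.real A := by rw [integral_indicator hAm]; simp
    have h2 : ∫ x, F0 x * ψ x ∂μ = ((∫ x in A, ‖F0 x‖ ∂μ : ℝ) : ℂ) := by
      rw [← integral_indicator hAm]
      refine Eq.trans ?_ (integral_ofReal (𝕜 := ℂ))
      congr 1; funext x
      by_cases hx : x ∈ A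
      · simp only [hψd, Set.indicator_of_mem hx]; rw [mul_comm, cphase_mul]; rfl
      · simp [hψd, Set.indicator_of_notMem hx]
    have h3 : ∫ x in A, (‖F0 x‖ - 1) ∂μ ≤ 0 := by
      rw [integral_sub hF0i.norm.integrableOn (integrable_const _)]
      have h4 : 0 ≤ ∫ x in A, ‖F0 x‖ ∂μ := integral_nonneg fun _ => norm_nonneg _
      rw [h2, Complex.norm_real, Real.norm_of_nonneg h4] at h1
      simp only [integral_const, smul_eq_mul, mul_one, measureReal_restrict_apply_univ]
      linarith
    have hnn : 0 ≤ᵐ[μ.restrict A] fun x => ‖F0 x‖ - 1 :=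
      (ae_restrict_iff' hAm).2 (ae_of_all _ fun x hx => by
        have : 1 < ‖F0 x‖ := hx
        simp only [Pi.zero_apply]; linarith)
    have h5 := (setIntegral_eq_zero_iff_of_nonneg_ae hnn
      (hF0i.norm.integrableOn.sub (integrable_const _))).1
      (le_antisymm h3 (integral_nonneg_of_ae hnn))
    have h6 := (ae_restrict_iff' hAm).1 h5
    filter_upwards [h6] with x hx
    by_contra hcon
    have hxA : 1 < ‖F0 x‖ := not_le.1 hcon
    have := hx hxA
    simp only [Pi.zero_apply] at this
    linarith
  refine ⟨{x | ‖F0 x‖ ≤ 1}.indicator F0, ⟨hF0m.indicator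
    (measurableSet_le hF0m.norm measurable_const), fun x => ?_⟩, fun ψ hψ => ?_⟩
  · by_cases hx : ‖F0 x‖ ≤ 1
    · rw [Set.indicator_of_mem (show x ∈ {x | ‖F0 x‖ ≤ 1} from hx)]; exact hx
    · rw [Set.indicator_of_notMem (show x ∉ {x | ‖F0 x‖ ≤ 1} from hx)]; simp
  · have : ∫ x, {x | ‖F0 x‖ ≤ 1}.indicator F0 x * ψ x ∂μ = ∫ x, F0 x * ψ x ∂μ := by
      refine integral_congr_ae ?_
      filter_upwards [hae] with x hx
      rw [Set.indicator_of_mem (show x ∈ {x | ‖F0 x‖ ≤ 1} from hx)]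
    rw [this]; exact key ψ hψ

end

/-! ### Functions orthogonal to the eigenfunctions -/

section

open scoped BigOperators
variable {X : Type} [MeasurableSpace X] {μ : Measure X} [IsProbabilityMeasure μ] {T : ℤ → X → X}

/-- The uniform Gowers–Host–Kra control property: averages whose `m`-th function is null for all
seminorms are small, uniformly in the weights and in the remaining functions. -/
def Ctl {K : ℕ} (μ : Measure X) (T : ℤ → X → X) (b : Fin K → ℕ → ℤ) (m : Fin K)
    (S : Finset (Fin K)) : Prop :=
  ∀ u : X → ℂ, Bdd u → Null μ T u → ∀ ε : ℝ, 0 < ε →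
    ∃ N0 : ℕ, ∀ N ≥ N0, ∀ c : ℕ → ℂ, (∀ n, ‖c n‖ ≤ 1) → ∀ g : X → ℂ, Bdd g → ∀ f : Fin K → X → ℂ,
      (∀ i, Bdd (f i)) → ‖∑ n ∈ Finset.Icc 1 N, c n * ∫ y, g y * (u (T (b m n) y) *
        ∏ i ∈ S, f i (T (b i n) y)) ∂μ‖ ≤ ε * N

variable {K : ℕ} {b : Fin K → ℕ → ℤ} {m : Fin K} {S : Finset (Fin K)} {r : ℕ → ℝ}
  {f : Fin K → X → ℂ}

/-- The defining property of the dual function. -/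
theorem integral_mul_dual (hS : Sys μ T) (hf : ∀ i, Bdd (f i)) {g u : X → ℂ} (hg : Bdd g)
    (hu : Bdd u) (N : ℕ) :
    ∫ x, u x * dual T b m S r f g N x ∂μ = 𝔼 n ∈ Finset.Icc 1 N, ee (r n) *
      ∫ y, g y * (u (T (b m n) y) * ∏ i ∈ S, f i (T (b i n) y)) ∂μ := by
  have h1 : ∀ n, Bdd (fun x => u x * dualt T b m S r f g n x) := fun n =>
    hu.mul (dualt_bdd hS hf hg n)
  have h2 : ∀ x, u x * dual T b m S r f g N x =
      𝔼 n ∈ Finset.Icc 1 N, u x * dualt T b m S r f g n x := fun x => by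
    rw [dual, Finset.mul_expect]
  simp only [h2]
  rw [integral_expect fun n _ => h1 n]
  refine Finset.expect_congr rfl fun n _ => ?_
  rw [← hS.integral_comp (h1 n).1 (b m n), ← integral_const_mul]
  congr 1; funext y
  simp only [dualt, hS.app, neg_add_cancel, hS.app0, sub_add_cancel]
  ring

/-- By seminorm control, null functions are asymptotically orthogonal to dual functions. -/
theorem integral_cj_mul_dual_tendsto (hS : Sys μ T) (hC : Ctl μ T b m S) (hf : ∀ i, Bdd (f i))
    {G : ℕ → X → ℂ} (hG : ∀ N, Bdd (G N)) {v : X → ℂ} (hv : Bdd v) (hn : Null μ T v) :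
    Tendsto (fun N => ∫ x, cj v x * dual T b m S r f (G N) N x ∂μ) atTop (𝓝 0) := by
  rw [Metric.tendsto_atTop]
  intro ε hε
  obtain ⟨N0, hN0⟩ := hC v hv hn (ε / 2) (by positivity)
  refine ⟨N0 + 1, fun N hN => ?_⟩
  have h := hN0 N (by omega) (fun n => (starRingEnd ℂ) (ee (r n)))
    (fun n => by rw [RCLike.norm_conj, norm_ee]) (cj (G N)) (hG N).cj (fun i => cj (f i))
    fun i => (hf i).cj
  have hNpos : (0 : ℝ) < N := by
    have : 0 < N := by omega
    exact_mod_cast this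
  rw [dist_zero_right, integral_mul_dual hS hf (hG N) hv.cj, Finset.expect_eq_sum_div_card,
    norm_div, Nat.card_Icc, Nat.add_sub_cancel, Complex.norm_natCast, div_lt_iff₀ hNpos]
  have e : ‖∑ n ∈ Finset.Icc 1 N, ee (r n) * ∫ y, G N y * (cj v (T (b m n) y) *
      ∏ i ∈ S, f i (T (b i n) y)) ∂μ‖ ≤ ε / 2 * N := by
    rw [← RCLike.norm_conj, map_sum]
    refine le_trans (le_of_eq ?_) h
    congr 1
    refine Finset.sum_congr rfl fun n _ => ?_
    rw [map_mul, ← integral_conj]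
    congr 2; funext y
    simp only [map_mul, cj_apply, map_prod, Complex.conj_conj]
  nlinarith

theorem InK.cj {w : X → ℂ} (h : InK μ T w) : InK μ T (cj w) := by
  intro ε hε
  obtain ⟨p, hp, hle⟩ := h ε hε
  refine ⟨_, TP_star hp, ?_⟩
  simpa only [cj_apply, ← map_sub, RCLike.norm_conj] using hle

theorem Bdd2.MB {w : X → ℂ} (h : Bdd2 w) : MB w := ⟨h.1, 2, h.2⟩
theorem Bdd2.cj {w : X → ℂ} (h : Bdd2 w) : Bdd2 (cj w) :=
  ⟨Complex.continuous_conj.measurable.comp h.1, fun x => by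
    rw [cj_apply, RCLike.norm_conj]; exact h.2 x⟩

/-- The part of the proof where the structure of dual functions meets the seminorm control: a
function orthogonal to all eigenfunctions does not contribute to the averages. -/
theorem orth_average (hS : Sys μ T) (hE : Ergodic (T 1) μ) (hC : Ctl μ T b m S)
    (hP : ∀ α : ℝ, (¬∃ n : ℤ, α = n) → ∀ f : Fin K → X → ℂ, (∀ i, Bdd (f i)) →
      Tendsto (fun N => ∫ x, ‖𝔼 n ∈ Finset.Icc 1 N, ee (α * b m n) *
        ∏ i ∈ S, f i (T (b i n) x)‖ ∂μ) atTop (𝓝 0))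
    (hf : ∀ i, Bdd (f i)) {u : X → ℂ} (hu : Bdd u)
    (ho : ∀ χ θ, Eig μ T χ θ → ∫ x, u x * χ x ∂μ = 0) :
    Tendsto (fun N => ∫ x, ‖𝔼 n ∈ Finset.Icc 1 N, ee (r n) *
      (u (T (b m n) x) * ∏ i ∈ S, f i (T (b i n) x))‖ ∂μ) atTop (𝓝 0) := by
  set A : ℕ → X → ℂ := fun N x => 𝔼 n ∈ Finset.Icc 1 N, ee (r n) *
      (u (T (b m n) x) * ∏ i ∈ S, f i (T (b i n) x)) with hA
  have hterm : ∀ n, Bdd (fun x => ee (r n) * (u (T (b m n) x) * ∏ i ∈ S, f i (T (b i n) x))) :=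
    fun n => (Bdd.const (norm_ee _).le).mul
      ((hS.bdd hu _).mul (Bdd.prod fun i _ => hS.bdd (hf i) _))
  have hAb : ∀ N, Bdd (A N) := fun N => Bdd.expect fun n _ => hterm n
  by_contra hcon
  have hfr : ∃ ε > 0, ∃ᶠ N in atTop, ε ≤ ∫ x, ‖A N x‖ ∂μ := by
    by_contra h
    push Not at h
    refine hcon ?_
    rw [Metric.tendsto_nhds]
    intro ε hε
    have := h ε hε
    filter_upwards [this] with N hN
    rw [dist_zero_right, Real.norm_of_nonneg (integral_nonneg fun _ => norm_nonneg _)]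
    exact hN
  obtain ⟨ε, hε, hfr⟩ := hfr
  have : (atTop ⊓ 𝓟 {N | ε ≤ ∫ x, ‖A N x‖ ∂μ}).NeBot :=
    frequently_iff_neBot.1 hfr
  set l : Ultrafilter ℕ := Ultrafilter.of (atTop ⊓ 𝓟 {N | ε ≤ ∫ x, ‖A N x‖ ∂μ})
  have hl : (l : Filter ℕ) ≤ atTop := (Ultrafilter.of_le _).trans inf_le_left
  have hl2 : ∀ᶠ N in (l : Filter ℕ), ε ≤ ∫ x, ‖A N x‖ ∂μ :=
    Filter.le_principal_iff.1 ((Ultrafilter.of_le _).trans inf_le_right)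
  set G : ℕ → X → ℂ := fun N x => cphase (A N x) with hGd
  have hG : ∀ N, Bdd (G N) := fun N =>
    ⟨measurable_cphase.comp (hAb N).1, fun x => norm_cphase_le _⟩
  obtain ⟨F, hF, hlim⟩ := weak_limit (μ := μ)
    (fun N => dual_bdd (b := b) (m := m) (S := S) (r := r) hS hf (hG N) N) l
  have hLF : Lin μ T F := Lin_dual hS hf hG hl hF hlim hP
  -- the pairing of `u` with the limit of the dual functions is bounded below
  have hint : ∀ N, ∫ x, dual T b m S r f (G N) N x * u x ∂μ = ((∫ x, ‖A N x‖ ∂μ : ℝ) : ℂ) := by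
    intro N
    simp only [mul_comm _ (u _)]
    rw [integral_mul_dual hS hf (hG N) hu]
    refine Eq.trans ?_ (integral_ofReal (𝕜 := ℂ))
    have e : ∀ x, ((‖A N x‖ : ℝ) : ℂ) = 𝔼 n ∈ Finset.Icc 1 N, G N x * (ee (r n) *
      (u (T (b m n) x) * ∏ i ∈ S, f i (T (b i n) x))) := by
      intro x
      rw [← cphase_mul, ← Finset.mul_expect]
    refine Eq.trans ?_ (integral_congr_ae (ae_of_all _ fun x => (e x).symm))
    rw [integral_expect fun n _ => (hG N).mul (hterm n)]
    refine Finset.expect_congr rfl fun n _ => ?_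
    rw [← integral_const_mul]
    congr 1; funext x; ring
  have hlow : ε ≤ ‖∫ x, F x * u x ∂μ‖ := by
    refine ge_of_tendsto (hlim u hu).norm ?_
    filter_upwards [hl2] with N hN
    rw [hint, Complex.norm_real, Real.norm_of_nonneg (integral_nonneg fun _ => norm_nonneg _)]
    exact hN
  obtain ⟨w, hw, hwK, hwo⟩ := exists_proj (μ := μ) (T := T) hF
  -- the factor `1/4` makes `v` bounded by `1`, as `|F - w| ≤ 3`
  set v : X → ℂ := fun x => (1 / 4 : ℂ) * (F x + (-1) * w x) with hv
  have hvb : Bdd v := by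
    refine ⟨(hF.1.add (hw.1.const_mul _)).const_mul _, fun x => ?_⟩
    have h1 := hF.2 x
    have h2 := hw.2 x
    have h3 : ‖F x + (-1) * w x‖ ≤ 3 := by
      refine (norm_add_le _ _).trans ?_
      rw [norm_mul, norm_neg, norm_one, one_mul]; linarith
    simp only [hv, norm_mul]
    norm_num
    norm_num at h3
    linarith
  have hvL : Lin μ T v :=
    Lin_smul _ (Lin_add hS hF.MB ((MB.const _).mul hw.MB) hLF (Lin_smul _ (Lin_InK hS hw hwK)))
  have hvo : ∀ χ θ, Eig μ T χ θ → ∫ x, v x * χ x ∂μ = 0 := by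
    intro χ θ hχ
    have : ∀ x, v x * χ x = (1 / 4 : ℂ) * ((F x - w x) * χ x) := fun x => by
      simp only [hv]; ring
    simp only [this]
    rw [integral_const_mul, hwo χ θ hχ, mul_zero]
  have hvn : Null μ T v := Null_of_Lin hS hE hvb hvL hvo
  have hvF : ∫ x, F x * cj v x ∂μ = 0 := by
    refine tendsto_nhds_unique (hlim _ hvb.cj) ?_
    have := (integral_cj_mul_dual_tendsto (r := r) hS hC hf hG hvb hvn).mono_left hl
    simpa only [mul_comm] using this
  have hvw : ∫ x, v x * (starRingEnd ℂ) (w x) ∂μ = 0 := orth_InK hvb hvo hw hwK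
  have hv0 : ∫ x, ‖v x‖ ^ 2 ∂μ = 0 := by
    have h1 : ((∫ x, ‖v x‖ ^ 2 ∂μ : ℝ) : ℂ) = (1 / 4 : ℂ) * ((∫ x, F x * cj v x ∂μ) -
        (starRingEnd ℂ) (∫ x, v x * (starRingEnd ℂ) (w x) ∂μ)) := by
      rw [← integral_conj, ← integral_sub (hF.mul hvb.cj).integrable, ← integral_const_mul]
      · refine (integral_ofReal (𝕜 := ℂ)).symm.trans ?_
        congr 1; funext x
        show ((‖v x‖ ^ 2 : ℝ) : ℂ) = _
        rw [norm_sq_conj]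
        simp only [map_mul, Complex.conj_conj, cj_apply]
        have : F x = 4 * v x + w x := by simp only [hv]; ring
        rw [this]; ring
      · have : MB fun x => cj v x * w x := hvb.cj.MB.mul hw.MB
        simpa only [map_mul, Complex.conj_conj, cj_apply] using this.integrable
    rw [hvF, hvw, map_zero, sub_zero, mul_zero] at h1
    exact_mod_cast h1
  have hvae : ∀ᵐ x ∂μ, v x = 0 := by
    have h1 := (integral_eq_zero_iff_of_nonneg (fun _ => by positivity) (by
      have := (hvb.mul hvb.cj).integrable (μ := μ)
      have := this.norm
      refine this.congr (ae_of_all _ fun x => ?_)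
      simp only [cj_apply, norm_mul, RCLike.norm_conj, sq])).1 hv0
    filter_upwards [h1] with x hx
    simpa using hx
  have hFu : ∫ x, F x * u x ∂μ = 0 := by
    rw [← orth_InK hu ho hw.cj hwK.cj]
    refine integral_congr_ae ?_
    filter_upwards [hvae] with x hx
    have : F x = 4 * v x + w x := by simp only [hv]; ring
    rw [this, hx, cj_apply, Complex.conj_conj]; ring
  rw [hFu, norm_zero] at hlow
  linarith

end

/-! ### Structured functions -/

section

open scoped BigOperators
variable {X : Type} [MeasurableSpace X] {μ : Measure X} [IsProbabilityMeasure μ] {T : ℤ → X → X}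

theorem MB.expect {ι : Type*} {s : Finset ι} {F : ι → X → ℂ} (h : ∀ i, MB (F i)) :
    MB fun x => 𝔼 i ∈ s, F i x := by
  choose hm C hC using h
  refine ⟨?_, 𝔼 i ∈ s, C i, fun x => ?_⟩
  · simp only [Finset.expect_eq_sum_div_card]
    exact (Finset.measurable_sum s fun i _ => hm i).div_const _
  · exact (RCLike.norm_expect_le (K := ℂ)).trans (Finset.expect_le_expect fun i _ => hC i x)

/-- The weighted averages of `φ` along `B` converge in `L¹` to `κ ∫ φ`. -/
def QQ (μ : Measure X) (T : ℤ → X → X) (c : ℕ → X → ℂ) (B : ℕ → ℤ) (κ : ℂ) (φ : X → ℂ) : Prop :=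
  Tendsto (fun N => ∫ x, ‖(𝔼 n ∈ Finset.Icc 1 N, c n x * φ (T (B n) x)) - κ * ∫ y, φ y ∂μ‖ ∂μ)
    atTop (𝓝 0)

variable {c : ℕ → X → ℂ} {B : ℕ → ℤ} {κ : ℂ}

theorem QQ_mb (hS : Sys μ T) (hc : ∀ n, Bdd (c n)) {φ : X → ℂ} (hφ : MB φ) (z : ℂ) (N : ℕ) :
    MB fun x => (𝔼 n ∈ Finset.Icc 1 N, c n x * φ (T (B n) x)) - z :=
  (MB.expect fun n => (hc n).MB.mul (hφ.comp (hS.meas _))).sub (MB.const z)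

theorem integral_add_add_const {p q : X → ℝ} (hp : Integrable p μ) (hq : Integrable q μ) (e : ℝ) :
    ∫ x, (p x + q x + e) ∂μ = ∫ x, p x ∂μ + ∫ x, q x ∂μ + e := by
  have h : Integrable (fun x => p x + q x) μ := hp.add hq
  rw [integral_add h (integrable_const _), integral_add hp hq]
  simp

theorem QQ_add (hS : Sys μ T) (hc : ∀ n, Bdd (c n)) {φ ψ : X → ℂ} (hφ : MB φ) (hψ : MB ψ)
    (h1 : QQ μ T c B κ φ) (h2 : QQ μ T c B κ ψ) : QQ μ T c B κ (fun x => φ x + ψ x) := by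
  have h3 := h1.add h2
  rw [add_zero] at h3
  refine squeeze_zero (fun N => integral_nonneg fun _ => norm_nonneg _) (fun N => ?_) h3
  have i1 := (QQ_mb (B := B) hS hc hφ (κ * ∫ y, φ y ∂μ) N).integrable (μ := μ) |>.norm
  have i2 := (QQ_mb (B := B) hS hc hψ (κ * ∫ y, ψ y ∂μ) N).integrable (μ := μ) |>.norm
  show _ ≤ (∫ x, _ ∂μ) + ∫ x, _ ∂μ
  rw [← integral_add i1 i2]
  refine integral_mono_of_nonneg (ae_of_all _ fun _ => norm_nonneg _) (i1.add i2)
    (ae_of_all _ fun x => ?_)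
  refine le_trans (le_of_eq ?_) (norm_add_le _ _)
  simp only
  congr 1
  rw [integral_add hφ.integrable hψ.integrable]
  simp only [mul_add, Finset.expect_add_distrib]
  ring

theorem QQ_smul (z : ℂ) {φ : X → ℂ} (h1 : QQ μ T c B κ φ) :
    QQ μ T c B κ (fun x => z * φ x) := by
  have h3 := h1.const_mul ‖z‖
  rw [mul_zero] at h3
  refine h3.congr fun N => ?_
  rw [← integral_const_mul]
  congr 1; funext x
  rw [← norm_mul, integral_const_mul, mul_sub, Finset.mul_expect]
  congr 2
  · exact Finset.expect_congr rfl fun n _ => by ring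
  · ring

theorem QQ_zero : QQ μ T c B κ (fun _ => 0) := by
  refine tendsto_const_nhds.congr fun N => ?_
  simp

theorem integral_norm_comp (hS : Sys μ T) {φ : X → ℂ} (hφ : MB φ) (n : ℤ) :
    ∫ x, ‖φ (T n x)‖ ∂μ = ∫ x, ‖φ x‖ ∂μ := by
  have := (hS.mp n).map_eq
  conv_rhs => rw [← this]
  rw [integral_map (hS.meas n).aemeasurable]
  exact hφ.1.norm.aestronglyMeasurable

/-- Convergence of the weighted averages passes to `L¹` limits of the function. -/
theorem QQ_approx (hS : Sys μ T) (hc : ∀ n, Bdd (c n)) (hκ : ‖κ‖ ≤ 1) {φ : X → ℂ} (hφ : MB φ)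
    (h : ∀ ε > 0, ∃ p, MB p ∧ QQ μ T c B κ p ∧ ∫ x, ‖φ x - p x‖ ∂μ ≤ ε) : QQ μ T c B κ φ := by
  rw [QQ, Metric.tendsto_nhds]
  intro ε hε
  obtain ⟨p, hp, hq, hle⟩ := h (ε / 4) (by positivity)
  have hd : MB fun x => φ x - p x := hφ.sub hp
  filter_upwards [(Metric.tendsto_nhds.1 hq) (ε / 4) (by positivity)] with N hN
  rw [dist_zero_right, Real.norm_of_nonneg (integral_nonneg fun _ => norm_nonneg _)] at hN ⊢
  have hmb1 : MB fun x => (𝔼 n ∈ Finset.Icc 1 N, c n x * (φ (T (B n) x) - p (T (B n) x))) :=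
    MB.expect fun n => (hc n).MB.mul (hd.comp (hS.meas _))
  have i1 := (QQ_mb (B := B) hS hc hp (κ * ∫ y, p y ∂μ) N).integrable (μ := μ) |>.norm
  have i2 := hmb1.integrable (μ := μ) |>.norm
  have b1 : ‖κ * ∫ y, (φ y - p y) ∂μ‖ ≤ ε / 4 := by
    rw [norm_mul]
    calc ‖κ‖ * ‖∫ y, (φ y - p y) ∂μ‖ ≤ 1 * ‖∫ y, (φ y - p y) ∂μ‖ :=
          mul_le_mul_of_nonneg_right hκ (norm_nonneg _)
      _ ≤ ∫ y, ‖φ y - p y‖ ∂μ := by rw [one_mul]; exact norm_integral_le_integral_norm _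
      _ ≤ _ := hle
  have b2 : ∫ x, ‖𝔼 n ∈ Finset.Icc 1 N, c n x * (φ (T (B n) x) - p (T (B n) x))‖ ∂μ ≤ ε / 4 := by
    have i3 : ∀ n, Integrable (fun x => ‖φ (T (B n) x) - p (T (B n) x)‖) μ := fun n =>
      (hd.comp (hS.meas (B n))).integrable.norm
    calc _ ≤ ∫ x, 𝔼 n ∈ Finset.Icc 1 N, ‖φ (T (B n) x) - p (T (B n) x)‖ ∂μ := by
          refine integral_mono i2 ?_ fun x => ?_
          · simp only [Finset.expect_eq_sum_div_card]
            exact (integrable_finsetSum _ fun n _ => i3 n).div_const _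
          · refine (RCLike.norm_expect_le (K := ℂ)).trans (Finset.expect_le_expect fun n _ => ?_)
            rw [norm_mul]
            exact mul_le_of_le_one_left (norm_nonneg _) ((hc n).2 x)
      _ = 𝔼 n ∈ Finset.Icc 1 N, ∫ x, ‖φ x - p x‖ ∂μ := by
          simp only [Finset.expect_eq_sum_div_card]
          rw [integral_div, integral_finsetSum _ fun n _ => i3 n]
          congr 1
          exact Finset.sum_congr rfl fun n _ => integral_norm_comp hS hd (B n)
      _ ≤ ε / 4 := by
          rcases (Finset.Icc 1 N).eq_empty_or_nonempty with he | he
          · rw [he, Finset.expect_empty]; positivity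
          · rw [Finset.expect_const he]; exact hle
  calc _ ≤ ∫ x, (‖𝔼 n ∈ Finset.Icc 1 N, c n x * (φ (T (B n) x) - p (T (B n) x))‖ +
        ‖(𝔼 n ∈ Finset.Icc 1 N, c n x * p (T (B n) x)) - κ * ∫ y, p y ∂μ‖ + ε / 4) ∂μ := by
        refine integral_mono_of_nonneg (ae_of_all _ fun _ => norm_nonneg _)
          ((i2.add i1).add (integrable_const _)) (ae_of_all _ fun x => ?_)
        simp only
        have e : (𝔼 n ∈ Finset.Icc 1 N, c n x * φ (T (B n) x)) - κ * ∫ y, φ y ∂μ =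
          (𝔼 n ∈ Finset.Icc 1 N, c n x * (φ (T (B n) x) - p (T (B n) x))) +
          ((𝔼 n ∈ Finset.Icc 1 N, c n x * p (T (B n) x)) - κ * ∫ y, p y ∂μ) -
          κ * ∫ y, (φ y - p y) ∂μ := by
          rw [integral_sub hφ.integrable hp.integrable]
          simp only [mul_sub, Finset.expect_sub_distrib]
          ring
        rw [e]
        refine (norm_sub_le _ _).trans ?_
        have := norm_add_le (𝔼 n ∈ Finset.Icc 1 N, c n x * (φ (T (B n) x) - p (T (B n) x)))
          ((𝔼 n ∈ Finset.Icc 1 N, c n x * p (T (B n) x)) - κ * ∫ y, p y ∂μ)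
        linarith
    _ < ε := by
        rw [integral_add_add_const i2 i1]
        linarith

/-- An eigenfunction turns the iterates along `B` into the phase `e(B(n) θ)`; by ergodicity its
integral is `0` unless `θ` is an integer. -/
theorem QQ_eig (hS : Sys μ T) (hE : Ergodic (T 1) μ)
    (hP : ∀ θ : ℝ, ∀ κ' : ℂ, ((∃ n : ℤ, θ = n) → κ' = κ) → ((¬∃ n : ℤ, θ = n) → κ' = 0) →
      Tendsto (fun N => ∫ x, ‖(𝔼 n ∈ Finset.Icc 1 N, ee (B n * θ) * c n x) - κ'‖ ∂μ) atTop (𝓝 0))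
    {χ : X → ℂ} {θ : ℝ} (hχ : Eig μ T χ θ) : QQ μ T c B κ χ := by
  classical
  have h1 := hP θ (if (∃ n : ℤ, θ = n) then κ else 0) (fun h => if_pos h) (fun h => if_neg h)
  refine h1.congr fun N => ?_
  refine integral_congr_ae ?_
  have h2 : ∀ᵐ x ∂μ, ∀ n, χ (T (B n) x) = ee (B n * θ) * χ x :=
    ae_all_iff.2 fun n => hχ.pow hS (B n)
  have h3 : ∀ᵐ x ∂μ, (if (∃ n : ℤ, θ = n) then κ else 0) * χ x = κ * ∫ y, χ y ∂μ := by
    by_cases h : ∃ n : ℤ, θ = n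
    · filter_upwards [hχ.ae_const hE h] with x hx
      rw [if_pos h, hx]
    · refine ae_of_all _ fun x => ?_
      rw [if_neg h, hχ.integral_eq_zero hS h]; ring
  filter_upwards [h2, h3] with x hx hx'
  rw [← hx', ← mul_one ‖_‖, ← hχ.norm_one x, ← norm_mul, sub_mul, Finset.expect_mul]
  congr 2
  refine Finset.expect_congr rfl fun n _ => ?_
  rw [hx]; ring

theorem QQ_TP (hS : Sys μ T) (hc : ∀ n, Bdd (c n))
    (he : ∀ χ θ, Eig μ T χ θ → QQ μ T c B κ χ) {p : X → ℂ}
    (hp : p ∈ TP μ T) : QQ μ T c B κ p := by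
  have : MB p ∧ QQ μ T c B κ p := by
    refine Submodule.span_induction (p := fun p _ => MB p ∧ QQ μ T c B κ p) ?_ ?_ ?_ ?_ hp
    · rintro χ ⟨θ, hχ⟩
      exact ⟨hχ.bdd.MB, he χ θ hχ⟩
    · exact ⟨MB.const 0, QQ_zero⟩
    · intro x y _ _ hx hy
      exact ⟨hx.1.add hy.1, QQ_add hS hc hx.1 hy.1 hx.2 hy.2⟩
    · intro z x _ hx
      exact ⟨(MB.const z).mul hx.1, QQ_smul z hx.2⟩
  exact this.2

theorem QQ_InK (hS : Sys μ T) (hc : ∀ n, Bdd (c n)) (hκ : ‖κ‖ ≤ 1)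
    (he : ∀ χ θ, Eig μ T χ θ → QQ μ T c B κ χ) {w : X → ℂ}
    (hw : Bdd2 w) (hK : InK μ T w) : QQ μ T c B κ w := by
  refine QQ_approx hS hc hκ hw.MB fun ε hε => ?_
  obtain ⟨p, hp, hle⟩ := hK (ε ^ 2) (by positivity)
  have hpb : MB p := TP_bound hp
  exact ⟨p, hpb, QQ_TP hS hc he hp, integral_norm_le (hw.MB.sub hpb) hε.le hle⟩

end

/-! ### Induction on the set of functions -/

section

open scoped BigOperators
variable {X : Type} [MeasurableSpace X] {μ : Measure X} [IsProbabilityMeasure μ] {T : ℤ → X → X}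
variable {K : ℕ} {b : Fin K → ℕ → ℤ}

/-- Joint ergodicity of the iterates indexed by `S`, twisted by arbitrary phases in the
remaining iterates; the limit is the expected product when the phases are trivial and `0`
otherwise. -/
def PS (μ : Measure X) (T : ℤ → X → X) (b : Fin K → ℕ → ℤ) (S : Finset (Fin K)) : Prop :=
  ∀ f : Fin K → X → ℂ, (∀ i, Bdd (f i)) → ∀ t : Fin K → ℝ, ∀ κ : ℂ,
    ((∀ j ∈ Sᶜ, ∃ n : ℤ, t j = n) → κ = ∏ i ∈ S, ∫ x, f i x ∂μ) →
    ((¬∀ j ∈ Sᶜ, ∃ n : ℤ, t j = n) → κ = 0) →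
    Tendsto (fun N => ∫ x, ‖(𝔼 n ∈ Finset.Icc 1 N, ee (∑ j ∈ Sᶜ, t j * b j n) *
      ∏ i ∈ S, f i (T (b i n) x)) - κ‖ ∂μ) atTop (𝓝 0)

/-- The inductive step: a function is inserted at the index `m`, after splitting it as `f_m = 4u +
w` with `w` in the Kronecker factor and `u` orthogonal to all eigenfunctions. -/
theorem PS_step (hS : Sys μ T) (hE : Ergodic (T 1) μ) {m : Fin K} {S : Finset (Fin K)}
    (hm : m ∉ S) (hC : Ctl μ T b m S) (hP : PS μ T b S) : PS μ T b (insert m S) := by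
  classical
  intro f hf t κ' hκ1 hκ2
  have hmS : m ∈ Sᶜ := Finset.mem_compl.2 hm
  have hcompl : Sᶜ = insert m (insert m S)ᶜ := by
    rw [Finset.compl_insert, Finset.insert_erase hmS]
  have hmn : m ∉ (insert m S)ᶜ := by simp
  set r : ℕ → ℝ := fun n => ∑ j ∈ (insert m S)ᶜ, t j * b j n with hr
  set c : ℕ → X → ℂ := fun n x => ee (r n) * ∏ i ∈ S, f i (T (b i n) x) with hcd
  have hc : ∀ n, Bdd (c n) := fun n =>
    (Bdd.const (norm_ee _).le).mul (Bdd.prod fun i _ => hS.bdd (hf i) _)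
  set κ : ℂ := if (∀ j ∈ (insert m S)ᶜ, ∃ n : ℤ, t j = n) then ∏ i ∈ S, ∫ x, f i x ∂μ else 0
    with hκd
  have hκ : ‖κ‖ ≤ 1 := by
    rw [hκd]; split_ifs
    · rw [norm_prod]
      exact Finset.prod_le_one (fun _ _ => norm_nonneg _) fun i _ => (hf i).norm_integral_le
    · simp
  have hκ' : κ' = κ * ∫ x, f m x ∂μ := by
    rw [hκd]; split_ifs with h
    · rw [hκ1 h, Finset.prod_insert hm, mul_comm]
    · rw [hκ2 h, zero_mul]
  have heig : ∀ χ θ, Eig μ T χ θ → QQ μ T c (b m) κ χ := by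
    intro χ θ hχ
    refine QQ_eig hS hE (fun θ κ0 h1 h2 => ?_) hχ
    have h := hP f hf (Function.update t m θ) κ0 (fun hall => ?_) (fun hnall => ?_)
    · refine h.congr fun N => ?_
      congr 1; funext x; congr 2
      refine Finset.expect_congr rfl fun n _ => ?_
      rw [hcompl, Finset.sum_insert hmn, Function.update_self, ee_add, mul_comm θ, mul_assoc]
      congr 3
      exact Finset.sum_congr rfl fun j hj => by
        rw [Function.update_of_ne (ne_of_mem_of_not_mem hj hmn)]
    · have hθ : ∃ n : ℤ, θ = n := by simpa using hall m hmS
      rw [h1 hθ, hκd, if_pos]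
      intro j hj
      have := hall j (by rw [hcompl]; exact Finset.mem_insert_of_mem hj)
      rwa [Function.update_of_ne (ne_of_mem_of_not_mem hj hmn)] at this
    · by_cases hθ : ∃ n : ℤ, θ = n
      · rw [h1 hθ, hκd, if_neg]
        intro hall
        refine hnall fun j hj => ?_
        rw [hcompl, Finset.mem_insert] at hj
        rcases hj with rfl | hj
        · simpa using hθ
        · rw [Function.update_of_ne (ne_of_mem_of_not_mem hj hmn)]; exact hall j hj
      · exact h2 hθ
  obtain ⟨w, hw, hwK, hwo⟩ := exists_proj (μ := μ) (T := T) (hf m)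
  -- the factor `1/4` makes `u` bounded by `1`, as `|f_m - w| ≤ 3`
  set u : X → ℂ := fun x => (1 / 4 : ℂ) * (f m x - w x) with hud
  have hub : Bdd u := by
    refine ⟨((hf m).1.sub hw.1).const_mul _, fun x => ?_⟩
    have h1 := (hf m).2 x
    have h2 := hw.2 x
    have h3 := norm_sub_le (f m x) (w x)
    simp only [hud, norm_mul]
    norm_num
    linarith
  have huo : ∀ χ θ, Eig μ T χ θ → ∫ x, u x * χ x ∂μ = 0 := by
    intro χ θ hχ
    have : ∀ x, u x * χ x = (1 / 4 : ℂ) * ((f m x - w x) * χ x) := fun x => by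
      simp only [hud]; ring
    simp only [this]
    rw [integral_const_mul, hwo χ θ hχ, mul_zero]
  have hu0 : ∫ x, u x ∂μ = 0 := by
    simpa using huo _ 0 (Eig.const (c := 1) (by simp))
  have hQu : QQ μ T c (b m) κ u := by
    have h := orth_average (r := r) hS hE hC (fun α hα f hf => ?_) hf hub huo
    · refine h.congr fun N => ?_
      rw [hu0]
      congr 1; funext x
      rw [mul_zero, sub_zero]
      congr 1
      exact Finset.expect_congr rfl fun n _ => by simp only [hcd]; ring
    · have h := hP f hf (Pi.single m α) 0 (fun hall => ?_) (fun _ => rfl)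
      · refine h.congr fun N => ?_
        congr 1; funext x
        rw [sub_zero]
        congr 1
        refine Finset.expect_congr rfl fun n _ => ?_
        congr 2
        rw [Finset.sum_eq_single_of_mem m hmS fun j _ hj => by
          rw [Pi.single_eq_of_ne hj, zero_mul], Pi.single_eq_same]
      · exact absurd (by simpa using hall m hmS) hα
  have hQ := QQ_add hS hc ((MB.const 4).mul hub.MB) hw.MB (QQ_smul 4 hQu)
    (QQ_InK hS hc hκ heig hw hwK)
  have hfm : (fun x => 4 * u x + w x) = f m := by
    funext x; simp only [hud]; ring
  rw [hfm] at hQ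
  refine hQ.congr fun N => ?_
  rw [hκ']
  congr 1; funext x; congr 2
  refine Finset.expect_congr rfl fun n _ => ?_
  rw [Finset.prod_insert hm]
  simp only [hcd, hr]; ring

/-- Equidistribution gives the convergence for every set of indices carrying functions. -/
theorem PS_all (hS : Sys μ T) (hE : Ergodic (T 1) μ)
    (hC : ∀ (m : Fin K) (S : Finset (Fin K)), m ∉ S → Ctl μ T b m S)
    (h0 : ∀ t : Fin K → ℝ, (¬∀ j, ∃ n : ℤ, t j = n) →
      Tendsto (fun N : ℕ => 𝔼 n ∈ Finset.Icc 1 N, ee (∑ j, t j * b j n)) atTop (𝓝 0))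
    (S : Finset (Fin K)) : PS μ T b S := by
  classical
  induction S using Finset.induction_on with
  | empty =>
    intro f hf t κ h1 h2
    simp only [Finset.prod_empty, mul_one, Finset.compl_empty, Finset.mem_univ, true_imp_iff,
      integral_const, probReal_univ, one_smul] at h1 h2 ⊢
    by_cases h : ∀ j, ∃ n : ℤ, t j = n
    · choose z hz using h
      rw [h1 fun j => ⟨z j, hz j⟩]
      have e : ∀ n, ee (∑ j, t j * b j n) = 1 := by
        intro n
        rw [ee_eq_one_iff]
        exact ⟨∑ j, z j * b j n, by push_cast; exact Finset.sum_congr rfl fun j _ => by rw [hz]⟩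
      refine tendsto_const_nhds.congr' ?_
      filter_upwards [eventually_ge_atTop 1] with N hN
      simp only [e]
      rw [Finset.expect_const (Finset.nonempty_Icc.2 hN)]
      simp
    · rw [h2 h]
      simpa using (h0 t h).norm
  | insert m S hm ih => exact PS_step hS hE hm (hC m S hm) ih

end

/-! ### Equidistribution implies joint ergodicity -/

section

open scoped BigOperators

variable {X : Type} [MeasurableSpace X] {μ : Measure X} [IsProbabilityMeasure μ] {T : ℤ → X → X}

/-- For uniformly bounded functions, convergence to `0` in `L¹` upgrades to `L²`. -/
theorem tendsto_eLpNorm_two {Δ : ℕ → X → ℝ} (hm : ∀ N, Measurable (Δ N)) {M : ℝ}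
    (hM : ∀ N x, |Δ N x| ≤ M) (h : Tendsto (fun N => ∫ x, |Δ N x| ∂μ) atTop (𝓝 0)) :
    Tendsto (fun N => eLpNorm (Δ N) 2 μ) atTop (𝓝 0) := by
  have hLp : ∀ N, MemLp (Δ N) 2 μ := fun N =>
    MemLp.of_bound (hm N).aestronglyMeasurable M (ae_of_all _ fun x => hM N x)
  have e : ∀ N, eLpNorm (Δ N) 2 μ = ENNReal.ofReal (Real.sqrt (∫ x, |Δ N x| ^ 2 ∂μ)) := by
    intro N
    rw [(hLp N).eLpNorm_eq_integral_rpow_norm (by norm_num) (by norm_num), Real.sqrt_eq_rpow]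
    simp
  simp only [e]
  have h2 : Tendsto (fun N => ∫ x, |Δ N x| ^ 2 ∂μ) atTop (𝓝 0) := by
    have h3 := h.const_mul M
    rw [mul_zero] at h3
    refine squeeze_zero (fun N => integral_nonneg fun _ => by positivity) (fun N => ?_) h3
    rw [← integral_const_mul]
    refine integral_mono_of_nonneg (ae_of_all _ fun _ => by positivity)
      (((hLp N).integrable (by norm_num)).norm.const_mul M) (ae_of_all _ fun x => ?_)
    simp only [sq]
    exact mul_le_mul_of_nonneg_right (hM N x) (abs_nonneg _)
  have h4 := ENNReal.tendsto_ofReal ((Real.continuous_sqrt.tendsto 0).comp h2)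
  simpa using h4

/-- Joint ergodicity from equidistribution and the control property. -/
theorem jointlyErgodic_of {k : ℕ} {b : Fin k → ℕ → ℤ}
    (hC : ∀ (X : Type) (_ : MeasurableSpace X) (μ : Measure X) (_ : IsProbabilityMeasure μ)
      (T : ℤ → X → X), Sys μ T → ∀ (m : Fin k) (S : Finset (Fin k)), m ∉ S → Ctl μ T b m S)
    (h0 : ∀ t : Fin k → ℝ, (¬∀ j, ∃ n : ℤ, t j = n) →
      Tendsto (fun N : ℕ => 𝔼 n ∈ Finset.Icc 1 N, ee (∑ j, t j * b j n)) atTop (𝓝 0)) :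
    JointlyErgodic b := by
  intro X _ μ _ T hmp h0' hadd hE f hfm hfb
  have hS : Sys μ T := ⟨hmp, h0', hadd⟩
  choose C hCb using hfb
  set D : Fin k → ℝ := fun i => |C i| + 1 with hD
  have hDpos : ∀ i, 0 < D i := fun i => by positivity
  have hfD : ∀ i x, |f i x| ≤ D i := fun i x =>
    (hCb i x).trans ((le_abs_self _).trans (by simp [hD]))
  set g : Fin k → X → ℂ := fun i x => ((f i x / D i : ℝ) : ℂ) with hg
  have hgb : ∀ i, Bdd (g i) := by
    refine fun i => ⟨Complex.measurable_ofReal.comp ((hfm i).div_const _), fun x => ?_⟩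
    rw [Complex.norm_real, Real.norm_eq_abs, abs_div, abs_of_pos (hDpos i), div_le_one (hDpos i)]
    exact hfD i x
  have hP := PS_all hS hE (hC X _ μ inferInstance T hS) h0 Finset.univ g hgb 0 (∏ i, ∫ x, g i x ∂μ)
    (fun _ => rfl) (fun h => absurd (fun j hj => by simp at hj) h)
  set P : ℝ := ∏ i, D i with hPd
  have hPpos : 0 < P := Finset.prod_pos fun i _ => hDpos i
  have hfg : ∀ i x, f i x = D i * (f i x / D i) := fun i x => by
    have := (hDpos i).ne'; field_simp
  set Δ : ℕ → X → ℝ := fun N x => (N : ℝ)⁻¹ * ∑ n ∈ Finset.Icc 1 N, ∏ i, f i (T (b i n) x)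
    - ∏ i, ∫ x, f i x ∂μ with hΔ
  have hprod : ∀ N x, |Δ N x| = P * ‖(𝔼 n ∈ Finset.Icc 1 N, ∏ i, g i (T (b i n) x)) -
      ∏ i, ∫ x, g i x ∂μ‖ := by
    intro N x
    have e1 : ((Δ N x : ℝ) : ℂ) = P * ((𝔼 n ∈ Finset.Icc 1 N, ∏ i, g i (T (b i n) x)) -
      ∏ i, ∫ x, g i x ∂μ) := by
      have e2 : ∀ i, ((∫ x, f i x ∂μ : ℝ) : ℂ) = D i * ∫ x, g i x ∂μ := by
        intro i
        have : ∫ x, g i x ∂μ = ((∫ x, f i x / D i ∂μ : ℝ) : ℂ) := integral_ofReal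
        rw [this, integral_div]
        have : (D i : ℂ) ≠ 0 := by exact_mod_cast (hDpos i).ne'
        push_cast; field_simp
      have e3 : ∀ i y, ((f i y : ℝ) : ℂ) = D i * g i y := by
        intro i y
        rw [hfg i y]; simp only [hg]; push_cast
        have : (D i : ℂ) ≠ 0 := by exact_mod_cast (hDpos i).ne'
        field_simp
      simp only [hΔ, Finset.expect_eq_sum_div_card, Nat.card_Icc, Nat.add_sub_cancel]
      push_cast
      simp only [e2, e3, Finset.prod_mul_distrib, ← Finset.mul_sum, hPd]
      push_cast
      rw [div_eq_inv_mul]; ring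
    rw [← Real.norm_eq_abs, ← Complex.norm_real, e1, norm_mul, Complex.norm_real,
      Real.norm_of_nonneg hPpos.le]
  refine tendsto_eLpNorm_two (M := P * 2) (fun N => ?_) (fun N x => ?_) ?_
  · refine Measurable.sub_const (Measurable.const_mul (Finset.measurable_sum _ fun n _ =>
      Finset.measurable_prod _ fun i _ => (hfm i).comp (hS.meas _)) _) _
  · have hb1 : Bdd fun x => 𝔼 n ∈ Finset.Icc 1 N, ∏ i, g i (T (b i n) x) :=
      Bdd.expect fun n _ => Bdd.prod fun i _ => hS.bdd (hgb i) _
    have hb2 : ‖∏ i, ∫ x, g i x ∂μ‖ ≤ 1 := by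
      rw [norm_prod]
      exact Finset.prod_le_one (fun _ _ => norm_nonneg _) fun i _ => (hgb i).norm_integral_le
    show |Δ N x| ≤ _
    rw [hprod]
    refine mul_le_mul_of_nonneg_left ((norm_sub_le _ _).trans ?_) hPpos.le
    have := hb1.2 x
    linarith
  · show Tendsto (fun N => ∫ x, |Δ N x| ∂μ) atTop (𝓝 0)
    simp only [hprod, integral_const_mul]
    have := hP.const_mul P
    simpa only [Finset.compl_univ, Finset.sum_empty, ee_zero, one_mul, mul_zero] using this

end

/-! ### Joint ergodicity implies equidistribution -/

section

open scoped BigOperators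

/-- The rotation by `τ` on the closure of the cyclic group it generates in the torus: an ergodic
system in which the coordinates are eigenfunctions with eigenvalues `τ i`. -/
theorem exists_rotation {k : ℕ} (τ : Fin k → Circle) :
    ∃ (X : Type) (_ : MeasurableSpace X) (μ : Measure X) (_ : IsProbabilityMeasure μ)
      (T : ℤ → X → X) (χ : Fin k → X → ℂ), Sys μ T ∧ Ergodic (T 1) μ ∧
      (∀ i, Measurable (χ i)) ∧ (∀ i x, ‖χ i x‖ = 1) ∧
      ∀ i (n : ℤ) x, χ i (T n x) = (τ i : ℂ) ^ n * χ i x := by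
  have : SecondCountableTopology Circle :=
    (Topology.IsEmbedding.subtypeVal (X := ℂ)).secondCountableTopology
  set Γ : Subgroup (Fin k → Circle) := (Subgroup.zpowers τ).topologicalClosure with hΓ
  have hτ : τ ∈ Γ := Subgroup.le_topologicalClosure _ (Subgroup.mem_zpowers τ)
  have hcl : IsClosed (Γ : Set (Fin k → Circle)) := Subgroup.isClosed_topologicalClosure _
  have : CompactSpace Γ := isCompact_iff_compactSpace.1 hcl.isCompact
  let _ : MeasurableSpace Γ := borel Γ
  have : BorelSpace Γ := ⟨rfl⟩
  set g : Γ := ⟨τ, hτ⟩ with hg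
  have hd : DenseRange (fun n : ℤ => g ^ n) := by
    rw [DenseRange, (Topology.IsEmbedding.subtypeVal).isInducing.dense_iff]
    rintro ⟨y, hy⟩
    have hy' : y ∈ closure ((Subgroup.zpowers τ : Subgroup (Fin k → Circle)) : Set _) := hy
    refine closure_mono ?_ hy'
    rintro _ ⟨n, rfl⟩
    exact ⟨g ^ n, ⟨n, rfl⟩, by simp [hg]⟩
  set μ : Measure Γ := Measure.haarMeasure ⊤ with hμ
  have hp : IsProbabilityMeasure μ := ⟨by
    have := Measure.haarMeasure_self (K₀ := (⊤ : TopologicalSpace.PositiveCompacts Γ))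
    simpa using this⟩
  refine ⟨Γ, inferInstance, μ, hp, fun n y => g ^ n * y, fun i y => ((y : Fin k → Circle) i : ℂ),
    ⟨fun n => measurePreserving_mul_left μ _, ?_, ?_⟩, ?_, ?_, ?_, ?_⟩
  · funext y; simp
  · intro m n; funext y; simp [zpow_add, mul_assoc]
  · simp only [zpow_one]
    exact ergodic_mul_left_of_denseRange_zpow hd μ
  · intro i
    have : Continuous (fun y : Γ => ((y : Fin k → Circle) i : ℂ)) :=
      continuous_subtype_val.comp ((continuous_apply i).comp continuous_subtype_val)
    exact this.measurable
  · intro i x; exact Circle.norm_coe _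
  · intro i n x; simp [hg]

/-- Joint ergodicity for complex-valued functions, in `L¹`: expand the products of
`re + i im` into real products. -/
theorem JointlyErgodic.complex {k : ℕ} {b : Fin k → ℕ → ℤ} (hJ : JointlyErgodic b) {X : Type}
    [MeasurableSpace X] {μ : Measure X} [IsProbabilityMeasure μ] {T : ℤ → X → X} (hS : Sys μ T)
    (hE : Ergodic (T 1) μ) {f : Fin k → X → ℂ} (hf : ∀ i, Bdd (f i)) :
    Tendsto (fun N : ℕ => ∫ x, ‖(N : ℂ)⁻¹ * ∑ n ∈ Finset.Icc 1 N, ∏ i, f i (T (b i n) x) -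
      ∏ i, ∫ x, f i x ∂μ‖ ∂μ) atTop (𝓝 0) := by
  classical
  set h : Finset (Fin k) → Fin k → X → ℝ := fun s i x =>
    if i ∈ s then (f i x).re else (f i x).im with hh
  set z : Finset (Fin k) → ℂ := fun s => ∏ i, if i ∈ s then 1 else Complex.I with hz
  have hm : ∀ s i, Measurable (h s i) := by
    intro s i
    by_cases hi : i ∈ s
    · simp only [hh, if_pos hi]; exact Complex.measurable_re.comp (hf i).1
    · simp only [hh, if_neg hi]; exact Complex.measurable_im.comp (hf i).1
  have hb : ∀ s i x, |h s i x| ≤ 1 := by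
    intro s i x
    by_cases hi : i ∈ s
    · simp only [hh, if_pos hi]; exact (Complex.abs_re_le_norm _).trans ((hf i).2 x)
    · simp only [hh, if_neg hi]; exact (Complex.abs_im_le_norm _).trans ((hf i).2 x)
  -- the expansion of a product of complex numbers
  have hexp : ∀ p q : Fin k → ℝ, ∏ i, ((p i : ℂ) + q i * Complex.I) =
      ∑ s ∈ Finset.univ.powerset, z s * ∏ i, (((if i ∈ s then p i else q i : ℝ)) : ℂ) := by
    intro p q
    rw [Finset.prod_add]
    refine Finset.sum_congr rfl fun s _ => ?_
    rw [hz, ← Finset.prod_mul_distrib, ← Finset.prod_mul_prod_compl s]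
    congr 1
    · exact Finset.prod_congr rfl fun i hi => by simp [hi]
    · rw [← Finset.compl_eq_univ_sdiff]
      refine Finset.prod_congr rfl fun i hi => ?_
      rw [if_neg (Finset.mem_compl.1 hi), if_neg (Finset.mem_compl.1 hi), mul_comm]
  set Δ : Finset (Fin k) → ℕ → X → ℝ := fun s N x => (N : ℝ)⁻¹ * ∑ n ∈ Finset.Icc 1 N,
    ∏ i, h s i (T (b i n) x) - ∏ i, ∫ x, h s i x ∂μ with hΔ
  have hΔm : ∀ s N, Measurable (Δ s N) := fun s N =>
    Measurable.sub_const (Measurable.const_mul (Finset.measurable_sum _ fun n _ =>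
      Finset.measurable_prod _ fun i _ => (hm s i).comp (hS.meas _)) _) _
  have hΔ2 : ∀ s, Tendsto (fun N => eLpNorm (Δ s N) 2 μ) atTop (𝓝 0) := fun s =>
    hJ X _ μ inferInstance T hS.mp hS.zero hS.add hE (h s) (hm s) fun i => ⟨1, hb s i⟩
  have hΔ1 : ∀ s, Tendsto (fun N => eLpNorm (Δ s N) 1 μ) atTop (𝓝 0) := fun s =>
    tendsto_of_tendsto_of_tendsto_of_le_of_le tendsto_const_nhds (hΔ2 s) (fun _ => zero_le)
      fun N => eLpNorm_le_eLpNorm_of_exponent_le (by norm_num) (hΔm s N).aestronglyMeasurable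
  have hΔi : ∀ s N, Integrable (Δ s N) μ := by
    intro s N
    have : MB (fun x => ((Δ s N x : ℝ) : ℂ)) := by
      have hterm : ∀ i, MB (fun x => ((h s i x : ℝ) : ℂ)) := fun i =>
        ⟨Complex.measurable_ofReal.comp (hm s i), 1, fun x => by
          rw [Complex.norm_real]; exact hb s i x⟩
      refine ⟨Complex.measurable_ofReal.comp (hΔm s N),
        ‖(N : ℝ)⁻¹‖ * N + ‖∏ i, ∫ x, h s i x ∂μ‖, fun x => ?_⟩
      rw [Complex.norm_real]
      refine (norm_sub_le _ _).trans (add_le_add_left ?_ _)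
      rw [norm_mul]
      refine mul_le_mul_of_nonneg_left ?_ (norm_nonneg _)
      refine (norm_sum_le _ _).trans ?_
      calc _ ≤ ∑ n ∈ Finset.Icc 1 N, (1 : ℝ) := by
            refine Finset.sum_le_sum fun n _ => ?_
            rw [norm_prod]
            exact Finset.prod_le_one (fun _ _ => norm_nonneg _) fun i _ => hb s i _
        _ = N := by simp
    simpa using this.integrable.re (μ := μ)
  have hΔ0 : ∀ s, Tendsto (fun N => ∫ x, ‖Δ s N x‖ ∂μ) atTop (𝓝 0) := by
    intro s
    have h1 := (ENNReal.tendsto_toReal ENNReal.zero_ne_top).comp (hΔ1 s)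
    refine h1.congr fun N => ?_
    simp only [Function.comp]
    rw [eLpNorm_one_eq_lintegral_enorm, integral_norm_eq_lintegral_enorm (hΔi s N).1]
  have hz1 : ∀ s, ‖z s‖ = 1 := by
    intro s
    rw [hz, norm_prod]
    exact Finset.prod_eq_one fun i _ => by split_ifs <;> simp
  have hsum : Tendsto (fun N => ∑ s ∈ (Finset.univ : Finset (Fin k)).powerset,
      ∫ x, ‖Δ s N x‖ ∂μ) atTop (𝓝 0) := by
    simpa using tendsto_finsetSum _ fun s _ => hΔ0 s
  refine squeeze_zero (fun N => integral_nonneg fun _ => norm_nonneg _) (fun N => ?_) hsum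
  rw [← integral_finsetSum _ fun s _ => (hΔi s N).norm]
  refine integral_mono_of_nonneg (ae_of_all _ fun _ => norm_nonneg _)
    (integrable_finsetSum _ fun s _ => (hΔi s N).norm) (ae_of_all _ fun x => ?_)
  have e1 : ∀ y : Fin k → X, ∏ i, f i (y i) = ∑ s ∈ Finset.univ.powerset,
      z s * ∏ i, ((h s i (y i) : ℝ) : ℂ) := by
    intro y
    rw [← hexp]
    exact Finset.prod_congr rfl fun i _ => (Complex.re_add_im _).symm
  have e2 : ∏ i, ∫ x, f i x ∂μ = ∑ s ∈ Finset.univ.powerset,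
      z s * ∏ i, ((∫ x, h s i x ∂μ : ℝ) : ℂ) := by
    have : ∀ i, ∫ x, f i x ∂μ = ((∫ x, (f i x).re ∂μ : ℝ) : ℂ) +
        ((∫ x, (f i x).im ∂μ : ℝ) : ℂ) * Complex.I := fun i =>
      (integral_re_add_im (𝕜 := ℂ) (hf i).integrable).symm
    simp only [this]
    rw [hexp]
    refine Finset.sum_congr rfl fun s _ => ?_
    congr 1
    refine Finset.prod_congr rfl fun i _ => ?_
    by_cases hi : i ∈ s <;> simp [hh, hi]
  have e3 : (N : ℂ)⁻¹ * ∑ n ∈ Finset.Icc 1 N, ∏ i, f i (T (b i n) x) - ∏ i, ∫ x, f i x ∂μ =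
      ∑ s ∈ Finset.univ.powerset, z s * ((Δ s N x : ℝ) : ℂ) := by
    rw [e2, Finset.sum_congr rfl fun n _ => e1 fun i => T (b i n) x, Finset.sum_comm,
      Finset.mul_sum, ← Finset.sum_sub_distrib]
    refine Finset.sum_congr rfl fun s _ => ?_
    simp only [hΔ]
    push_cast
    rw [← Finset.mul_sum]; ring
  simp only [e3]
  refine (norm_sum_le _ _).trans (Finset.sum_le_sum fun s _ => ?_)
  rw [norm_mul, hz1, one_mul, Complex.norm_real]

/-- The exponential averages are obtained by evaluating a multiple average of coordinate functions
on a torus rotation. -/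
theorem equidistributed_of {k : ℕ} {b : Fin k → ℕ → ℤ} (hJ : JointlyErgodic b)
    {t : Fin k → ℝ} (ht : ∃ i, ¬∃ n : ℤ, t i = n) :
    Tendsto (fun N : ℕ => (N : ℂ)⁻¹ * ∑ n ∈ Finset.Icc 1 N, ee (∑ i, t i * b i n)) atTop (𝓝 0) := by
  obtain ⟨i0, hi0⟩ := ht
  obtain ⟨X, _, μ, _, T, χ, hS, hE, hm, h1, heig⟩ :=
    exists_rotation (fun i => Circle.exp (2 * Real.pi * t i))
  have hee : ∀ i, ((Circle.exp (2 * Real.pi * t i) : Circle) : ℂ) = ee (t i) := by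
    intro i
    rw [Circle.coe_exp, ee]; push_cast; congr 1; ring
  have hpow : ∀ i (n : ℤ), ee (t i) ^ n = ee (t i * n) := by
    intro i n
    simp only [ee]
    rw [← Complex.exp_int_mul]
    congr 1; push_cast; ring
  simp only [hee, hpow] at heig
  have hb : ∀ i, Bdd (χ i) := fun i => ⟨hm i, fun x => (h1 i x).le⟩
  have hzero : ∏ i, ∫ x, χ i x ∂μ = 0 := by
    refine Finset.prod_eq_zero (Finset.mem_univ i0) ?_
    have : Eig μ T (χ i0) (t i0) := ⟨hm i0, h1 i0, ae_of_all _ fun x => by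
      have := heig i0 1 x
      simpa using this⟩
    exact this.integral_eq_zero hS hi0
  have h := hJ.complex hS hE hb
  rw [tendsto_zero_iff_norm_tendsto_zero]
  refine h.congr fun N => ?_
  have : ∀ x, ‖(N : ℂ)⁻¹ * ∑ n ∈ Finset.Icc 1 N, ∏ i, χ i (T (b i n) x) - ∏ i, ∫ x, χ i x ∂μ‖ =
      ‖(N : ℂ)⁻¹ * ∑ n ∈ Finset.Icc 1 N, ee (∑ i, t i * b i n)‖ := by
    intro x
    have e : ∀ n, ∏ i, χ i (T (b i n) x) = ee (∑ i, t i * b i n) * ∏ i, χ i x := by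
      intro n
      rw [ee_sum, ← Finset.prod_mul_distrib]
      exact Finset.prod_congr rfl fun i _ => heig i _ x
    rw [hzero, sub_zero, Finset.sum_congr rfl fun n _ => e n, ← Finset.sum_mul, ← mul_assoc,
      norm_mul, norm_prod, Finset.prod_eq_one fun i _ => h1 i x, mul_one]
  simp only [this]
  simp

end

/-! ### The equivalence -/

/-- Reducing the frequencies modulo `1` does not change the exponential. -/
theorem ee_sum_fract {k : ℕ} (t : Fin k → ℝ) (z : Fin k → ℤ) :
    ee (∑ j, Int.fract (t j) * z j) = ee (∑ j, t j * z j) := by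
  have : ∑ j, t j * (z j : ℝ) = ∑ j, Int.fract (t j) * z j + ((∑ j, ⌊t j⌋ * z j : ℤ) : ℝ) := by
    push_cast
    rw [← Finset.sum_add_distrib]
    refine Finset.sum_congr rfl fun j _ => ?_
    rw [← add_mul, Int.fract_add_floor]
  rw [this, ee_add, ee_int, mul_one]

/-- If `a_1, …, a_k` belong to a Hardy field, have polynomial growth,
`|a_i(t)|/log t → ∞` and `|a_i(t) - a_j(t)|/log t → ∞` for `i ≠ j`, then the sequences
`⌊a_1(n)⌋, …, ⌊a_k(n)⌋` are jointly ergodic if and only if they are good for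
equidistribution. -/
theorem statement2 (H : HardyField) (k : ℕ) (hk : 0 < k)
    (a : Fin k → ℝ → ℝ) (haH : ∀ i, a i ∈ H.carrier)
    (hgrowth : ∀ i, PolynomialGrowth (a i))
    (hlog : ∀ i, Tendsto (fun t => |a i t| / Real.log t) atTop atTop)
    (hdiff : ∀ i j, i ≠ j → Tendsto (fun t => |a i t - a j t| / Real.log t) atTop atTop) :
    JointlyErgodic (fun (i : Fin k) (n : ℕ) => ⌊a i (n : ℝ)⌋) ↔
      ∀ t : Fin k → ℝ, (∀ i, t i ∈ Set.Ico (0 : ℝ) 1) → (∃ i, t i ≠ 0) →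
        Tendsto (fun N : ℕ =>
          (N : ℂ)⁻¹ * ∑ n ∈ Finset.Icc 1 N,
            Complex.exp (2 * Real.pi * Complex.I * (∑ i, t i * ⌊a i (n : ℝ)⌋ : ℝ)))
          atTop (𝓝 0) := by
  constructor
  · rintro hJ t ht ⟨i, hi⟩
    refine equidistributed_of hJ ⟨i, ?_⟩
    rintro ⟨n, hn⟩
    have h1 := (ht i).1
    have h2 := (ht i).2
    rw [hn] at h1 h2 hi
    have h3 : 0 ≤ n := by exact_mod_cast h1
    have h4 : n < 1 := by exact_mod_cast h2
    exact hi (by exact_mod_cast (show n = 0 by omega))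
  · intro h
    refine jointlyErgodic_of (fun X _ μ _ T hS m S hm u hu hn ε hε =>
      propS hS hu hn a haH hgrowth hlog hdiff m S hm ε hε) fun t ht => ?_
    have h1 := h (fun i => Int.fract (t i))
      (fun i => ⟨Int.fract_nonneg _, Int.fract_lt_one _⟩) (by
        by_contra hc
        push Not at hc
        refine ht fun j => ⟨⌊t j⌋, ?_⟩
        have := Int.fract_add_floor (t j)
        rw [hc j] at this
        linarith)
    refine h1.congr fun N => ?_
    rw [Finset.expect_eq_sum_div_card, Nat.card_Icc, Nat.add_sub_cancel, div_eq_inv_mul]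
    congr 1
    exact Finset.sum_congr rfl fun n _ => ee_sum_fract t fun j => ⌊a j (n : ℝ)⌋
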